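/- For every subgroup H of G = PSU(3,q), q = 2^(2^n), the Möbius function satisfies |μ(H, G)| ≤ [G : H], the index of H in G. (In particular the groups PSU(3,2^(2^n)) satisfy the bound required by Mann's conjecture.) -/

import Mathlib

/-! Since `3` does not divide `q + 1`, the group `SU(3,q)` has trivial center, and `PSU(3,q)` is
identified with it (`HU.center_eq_bot`). The argument takes place in an abstract three-dimensional
hermitian space `V` over the field with `q²` elements on which a group `G` acts as the full special
unitary group (structure `HU`); points are the points of the projective plane of `V`, isotropic or
not, a flag is a pair of perpendicular points of which the first is isotropic and the second is not,
and a triangle is a set of three mutually orthogonal nonisotropic points. `Theta` is the family of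
centralizers of the elements acting irreducibly on `V`: cyclic subgroups, any two of which meet
trivially.

*Classification.* Every proper subgroup of `G` fixes a point, stabilizes a triangle or normalizes a
member of `Theta` (`HU.good`). A subgroup of odd order is solvable, so a subgroup with a nontrivial
normal subgroup of odd order is settled by its action on the fixed points, or on the centralizer, of
a nontrivial abelian normal subgroup (`HU.odd_good`). Involutions are unitary transvections. In a
subgroup of even order without fixed points, if all centers carry at most one transvection, the
2-subgroups are cyclic and there is a normal 2-complement; otherwise the transvections generate `G`.
That the exponent in `q` is a power of two is what excludes the subfield subgroups.

*A virtual `G`-set.* Let `X0 H` be the number of flags and of pairs (vertex, triangle) fixed by `H`,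
minus the numbers of fixed points, of stabilized triangles, and of members of `Theta` normalized by
`H`. A case distinction on the shape of the set of fixed points shows `X0 H = -1 - defect H` for `H
≠ 1` (`HU.X0_eq`), where the defect counts the triangles stabilized without fixed vertex and the
members of `Theta` that are normalized, minus one if `H` has no fixed point. By the classification
the defect of a proper nontrivial subgroup is nonnegative, and it is zero unless `H` has order 3 or
6 (`HU.defect_eq_zero`).

*Möbius function.* Let `mainPart H` be the signed number of objects whose stabilizer is exactly `H`,
with one added for `H = G`. Its sum over all `K ≥ H` is `1 + X0 H`, which is zero, as the sum of
`μ(K, G)`, except for `H = G` and for the subgroups of order 1, 3 and 6. Hence `μ(-, G)` agrees with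
`mainPart` outside the subgroups of order 1, 2, 3 and 6. The objects are determined by their
stabilizers (`HU.stab_point`, `HU.stab_flag`, `HU.stab_vtx`, `HU.stab_tri`, `HU.stab_theta`), so
`|mainPart H| ≤ 2` for proper `H` (`HU.mainPart_le`), which is at most the index. On the small
subgroups the correction is obtained by inversion (`delta_six`, `delta_prime`, `delta_bot_bounds`)
and estimated by counting: points, flags and triangles (`HU.card_points`, `HU.flags_card`,
`HU.tri_card`), subgroups of order 3 or 6 acting freely on a triangle (`HU.freePairs_three`,
`HU.freePairs_six`), subgroups of order three (`HU.card_C3`), members of `Theta` (`HU.card_Theta`)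
and those normalized by an element of order three (`HU.thetaFix_three`). Compared with `|G| ≥ (q² -
1)(q³ + 1)q³` (`HU.card_ge`) this gives the bound (`HU.index_bound`). -/

open scoped Classical Pointwise

namespace PSUPaper

/-- `q = 2^(2^n)`. -/
abbrev qval (n : ℕ) : ℕ := 2 ^ 2 ^ n

/-- The field with `q² = 2^(2^(n+1))` elements. -/
abbrev Fq2 (n : ℕ) : Type := GaloisField 2 (2 ^ (n + 1))

/-- The involutory automorphism `x ↦ x^q` of `F_{q²}`, as a star-ring structure. -/
noncomputable instance starRingFq2 (n : ℕ) : StarRing (Fq2 n) where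
  star x := x ^ qval n
  star_involutive x := by
    letI : Fintype (Fq2 n) := Fintype.ofFinite _
    show (x ^ qval n) ^ qval n = x
    rw [← pow_mul]
    have h : qval n * qval n = 2 ^ 2 ^ (n + 1) := by
      rw [← pow_add, ← two_mul, pow_succ, mul_comm]
    have hcard : Fintype.card (Fq2 n) = 2 ^ 2 ^ (n + 1) := by
      rw [← Nat.card_eq_fintype_card, GaloisField.card 2 (2 ^ (n + 1)) (by positivity)]
    rw [h, ← hcard]
    exact FiniteField.pow_card x
  star_mul x y := by
    show (x * y) ^ qval n = y ^ qval n * x ^ qval n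
    rw [mul_pow, mul_comm]
  star_add x y := by
    show (x + y) ^ qval n = x ^ qval n + y ^ qval n
    exact add_pow_char_pow x y 2 (2 ^ n)

/-- `SU(3,q)`: the subgroup of the unitary group `{M | M * (M^σ)ᵀ = 1}` (with respect to the
star structure `σ : x ↦ x^q` on `F_{q²}`) consisting of the matrices of determinant 1. -/
noncomputable def SU3 (n : ℕ) : Subgroup (Matrix.unitaryGroup (Fin 3) (Fq2 n)) where
  carrier := {M | (M : Matrix (Fin 3) (Fin 3) (Fq2 n)).det = 1}
  one_mem' := by simp
  mul_mem' := by
    intro a b ha hb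
    simp only [Set.mem_setOf_eq, Matrix.UnitaryGroup.mul_val, Matrix.det_mul] at *
    rw [ha, hb, mul_one]
  inv_mem' := by
    intro a ha
    simp only [Set.mem_setOf_eq, Matrix.UnitaryGroup.inv_val] at *
    rw [Matrix.star_eq_conjTranspose, Matrix.det_conjTranspose, ha, star_one]

/-- `PSU(3,q)`: the quotient of `SU(3,q)` by its center. -/
noncomputable abbrev PSU3 (n : ℕ) : Type := SU3 n ⧸ Subgroup.center (SU3 n)

/-- `mu` is the Möbius function `H ↦ μ(H, G)` of the subgroup lattice of `G`:
`μ(G,G) = 1` and `∑_{J : H ≤ J ≤ G} μ(J,G) = 0` for `H < G`. -/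
def IsSubgroupMobius {G : Type*} [Group G] (mu : Subgroup G → ℤ) : Prop :=
  ∀ H : Subgroup G, (∑ᶠ K ∈ {K : Subgroup G | H ≤ K}, mu K) = if H = ⊤ then 1 else 0

/-- `H` and `K` are conjugate subgroups. -/
def IsConjSub {G : Type*} [Group G] (H K : Subgroup G) : Prop :=
  ∃ g : G, Subgroup.map (MulAut.conj g).toMonoidHom H = K

/-- The conjugacy classes of subgroups of `G`. -/
abbrev SubClasses (G : Type*) [Group G] : Type _ :=
  Quotient (MulAction.orbitRel (ConjAct G) (Subgroup G))

/-- The conjugacy class of a subgroup. -/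
def clsOf {G : Type*} [Group G] (H : Subgroup G) : SubClasses G :=
  Quotient.mk (MulAction.orbitRel (ConjAct G) (Subgroup G)) H

/-- The order on conjugacy classes of subgroups: `[H] ≤ [K]` iff `H` is contained in some
conjugate of `K`. -/
def clsLe {G : Type*} [Group G] (x y : SubClasses G) : Prop :=
  ∃ H K : Subgroup G, clsOf H = x ∧ clsOf K = y ∧ ∃ g : ConjAct G, H ≤ g • K

/-- `lam` is the Möbius function `[H] ↦ μ([H], [G])` of the poset of conjugacy classes of
subgroups of `G`: `μ([G],[G]) = 1` and `∑_{[J] : [H] ≤ [J] ≤ [G]} μ([J],[G]) = 0` for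
`[H] < [G]`. -/
def IsClassMobius {G : Type*} [Group G] (lam : SubClasses G → ℤ) : Prop :=
  ∀ x : SubClasses G, (∑ᶠ y ∈ {y : SubClasses G | clsLe x y}, lam y) =
    if x = clsOf (⊤ : Subgroup G) then 1 else 0

/-- `m` is the Möbius function `H ↦ μ_{L_p}({1}, H)` of the poset `L_p` of `p`-subgroups of `G`:
`μ_{L_p}({1},{1}) = 1` and `∑_{J ∈ L_p : J ≤ K} μ_{L_p}({1},J) = 0` for `{1} < K ∈ L_p`. -/
def IsPMobiusBot {G : Type*} [Group G] (p : ℕ) (m : Subgroup G → ℤ) : Prop :=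
  m ⊥ = 1 ∧ ∀ K : Subgroup G, IsPGroup p K → ⊥ < K →
    (∑ᶠ J ∈ {J : Subgroup G | IsPGroup p J ∧ J ≤ K}, m J) = 0

/-! ### The field of order `q²` and its involution -/

section FieldFacts

/-- `F` is a field with `q² = 2^(2^(n+1))` elements whose star operation is `x ↦ x^q`. -/
structure UF (n : ℕ) (F : Type) [Field F] [StarRing F] : Prop where
  hn : 1 ≤ n
  card : Nat.card F = qval n * qval n
  star_eq : ∀ x : F, star x = x ^ qval n

theorem qval_ge {n : ℕ} (hn : 1 ≤ n) : 4 ≤ qval n := by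
  have h1 : 2 ^ 1 ≤ 2 ^ n := Nat.pow_le_pow_right (by norm_num) hn
  have : 2 ^ 2 ≤ 2 ^ 2 ^ n := Nat.pow_le_pow_right (by norm_num) (by simpa using h1)
  simpa using this

theorem qval_mod3 {n : ℕ} (hn : 1 ≤ n) : qval n % 3 = 1 := by
  obtain ⟨m, rfl⟩ := Nat.exists_eq_add_of_le' hn
  rw [qval, pow_succ, mul_comm, pow_mul, Nat.pow_mod]
  norm_num

theorem qval_even {n : ℕ} (hn : 1 ≤ n) : qval n % 2 = 0 := by
  obtain ⟨m, hm⟩ : ∃ m, 2 ^ n = m + 1 := ⟨2 ^ n - 1, by have := Nat.one_le_two_pow (n := n); omega⟩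
  rw [qval, hm, pow_succ]; omega

theorem qval_coprime {n : ℕ} (hn : 1 ≤ n) : Nat.Coprime (qval n + 1) 12 := by
  have h3 := qval_mod3 hn
  have h2 := qval_even hn
  have e3 : Nat.Coprime (qval n + 1) 3 := by
    rw [Nat.coprime_comm, (by norm_num : Nat.Prime 3).coprime_iff_not_dvd]; omega
  have e2 : Nat.Coprime (qval n + 1) 2 := by
    rw [Nat.coprime_comm, (by norm_num : Nat.Prime 2).coprime_iff_not_dvd]; omega
  have : (12 : ℕ) = 3 * 2 * 2 := by norm_num
  rw [this]
  exact (e3.mul_right e2).mul_right e2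

variable {n : ℕ} {F : Type} [Field F] [StarRing F] [Finite F] [CharP F 2]

namespace UF

theorem pow_card (U : UF n F) (x : F) : x ^ (qval n * qval n) = x := by
  letI := Fintype.ofFinite F
  rw [← U.card, Nat.card_eq_fintype_card]
  exact FiniteField.pow_card x

/-- Every fixed element is the square, hence the norm, of a fixed element. -/
theorem sqrt (U : UF n F) {a : F} (ha : star a = a) : ∃ b : F, star b = b ∧ b * b = a := by
  have h2 := qval_even U.hn
  obtain ⟨m, hm⟩ : ∃ m, qval n = m + m := ⟨qval n / 2, by omega⟩
  refine ⟨a ^ m, by rw [star_pow, ha], ?_⟩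
  rw [← pow_add, ← hm, ← U.star_eq, ha]

theorem norm_iff (U : UF n F) (x : F) : x * star x = 1 ↔ x ^ (qval n + 1) = 1 := by
  rw [U.star_eq, pow_succ, mul_comm]

/-- A nonzero polynomial of degree `m` with all elements of a set among its roots. -/
theorem roots_bound (p : Polynomial F) (hp : p ≠ 0) (S : Set F) (hS : ∀ x ∈ S, p.eval x = 0) :
    S.ncard ≤ p.natDegree := by
  have hsub : S ⊆ (p.roots.toFinset : Set F) := by
    intro x hx
    simp [hp, hS x hx]
  calc S.ncard ≤ (p.roots.toFinset : Set F).ncard := Set.ncard_le_ncard hsub (Finset.finite_toSet _)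
    _ = p.roots.toFinset.card := Set.ncard_coe_finset _
    _ ≤ p.roots.card := Multiset.toFinset_card_le _
    _ ≤ p.natDegree := p.card_roots'

theorem fix_le (U : UF n F) : {x : F | star x = x}.ncard ≤ qval n := by
  have hq := qval_ge U.hn
  have hd : (Polynomial.X ^ qval n - Polynomial.X : Polynomial F).natDegree = qval n :=
    FiniteField.X_pow_card_sub_X_natDegree_eq F (by omega)
  have h0 : (Polynomial.X ^ qval n - Polynomial.X : Polynomial F) ≠ 0 :=
    FiniteField.X_pow_card_sub_X_ne_zero F (by omega)
  refine (roots_bound _ h0 _ ?_).trans hd.le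
  intro x hx
  have hx : star x = x := hx
  simp [← U.star_eq, hx]

/-- Trace and its fibres: the fixed field has exactly `q` elements. -/
theorem fix_card (U : UF n F) : {x : F | star x = x}.ncard = qval n := by
  have hq := qval_ge U.hn
  refine le_antisymm U.fix_le ?_
  let f : F →+ F := ⟨⟨fun x => x + star x, by simp⟩, fun x y => by simp; ring⟩
  have hk : (f.ker : Set F) = {x : F | star x = x} := by
    ext x
    simp only [SetLike.mem_coe, AddMonoidHom.mem_ker, f, AddMonoidHom.coe_mk, ZeroHom.coe_mk,
      Set.mem_setOf_eq]
    constructor <;> intro h <;> grind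
  have hr : (f.range : Set F) ⊆ {x : F | star x = x} := by
    rintro _ ⟨x, rfl⟩
    simp [f, add_comm]
  have h1 := f.ker.index_mul_card
  rw [AddSubgroup.index_ker, U.card] at h1
  have h2 : Nat.card f.ker = {x : F | star x = x}.ncard := by rw [← hk]; rfl
  have h3 : Nat.card f.range ≤ {x : F | star x = x}.ncard := Set.ncard_le_ncard hr (Set.toFinite _)
  rw [h2] at h1
  have h4 := U.fix_le
  nlinarith

theorem exists_not_fix (U : UF n F) : ∃ x : F, star x ≠ x := by
  by_contra! h
  have h1 := U.fix_card
  have h2 : {x : F | star x = x} = Set.univ := by ext; simp [h]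
  rw [h2, Set.ncard_univ, U.card] at h1
  have := qval_ge U.hn
  nlinarith

/-- There is an element of trace one. -/
theorem exists_theta (U : UF n F) : ∃ t : F, t + star t = 1 := by
  obtain ⟨x, hx⟩ := U.exists_not_fix
  have h0 : x + star x ≠ 0 := fun h => hx (by grind)
  refine ⟨x / (x + star x), ?_⟩
  rw [star_div₀, star_add, star_star, add_comm (star x) x, ← add_div, div_self h0]

theorem trace_surj (U : UF n F) {s : F} (hs : star s = s) : ∃ t : F, t + star t = s := by
  obtain ⟨t, ht⟩ := U.exists_theta
  exact ⟨s * t, by rw [star_mul, hs, mul_comm (star t), ← mul_add, ht, mul_one]⟩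

theorem norm_surj (U : UF n F) {s : F} (hs : star s = s) : ∃ t : F, t * star t = s := by
  obtain ⟨b, hb, h⟩ := U.sqrt hs
  exact ⟨b, by rw [hb, h]⟩

/-- A norm-one element of order dividing `12` is trivial, because `gcd(q + 1, 12) = 1`. -/
theorem norm_one_pow (U : UF n F) {x : F} (hx : x * star x = 1) (h12 : x ^ 12 = 1) : x = 1 := by
  rw [U.norm_iff] at hx
  have := Nat.dvd_gcd (orderOf_dvd_of_pow_eq_one hx) (orderOf_dvd_of_pow_eq_one h12)
  rw [(qval_coprime U.hn : Nat.gcd _ _ = 1)] at this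
  exact orderOf_eq_one_iff.1 (Nat.dvd_one.1 this)

theorem norm_one_cube (U : UF n F) {x : F} (hx : x * star x = 1) (h3 : x ^ 3 = 1) : x = 1 :=
  U.norm_one_pow hx (by rw [show 12 = 3 * 4 by norm_num, pow_mul, h3, one_pow])

theorem norm_one_sq (U : UF n F) {x : F} (hx : x * star x = 1) (h3 : x ^ 2 = 1) : x = 1 :=
  U.norm_one_pow hx (by rw [show 12 = 2 * 6 by norm_num, pow_mul, h3, one_pow])

theorem norm_one_six (U : UF n F) {x : F} (hx : x * star x = 1) (h3 : x ^ 6 = 1) : x = 1 :=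
  U.norm_one_pow hx (by rw [show 12 = 6 * 2 by norm_num, pow_mul, h3, one_pow])

theorem exists_norm_one (U : UF n F) : ∃ x : F, x * star x = 1 ∧ x ≠ 1 := by
  obtain ⟨x, hx⟩ := U.exists_not_fix
  have h0 : x ≠ 0 := by rintro rfl; simp at hx
  have h1 : star x ≠ 0 := by simpa using h0
  refine ⟨x / star x, ?_, ?_⟩
  · rw [star_div₀, star_star]; field_simp
  · intro h
    rw [div_eq_one_iff_eq h1] at h
    exact hx h.symm

/-- The primitive cube roots of unity lie in the fixed field, because `3 ∣ q - 1`. -/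
theorem cube_root_fix (U : UF n F) {w : F} (hw : w ^ 3 = 1) : star w = w := by
  have h := qval_mod3 U.hn
  rw [U.star_eq, ← Nat.div_add_mod (qval n) 3, h, pow_succ, pow_mul, hw, one_pow, one_mul]

theorem exists_omega (U : UF n F) : ∃ w : F, w * w + w + 1 = 0 ∧ star w = w ∧ w ^ 3 = 1 := by
  letI := Fintype.ofFinite F
  have hd : 3 ∣ Nat.card Fˣ := by
    rw [Nat.card_units, U.card]
    have h := qval_mod3 U.hn
    have : qval n * qval n % 3 = 1 := by rw [Nat.mul_mod, h]
    omega
  haveI : Fact (Nat.Prime 3) := ⟨by norm_num⟩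
  obtain ⟨x, hx⟩ := exists_prime_orderOf_dvd_card' 3 hd
  have h3 : (x : F) ^ 3 = 1 := by
    rw [← Units.val_pow_eq_pow_val, ← hx, pow_orderOf_eq_one]; rfl
  have h1 : (x : F) ≠ 1 := by
    intro h
    have : x = 1 := Units.ext h
    rw [this, orderOf_one] at hx
    omega
  refine ⟨x, ?_, U.cube_root_fix h3, h3⟩
  have : ((x : F) - 1) * ((x : F) * x + x + 1) = 0 := by linear_combination h3
  rcases mul_eq_zero.1 this with h | h
  · exact absurd (sub_eq_zero.1 h) h1
  · exact h

theorem norm_one_card_le (U : UF n F) : {x : F | x * star x = 1}.ncard ≤ qval n + 1 := by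
  have h0 : (Polynomial.X ^ (qval n + 1) - Polynomial.C 1 : Polynomial F) ≠ 0 :=
    Polynomial.X_pow_sub_C_ne_zero (by omega) 1
  refine (roots_bound _ h0 _ ?_).trans (Polynomial.natDegree_X_pow_sub_C).le
  intro x hx
  have := (U.norm_iff x).1 hx
  simp [this]

end UF
end FieldFacts

/-! ### The hermitian space, its frames and its group -/

section Hermitian

/-- A nondegenerate 3-dimensional hermitian space `(V, h)` over the field with `q²` elements, with
a group `G` acting faithfully on `V` as the full special unitary group. The form is linear in its
first argument. -/
structure HU (n : ℕ) (F V G : Type) [Field F] [StarRing F] [AddCommGroup V] [Module F V]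
    [Group G] [DistribMulAction G V] [SMulCommClass G F V] where of ::
  uf : UF n F
  h : V → V → F
  h_add : ∀ x y z, h (x + y) z = h x z + h y z
  h_smul : ∀ (a : F) x y, h (a • x) y = a * h x y
  h_star : ∀ x y, star (h x y) = h y x
  nondeg : ∀ x, (∀ y, h x y = 0) → x = 0
  dim : Module.finrank F V = 3
  inv : ∀ (g : G) x y, h (g • x) (g • y) = h x y
  faithful : ∀ g : G, (∀ x : V, g • x = x) → g = 1
  build : ∀ f : V →ₗ[F] V, (∀ x y, h (f x) (f y) = h x y) → LinearMap.det f = 1 →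
    ∃ g : G, ∀ x : V, g • x = f x
  det_one : ∀ g : G, LinearMap.det (DistribSMul.toLinearMap F V g) = 1
  exists_e : ∃ e, h e e = 1

variable {n : ℕ} {F V G : Type} [Field F] [StarRing F] [Finite F] [CharP F 2]
  [AddCommGroup V] [Module F V] [Group G] [DistribMulAction G V] [SMulCommClass G F V]

namespace HU

theorem add_h (U : HU n F V G) (x y z : V) : U.h x (y + z) = U.h x y + U.h x z := by
  rw [← U.h_star, U.h_add, star_add, U.h_star, U.h_star]

theorem smul_h (U : HU n F V G) (a : F) (x y : V) : U.h x (a • y) = star a * U.h x y := by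
  rw [← U.h_star, U.h_smul, star_mul, U.h_star, mul_comm]

theorem h_zero (U : HU n F V G) (x : V) : U.h x 0 = 0 := by
  simpa using U.smul_h 0 x 0

theorem zero_h (U : HU n F V G) (x : V) : U.h 0 x = 0 := by
  simpa using U.h_smul 0 0 x

theorem h_symm0 (U : HU n F V G) {x y : V} (h : U.h x y = 0) : U.h y x = 0 := by
  rw [← U.h_star, h, star_zero]

theorem h_symm1 (U : HU n F V G) {x y : V} (h : U.h x y = 1) : U.h y x = 1 := by
  rw [← U.h_star, h, star_one]

theorem h_self (U : HU n F V G) (x : V) : star (U.h x x) = U.h x x := U.h_star x x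

theorem two_V (U : HU n F V G) (x : V) : x + x = 0 := by
  rw [← two_smul F x, CharTwo.two_eq_zero, zero_smul]

theorem neg_V (U : HU n F V G) (x : V) : -x = x := by
  rw [neg_eq_iff_add_eq_zero, U.two_V]

theorem sub_V (U : HU n F V G) (x y : V) : x - y = x + y := by
  rw [sub_eq_add_neg, U.neg_V]

theorem eq_of_add (U : HU n F V G) {x y : V} (h : x + y = 0) : x = y := by
  rw [← U.neg_V y]; exact eq_neg_of_add_eq_zero_left h

theorem ext_h (U : HU n F V G) {x y : V} (h : ∀ z, U.h x z = U.h y z) : x = y := by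
  apply U.eq_of_add
  apply U.nondeg
  intro z
  rw [U.h_add, h z, CharTwo.add_self_eq_zero]

theorem fd (U : HU n F V G) : FiniteDimensional F V :=
  FiniteDimensional.of_finrank_pos (by rw [U.dim]; norm_num)

/-- The group acts linearly. -/
theorem act (_U : HU n F V G) (g : G) (a : F) (x : V) : g • (a • x) = a • (g • x) :=
  smul_comm g a x

theorem h_sum (U : HU n F V G) (c : Fin 3 → F) (b : Fin 3 → V) (z : V) :
    U.h (∑ i, c i • b i) z = ∑ i, c i * U.h (b i) z := by
  simp [Fin.sum_univ_three, U.h_add, U.h_smul]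

/-- `b` and `b'` are dual frames with respect to `h`. -/
def Dual (U : HU n F V G) (b b' : Fin 3 → V) : Prop :=
  ∀ i j, U.h (b i) (b' j) = if i = j then 1 else 0

theorem Dual.li {U : HU n F V G} {b b' : Fin 3 → V} (d : U.Dual b b') :
    LinearIndependent F b := by
  rw [Fintype.linearIndependent_iff]
  intro c hc i
  have := congrArg (fun x => U.h x (b' i)) hc
  simpa [U.h_sum, U.zero_h, d _ _] using this

/-- The basis attached to a dual pair of frames. -/
noncomputable def Dual.basis {U : HU n F V G} {b b' : Fin 3 → V} (d : U.Dual b b') :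
    Module.Basis (Fin 3) F V :=
  basisOfLinearIndependentOfCardEqFinrank d.li (by simp [U.dim])

theorem Dual.basis_apply {U : HU n F V G} {b b' : Fin 3 → V} (d : U.Dual b b') (i : Fin 3) :
    d.basis i = b i := by simp [Dual.basis]

theorem Dual.repr {U : HU n F V G} {b b' : Fin 3 → V} (d : U.Dual b b') (x : V) (i : Fin 3) :
    d.basis.repr x i = U.h x (b' i) := by
  conv_rhs => rw [← d.basis.sum_repr x, U.h_sum]
  simp [d.basis_apply, d _ _]

theorem Dual.expand {U : HU n F V G} {b b' : Fin 3 → V} (d : U.Dual b b') (x : V) :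
    x = ∑ i, U.h x (b' i) • b i := by
  conv_lhs => rw [← d.basis.sum_repr x]
  simp [d.basis_apply, d.repr]

theorem Dual.det {U : HU n F V G} {b b' : Fin 3 → V} (d : U.Dual b b') (f : V →ₗ[F] V) :
    LinearMap.det f = (Matrix.of fun i j => U.h (f (b j)) (b' i)).det := by
  rw [← LinearMap.det_toMatrix d.basis]
  congr 1
  ext i j
  rw [LinearMap.toMatrix_apply, d.basis_apply, d.repr]
  rfl

/-- An isometry of determinant one, given on a frame, comes from the group. -/
theorem Dual.build {U : HU n F V G} {b b' : Fin 3 → V} (d : U.Dual b b') (c : Fin 3 → V)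
    (hc : ∀ i j, U.h (c i) (c j) = U.h (b i) (b j))
    (hdet : (Matrix.of fun i j => U.h (c j) (b' i)).det = 1) : ∃ g : G, ∀ i, g • b i = c i := by
  have hf : ∀ i, d.basis.constr F c (b i) = c i := by
    intro i; rw [← d.basis_apply i, Module.Basis.constr_basis]
  have h1 : ∀ x y, U.h (d.basis.constr F c x) (d.basis.constr F c y) = U.h x y := by
    intro x y
    rw [d.expand x, d.expand y]
    simp only [Fin.sum_univ_three, map_add, map_smul, hf, U.h_add, U.add_h, U.h_smul, U.smul_h, hc]
  have h2 : LinearMap.det (d.basis.constr F c) = 1 := by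
    rw [d.det]
    simpa [hf] using hdet
  obtain ⟨g, hg⟩ := U.build (d.basis.constr F c) h1 h2
  exact ⟨g, fun i => by rw [hg, hf]⟩

theorem Dual.det_g {U : HU n F V G} {b b' : Fin 3 → V} (d : U.Dual b b') (g : G) :
    (Matrix.of fun i j => U.h (g • b j) (b' i)).det = 1 := by
  rw [← U.det_one g, d.det]
  rfl

theorem Dual.ext {U : HU n F V G} {b b' : Fin 3 → V} (d : U.Dual b b') {g g' : G}
    (h : ∀ i, g • b i = g' • b i) : g = g' := by
  rw [← inv_mul_eq_one]
  apply U.faithful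
  intro x
  rw [d.expand x]
  simp only [Fin.sum_univ_three, smul_add, U.act, mul_smul]
  simp [← h]

/-- A scalar element of the group is trivial, since `gcd(3, q + 1) = 1`. -/
theorem scalar (U : HU n F V G) {g : G} {a : F} (h : ∀ x : V, g • x = a • x) : g = 1 := by
  have hdet : a ^ 3 = 1 := by
    rw [← U.det_one g]
    have : DistribSMul.toLinearMap F V g = a • LinearMap.id := by
      ext x; exact h x
    rw [this, LinearMap.det_smul, LinearMap.det_id, U.dim, mul_one]
  obtain ⟨e, he⟩ := U.exists_e
  have hn : a * star a = 1 := by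
    have := U.inv g e e
    rw [h, U.h_smul, U.smul_h, he, mul_one] at this
    exact this
  have := U.uf.norm_one_cube hn hdet
  subst this
  exact U.faithful g fun x => by rw [h, one_smul]

/-- Three dimensions leave room for a vector orthogonal to two given ones. -/
theorem exists_perp (U : HU n F V G) (a b : V) : ∃ x, x ≠ 0 ∧ U.h x a = 0 ∧ U.h x b = 0 := by
  have := U.fd
  let f : V →ₗ[F] (Fin 2 → F) :=
    { toFun := fun x => ![U.h x a, U.h x b]
      map_add' := fun x y => by ext i; fin_cases i <;> simp [U.h_add]
      map_smul' := fun c x => by ext i; fin_cases i <;> simp [U.h_smul] }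
  have hk : f.ker ≠ ⊥ := by
    intro hk
    have := LinearMap.finrank_le_finrank_of_injective (LinearMap.ker_eq_bot.1 hk)
    rw [U.dim] at this
    simp at this
  obtain ⟨x, hx, h0⟩ := Submodule.exists_mem_ne_zero_of_ne_bot hk
  have hx : f x = 0 := hx
  exact ⟨x, h0, congrFun hx 0, congrFun hx 1⟩

theorem exists_h_one (U : HU n F V G) {x : V} (hx : x ≠ 0) : ∃ y, U.h x y = 1 := by
  by_contra! hc
  apply hx
  apply U.nondeg
  intro y
  by_contra hy
  apply hc (star (U.h x y)⁻¹ • y)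
  rw [U.smul_h, star_star, inv_mul_cancel₀ hy]

/-- A nonisotropic vector can be scaled to norm one. -/
theorem exists_norm (U : HU n F V G) {x : V} (hx : U.h x x ≠ 0) :
    ∃ c : F, c ≠ 0 ∧ U.h (c • x) (c • x) = 1 := by
  obtain ⟨c, hc⟩ := U.uf.norm_surj (s := (U.h x x)⁻¹) (by rw [star_inv₀, U.h_self])
  refine ⟨c, ?_, ?_⟩
  · rintro rfl
    simp at hc
    exact hx hc.symm
  · rw [U.h_smul, U.smul_h, ← mul_assoc, hc, inv_mul_cancel₀ hx]

/-- Hyperbolic frame: isotropic `u`, `v` with `h u v = 1` and a unit vector `e` orthogonal to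
both. -/
structure Hyp (U : HU n F V G) (u e v : V) : Prop where
  uu : U.h u u = 0
  vv : U.h v v = 0
  ee : U.h e e = 1
  uv : U.h u v = 1
  ue : U.h u e = 0
  ev : U.h e v = 0

/-- Orthonormal frame. -/
structure Orth (U : HU n F V G) (a b c : V) : Prop where
  aa : U.h a a = 1
  bb : U.h b b = 1
  cc : U.h c c = 1
  ab : U.h a b = 0
  ac : U.h a c = 0
  bc : U.h b c = 0

theorem Hyp.vu {U : HU n F V G} {u e v : V} (f : U.Hyp u e v) : U.h v u = 1 := U.h_symm1 f.uv
theorem Hyp.eu {U : HU n F V G} {u e v : V} (f : U.Hyp u e v) : U.h e u = 0 := U.h_symm0 f.ue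
theorem Hyp.ve {U : HU n F V G} {u e v : V} (f : U.Hyp u e v) : U.h v e = 0 := U.h_symm0 f.ev
theorem Orth.ba {U : HU n F V G} {u e v : V} (f : U.Orth u e v) : U.h e u = 0 := U.h_symm0 f.ab
theorem Orth.ca {U : HU n F V G} {u e v : V} (f : U.Orth u e v) : U.h v u = 0 := U.h_symm0 f.ac
theorem Orth.cb {U : HU n F V G} {u e v : V} (f : U.Orth u e v) : U.h v e = 0 := U.h_symm0 f.bc

theorem Hyp.swap {U : HU n F V G} {u e v : V} (f : U.Hyp u e v) : U.Hyp v e u :=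
  ⟨f.vv, f.uu, f.ee, f.vu, f.ve, f.eu⟩
theorem Orth.rot {U : HU n F V G} {a b c : V} (f : U.Orth a b c) : U.Orth b c a :=
  ⟨f.bb, f.cc, f.aa, f.bc, f.ba, f.ca⟩
theorem Orth.swap {U : HU n F V G} {a b c : V} (f : U.Orth a b c) : U.Orth b a c :=
  ⟨f.bb, f.aa, f.cc, f.ba, f.bc, f.ac⟩

theorem Hyp.dual {U : HU n F V G} {u e v : V} (f : U.Hyp u e v) :
    U.Dual ![u, e, v] ![v, e, u] := by
  intro i j
  fin_cases i <;> fin_cases j <;> simp [f.uu, f.vv, f.ee, f.uv, f.ue, f.ev, f.vu, f.eu, f.ve]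

theorem Orth.dual {U : HU n F V G} {a b c : V} (f : U.Orth a b c) :
    U.Dual ![a, b, c] ![a, b, c] := by
  intro i j
  fin_cases i <;> fin_cases j <;> simp [f.aa, f.bb, f.cc, f.ab, f.ac, f.bc, f.ba, f.ca, f.cb]

theorem Hyp.expand {U : HU n F V G} {u e v : V} (f : U.Hyp u e v) (x : V) :
    x = U.h x v • u + U.h x e • e + U.h x u • v := by
  simpa [Fin.sum_univ_three] using f.dual.expand x

theorem Orth.expand {U : HU n F V G} {a b c : V} (f : U.Orth a b c) (x : V) :
    x = U.h x a • a + U.h x b • b + U.h x c • c := by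
  simpa [Fin.sum_univ_three] using f.dual.expand x

/-- Partial frames: a vector orthogonal to the norm-one vectors of a frame is nonisotropic. -/
theorem exists_hyp_of_uv (U : HU n F V G) {u v : V} (uu : U.h u u = 0) (vv : U.h v v = 0)
    (uv : U.h u v = 1) : ∃ e, U.Hyp u e v := by
  obtain ⟨x, hx, xu, xv⟩ := U.exists_perp u v
  have vu := U.h_symm1 uv
  have hxx : U.h x x ≠ 0 := by
    intro hxx
    obtain ⟨y0, hy0⟩ := U.exists_h_one hx
    set y := y0 + U.h y0 v • u + U.h y0 u • v with hy
    have h1 : U.h x y = 1 := by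
      rw [hy, U.add_h, U.add_h, U.smul_h, U.smul_h, xu, xv, hy0]; simp
    have h2 : U.h y u = 0 := by
      simp only [hy, U.h_add, U.h_smul, uu, vu]; grind
    have h3 : U.h y v = 0 := by
      simp only [hy, U.h_add, U.h_smul, vv, uv]; grind
    have d : U.Dual ![x, u, v] ![y, v, u] := by
      intro i j
      fin_cases i <;> fin_cases j <;>
        simp [h1, xu, xv, uu, vv, uv, vu, U.h_symm0 h2, U.h_symm0 h3]
    have h4 := d.expand y
    simp only [Fin.sum_univ_three] at h4
    simp only [Matrix.cons_val_zero, Matrix.cons_val_one, Matrix.cons_val, h2, h3, zero_smul,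
      add_zero] at h4
    rw [h4, U.smul_h, hxx, mul_zero] at h1
    exact zero_ne_one h1
  obtain ⟨c, hc, hcc⟩ := U.exists_norm hxx
  refine ⟨c • x, uu, vv, hcc, uv, ?_, ?_⟩
  · rw [U.smul_h, U.h_symm0 xu, mul_zero]
  · rw [U.h_smul, xv, mul_zero]

/-- An isotropic vector has a hyperbolic partner, which can be taken orthogonal to a given unit
vector orthogonal to the first one. -/
theorem exists_partner (U : HU n F V G) {u : V} (uu : U.h u u = 0) (hu : u ≠ 0) :
    ∃ v, U.h u v = 1 ∧ U.h v v = 0 := by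
  obtain ⟨w, hw⟩ := U.exists_h_one hu
  obtain ⟨t, ht⟩ := U.uf.trace_surj (U.h_self w)
  refine ⟨w + t • u, ?_, ?_⟩
  · rw [U.add_h, U.smul_h, uu, hw]; simp
  · simp only [U.add_h, U.h_add, U.smul_h, U.h_smul, uu, hw, U.h_symm1 hw]
    grind

theorem exists_hyp_of_u (U : HU n F V G) {u : V} (uu : U.h u u = 0) (hu : u ≠ 0) :
    ∃ e v, U.Hyp u e v := by
  obtain ⟨v, uv, vv⟩ := U.exists_partner uu hu
  obtain ⟨e, f⟩ := U.exists_hyp_of_uv uu vv uv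
  exact ⟨e, v, f⟩

theorem exists_hyp_of_ue (U : HU n F V G) {u e : V} (uu : U.h u u = 0) (hu : u ≠ 0)
    (ee : U.h e e = 1) (ue : U.h u e = 0) : ∃ v, U.Hyp u e v := by
  obtain ⟨w, hw⟩ := U.exists_h_one hu
  set v := w + U.h w e • e with hv
  have uv : U.h u v = 1 := by rw [hv, U.add_h, U.smul_h, ue, hw]; simp
  have ev : U.h e v = 0 := by
    rw [hv, U.add_h, U.smul_h, ee, U.h_star, mul_one, CharTwo.add_self_eq_zero]
  obtain ⟨t, ht⟩ := U.uf.trace_surj (U.h_self v)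
  refine ⟨v + t • u, uu, ?_, ee, ?_, ue, ?_⟩
  · simp only [U.add_h, U.h_add, U.smul_h, U.h_smul, uu, uv, U.h_symm1 uv]
    grind
  · rw [U.add_h, U.smul_h, uu, uv]; simp
  · rw [U.add_h, U.smul_h, ev, U.h_symm0 ue]; simp

theorem Hyp.ne {U : HU n F V G} {u e v : V} (f : U.Hyp u e v) : u ≠ 0 ∧ e ≠ 0 ∧ v ≠ 0 := by
  refine ⟨?_, ?_, ?_⟩
  · rintro rfl; have := f.uv; simp [U.zero_h] at this
  · rintro rfl; have := f.ee; simp [U.zero_h] at this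
  · rintro rfl; have := f.uv; simp [U.h_zero] at this

theorem ne_of_norm (U : HU n F V G) {e : V} (he : U.h e e ≠ 0) : e ≠ 0 := by
  rintro rfl; simp [U.zero_h] at he

theorem Orth.ne {U : HU n F V G} {u e v : V} (f : U.Orth u e v) : u ≠ 0 ∧ e ≠ 0 ∧ v ≠ 0 :=
  ⟨U.ne_of_norm (by simp [f.aa]), U.ne_of_norm (by simp [f.bb]), U.ne_of_norm (by simp [f.cc])⟩

/-- The line spanned by a hyperbolic pair contains an orthonormal pair. -/
theorem Hyp.toOrth {U : HU n F V G} {u e v : V} (f : U.Hyp u e v) {t : F} (ht : t + star t = 1) :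
    U.Orth e (t • u + v) (star t • u + v) := by
  refine ⟨f.ee, ?_, ?_, ?_, ?_, ?_⟩ <;>
    simp only [U.add_h, U.h_add, U.smul_h, U.h_smul, f.uu, f.vv, f.uv, f.vu, f.ev, f.eu,
      star_star] <;> grind

/-- The line spanned by an orthonormal pair contains the isotropic point `⟨b + c⟩`. -/
theorem exists_hyp_of_orth (U : HU n F V G) {a b c : V} (f : U.Orth a b c) :
    ∃ v, U.Hyp (b + c) a v := by
  apply U.exists_hyp_of_ue
  · simp only [U.add_h, U.h_add, f.bb, f.cc, f.bc, f.cb]; grind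
  · intro h
    have := congrArg (fun x => U.h x b) h
    simp [U.h_add, f.bb, f.cb, U.zero_h] at this
  · exact f.aa
  · simp [U.h_add, f.ba, f.ca]

theorem exists_hyp_of_e (U : HU n F V G) {e : V} (ee : U.h e e = 1) : ∃ u v, U.Hyp u e v := by
  obtain ⟨x, hx, xe, -⟩ := U.exists_perp e e
  by_cases hxx : U.h x x = 0
  · exact ⟨x, U.exists_hyp_of_ue hxx hx ee xe⟩
  · obtain ⟨c, hc, hcc⟩ := U.exists_norm hxx
    set b := c • x with hb
    have be : U.h b e = 0 := by rw [hb, U.h_smul, xe, mul_zero]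
    obtain ⟨y, hy, ye, yb⟩ := U.exists_perp e b
    by_cases hyy : U.h y y = 0
    · exact ⟨y, U.exists_hyp_of_ue hyy hy ee ye⟩
    · obtain ⟨d, hd, hdd⟩ := U.exists_norm hyy
      have f : U.Orth e b (d • y) := ⟨ee, hcc, hdd, U.h_symm0 be, by
        rw [U.smul_h, U.h_symm0 ye, mul_zero], by rw [U.smul_h, U.h_symm0 yb, mul_zero]⟩
      exact ⟨_, U.exists_hyp_of_orth f⟩

theorem exists_hyp (U : HU n F V G) : ∃ u e v, U.Hyp u e v := by
  obtain ⟨e, he⟩ := U.exists_e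
  obtain ⟨u, v, f⟩ := U.exists_hyp_of_e he
  exact ⟨u, e, v, f⟩

theorem exists_orth_of_a (U : HU n F V G) {a : V} (aa : U.h a a = 1) : ∃ b c, U.Orth a b c := by
  obtain ⟨u, v, f⟩ := U.exists_hyp_of_e aa
  obtain ⟨t, ht⟩ := U.uf.exists_theta
  exact ⟨_, _, f.toOrth ht⟩

theorem exists_orth_of_ab (U : HU n F V G) {a b : V} (aa : U.h a a = 1) (bb : U.h b b = 1)
    (ab : U.h a b = 0) : ∃ c, U.Orth a b c := by
  obtain ⟨b', c', f⟩ := U.exists_orth_of_a aa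
  obtain ⟨y, hy, ya, yb⟩ := U.exists_perp a b
  have h1 := f.expand b
  rw [U.h_symm0 ab, zero_smul, zero_add] at h1
  have h2 := f.expand y
  rw [ya, zero_smul, zero_add] at h2
  have hyy : U.h y y ≠ 0 := by
    intro hyy
    set p := U.h b b'
    set r := U.h b c'
    set s := U.h y b'
    set t := U.h y c'
    rw [h2] at hyy
    rw [h1] at bb
    rw [h1, h2] at yb
    simp only [U.add_h, U.h_add, U.smul_h, U.h_smul, f.bb, f.cc, f.bc, f.cb] at hyy bb yb
    have hs : s = 0 := by
      -- the matrix with rows `(p, r)`, `(s, t)` has gram matrix `diag(1, 0)`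
      have hdet : (p * t + r * s) * (star p * star t + star r * star s) = 0 := by
        have := congrArg star yb
        simp only [star_add, star_mul, star_star, star_zero, star_one] at this
        grind
      have : p * t + r * s = 0 := by
        rcases mul_eq_zero.1 hdet with h | h
        · exact h
        · have := congrArg star h
          simpa [mul_comm] using this
      have h4 : s * (p * star p + r * star r) = 0 := by grind
      grind
    have ht : t = 0 := by
      rw [hs] at hyy
      simpa using hyy
    apply hy
    rw [h2, hs, ht]; simp
  obtain ⟨c, hc, hcc⟩ := U.exists_norm hyy
  exact ⟨c • y, aa, bb, hcc, ab, by rw [U.smul_h, U.h_symm0 ya, mul_zero],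
    by rw [U.smul_h, U.h_symm0 yb, mul_zero]⟩

/-- Witt index one: two orthogonal isotropic vectors are proportional. -/
theorem iso_perp (U : HU n F V G) {u w : V} (uu : U.h u u = 0) (hu : u ≠ 0) (ww : U.h w w = 0)
    (uw : U.h w u = 0) : ∃ c : F, w = c • u := by
  obtain ⟨e, v, f⟩ := U.exists_hyp_of_u uu hu
  have h1 := f.expand w
  rw [uw, zero_smul, add_zero] at h1
  have h2 : U.h w e = 0 := by
    rw [h1] at ww
    simp only [U.add_h, U.h_add, U.smul_h, U.h_smul, f.uu, f.ee, f.ue, f.eu] at ww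
    simpa using ww
  rw [h2, zero_smul, add_zero] at h1
  exact ⟨_, h1⟩

/-- The determinant condition in a hyperbolic frame. -/
theorem Hyp.build {U : HU n F V G} {u e v : V} (f : U.Hyp u e v) {u' e' v' : V}
    (f' : U.Hyp u' e' v') (hdet : (Matrix.of ![![U.h u' v, U.h e' v, U.h v' v],
      ![U.h u' e, U.h e' e, U.h v' e], ![U.h u' u, U.h e' u, U.h v' u]]).det = 1) :
    ∃ g : G, g • u = u' ∧ g • e = e' ∧ g • v = v' := by
  obtain ⟨g, hg⟩ := f.dual.build ![u', e', v'] (by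
    intro i j
    fin_cases i <;> fin_cases j <;> simp [f.uu, f.vv, f.ee, f.uv, f.ue, f.ev, f.vu, f.eu, f.ve,
      f'.uu, f'.vv, f'.ee, f'.uv, f'.ue, f'.ev, f'.vu, f'.eu, f'.ve]) (by
    rw [← hdet]; congr 1; ext i j; fin_cases i <;> fin_cases j <;> rfl)
  exact ⟨g, hg 0, hg 1, hg 2⟩

theorem Orth.build {U : HU n F V G} {u e v : V} (f : U.Orth u e v) {u' e' v' : V}
    (f' : U.Orth u' e' v') (hdet : (Matrix.of ![![U.h u' u, U.h e' u, U.h v' u],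
      ![U.h u' e, U.h e' e, U.h v' e], ![U.h u' v, U.h e' v, U.h v' v]]).det = 1) :
    ∃ g : G, g • u = u' ∧ g • e = e' ∧ g • v = v' := by
  obtain ⟨g, hg⟩ := f.dual.build ![u', e', v'] (by
    intro i j
    fin_cases i <;> fin_cases j <;> simp [f.aa, f.bb, f.cc, f.ab, f.ac, f.bc, f.ba, f.ca, f.cb,
      f'.aa, f'.bb, f'.cc, f'.ab, f'.ac, f'.bc, f'.ba, f'.ca, f'.cb]) (by
    rw [← hdet]; congr 1; ext i j; fin_cases i <;> fin_cases j <;> rfl)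
  exact ⟨g, hg 0, hg 1, hg 2⟩

theorem Hyp.det_g {U : HU n F V G} {u e v : V} (f : U.Hyp u e v) (g : G) :
    (Matrix.of ![![U.h (g • u) v, U.h (g • e) v, U.h (g • v) v],
      ![U.h (g • u) e, U.h (g • e) e, U.h (g • v) e],
      ![U.h (g • u) u, U.h (g • e) u, U.h (g • v) u]]).det = 1 := by
  rw [← f.dual.det_g g]; congr 1; ext i j; fin_cases i <;> fin_cases j <;> rfl

theorem Orth.det_g {U : HU n F V G} {u e v : V} (f : U.Orth u e v) (g : G) :
    (Matrix.of ![![U.h (g • u) u, U.h (g • e) u, U.h (g • v) u],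
      ![U.h (g • u) e, U.h (g • e) e, U.h (g • v) e],
      ![U.h (g • u) v, U.h (g • e) v, U.h (g • v) v]]).det = 1 := by
  rw [← f.dual.det_g g]; congr 1; ext i j; fin_cases i <;> fin_cases j <;> rfl

theorem Hyp.ext {U : HU n F V G} {u e v : V} (f : U.Hyp u e v) {g g' : G}
    (h1 : g • u = g' • u) (h2 : g • e = g' • e) (h3 : g • v = g' • v) : g = g' :=
  f.dual.ext (fun i => by fin_cases i <;> assumption)

theorem Orth.ext {U : HU n F V G} {u e v : V} (f : U.Orth u e v) {g g' : G}
    (h1 : g • u = g' • u) (h2 : g • e = g' • e) (h3 : g • v = g' • v) : g = g' :=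
  f.dual.ext (fun i => by fin_cases i <;> assumption)

theorem Hyp.map {U : HU n F V G} {u e v : V} (f : U.Hyp u e v) (g : G) :
    U.Hyp (g • u) (g • e) (g • v) := by
  constructor <;> rw [U.inv] <;> simp [f.uu, f.vv, f.ee, f.uv, f.ue, f.ev]

/-- The torus element `diag(λ, 1, λ⁻¹)` of a hyperbolic frame. -/
theorem Hyp.diag {U : HU n F V G} {u e v : V} (f : U.Hyp u e v) {l : F} (hl : star l = l)
    (h0 : l ≠ 0) : ∃ g : G, g • u = l • u ∧ g • e = e ∧ g • v = l⁻¹ • v := by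
  apply f.build
  · constructor <;>
      simp [U.h_smul, U.smul_h, f.uu, f.vv, f.ee, f.uv, f.ue, f.ev, hl, h0]
  · simp [Matrix.det_fin_three, U.h_smul, f.uu, f.vv, f.ee, f.uv, f.ue, f.ev, f.vu, f.eu, f.ve, h0]

/-- The element `diag(ζ, ζ⁻¹, 1)` of an orthonormal frame. -/
theorem Orth.diag {U : HU n F V G} {a b c : V} (f : U.Orth a b c) {z : F} (hz : z * star z = 1) :
    ∃ g : G, g • a = z • a ∧ g • b = star z • b ∧ g • c = c := by
  apply f.build
  · constructor <;>
      simp [U.h_smul, U.smul_h, f.aa, f.bb, f.cc, f.ab, f.ac, f.bc, f.ba, f.ca, f.cb, hz]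
    rw [mul_comm, hz]
  · simp [Matrix.det_fin_three, U.h_smul, f.aa, f.bb, f.cc, f.ab, f.ac, f.bc, f.ba, f.ca, f.cb, hz]

/-- The swap of two vectors of an orthonormal frame; its determinant is `-1 = 1`. -/
theorem Orth.swap_mem {U : HU n F V G} {a b c : V} (f : U.Orth a b c) :
    ∃ g : G, g • a = b ∧ g • b = a ∧ g • c = c := by
  apply f.build f.swap
  simp [Matrix.det_fin_three, f.aa, f.bb, f.cc, f.ab, f.ac, f.bc, f.ba, f.ca, f.cb]
  exact CharTwo.neg_eq 1

/-- The unitary transvections `x ↦ x + a h(x,u) u`, for `u` isotropic and `a` in the fixed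
field. -/
theorem exists_transvection (U : HU n F V G) {u : V} (uu : U.h u u = 0) {a : F}
    (ha : star a = a) : ∃ g : G, ∀ x, g • x = x + (a * U.h x u) • u := by
  let φ : Module.Dual F V :=
    { toFun := fun x => a * U.h x u
      map_add' := fun x y => by rw [U.h_add, mul_add]
      map_smul' := fun c x => by rw [U.h_smul]; simp; ring }
  have h1 : ∀ x y, U.h (LinearMap.transvection φ u x) (LinearMap.transvection φ u y) = U.h x y := by
    intro x y
    simp only [LinearMap.transvection.apply]
    change U.h (x + (a * U.h x u) • u) (y + (a * U.h y u) • u) = U.h x y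
    simp only [U.add_h, U.h_add, U.smul_h, U.h_smul, uu, star_mul, ha, U.h_star]
    grind
  have h2 : LinearMap.det (LinearMap.transvection φ u) = 1 := by
    have := U.fd
    rw [LinearMap.transvection.det]
    change 1 + a * U.h u u = 1
    rw [uu]; simp
  obtain ⟨g, hg⟩ := U.build (LinearMap.transvection φ u) h1 h2
  exact ⟨g, fun x => by rw [hg, LinearMap.transvection.apply]; rfl⟩

end HU
end Hermitian

/-! ### Points of the projective plane and fixed-point sets of subgroups -/

section Points

open scoped LinearAlgebra.Projectivization
open Projectivization (mk)

variable {n : ℕ} {F V G : Type} [Field F] [StarRing F] [Finite F] [CharP F 2]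
  [AddCommGroup V] [Module F V] [Group G] [DistribMulAction G V] [SMulCommClass G F V]

theorem exists_mk (P : ℙ F V) : ∃ x hx, P = mk F x hx :=
  ⟨P.rep, P.rep_nonzero, P.mk_rep.symm⟩

/-- The points fixed by every element of `H`. -/
def fixPts (F V : Type) [Field F] [AddCommGroup V] [Module F V] [DistribMulAction G V]
    [SMulCommClass G F V] (H : Subgroup G) : Set (ℙ F V) := {P | ∀ g ∈ H, g • P = P}

theorem mem_fixPts {H : Subgroup G} {P : ℙ F V} : P ∈ fixPts F V H ↔ ∀ g ∈ H, g • P = P := Iff.rfl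

theorem smul_mk_eq (g : G) {x : V} (hx : x ≠ 0) :
    g • mk F x hx = mk F x hx ↔ ∃ a : F, g • x = a • x := by
  rw [Projectivization.smul_mk, Projectivization.mk_eq_mk_iff']
  exact ⟨fun ⟨a, h⟩ => ⟨a, h.symm⟩, fun ⟨a, h⟩ => ⟨a, h.symm⟩⟩

namespace HU

/-- Orthogonality of points. -/
def perp (U : HU n F V G) (P Q : ℙ F V) : Prop := U.h P.rep Q.rep = 0

/-- Isotropic points. -/
abbrev iso (U : HU n F V G) (P : ℙ F V) : Prop := U.perp P P

theorem perp_mk (U : HU n F V G) {x y : V} (hx : x ≠ 0) (hy : y ≠ 0) :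
    U.perp (mk F x hx) (mk F y hy) ↔ U.h x y = 0 := by
  obtain ⟨a, ha⟩ := Projectivization.exists_smul_eq_mk_rep F x hx
  obtain ⟨b, hb⟩ := Projectivization.exists_smul_eq_mk_rep F y hy
  rw [perp, ← ha, ← hb, Units.smul_def, Units.smul_def, U.h_smul, U.smul_h]
  simp

theorem perp_comm (U : HU n F V G) {P Q : ℙ F V} : U.perp P Q ↔ U.perp Q P :=
  ⟨U.h_symm0, U.h_symm0⟩

theorem perp_smul (U : HU n F V G) (g : G) {P Q : ℙ F V} :
    U.perp (g • P) (g • Q) ↔ U.perp P Q := by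
  obtain ⟨x, hx, rfl⟩ := exists_mk P
  obtain ⟨y, hy, rfl⟩ := exists_mk Q
  rw [Projectivization.smul_mk, Projectivization.smul_mk, U.perp_mk, U.perp_mk, U.inv]

theorem Dual.symm {U : HU n F V G} {b b' : Fin 3 → V} (d : U.Dual b b') : U.Dual b' b := by
  intro i j
  rw [← U.h_star, d j i]
  by_cases h : i = j <;> simp [h, eq_comm]

theorem Dual.expand3 {U : HU n F V G} {x y t x' y' t' : V}
    (d : U.Dual ![x, y, t] ![x', y', t']) (w : V) :
    w = U.h w x' • x + U.h w y' • y + U.h w t' • t := by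
  simpa [Fin.sum_univ_three] using d.expand w

/-- If `x`, `y` are independent, some vector separates `x` from `y`. -/
theorem exists_sep (U : HU n F V G) {x y : V} (hy : y ≠ 0) (hxy : ∀ c : F, x ≠ c • y) :
    ∃ w, U.h x w = 1 ∧ U.h y w = 0 := by
  obtain ⟨w, hw⟩ := U.exists_h_one hy
  have hx' : x + U.h x w • y ≠ 0 := fun h => hxy _ (U.eq_of_add h)
  obtain ⟨w', hw'⟩ := U.exists_h_one hx'
  refine ⟨w' + star (U.h y w') • w, ?_, ?_⟩
  · rw [U.h_add, U.h_smul] at hw'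
    rw [U.add_h, U.smul_h, star_star, mul_comm, hw']
  · rw [U.add_h, U.smul_h, hw, star_star, mul_one, CharTwo.add_self_eq_zero]

/-- A frame adapted to a line spanned by `x`, `y` with pole `z`. -/
theorem exists_dual (U : HU n F V G) {x y z : V} (hx : x ≠ 0) (hxy : ∀ c : F, y ≠ c • x)
    (hz : z ≠ 0) (xz : U.h x z = 0) (yz : U.h y z = 0) :
    ∃ w1 w2 t, U.Dual ![x, y, t] ![w1, w2, z] := by
  have hy : y ≠ 0 := by simpa using hxy 0
  have hyx : ∀ c : F, x ≠ c • y := by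
    intro c hc
    have hc0 : c ≠ 0 := by rintro rfl; exact hx (by simpa using hc)
    exact hxy c⁻¹ (by rw [hc, smul_smul, inv_mul_cancel₀ hc0, one_smul])
  obtain ⟨w1, h1, h1'⟩ := U.exists_sep hy hyx
  obtain ⟨w2, h2, h2'⟩ := U.exists_sep hx hxy
  obtain ⟨t, ht⟩ := U.exists_h_one hz
  have ht := U.h_symm1 ht
  refine ⟨w1, w2, t + U.h t w1 • x + U.h t w2 • y, ?_⟩
  intro i j
  fin_cases i <;> fin_cases j <;> simp [h1, h1', h2, h2', xz, yz, U.h_add, U.h_smul, ht] <;> grind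

theorem perp_unique (U : HU n F V G) {x y z z' : V} (hx : x ≠ 0) (hxy : ∀ c : F, y ≠ c • x)
    (hz : z ≠ 0) (xz : U.h x z = 0) (yz : U.h y z = 0) (xz' : U.h x z' = 0)
    (yz' : U.h y z' = 0) : ∃ c : F, z' = c • z := by
  obtain ⟨w1, w2, t, d⟩ := U.exists_dual hx hxy hz xz yz
  have := d.symm.expand3 z'
  rw [U.h_symm0 xz', U.h_symm0 yz'] at this
  exact ⟨_, by simpa using this⟩

theorem perp_span (U : HU n F V G) {x y z w : V} (hx : x ≠ 0) (hxy : ∀ c : F, y ≠ c • x)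
    (hz : z ≠ 0) (xz : U.h x z = 0) (yz : U.h y z = 0) (wz : U.h w z = 0) :
    ∃ a b : F, w = a • x + b • y := by
  obtain ⟨w1, w2, t, d⟩ := U.exists_dual hx hxy hz xz yz
  have := d.expand3 w
  rw [wz] at this
  exact ⟨_, _, by simpa using this⟩

theorem mk_ne (_U : HU n F V G) {x y : V} (hx : x ≠ 0) (hy : y ≠ 0)
    (h : mk F y hy ≠ mk F x hx) : ∀ c : F, y ≠ c • x := by
  intro c hc
  exact h ((Projectivization.mk_eq_mk_iff' F y x hy hx).2 ⟨c, hc.symm⟩)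

/-- Two points have a unique common pole. -/
theorem pole (U : HU n F V G) {X Y : ℙ F V} (h : Y ≠ X) :
    ∃ Z, U.perp X Z ∧ U.perp Y Z ∧ ∀ Z', U.perp X Z' → U.perp Y Z' → Z' = Z := by
  obtain ⟨x, hx, rfl⟩ := exists_mk X
  obtain ⟨y, hy, rfl⟩ := exists_mk Y
  obtain ⟨z, hz, zx, zy⟩ := U.exists_perp x y
  refine ⟨mk F z hz, (U.perp_mk hx hz).2 (U.h_symm0 zx), (U.perp_mk hy hz).2 (U.h_symm0 zy), ?_⟩
  intro Z' h1 h2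
  obtain ⟨z', hz', rfl⟩ := exists_mk Z'
  rw [U.perp_mk] at h1 h2
  obtain ⟨c, hc⟩ := U.perp_unique hx (U.mk_ne hx hy h) hz (U.h_symm0 zx) (U.h_symm0 zy) h1 h2
  rw [Projectivization.mk_eq_mk_iff']
  exact ⟨c, hc.symm⟩

theorem pole_unique (U : HU n F V G) {X Y Z Z' : ℙ F V} (h : Y ≠ X) (h1 : U.perp X Z)
    (h2 : U.perp Y Z) (h1' : U.perp X Z') (h2' : U.perp Y Z') : Z = Z' := by
  obtain ⟨W, -, -, hW⟩ := U.pole h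
  rw [hW Z h1 h2, hW Z' h1' h2']

theorem pole_mem (U : HU n F V G) {H : Subgroup G} {X Y Z : ℙ F V} (h : Y ≠ X)
    (hX : X ∈ fixPts F V H) (hY : Y ∈ fixPts F V H) (h1 : U.perp X Z) (h2 : U.perp Y Z) :
    Z ∈ fixPts F V H := by
  intro g hg
  apply U.pole_unique h _ _ h1 h2
  · rw [← hX g hg, U.perp_smul]; exact h1
  · rw [← hY g hg, U.perp_smul]; exact h2

theorem iso_unique (U : HU n F V G) {P Q : ℙ F V} (hP : U.iso P) (hQ : U.iso Q)
    (h : U.perp Q P) : Q = P := by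
  obtain ⟨x, hx, rfl⟩ := exists_mk P
  obtain ⟨y, hy, rfl⟩ := exists_mk Q
  rw [iso, U.perp_mk] at hP hQ
  rw [U.perp_mk] at h
  obtain ⟨c, hc⟩ := U.iso_perp hP hx hQ h
  rw [Projectivization.mk_eq_mk_iff']
  exact ⟨c, hc.symm⟩

/-- Every nonisotropic point is spanned by a unit vector. -/
theorem exists_unit (U : HU n F V G) {P : ℙ F V} (hP : ¬ U.iso P) :
    ∃ x hx, P = mk F x hx ∧ U.h x x = 1 := by
  obtain ⟨x, hx, rfl⟩ := exists_mk P
  rw [iso, U.perp_mk] at hP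
  obtain ⟨c, hc, h⟩ := U.exists_norm hP
  refine ⟨c • x, smul_ne_zero hc hx, ?_, h⟩
  rw [Projectivization.mk_eq_mk_iff']
  exact ⟨c⁻¹, by rw [smul_smul, inv_mul_cancel₀ hc, one_smul]⟩

theorem third_noniso (U : HU n F V G) {A B C : ℙ F V} (hA : ¬ U.iso A) (hB : ¬ U.iso B)
    (hAB : U.perp A B) (hAC : U.perp A C) (hBC : U.perp B C) : ¬ U.iso C := by
  have hne : B ≠ A := by rintro rfl; exact hA hAB
  obtain ⟨a, ha, rfl, haa⟩ := U.exists_unit hA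
  obtain ⟨b, hb, rfl, hbb⟩ := U.exists_unit hB
  obtain ⟨c, f⟩ := U.exists_orth_of_ab haa hbb ((U.perp_mk ha hb).1 hAB)
  have := U.pole_unique hne hAC hBC ((U.perp_mk ha f.ne.2.2).2 f.ac) ((U.perp_mk hb f.ne.2.2).2 f.bc)
  subst this
  rw [iso, U.perp_mk, f.cc]
  exact one_ne_zero

/-- An element acting as a scalar on a line and with the same scalar on a vector off the line is
trivial. -/
theorem scalar_of_line (U : HU n F V G) {g : G} {a : F} {z w : V} (wz : U.h w z ≠ 0)
    (hl : ∀ x, U.h x z = 0 → g • x = a • x) (hw : g • w = a • w) : g = 1 := by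
  apply U.scalar (a := a)
  intro x
  have h0 : U.h (x + (U.h x z / U.h w z) • w) z = 0 := by
    rw [U.h_add, U.h_smul, div_mul_cancel₀ _ wz, CharTwo.add_self_eq_zero]
  have := hl _ h0
  rw [smul_add, smul_add, U.act, hw, smul_smul, smul_smul, mul_comm a] at this
  exact add_right_cancel this

/-- An element fixing three points of a line acts as a scalar on it. -/
theorem line_scalar (U : HU n F V G) {X Y W : ℙ F V} {z : V} (hz : z ≠ 0) (hYX : Y ≠ X)
    (hWX : W ≠ X) (hWY : W ≠ Y) (hX : U.perp X (mk F z hz)) (hY : U.perp Y (mk F z hz))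
    (hW : U.perp W (mk F z hz)) {g : G} (gX : g • X = X) (gY : g • Y = Y) (gW : g • W = W) :
    ∃ a : F, ∀ x, U.h x z = 0 → g • x = a • x := by
  obtain ⟨x, hx, rfl⟩ := exists_mk X
  obtain ⟨y, hy, rfl⟩ := exists_mk Y
  obtain ⟨w, hw, rfl⟩ := exists_mk W
  rw [U.perp_mk] at hX hY hW
  rw [smul_mk_eq] at gX gY gW
  obtain ⟨a, ha⟩ := gX
  obtain ⟨b, hb⟩ := gY
  obtain ⟨e, he⟩ := gW
  have hxy := U.mk_ne hx hy hYX
  obtain ⟨w1, w2, t, d⟩ := U.exists_dual hx hxy hz hX hY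
  have hs : ∀ l, U.h l z = 0 → l = U.h l w1 • x + U.h l w2 • y := by
    intro l hl
    have := d.expand3 l
    rw [hl] at this
    simpa using this
  have hwx := U.mk_ne hx hw hWX
  have hwy := U.mk_ne hy hw hWY
  have hc : U.h w w1 ≠ 0 := by
    intro h
    have := hs w hW
    rw [h, zero_smul, zero_add] at this
    exact hwy _ this
  have hd : U.h w w2 ≠ 0 := by
    intro h
    have := hs w hW
    rw [h, zero_smul, add_zero] at this
    exact hwx _ this
  have hx1 : U.h x w1 = 1 := d 0 0
  have hx2 : U.h x w2 = 0 := d 0 1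
  have hy1 : U.h y w1 = 0 := d 1 0
  have hy2 : U.h y w2 = 1 := d 1 1
  have hgw : g • w = (U.h w w1 * a) • x + (U.h w w2 * b) • y := by
    conv_lhs => rw [hs w hW]
    rw [smul_add, U.act, U.act, ha, hb, smul_smul, smul_smul]
  rw [he] at hgw
  have e1 := congrArg (fun v => U.h v w1) hgw
  have e2 := congrArg (fun v => U.h v w2) hgw
  simp only [U.h_add, U.h_smul, hx1, hx2, hy1, hy2] at e1 e2
  have hab : e = a := mul_left_cancel₀ hc (by linear_combination e1)
  have hbb : e = b := mul_left_cancel₀ hd (by linear_combination e2)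
  refine ⟨a, fun l hl => ?_⟩
  conv_lhs => rw [hs l hl]
  conv_rhs => rw [hs l hl]
  rw [smul_add, U.act, U.act, ha, hb, ← hab, ← hbb, smul_add, smul_comm e, smul_comm e]

/-- The possible fixed-point sets of nontrivial subgroups having a fixed point. -/
inductive FixType (U : HU n F V G) (S : Set (ℙ F V)) : Prop
  | iso (P : ℙ F V) (hP : U.iso P) (hS : S = {P})
  | non (R : ℙ F V) (hR : ¬ U.iso R) (hS : S = {R})
  | flag (P R : ℙ F V) (hP : U.iso P) (hR : ¬ U.iso R) (h : U.perp P R) (hS : S = {P, R})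
  | hyp (R P Q : ℙ F V) (hR : ¬ U.iso R) (hP : U.iso P) (hQ : U.iso Q) (hne : P ≠ Q)
      (h1 : U.perp R P) (h2 : U.perp R Q) (hS : S = {R, P, Q})
  | tri (A B C : ℙ F V) (hA : ¬ U.iso A) (hB : ¬ U.iso B) (hC : ¬ U.iso C) (hAB : U.perp A B)
      (hAC : U.perp A C) (hBC : U.perp B C) (hS : S = {A, B, C})
  | hom (R : ℙ F V) (hR : ¬ U.iso R) (hS : S = {X | X = R ∨ U.perp X R})
  | trans (P : ℙ F V) (hP : U.iso P) (hS : S = {X | U.perp X P})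

/-- Three collinear fixed points force a homology or elation type. -/
theorem fixType_line (U : HU n F V G) {H : Subgroup G} (hH : H ≠ ⊥) {X Y W Z : ℙ F V}
    (hYX : Y ≠ X) (hWX : W ≠ X) (hWY : W ≠ Y) (hX : U.perp X Z) (hY : U.perp Y Z)
    (hW : U.perp W Z) (gX : X ∈ fixPts F V H) (gY : Y ∈ fixPts F V H) (gW : W ∈ fixPts F V H) :
    U.FixType (fixPts F V H) := by
  have gZ : Z ∈ fixPts F V H := U.pole_mem hYX gX gY hX hY
  obtain ⟨z, hz, rfl⟩ := exists_mk Z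
  have hscal : ∀ g ∈ H, ∃ a : F, ∀ x, U.h x z = 0 → g • x = a • x := fun g hg =>
    U.line_scalar hz hYX hWX hWY hX hY hW (gX g hg) (gY g hg) (gW g hg)
  have hline : ∀ X', U.perp X' (mk F z hz) → X' ∈ fixPts F V H := by
    intro X' h g hg
    obtain ⟨x, hx, rfl⟩ := exists_mk X'
    obtain ⟨a, ha⟩ := hscal g hg
    rw [smul_mk_eq]
    exact ⟨a, ha x ((U.perp_mk hx hz).1 h)⟩
  by_cases hzz : U.h z z = 0
  · refine .trans (mk F z hz) ((U.perp_mk hz hz).2 hzz) ?_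
    ext T
    refine ⟨fun hT => ?_, hline T⟩
    by_contra hTZ
    obtain ⟨w, hw, rfl⟩ := exists_mk T
    have hwz : U.h w z ≠ 0 := fun h => hTZ ((U.perp_mk hw hz).2 h)
    obtain ⟨y, hy, yz, yw⟩ := U.exists_perp z w
    have hyy : U.h y y ≠ 0 := by
      intro hyy
      obtain ⟨c, hc⟩ := U.iso_perp hzz hz hyy yz
      rw [hc, U.h_smul] at yw
      rcases mul_eq_zero.1 yw with h | h
      · exact hy (by rw [hc, h, zero_smul])
      · exact hwz (U.h_symm0 h)
    apply hH
    rw [Subgroup.eq_bot_iff_forall]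
    intro g hg
    obtain ⟨a, ha⟩ := hscal g hg
    have := hT g hg
    rw [smul_mk_eq] at this
    obtain ⟨e, he⟩ := this
    have h1 := U.inv g y y
    rw [ha y yz, U.h_smul, U.smul_h] at h1
    have h2 := U.inv g w z
    rw [he, ha z hzz, U.h_smul, U.smul_h] at h2
    have h1' : a * star a = 1 := mul_right_cancel₀ hyy (by linear_combination h1)
    have h2' : e * star a = 1 := mul_right_cancel₀ hwz (by linear_combination h2)
    have hae : e = a := mul_right_cancel₀ (right_ne_zero_of_mul_eq_one h1') (h2'.trans h1'.symm)
    exact U.scalar_of_line hwz ha (hae ▸ he)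
  · refine .hom (mk F z hz) (fun h => hzz ((U.perp_mk hz hz).1 h)) ?_
    ext T
    constructor
    · intro hT
      by_contra hc
      rw [Set.mem_setOf_eq, not_or] at hc
      obtain ⟨hne, hnp⟩ := hc
      obtain ⟨w, hw, rfl⟩ := exists_mk T
      have hwz : U.h w z ≠ 0 := fun h => hnp ((U.perp_mk hw hz).2 h)
      apply hH
      rw [Subgroup.eq_bot_iff_forall]
      intro g hg
      obtain ⟨a, ha⟩ := hscal g hg
      have h1 := hT g hg
      have h2 := gZ g hg
      rw [smul_mk_eq] at h1 h2
      obtain ⟨e, he⟩ := h1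
      obtain ⟨b, hb⟩ := h2
      -- decompose `w = c z + l` with `l` on the line
      set c := U.h w z / U.h z z
      have hc0 : c ≠ 0 := div_ne_zero hwz hzz
      set l := w + c • z with hl
      have lz : U.h l z = 0 := by
        rw [hl, U.h_add, U.h_smul, div_mul_cancel₀ _ hzz, CharTwo.add_self_eq_zero]
      have hl0 : l ≠ 0 := fun h => U.mk_ne hz hw hne c (U.eq_of_add h)
      have hwl : w = l + c • z := by
        rw [hl, add_assoc, U.two_V, add_zero]
      have h3 : (e + a) • l = (c * (b + e)) • z := by
        apply U.eq_of_add
        have : g • w = a • l + (c * b) • z := by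
          rw [hwl, smul_add, U.act, hb, ha l lz, smul_smul]
        rw [he, hwl] at this
        have h4 : e • (l + c • z) + (a • l + (c * b) • z) = 0 := by rw [this, U.two_V]
        rw [← h4]; module
      have h4 := congrArg (fun v => U.h v z) h3
      simp only [U.h_smul, lz, mul_zero] at h4
      have h5 : b + e = 0 := by
        rcases mul_eq_zero.1 h4.symm with h | h
        · exact (mul_eq_zero.1 h).resolve_left hc0
        · exact absurd h hzz
      rw [h5, mul_zero, zero_smul] at h3
      have h6 : e + a = 0 := (smul_eq_zero.1 h3).resolve_right hl0
      have h7 : a = b := by grind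
      exact U.scalar_of_line hzz ha (h7 ▸ hb)
    · rintro (rfl | h)
      · exact gZ
      · exact hline T h

theorem fixType (U : HU n F V G) {H : Subgroup G} (hH : H ≠ ⊥) (hne : (fixPts F V H).Nonempty) :
    U.FixType (fixPts F V H) := by
  by_contra hnot
  have hB : ∀ {X Y W Z : ℙ F V}, X ∈ fixPts F V H → Y ∈ fixPts F V H → W ∈ fixPts F V H →
      U.perp X Z → U.perp Y Z → U.perp W Z → Y ≠ X → W ≠ X → W = Y := by
    intro X Y W Z hX hY hW pX pY pW h1 h2
    by_contra h3
    exact hnot (U.fixType_line hH h1 h2 h3 pX pY pW hX hY hW)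
  apply hnot
  by_cases hR : ∃ R ∈ fixPts F V H, ¬ U.iso R
  · obtain ⟨R, hRf, hR⟩ := hR
    have hperp : ∀ X ∈ fixPts F V H, X ≠ R → U.perp X R := by
      intro X hX hXR
      by_contra hp
      obtain ⟨Y, hY1, hY2, -⟩ := U.pole hXR
      have hY := U.pole_mem hXR hRf hX hY1 hY2
      have hYR : Y ≠ R := by rintro rfl; exact hR hY1
      obtain ⟨W, hW1, hW2, -⟩ := U.pole hYR
      have hW := U.pole_mem hYR hRf hY hW1 hW2
      have := hB hRf hX hW hY1 hY2 (U.perp_comm.1 hW2) hXR (by rintro rfl; exact hR hW1)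
      subst this
      exact hp (U.perp_comm.1 hW1)
    by_cases hX : ∃ X ∈ fixPts F V H, X ≠ R
    · by_cases hX' : ∃ X ∈ fixPts F V H, X ≠ R ∧ ¬ U.iso X
      · obtain ⟨X, hXf, hXR, hXi⟩ := hX'
        have hXp := hperp X hXf hXR
        obtain ⟨Z, hZ1, hZ2, -⟩ := U.pole hXR
        have hZ := U.pole_mem hXR hRf hXf hZ1 hZ2
        have hZi := U.third_noniso hR hXi (U.perp_comm.1 hXp) hZ1 hZ2
        refine .tri R X Z hR hXi hZi (U.perp_comm.1 hXp) hZ1 hZ2 ?_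
        ext T
        simp only [Set.mem_insert_iff, Set.mem_singleton_iff]
        constructor
        · intro hT
          by_cases hTR : T = R
          · exact Or.inl hTR
          by_cases hTX : T = X
          · exact Or.inr (Or.inl hTX)
          right; right
          exact hB hXf hZ hT hXp (U.perp_comm.1 hZ1) (hperp T hT hTR)
            (by rintro rfl; exact hXi hZ2) hTX
        · rintro (rfl | rfl | rfl) <;> assumption
      · push Not at hX'
        obtain ⟨X, hXf, hXR⟩ := hX
        have hXi := hX' X hXf hXR
        have hXp := hperp X hXf hXR
        by_cases hY : ∃ Y ∈ fixPts F V H, Y ≠ R ∧ Y ≠ X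
        · obtain ⟨Y, hYf, hYR, hYX⟩ := hY
          refine .hyp R X Y hR hXi (hX' Y hYf hYR) hYX.symm (U.perp_comm.1 hXp)
            (U.perp_comm.1 (hperp Y hYf hYR)) ?_
          ext T
          simp only [Set.mem_insert_iff, Set.mem_singleton_iff]
          constructor
          · intro hT
            by_cases hTR : T = R
            · exact Or.inl hTR
            by_cases hTX : T = X
            · exact Or.inr (Or.inl hTX)
            right; right
            exact hB hXf hYf hT hXp (hperp Y hYf hYR) (hperp T hT hTR) hYX hTX
          · rintro (rfl | rfl | rfl) <;> assumption
        · push Not at hY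
          refine .flag X R hXi hR hXp ?_
          ext T
          simp only [Set.mem_insert_iff, Set.mem_singleton_iff]
          constructor
          · intro hT
            by_cases hTR : T = R
            · exact Or.inr hTR
            · exact Or.inl (hY T hT hTR)
          · rintro (rfl | rfl) <;> assumption
    · push Not at hX
      exact .non R hR (Set.eq_singleton_iff_unique_mem.2 ⟨hRf, hX⟩)
  · push Not at hR
    obtain ⟨P, hP⟩ := hne
    refine .iso P (hR P hP) (Set.eq_singleton_iff_unique_mem.2 ⟨hP, fun Q hQ => ?_⟩)
    by_contra hQP
    obtain ⟨Z, hZ1, hZ2, -⟩ := U.pole hQP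
    have hZ := U.pole_mem hQP hP hQ hZ1 hZ2
    have h1 := U.iso_unique (hR Z hZ) (hR P hP) hZ1
    have h2 := U.iso_unique (hR Z hZ) (hR Q hQ) hZ2
    exact hQP (h2.trans h1.symm)

end HU
end Points

/-! ### Unitary transvections: involutions and generation -/

section Transvections

open scoped LinearAlgebra.Projectivization
open Projectivization (mk)

variable {n : ℕ} {F V G : Type} [Field F] [StarRing F] [Finite F] [CharP F 2]
  [AddCommGroup V] [Module F V] [Group G] [DistribMulAction G V] [SMulCommClass G F V]

namespace HU

/-- The transvection `x ↦ x + a h(x,u) u`, defined for `u` isotropic and `star a = a` (and equal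
to `1` for other parameters). -/
noncomputable def tv (U : HU n F V G) (u : V) (a : F) : G :=
  if h : U.h u u = 0 ∧ star a = a then (U.exists_transvection h.1 h.2).choose else 1

theorem tv_apply (U : HU n F V G) {u : V} (uu : U.h u u = 0) {a : F} (ha : star a = a) (x : V) :
    U.tv u a • x = x + (a * U.h x u) • u := by
  have h : U.h u u = 0 ∧ star a = a := ⟨uu, ha⟩
  rw [tv, dif_pos h]
  exact (U.exists_transvection h.1 h.2).choose_spec x

theorem ext_g (U : HU n F V G) {g g' : G} (h : ∀ x : V, g • x = g' • x) : g = g' := by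
  rw [← inv_mul_eq_one]
  apply U.faithful
  intro x
  rw [mul_smul, ← h, inv_smul_smul]

theorem tv_add (U : HU n F V G) {u : V} (uu : U.h u u = 0) {a b : F} (ha : star a = a)
    (hb : star b = b) : U.tv u a * U.tv u b = U.tv u (a + b) := by
  apply U.ext_g
  intro x
  rw [mul_smul, U.tv_apply uu hb, U.tv_apply uu ha, U.tv_apply uu (by rw [star_add, ha, hb]),
    U.h_add, U.h_smul, uu]
  module

theorem tv_zero (U : HU n F V G) {u : V} (uu : U.h u u = 0) : U.tv u 0 = 1 := by
  apply U.ext_g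
  intro x
  rw [U.tv_apply uu (star_zero F)]; simp

theorem tv_sq (U : HU n F V G) {u : V} (uu : U.h u u = 0) {a : F} (ha : star a = a) :
    U.tv u a * U.tv u a = 1 := by
  rw [U.tv_add uu ha ha, CharTwo.add_self_eq_zero, U.tv_zero uu]

theorem tv_inv (U : HU n F V G) {u : V} (uu : U.h u u = 0) {a : F} (ha : star a = a) :
    (U.tv u a)⁻¹ = U.tv u a := by
  rw [inv_eq_iff_mul_eq_one, U.tv_sq uu ha]

theorem star_norm (c : F) : star (c * star c) = c * star c := by
  rw [star_mul, star_star]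

theorem tv_smul (U : HU n F V G) {u : V} (uu : U.h u u = 0) {a : F} (ha : star a = a) (c : F) :
    U.tv (c • u) a = U.tv u (a * (c * star c)) := by
  apply U.ext_g
  intro x
  rw [U.tv_apply (by rw [U.h_smul, U.smul_h, uu]; simp) ha,
    U.tv_apply uu (by rw [star_mul, star_norm, ha, mul_comm]), U.smul_h, smul_smul]
  congr 2
  ring

theorem tv_conj (U : HU n F V G) {u : V} (uu : U.h u u = 0) {a : F} (ha : star a = a) (g : G) :
    g * U.tv u a * g⁻¹ = U.tv (g • u) a := by
  apply U.ext_g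
  intro x
  have hx : U.h (g⁻¹ • x) u = U.h x (g • u) := by rw [← U.inv g, smul_inv_smul]
  rw [mul_smul, mul_smul, U.tv_apply uu ha, U.tv_apply (by rw [U.inv, uu]) ha, smul_add,
    smul_inv_smul, U.act, hx]

theorem tv_eq_one (U : HU n F V G) {u : V} (uu : U.h u u = 0) (hu : u ≠ 0) {a : F}
    (ha : star a = a) (h : U.tv u a = 1) : a = 0 := by
  obtain ⟨v, hv⟩ := U.exists_h_one hu
  have h1 := U.tv_apply uu ha v
  rw [h, one_smul, U.h_symm1 hv, mul_one] at h1
  exact (smul_eq_zero.1 (left_eq_add.1 h1)).resolve_right hu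

theorem tv_ne_one (U : HU n F V G) {u : V} (uu : U.h u u = 0) (hu : u ≠ 0) {a : F}
    (ha : star a = a) (h : a ≠ 0) : U.tv u a ≠ 1 := fun h' => h (U.tv_eq_one uu hu ha h')

theorem tv_inj (U : HU n F V G) {u : V} (uu : U.h u u = 0) (hu : u ≠ 0) {a b : F}
    (ha : star a = a) (hb : star b = b) (h : U.tv u a = U.tv u b) : a = b := by
  have h1 : U.tv u a * U.tv u b = 1 := by rw [h, U.tv_sq uu hb]
  rw [U.tv_add uu ha hb] at h1
  have := U.tv_eq_one uu hu (by rw [star_add, ha, hb]) h1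
  grind

/-- Every involution is a transvection. -/
theorem involution (U : HU n F V G) {g : G} (h1 : g ≠ 1) (h2 : g * g = 1) :
    ∃ u a, u ≠ 0 ∧ U.h u u = 0 ∧ star a = a ∧ a ≠ 0 ∧ g = U.tv u a := by
  have hsq : ∀ x : V, g • g • x = x := fun x => by rw [← mul_smul, h2, one_smul]
  have hadj : ∀ x y : V, U.h (g • x) y = U.h x (g • y) := by
    intro x y; rw [← U.inv g x (g • y), hsq]
  obtain ⟨x0, hx0⟩ : ∃ x0 : V, g • x0 ≠ x0 := by
    by_contra! hc
    exact h1 (U.faithful g hc)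
  set u := g • x0 + x0 with hu
  have hu0 : u ≠ 0 := fun h => hx0 (U.eq_of_add h)
  -- the map `N = g - 1` squares to zero, is self-adjoint, and has totally isotropic image
  have hN : ∀ x y : V, U.h (g • x + x) (g • y + y) = 0 := by
    intro x y
    simp only [U.h_add, U.add_h, hadj, hsq]
    grind
  have hNs : ∀ x y : V, U.h (g • x + x) y = U.h x (g • y + y) := by
    intro x y
    simp only [U.h_add, U.add_h, hadj]
  have uu : U.h u u = 0 := hN _ _
  have him : ∀ x : V, ∃ c : F, g • x + x = c • u := fun x =>
    U.iso_perp uu hu0 (hN x x) (hN x x0)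
  obtain ⟨v, hv⟩ := U.exists_h_one hu0
  obtain ⟨c, hc⟩ := him v
  have hx : ∀ x : V, g • x + x = (star c * U.h x u) • u := by
    intro x
    obtain ⟨d, hd⟩ := him x
    have h3 := hNs x v
    rw [hd, hc, U.h_smul, U.smul_h, hv, mul_one] at h3
    rw [hd, h3]
  have hcc : star c = c := by
    have h3 := congrArg (fun w => U.h w v) (hx v)
    simp only [hc, U.h_smul, hv, U.h_symm1 hv, mul_one] at h3
    exact h3.symm
  have hg : ∀ x : V, g • x = x + (star c * U.h x u) • u := by
    intro x
    rw [← hx, add_comm (g • x), ← add_assoc, U.two_V, zero_add]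
  refine ⟨u, star c, hu0, uu, by rw [star_star, hcc], ?_, ?_⟩
  · intro h
    apply h1
    apply U.faithful
    intro x
    rw [hg, h]; simp
  · apply U.ext_g
    intro x
    rw [hg, U.tv_apply uu (by rw [star_star, hcc])]

theorem tv_fix (U : HU n F V G) {u : V} (uu : U.h u u = 0) (hu : u ≠ 0) {a : F}
    (ha : star a = a) (h0 : a ≠ 0) {P : ℙ F V} : U.tv u a • P = P ↔ U.perp P (mk F u hu) := by
  obtain ⟨x, hx, rfl⟩ := exists_mk P
  rw [smul_mk_eq, U.perp_mk, U.tv_apply uu ha]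
  constructor
  · rintro ⟨b, hb⟩
    by_contra hxu
    have h1 := congrArg (fun w => U.h w u) hb
    simp only [U.h_add, U.h_smul, uu, mul_zero, add_zero] at h1
    have hb1 : b = 1 := (mul_right_cancel₀ hxu (by linear_combination h1)).symm
    rw [hb1, one_smul] at hb
    have := (smul_eq_zero.1 (left_eq_add.1 hb.symm)).resolve_right hu
    exact (mul_ne_zero h0 hxu) this
  · intro h
    exact ⟨1, by rw [h]; simp⟩

/-- `K` contains all transvections. -/
def AllTv (U : HU n F V G) (K : Subgroup G) : Prop :=
  ∀ u, U.h u u = 0 → ∀ a, star a = a → U.tv u a ∈ K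

theorem AllTv.move {U : HU n F V G} {K : Subgroup G} (hK : U.AllTv K) {x y : V}
    (h1 : U.h x x = U.h y y) (h2 : star (U.h x y) = U.h x y) (h3 : U.h x y ≠ U.h x x) :
    ∃ k ∈ K, k • x = y := by
  have h4 : U.h y x = U.h x y := by rw [← U.h_star, h2]
  have dd : U.h (x + y) (x + y) = 0 := by
    simp only [U.h_add, U.add_h, h4]; grind
  have h5 : U.h x (x + y) ≠ 0 := by
    rw [U.add_h]; intro h; exact h3 (by grind)
  have h6 : star (U.h x (x + y))⁻¹ = (U.h x (x + y))⁻¹ := by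
    rw [star_inv₀, U.add_h, star_add, h2, U.h_self]
  refine ⟨_, hK _ dd _ h6, ?_⟩
  rw [U.tv_apply dd h6, inv_mul_cancel₀ h5, one_smul, ← add_assoc, U.two_V, zero_add]

theorem AllTv.move_unit {U : HU n F V G} {K : Subgroup G} (hK : U.AllTv K) {e e' : V}
    (ee : U.h e e = 1) (ee' : U.h e' e' = 1) : ∃ k ∈ K, k • e' = e := by
  -- it is enough to treat the case where `⟨e, e'⟩` is a nondegenerate plane
  have key : ∀ e' : V, U.h e' e' = 1 → U.h e' e * U.h e e' ≠ 1 → ∃ k ∈ K, k • e' = e := by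
    intro e' ee' hne
    set d := e' + U.h e' e • e with hd
    have de : U.h d e = 0 := by rw [hd, U.h_add, U.h_smul, ee]; grind
    have dd : U.h d d ≠ 0 := by
      conv_lhs => rw [hd]
      simp only [U.add_h, U.h_add, U.smul_h, U.h_smul, ee, ee', U.h_star]
      intro h
      exact hne (by grind)
    obtain ⟨c, hc, hcc⟩ := U.exists_norm dd
    obtain ⟨z, f⟩ := U.exists_orth_of_ab ee hcc (by rw [U.smul_h, U.h_symm0 de, mul_zero])
    have hdz : U.h d z = 0 := by
      have := f.bc
      rw [U.h_smul] at this
      exact (mul_eq_zero.1 this).resolve_left hc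
    have hz : U.h e' z = 0 := by
      rw [hd, U.h_add, U.h_smul, f.ac] at hdz
      simpa using hdz
    obtain ⟨k1, hk1, h1⟩ := hK.move (x := e') (y := z) (by rw [ee', f.cc]) (by rw [hz, star_zero])
      (by rw [hz, ee']; exact zero_ne_one)
    obtain ⟨k2, hk2, h2⟩ := hK.move (x := z) (y := e) (by rw [ee, f.cc]) (by rw [f.ca, star_zero])
      (by rw [f.ca, f.cc]; exact zero_ne_one)
    exact ⟨k2 * k1, K.mul_mem hk2 hk1, by rw [mul_smul, h1, h2]⟩
  by_cases hne : U.h e' e * U.h e e' = 1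
  swap
  · exact key e' ee' hne
  obtain ⟨w, hw, hws, hw3⟩ := U.uf.exists_omega
  have hw0 : w ≠ 0 := by rintro rfl; simp at hw
  have hw1 : w ≠ 1 := by rintro rfl; grind
  set s := U.h e' e with hs
  have hs' : U.h e e' = star s := (U.h_star _ _).symm
  have hs0 : s ≠ 0 := left_ne_zero_of_mul_eq_one hne
  obtain ⟨p, pp, pe, pe'⟩ : ∃ p, U.h p p = 0 ∧ U.h e p ≠ 0 ∧ U.h e' p ≠ 0 := by
    set u := e' + s • e with hu
    have he' : e' = u + s • e := by rw [hu, add_assoc, U.two_V, add_zero]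
    have ue : U.h u e = 0 := by rw [hu, U.h_add, U.h_smul, ee]; grind
    have uu : U.h u u = 0 := by
      conv_lhs => rw [hu]
      simp only [U.add_h, U.h_add, U.smul_h, U.h_smul, ee, ee', ← hs, hs']
      rw [hs'] at hne
      grind
    have hb0 : s⁻¹ * w ≠ 0 := mul_ne_zero (inv_ne_zero hs0) hw0
    have hbb : star (star (s⁻¹ * w) * (s⁻¹ * w)) = star (s⁻¹ * w) * (s⁻¹ * w) := by
      rw [star_mul, star_star]
    obtain ⟨x, hx⟩ := U.uf.trace_surj hbb
    by_cases hu0 : u = 0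
    · obtain ⟨u', v, f⟩ := U.exists_hyp_of_e ee
      refine ⟨v + star (s⁻¹ * w) • e + x • u', ?_, ?_, ?_⟩
      · simp only [U.add_h, U.h_add, U.smul_h, U.h_smul, f.uu, f.vv, f.ee, f.uv, f.vu, f.ue, f.eu,
          f.ev, f.ve, star_star]
        grind
      · simp only [U.add_h, U.smul_h, f.ee, f.eu, f.ev, star_star]
        simp [hs0, hw0]
      · rw [he', hu0, zero_add]
        simp only [U.add_h, U.smul_h, U.h_smul, f.ee, f.eu, f.ev, star_star]
        simp [hs0, hw0]
    · obtain ⟨v, f⟩ := U.exists_hyp_of_ue uu hu0 ee ue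
      refine ⟨v + star (s⁻¹ * w) • e + x • u, ?_, ?_, ?_⟩
      · simp only [U.add_h, U.h_add, U.smul_h, U.h_smul, f.uu, f.vv, f.ee, f.uv, f.vu, f.ue, f.eu,
          f.ev, f.ve, star_star]
        grind
      · simp only [U.add_h, U.smul_h, f.ee, f.eu, f.ev, star_star]
        simp [hs0, hw0]
      · rw [he']
        simp only [U.add_h, U.h_add, U.smul_h, U.h_smul, f.ee, f.eu, f.ev, f.uu, f.ue, f.uv,
          star_star]
        intro h
        apply hw1
        have : s * s⁻¹ = 1 := mul_inv_cancel₀ hs0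
        grind
  set c := U.h e' p * U.h p e with hc
  have hc0 : c ≠ 0 := mul_ne_zero pe' (fun h => pe (U.h_symm0 h))
  -- at most one nonzero parameter `a` fails
  obtain ⟨a, ha, ha0, hane⟩ : ∃ a : F, star a = a ∧ a ≠ 0 ∧
      s * star c + star s * c + a * (c * star c) ≠ 0 := by
    by_cases h : s * star c + star s * c + 1 * (c * star c) = 0
    · refine ⟨w, hws, hw0, fun h' => ?_⟩
      have h3 : (w + 1) * (c * star c) = 0 := by grind
      have h4 : c * star c ≠ 0 := mul_ne_zero hc0 (by simpa using hc0)
      have := (mul_eq_zero.1 h3).resolve_right h4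
      exact hw1 (by grind)
    · exact ⟨1, star_one F, one_ne_zero, h⟩
  obtain ⟨k, hk, hk'⟩ := key (U.tv p a • e') (by rw [U.inv, ee']) (by
    rw [← U.h_star _ e]
    have h1 : U.h (U.tv p a • e') e = s + a * c := by
      rw [U.tv_apply pp ha, U.h_add, U.h_smul, hc, hs]; ring
    rw [h1, star_add, star_mul, ha]
    rw [hs'] at hne
    intro h
    have : a * (s * star c + star s * c + a * (c * star c)) = 0 := by grind
    exact hane ((mul_eq_zero.1 this).resolve_left ha0))
  exact ⟨k * U.tv p a, K.mul_mem hk (hK _ pp _ ha), by rw [mul_smul, hk']⟩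

/-- The element `u ↦ y v`, `v ↦ y⁻¹ u` is a transvection. -/
theorem Hyp.tv_swap {U : HU n F V G} {u e v : V} (f : U.Hyp u e v) {y : F} (hy : star y = y)
    (h0 : y ≠ 0) : U.h (u + y • v) (u + y • v) = 0 ∧ U.tv (u + y • v) y⁻¹ • u = y • v ∧
      U.tv (u + y • v) y⁻¹ • e = e ∧ U.tv (u + y • v) y⁻¹ • v = y⁻¹ • u := by
  have h1 : U.h (u + y • v) (u + y • v) = 0 := by
    simp only [U.h_add, U.add_h, U.h_smul, U.smul_h, f.uu, f.vv, f.uv, f.vu, hy]; grind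
  have h2 : star y⁻¹ = y⁻¹ := by rw [star_inv₀, hy]
  refine ⟨h1, ?_, ?_, ?_⟩
  · rw [U.tv_apply h1 h2, U.add_h, U.smul_h, f.uu, f.uv, hy, zero_add, mul_one,
      inv_mul_cancel₀ h0, one_smul, ← add_assoc, U.two_V, zero_add]
  · rw [U.tv_apply h1 h2, U.add_h, U.smul_h, f.eu, f.ev]; simp
  · rw [U.tv_apply h1 h2, U.add_h, U.smul_h, f.vu, f.vv, mul_zero, add_zero, mul_one, smul_add,
      smul_smul, inv_mul_cancel₀ h0, one_smul, add_comm v, add_assoc, U.two_V, add_zero]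

/-- An element of the group fixing `e` and the point `⟨u⟩` of a hyperbolic frame. -/
theorem Hyp.borel {U : HU n F V G} {u e v : V} (f : U.Hyp u e v) {g : G} {l : F}
    (h1 : g • u = l • u) (h2 : g • e = e) :
    star l = l ∧ l ≠ 0 ∧ ∃ x : F, star x = x ∧ g • v = x • u + l⁻¹ • v := by
  have h3 := f.expand (g • v)
  have h4 : U.h (g • v) e = 0 := by rw [← h2, U.inv, f.ve]
  rw [h4, zero_smul, add_zero] at h3
  set x := U.h (g • v) v
  set y := U.h (g • v) u
  have h5 : l * star y = 1 := by
    have := U.inv g u v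
    rw [h1, U.h_smul, f.uv, ← U.h_star] at this
    exact this
  have h6 : l * y = 1 := by
    have := f.det_g g
    simpa [Matrix.det_fin_three, h1, h2, U.h_smul, f.uu, f.vv, f.ee, f.uv, f.ue, f.ev, f.vu, f.eu,
      f.ve, h4] using this
  have l0 : l ≠ 0 := left_ne_zero_of_mul_eq_one h5
  have h7 : star y = y := mul_left_cancel₀ l0 (h5.trans h6.symm)
  have h8 : y = l⁻¹ := (eq_inv_of_mul_eq_one_right h6)
  have hl : star l = l := by
    rw [h8, star_inv₀] at h7
    exact inv_injective h7
  have h9 := U.inv g v v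
  rw [h3] at h9
  simp only [U.h_add, U.add_h, U.h_smul, U.smul_h, f.uu, f.vv, f.uv, f.vu, h7] at h9
  have h10 : y * (x + star x) = 0 := by linear_combination h9
  have hx : x + star x = 0 := (mul_eq_zero.1 h10).resolve_left (by rw [h8]; exact inv_ne_zero l0)
  exact ⟨hl, l0, x, by grind, by rw [h3, h8]⟩

/-- The transvections generate the group. -/
theorem AllTv.eq_top {U : HU n F V G} {K : Subgroup G} (hK : U.AllTv K) : K = ⊤ := by
  rw [Subgroup.eq_top_iff']
  intro g
  obtain ⟨u, e, v, f⟩ := U.exists_hyp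
  -- move `g e` back to `e`
  suffices H : ∀ g : G, g • e = e → g ∈ K by
    obtain ⟨k, hk, h⟩ := hK.move_unit f.ee (e' := g • e) (by rw [U.inv, f.ee])
    have := H (k * g) (by rw [mul_smul, h])
    exact (K.mul_mem_cancel_left hk).1 this
  clear g
  -- move `⟨g u⟩` back to `⟨u⟩`
  suffices H : ∀ g : G, g • e = e → ∀ l : F, g • u = l • u → g ∈ K by
    intro g ge
    have h1 := f.expand (g • u)
    have h2 : U.h (g • u) e = 0 := by rw [← ge, U.inv, f.ue]
    rw [h2, zero_smul, add_zero] at h1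
    set a := U.h (g • u) v
    set b := U.h (g • u) u
    by_cases hb : b = 0
    · exact H g ge a (by rw [h1, hb]; simp)
    have h3 := U.inv g u u
    rw [h1] at h3
    simp only [U.h_add, U.add_h, U.h_smul, U.smul_h, f.uu, f.vv, f.uv, f.vu] at h3
    have hsb : star b ≠ 0 := by simpa using hb
    set y := a / b with hy
    have hys : star y = y := by
      rw [hy, star_div₀, div_eq_div_iff hsb hb]; grind
    have ww : U.h (v + (y + 1) • u) (v + (y + 1) • u) = 0 := by
      simp only [U.h_add, U.add_h, U.h_smul, U.smul_h, f.uu, f.vv, f.uv, f.vu, star_add, star_one,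
        hys]
      grind
    have h4 := hK _ ww 1 (star_one F)
    have h5 : U.tv (v + (y + 1) • u) 1 • (v + y • u) = u := by
      have : U.h (v + y • u) (v + (y + 1) • u) = 1 := by
        simp only [U.h_add, U.add_h, U.h_smul, U.smul_h, f.uu, f.vv, f.uv, f.vu, star_add,
          star_one, hys]
        grind
      rw [U.tv_apply ww (star_one F), this]
      have h2v : v + y • u + (v + y • u) = 0 := U.two_V _
      calc v + y • u + ((1 : F) * 1) • (v + (y + 1) • u)
          = (v + y • u + (v + y • u)) + u := by module
        _ = u := by rw [h2v, zero_add]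
    have h6 : g • u = b • (v + y • u) := by
      rw [h1, hy, smul_add, smul_smul, mul_div_cancel₀ _ hb, add_comm]
    have h7 : U.tv (v + (y + 1) • u) 1 • e = e := by
      rw [U.tv_apply ww (star_one F), U.add_h, U.smul_h, f.ev, f.eu]; simp
    have := H (U.tv (v + (y + 1) • u) 1 * g) (by rw [mul_smul, ge, h7]) b
      (by rw [mul_smul, h6, U.act, h5])
    exact (K.mul_mem_cancel_left h4).1 this
  intro g ge l gu
  obtain ⟨hl, l0, x, hx, gv⟩ := f.borel gu ge
  obtain ⟨s1, s1u, s1e, s1v⟩ := f.tv_swap (star_one F) one_ne_zero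
  obtain ⟨s2, s2u, s2e, s2v⟩ := f.tv_swap hl l0
  have hxl : star (l * x) = l * x := by rw [star_mul, hl, hx, mul_comm]
  have : g = U.tv u (l * x) * (U.tv (u + (1 : F) • v) 1⁻¹ * U.tv (u + l • v) l⁻¹) := by
    apply f.ext
    · rw [gu, mul_smul, mul_smul, s2u, U.act, s1v, inv_one, one_smul, U.act, U.tv_apply f.uu hxl,
        f.uu]
      simp
    · rw [ge, mul_smul, mul_smul, s2e, s1e, U.tv_apply f.uu hxl, f.eu]
      simp
    · rw [gv, mul_smul, mul_smul, s2v, U.act, s1u, one_smul, U.act, U.tv_apply f.uu hxl, f.vu,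
        smul_add, smul_smul, mul_one, ← mul_assoc, inv_mul_cancel₀ l0, one_mul, add_comm]
  rw [this]
  refine K.mul_mem (hK _ f.uu _ hxl) (K.mul_mem (hK _ s1 _ ?_) (hK _ s2 _ ?_))
  · rw [inv_one, star_one]
  · rw [star_inv₀, hl]

end HU
end Transvections

/-! ### Irreducible elements and their centralizers -/

section Irreducible

open scoped LinearAlgebra.Projectivization
open Projectivization (mk)

variable {n : ℕ} {F V G : Type} [Field F] [StarRing F] [Finite F] [CharP F 2]
  [AddCommGroup V] [Module F V] [Group G] [DistribMulAction G V] [SMulCommClass G F V]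

namespace HU

/-- An element of the group without eigenvectors. By self-duality such an element leaves no
proper nonzero subspace invariant. -/
def Irr (_U : HU n F V G) (g : G) : Prop := ∀ (x : V) (a : F), g • x = a • x → x = 0

theorem Irr.ne_one {U : HU n F V G} {g : G} (hg : U.Irr g) : g ≠ 1 := by
  rintro rfl
  obtain ⟨e, he⟩ := U.exists_e
  exact U.ne_of_norm (by rw [he]; exact one_ne_zero) (hg e 1 (by simp))

theorem exists_eigen {U : HU n F V G} {g : G} (hg : ¬ U.Irr g) :
    ∃ (x : V) (a : F), x ≠ 0 ∧ g • x = a • x := by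
  unfold Irr at hg
  push Not at hg
  obtain ⟨x, a, h, h0⟩ := hg
  exact ⟨x, a, h0, h⟩

theorem h_inv (U : HU n F V G) (g : G) (x y : V) : U.h (g⁻¹ • x) y = U.h x (g • y) := by
  rw [← U.inv g, smul_inv_smul]

theorem h_inv' (U : HU n F V G) (g : G) (x y : V) : U.h (g • x) y = U.h x (g⁻¹ • y) := by
  rw [← U.h_inv, inv_inv]

/-- The orbit `v, gv, g²v` of a nonzero vector under an irreducible element spans the space. -/
theorem Irr.span {U : HU n F V G} {g : G} (hg : U.Irr g) {v : V} (hv : v ≠ 0) (w : V) :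
    ∃ a b c : F, w = a • v + b • (g • v) + c • (g • g • v) := by
  have h1 : ∀ c : F, g • v ≠ c • v := fun c hc => hv (hg v c hc)
  obtain ⟨z, hz, z1, z2⟩ := U.exists_perp v (g • v)
  have z3 : U.h (g • g • v) z ≠ 0 := by
    intro h3
    obtain ⟨c, hc⟩ := U.perp_unique hv h1 hz (U.h_symm0 z1) (U.h_symm0 z2) (z' := g⁻¹ • z)
      (by rw [← U.h_inv']; exact U.h_symm0 z2)
      (by rw [← U.h_inv']; exact h3)
    have h4 : c • (g • z) = z := by rw [← U.act, ← hc, smul_inv_smul]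
    have c0 : c ≠ 0 := by rintro rfl; rw [zero_smul] at h4; exact hz h4.symm
    refine hz (hg z c⁻¹ ?_)
    conv_rhs => rw [← h4]
    rw [inv_smul_smul₀ c0]
  set d := U.h w z / U.h (g • g • v) z with hd
  obtain ⟨a, b, hab⟩ := U.perp_span hv h1 hz (U.h_symm0 z1) (U.h_symm0 z2)
    (w := w - d • (g • g • v)) (by
      rw [U.sub_V, U.h_add, U.h_smul, hd, div_mul_cancel₀ _ z3, CharTwo.add_self_eq_zero])
  exact ⟨a, b, d, by rw [← hab]; abel⟩

/-- A linear map commuting with an irreducible element vanishes if it kills a nonzero vector. -/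
theorem Irr.ker {U : HU n F V G} {g : G} (hg : U.Irr g) {f : V →ₗ[F] V}
    (hf : ∀ x, f (g • x) = g • f x) {v : V} (hv : v ≠ 0) (h0 : f v = 0) : f = 0 := by
  ext w
  obtain ⟨a, b, c, rfl⟩ := hg.span hv w
  simp [hf, h0]

/-- The commutant of an irreducible element is commutative. -/
theorem Irr.lin_comm {U : HU n F V G} {g : G} (hg : U.Irr g) {f f' : V →ₗ[F] V}
    (hf : ∀ x, f (g • x) = g • f x) (hf' : ∀ x, f' (g • x) = g • f' x) (x : V) :
    f (f' x) = f' (f x) := by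
  by_cases hx : x = 0
  · simp [hx]
  obtain ⟨a, b, c, h⟩ := hg.span hx (f x)
  have key : ∀ w, f w = a • w + b • (g • w) + c • (g • g • w) := by
    intro w
    obtain ⟨a', b', c', rfl⟩ := hg.span hx w
    simp only [map_add, map_smul, hf, h, smul_add, U.act]
    generalize g • x = x1
    generalize g • x1 = x2
    generalize g • x2 = x3
    generalize g • x3 = x4
    module
  rw [key, key x]
  simp [hf']

/-- The action of a group element as a linear map. -/
abbrev T (_U : HU n F V G) (g : G) : V →ₗ[F] V := DistribSMul.toLinearMap F V g

theorem commute_iff (U : HU n F V G) {a b : G} : Commute a b ↔ ∀ x : V, a • b • x = b • a • x := by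
  constructor
  · intro h x; rw [← mul_smul, h.eq, mul_smul]
  · intro h; apply U.ext_g; intro x; rw [mul_smul, mul_smul, h]

theorem Irr.comm {U : HU n F V G} {g a b : G} (hg : U.Irr g) (ha : Commute g a)
    (hb : Commute g b) : Commute a b := by
  rw [U.commute_iff] at *
  exact hg.lin_comm (f := U.T a) (f' := U.T b) (fun x => (ha x).symm) (fun x => (hb x).symm)

theorem Irr.of_comm {U : HU n F V G} {g a : G} (hg : U.Irr g) (ha : Commute g a)
    (h1 : a ≠ 1) : U.Irr a := by
  intro x c hx
  by_contra h0
  apply h1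
  rw [U.commute_iff] at ha
  have := hg.ker (f := U.T a - c • LinearMap.id) (v := x) (by
    intro y; simp [ha, smul_sub, U.act]) h0 (by simp [hx])
  apply U.scalar (a := c)
  intro y
  have h2 := LinearMap.congr_fun this y
  simpa [sub_eq_zero] using h2

theorem Irr.conj {U : HU n F V G} {g : G} (hg : U.Irr g) (m : G) : U.Irr (m * g * m⁻¹) := by
  intro x a hx
  have : m⁻¹ • x = 0 := by
    apply hg _ a
    rw [mul_smul, mul_smul] at hx
    rw [← U.act, ← hx, inv_smul_smul]
  simpa using congrArg (m • ·) this

theorem not_irr_two (U : HU n F V G) {g : G} (h2 : g * g = 1) : ¬ U.Irr g := by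
  intro hg
  obtain ⟨u, a, hu, uu, ha, a0, rfl⟩ := U.involution hg.ne_one h2
  exact hu (hg u 1 (by rw [U.tv_apply uu ha, uu]; simp))

/-- An element of order `3` is diagonalizable. -/
theorem eigen_three (U : HU n F V G) {w : F} (hw : w * w + w + 1 = 0) {g : G}
    (h3 : g * g * g = 1) (x : V) (c : F) (hc : c = 1 ∨ c = w ∨ c = w * w) :
    g • (x + (c * c) • (g • x) + c • (g • g • x)) = c • (x + (c * c) • (g • x) + c • (g • g • x)) := by
  have h : g • g • g • x = x := by rw [← mul_smul, ← mul_smul, h3, one_smul]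
  have c3 : c * c * c = 1 := by grind
  simp only [smul_add, U.act, h]
  generalize g • x = x1
  generalize g • x1 = x2
  simp only [smul_smul, ← mul_assoc, c3, one_smul]
  abel

theorem sum_three (U : HU n F V G) {w : F} (hw : w * w + w + 1 = 0) (x y z : V) :
    (x + y + z) + (x + (w * w) • y + w • z) + (x + w • y + (w * w) • z) = x := by
  have hw2 : w * w = w + 1 := by grind
  rw [hw2]
  have h1 : (x + y + z) + (x + (w + 1) • y + w • z) + (x + w • y + (w + 1) • z)
      = x + (x + x) + (y + y) + (z + z) + w • (y + y) + w • (z + z) := by module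
  rw [h1]; simp [U.two_V]

theorem not_irr_three (U : HU n F V G) {g : G} (h3 : g * g * g = 1) : ¬ U.Irr g := by
  intro hg
  obtain ⟨w, hw, -, hw3⟩ := U.uf.exists_omega
  obtain ⟨x, hx⟩ : ∃ x : V, x ≠ 0 := by
    obtain ⟨u, e, v, f⟩ := U.exists_hyp; exact ⟨u, f.ne.1⟩
  have k := fun c hc => hg _ c (U.eigen_three hw h3 x c hc)
  have k1 := k 1 (by simp)
  have k2 := k w (by simp)
  have k3 := k (w * w) (by simp)
  rw [show w * w * (w * w) = w by grind] at k3
  simp only [one_smul, mul_one] at k1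
  have := U.sum_three hw x (g • x) (g • g • x)
  rw [k1, k2, k3] at this
  apply hx; rw [← this]; simp

/-- The commutant of an irreducible element is a cubic field extension, so an element of the
group normalizing it induces on it an automorphism of order dividing `3`. -/
theorem Irr.cube {U : HU n F V G} {g : G} (hg : U.Irr g) {m : G}
    (hm : Commute g (m * g * m⁻¹)) : Commute g (m ^ 3) := by
  have := U.fd
  have : Finite V := Module.finite_of_finite F
  obtain ⟨x, hx⟩ : ∃ x : V, x ≠ 0 := by
    obtain ⟨u, e, v, f⟩ := U.exists_hyp; exact ⟨u, f.ne.1⟩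
  let E := Subalgebra.centralizer F {U.T g}
  have mem : ∀ f : Module.End F V, f ∈ E ↔ ∀ x, f (g • x) = g • f x := by
    intro f
    rw [Subalgebra.mem_centralizer_iff]
    simp only [Set.mem_singleton_iff, forall_eq]
    exact ⟨fun h x => (LinearMap.congr_fun h x).symm, fun h => LinearMap.ext fun x => (h x).symm⟩
  letI : CommRing E := { (inferInstance : Ring E) with
    mul_comm := fun a b => Subtype.ext (LinearMap.ext fun x =>
      hg.lin_comm ((mem _).1 a.2) ((mem _).1 b.2) x) }
  have : Nontrivial E := by
    refine ⟨0, 1, fun h => hx ?_⟩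
    have := congrArg (fun f : E => (f : Module.End F V) x) h
    simpa using this.symm
  have : NoZeroDivisors E := by
    refine ⟨fun {a b} hab => ?_⟩
    by_cases hb : (b : Module.End F V) x = 0
    · right; exact Subtype.ext (hg.ker ((mem _).1 b.2) hx hb)
    · left
      refine Subtype.ext (hg.ker ((mem _).1 a.2) hb ?_)
      exact congrArg (fun f : E => (f : Module.End F V) x) hab
  have : IsDomain E := NoZeroDivisors.to_isDomain E
  have : Finite (Module.End F V) := Module.finite_of_finite F
  letI : Field E := (Finite.isField_of_domain E).toField
  let ev : E →ₗ[F] V := (LinearMap.applyₗ x).comp E.val.toLinearMap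
  have hev : Function.Bijective ev := by
    constructor
    · rw [← LinearMap.ker_eq_bot, LinearMap.ker_eq_bot']
      intro a ha
      exact Subtype.ext (hg.ker ((mem _).1 a.2) hx ha)
    · intro w
      obtain ⟨a, b, c, h⟩ := hg.span hx w
      refine ⟨⟨a • LinearMap.id + b • U.T g + c • (U.T g ∘ₗ U.T g), ?_⟩, ?_⟩
      · rw [mem]; intro y; simp [U.act]
      · rw [h]; rfl
  have rank : Module.finrank F E = 3 := by
    rw [← U.dim]; exact (LinearEquiv.ofBijective ev hev).finrank_eq
  have irr' : U.Irr (m * g * m⁻¹) := hg.conj m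
  let c0 : Module.End F V →ₐ[F] Module.End F V := AlgHom.ofLinearMap
    { toFun := fun f => U.T m ∘ₗ f ∘ₗ U.T m⁻¹
      map_add' := by intro f f'; ext y; simp
      map_smul' := by intro a f; ext y; simp [U.act] }
    (by ext y; simp) (by intro f f'; ext y; simp)
  have hc0 : ∀ f y, c0 f y = m • f (m⁻¹ • y) := fun f y => rfl
  have hmem : ∀ f : E, c0 f ∈ E := by
    intro f
    rw [mem]
    intro y
    refine irr'.lin_comm (f := c0 f) (f' := U.T g) ?_ ?_ y
    · intro y
      have := (mem _).1 f.2
      simp only [hc0, mul_smul, inv_smul_smul, this]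
    · intro y
      exact (U.commute_iff.1 hm y)
  let s : E →ₐ[F] E := (c0.comp E.val).codRestrict E hmem
  have hs : ∀ f : E, ((s f : E) : Module.End F V) = c0 f := fun f => rfl
  have sb : Function.Bijective s := Finite.injective_iff_bijective.1 s.toRingHom.injective
  have hfin : Finite E := inferInstance
  have gal : IsGalois F E := inferInstance
  let s' : E ≃ₐ[F] E := AlgEquiv.ofBijective s sb
  have h3 : s' ^ 3 = 1 := by
    rw [← rank, ← IsGalois.card_aut_eq_finrank F E]
    exact pow_card_eq_one'
  let g0 : E := ⟨U.T g, by rw [mem]; intro y; rfl⟩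
  have h4 : s (s (s g0)) = g0 := by
    have := congrArg (fun t : E ≃ₐ[F] E => t g0) h3
    exact this
  rw [U.commute_iff]
  intro y
  have h5 := congrArg (fun f : E => (f : Module.End F V) (m ^ 3 • y)) h4
  simp only [hs, hc0] at h5
  have h6 : m⁻¹ • m⁻¹ • m⁻¹ • m ^ 3 • y = y := by
    simp only [← mul_smul]; group; simp
  have h7 : ∀ z : V, (g0 : Module.End F V) z = g • z := fun z => rfl
  rw [h6, h7, h7] at h5
  rw [← h5]
  simp only [pow_succ, pow_zero, one_mul, mul_smul]

/-- A nontrivial element having an eigenvector has a fixed point that is fixed by its whole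
centralizer. -/
theorem exists_fix_of_comm (U : HU n F V G) {a : G} (h1 : a ≠ 1) (hirr : ¬ U.Irr a) :
    ∃ P : ℙ F V, ∀ b : G, Commute b a → b • P = P := by
  obtain ⟨x, c, hx, hc⟩ := exists_eigen hirr
  have inv : ∀ b : G, Commute b a → ∀ y : V, a • y = c • y → a • b • y = c • b • y := by
    intro b hb y hy
    rw [← (U.commute_iff.1 hb), hy, U.act]
  by_cases hW : ∀ y : V, a • y = c • y → ∃ d : F, y = d • x
  · refine ⟨mk F x hx, fun b hb => (smul_mk_eq b hx).2 (hW _ (inv b hb x hc))⟩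
  push Not at hW
  obtain ⟨y, hy, hyx⟩ := hW
  obtain ⟨z, hz, zx, zy⟩ := U.exists_perp x y
  have xz := U.h_symm0 zx
  have yz := U.h_symm0 zy
  have key : ∀ w : V, a • w = c • w → U.h w z = 0 := by
    intro w hw
    by_contra h0
    refine h1 (U.scalar_of_line h0 (fun t ht => ?_) hw)
    obtain ⟨p, q, rfl⟩ := U.perp_span hx hyx hz xz yz ht
    rw [smul_add, U.act, U.act, hc, hy]; module
  refine ⟨mk F z hz, fun b hb => (smul_mk_eq b hz).2 ?_⟩
  refine U.perp_unique hx hyx hz xz yz ?_ ?_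
  · rw [← U.h_inv]
    exact key _ (inv _ hb.inv_left x hc)
  · rw [← U.h_inv]
    exact key _ (inv _ hb.inv_left y hy)

/-- The centralizers of the irreducible elements (maximal tori of order `q² - q + 1`). -/
def Theta (U : HU n F V G) : Set (Subgroup G) :=
  {C | ∃ g, U.Irr g ∧ C = Subgroup.centralizer {g}}

theorem mem_cent {g a : G} : a ∈ Subgroup.centralizer {g} ↔ Commute g a := by
  rw [Subgroup.mem_centralizer_singleton_iff]
  exact eq_comm

theorem Theta.comm {U : HU n F V G} {C : Subgroup G} (hC : C ∈ U.Theta) {a b : G} (ha : a ∈ C)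
    (hb : b ∈ C) : Commute a b := by
  obtain ⟨g, hg, rfl⟩ := hC
  exact hg.comm (mem_cent.1 ha) (mem_cent.1 hb)

theorem Theta.irr {U : HU n F V G} {C : Subgroup G} (hC : C ∈ U.Theta) {a : G} (ha : a ∈ C)
    (h1 : a ≠ 1) : U.Irr a := by
  obtain ⟨g, hg, rfl⟩ := hC
  exact hg.of_comm (mem_cent.1 ha) h1

theorem Theta.mem {U : HU n F V G} {C : Subgroup G} (hC : C ∈ U.Theta) {a b : G} (ha : a ∈ C)
    (h1 : a ≠ 1) (hab : Commute a b) : b ∈ C := by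
  obtain ⟨g, hg, rfl⟩ := hC
  have h2 : U.Irr a := hg.of_comm (mem_cent.1 ha) h1
  exact mem_cent.2 (h2.comm (mem_cent.1 ha).symm hab)

theorem Theta.eq {U : HU n F V G} {C C' : Subgroup G} (hC : C ∈ U.Theta) (hC' : C' ∈ U.Theta)
    {a : G} (ha : a ∈ C) (ha' : a ∈ C') (h1 : a ≠ 1) : C = C' := by
  ext b
  exact ⟨fun h => Theta.mem hC' ha' h1 (Theta.comm hC ha h),
    fun h => Theta.mem hC ha h1 (Theta.comm hC' ha' h)⟩

theorem Theta.exists_mem {U : HU n F V G} {C : Subgroup G} (hC : C ∈ U.Theta) :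
    ∃ g ∈ C, U.Irr g := by
  obtain ⟨g, hg, rfl⟩ := hC
  exact ⟨g, mem_cent.2 (Commute.refl g), hg⟩

theorem Theta.cent {U : HU n F V G} {C : Subgroup G} (hC : C ∈ U.Theta) {a : G} (ha : a ∈ C)
    (h1 : a ≠ 1) : C = Subgroup.centralizer {a} :=
  Subgroup.ext fun _ => ⟨fun h => mem_cent.2 (Theta.comm hC ha h),
    fun h => Theta.mem hC ha h1 (mem_cent.1 h)⟩

theorem Theta.cube {U : HU n F V G} {C : Subgroup G} (hC : C ∈ U.Theta) {m : G}
    (hm : m ∈ Subgroup.normalizer (C : Set G)) : m ^ 3 ∈ C := by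
  obtain ⟨g, hg, hi⟩ := Theta.exists_mem hC
  have h1 := (Subgroup.mem_normalizer_iff.1 hm g).1 hg
  exact Theta.mem hC hg hi.ne_one (hi.cube (Theta.comm hC hg h1))

theorem Theta.sq_ne {U : HU n F V G} {C : Subgroup G} (hC : C ∈ U.Theta) {m : G} (h1 : m ≠ 1)
    (h2 : m * m = 1) : m ∉ Subgroup.normalizer (C : Set G) := by
  intro hm
  have h3 := Theta.cube hC hm
  have : m ^ 3 = m := by rw [pow_succ, pow_two, h2, one_mul]
  rw [this] at h3
  exact U.not_irr_two h2 (Theta.irr hC h3 h1)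

/-- To normalize a member of `Theta` it suffices to move one nontrivial element into it. -/
theorem Theta.norm_of {U : HU n F V G} {C : Subgroup G} (hC : C ∈ U.Theta) {a k : G} (ha : a ∈ C)
    (h1 : a ≠ 1) (hk : k * a * k⁻¹ ∈ C) : k ∈ Subgroup.normalizer (C : Set G) := by
  rw [Subgroup.mem_normalizer_iff]
  have h2 : k * a * k⁻¹ ≠ 1 := by simpa using h1
  intro b
  rw [Theta.cent hC ha h1] at hk ⊢
  rw [← Theta.cent hC ha h1] at hk
  nth_rewrite 2 [← Theta.cent hC ha h1]
  rw [Theta.cent hC hk h2, mem_cent, mem_cent]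
  simp only [Commute, SemiconjBy]
  constructor
  · intro h
    calc k * a * k⁻¹ * (k * b * k⁻¹) = k * (a * b) * k⁻¹ := by group
      _ = k * b * k⁻¹ * (k * a * k⁻¹) := by rw [h]; group
  · intro h
    have h3 : k * (a * b) * k⁻¹ = k * (b * a) * k⁻¹ := by
      calc k * (a * b) * k⁻¹ = k * a * k⁻¹ * (k * b * k⁻¹) := by group
        _ = k * (b * a) * k⁻¹ := by rw [h]; group
    simpa using h3

/-- A triangle: three pairwise orthogonal nonisotropic points. -/
def IsTri (U : HU n F V G) (D : Set (ℙ F V)) : Prop :=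
  ∃ A B C : ℙ F V, ¬ U.iso A ∧ ¬ U.iso B ∧ ¬ U.iso C ∧ U.perp A B ∧ U.perp A C ∧ U.perp B C ∧
    D = {A, B, C}

/-- The subgroups fixing a point, or a triangle, or normalizing a member of `Theta`. -/
def Good (U : HU n F V G) (K : Subgroup G) : Prop :=
  (fixPts F V K).Nonempty ∨ (∃ D, U.IsTri D ∧ ∀ k ∈ K, k • D = D) ∨
    ∃ C ∈ U.Theta, K ≤ Subgroup.normalizer (C : Set G)

theorem fixPts_perm {A K : Subgroup G} (hK : K ≤ Subgroup.normalizer (A : Set G)) {k : G}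
    (hk : k ∈ K) {P : ℙ F V} (hP : P ∈ fixPts F V A) : k • P ∈ fixPts F V A := by
  intro a ha
  have h1 : k⁻¹ * a * k ∈ A := by
    have := (Subgroup.mem_normalizer_iff.1 ((Subgroup.normalizer (A : Set G)).inv_mem (hK hk)) a).1 ha
    simpa using this
  have h2 := hP _ h1
  have h3 : a • k • P = k • (k⁻¹ * a * k) • P := by simp only [← mul_smul]; group
  rw [h3, h2]

theorem iso_smul (U : HU n F V G) (g : G) {P : ℙ F V} : U.iso (g • P) ↔ U.iso P := U.perp_smul g

/-- A subgroup normalizing a nontrivial subgroup which is abelian or has a fixed point is good. -/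
theorem good_of_normal (U : HU n F V G) {A K : Subgroup G} (hA : A ≠ ⊥) (hAK : A ≤ K)
    (hK : K ≤ Subgroup.normalizer (A : Set G))
    (h : (fixPts F V A).Nonempty ∨ ∀ a ∈ A, ∀ b ∈ A, Commute a b) : U.Good K := by
  have main : (fixPts F V A).Nonempty → U.Good K := by
    intro hne
    have perm := fun (k : G) (hk : k ∈ K) (P : ℙ F V) (hP : P ∈ fixPts F V A) => fixPts_perm hK hk hP
    have one : ∀ (P : ℙ F V), (∀ k ∈ K, k • P = P) → U.Good K := fun P h => Or.inl ⟨P, h⟩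
    rcases U.fixType hA hne with ⟨P, hP, hS⟩ | ⟨R, hR, hS⟩ | ⟨P, R, hP, hR, h1, hS⟩ |
      ⟨R, P, Q, hR, hP, hQ, hne, h1, h2, hS⟩ | ⟨A', B, C, hA', hB, hC, h1, h2, h3, hS⟩ |
      ⟨R, hR, hS⟩ | ⟨P, hP, hS⟩
    · exact one P fun k hk => by simpa [hS] using perm k hk P (by simp [hS])
    · exact one R fun k hk => by simpa [hS] using perm k hk R (by simp [hS])
    · refine one P fun k hk => ?_
      have := perm k hk P (by simp [hS])
      rw [hS] at this
      rcases this with h | h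
      · exact h
      · exact absurd ((U.iso_smul k).2 hP) (by rw [Set.mem_singleton_iff.1 h]; exact hR)
    · refine one R fun k hk => ?_
      have := perm k hk R (by simp [hS])
      rw [hS] at this
      rcases this with h | h | h
      · exact h
      · exact absurd hR (by rw [not_not, ← U.iso_smul k, h]; exact hP)
      · exact absurd hR (by rw [not_not, ← U.iso_smul k, Set.mem_singleton_iff.1 h]; exact hQ)
    · refine Or.inr (Or.inl ⟨_, ⟨A', B, C, hA', hB, hC, h1, h2, h3, rfl⟩, fun k hk => ?_⟩)
      rw [← hS]
      have sub : ∀ k ∈ K, k • fixPts F V A ⊆ fixPts F V A := by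
        rintro k hk _ ⟨P, hP, rfl⟩
        exact perm k hk P hP
      refine (sub k hk).antisymm ?_
      have := sub k⁻¹ (K.inv_mem hk)
      rwa [Set.subset_smul_set_iff]
    · refine one R fun k hk => ?_
      have := perm k hk R (by simp [hS])
      rw [hS] at this
      rcases this with h | h
      · exact h
      -- an orthogonal point `k R` would, with all points orthogonal to `R`, lie orthogonal to
      -- the `k`-images of the points orthogonal to `R`
      · exfalso
        obtain ⟨r, hr, rfl, rr⟩ := U.exists_unit hR
        obtain ⟨u, v, f⟩ := U.exists_hyp_of_e rr
        have hu : ∀ w (hw : w ≠ 0), U.h w w = 0 → U.h w r = 0 →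
            U.perp (k • mk F w hw) (mk F r hr) := by
          intro w hw ww wr
          have := perm k hk (mk F w hw) (by rw [hS]; right; exact (U.perp_mk hw hr).2 wr)
          rw [hS] at this
          rcases this with h | h
          · exact absurd ((U.iso_smul k).2 ((U.perp_mk hw hw).2 ww)) (by rw [h]; exact hR)
          · exact h
        have e1 := hu u f.ne.1 f.uu f.ue
        have e2 := hu v f.ne.2.2 f.vv f.ve
        rw [Projectivization.smul_mk, U.perp_mk] at e1 e2 h
        have e3 := (f.map k).expand r
        rw [U.h_symm0 e1, U.h_symm0 e2, U.h_symm0 h] at e3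
        exact hr (by rw [e3]; simp)
    · refine one P fun k hk => ?_
      have := perm k hk P (by rw [hS]; exact hP)
      rw [hS] at this
      exact U.iso_unique hP ((U.iso_smul k).2 hP) this
  rcases h with h | hcomm
  · exact main h
  by_cases hirr : ∃ a ∈ A, U.Irr a
  · obtain ⟨a, ha, hi⟩ := hirr
    have hC : Subgroup.centralizer {a} ∈ U.Theta := ⟨a, hi, rfl⟩
    refine Or.inr (Or.inr ⟨_, hC, fun k hk => ?_⟩)
    refine Theta.norm_of hC (mem_cent.2 (Commute.refl a)) hi.ne_one (mem_cent.2 ?_)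
    exact hcomm a ha _ ((Subgroup.mem_normalizer_iff.1 (hK hk) a).1 ha)
  · push Not at hirr
    obtain ⟨⟨a, ha⟩, h1⟩ := Subgroup.ne_bot_iff_exists_ne_one.1 hA
    obtain ⟨P, hP⟩ := U.exists_fix_of_comm (a := a) (by simpa using h1) (hirr _ ha)
    exact main ⟨P, fun b hb => hP b (hcomm b hb _ ha)⟩

end HU
end Irreducible

/-! ### Subgroups of odd order -/

section OddOrder

open scoped LinearAlgebra.Projectivization
open Projectivization (mk)

variable {n : ℕ} {F V G : Type} [Field F] [StarRing F] [Finite F] [CharP F 2]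
  [AddCommGroup V] [Module F V] [Group G] [DistribMulAction G V] [SMulCommClass G F V]

theorem UF.sqrt' (U : UF n F) (a : F) : ∃ x : F, x * x = a := by
  have h2 := qval_even U.hn
  obtain ⟨m, hm⟩ : ∃ m, qval n = m + m := ⟨qval n / 2, by omega⟩
  refine ⟨a ^ (qval n * m), ?_⟩
  rw [← pow_add, ← mul_add, ← hm, U.pow_card]

/-- Every Artin–Schreier equation over the fixed field of the involution is solvable: the image
of `y ↦ y² + y` has index two, is stable under the involution, and an element `t + star t` lies
in it whichever coset `t` is in. -/
theorem UF.artin (U : UF n F) {k : F} (hk : star k = k) : ∃ y : F, y * y + y = k := by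
  let f : F →+ F := ⟨⟨fun y => y * y + y, by simp⟩, fun x y => by
    show (x + y) * (x + y) + (x + y) = _; grind⟩
  have hker : Nat.card f.ker = 2 := by
    have h1 : (f.ker : Set F) = {0, 1} := by
      ext y
      have : f y = y * y + y := rfl
      simp only [SetLike.mem_coe, AddMonoidHom.mem_ker, this, Set.mem_insert_iff,
        Set.mem_singleton_iff]
      constructor
      · intro h
        have : y * (y + 1) = 0 := by rw [← h]; ring
        rcases mul_eq_zero.1 this with h | h
        · exact Or.inl h
        · right; grind
      · rintro (rfl | rfl)
        · simp
        · grind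
    have h2 : Nat.card f.ker = (f.ker : Set F).ncard := rfl
    rw [h2, h1, Set.ncard_pair zero_ne_one]
  have hidx : f.range.index = 2 := by
    have h1 := f.range.index_mul_card
    have h2 := f.ker.card_mul_index
    rw [AddSubgroup.index_ker, hker] at h2
    have h3 : Nat.card f.range ≠ 0 := Nat.card_pos.ne'
    rw [← h2] at h1
    exact Nat.eq_of_mul_eq_mul_right (Nat.pos_of_ne_zero h3) h1
  obtain ⟨t, ht⟩ := U.trace_surj hk
  have hst : t ∈ f.range ↔ star t ∈ f.range := by
    have : ∀ t, t ∈ f.range → star t ∈ f.range := by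
      rintro _ ⟨y, rfl⟩
      exact ⟨star y, by show star y * star y + star y = star (y * y + y); simp⟩
    exact ⟨this t, fun h => by simpa using this _ h⟩
  have : t + star t ∈ f.range := (AddSubgroup.add_mem_iff_of_index_two hidx).2 hst
  rw [ht] at this
  exact this

theorem pow_stable {k : G} {P : ℙ F V} {S : Set (ℙ F V)} (hS : ∀ X ∈ S, k • X ∈ S) (hP : P ∈ S)
    (j : ℕ) : k ^ j • P ∈ S := by
  induction j with
  | zero => simpa using hP
  | succ j ih => rw [pow_succ', mul_smul]; exact hS _ ih

/-- A permutation of at most three points becomes trivial after taking the sixth power. -/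
theorem pow_six {k : G} {A B C P : ℙ F V} (hS : ∀ X ∈ ({A, B, C} : Set (ℙ F V)), k • X ∈
    ({A, B, C} : Set (ℙ F V))) (hP : P ∈ ({A, B, C} : Set (ℙ F V))) : k ^ 6 • P = P := by
  have h0 := hP
  have h1 := pow_stable hS hP 1
  have h2 := pow_stable hS hP 2
  have h3 := pow_stable hS hP 3
  simp only [Set.mem_insert_iff, Set.mem_singleton_iff] at h0 h1 h2 h3
  have inj : ∀ i j : ℕ, k ^ (i + j) • P = k ^ i • P → k ^ j • P = P := by
    intro i j h
    rw [pow_add, mul_smul] at h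
    exact smul_left_cancel _ h
  have key : k ^ 1 • P = P ∨ k ^ 2 • P = P ∨ k ^ 3 • P = P ∨ k ^ 2 • P = k ^ 1 • P ∨
      k ^ 3 • P = k ^ 1 • P ∨ k ^ 3 • P = k ^ 2 • P := by grind
  have fin : ∀ j : ℕ, j ∣ 6 → k ^ j • P = P → k ^ 6 • P = P := by
    rintro j ⟨m, hm⟩ h
    rw [hm, pow_mul]
    generalize k ^ j = a at *
    clear hm
    induction m with
    | zero => simp
    | succ m ih => rw [pow_succ, mul_smul, h, ih]
  rcases key with h | h | h | h | h | h
  · exact fin 1 (by norm_num) h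
  · exact fin 2 (by norm_num) h
  · exact fin 3 (by norm_num) h
  · exact fin 1 (by norm_num) (inj 1 1 h)
  · exact fin 2 (by norm_num) (inj 1 2 h)
  · exact fin 1 (by norm_num) (inj 2 1 h)

theorem pow_smul_fix {k : G} {P : ℙ F V} (h : k • P = P) (m : ℕ) : k ^ m • P = P := by
  induction m with
  | zero => simp
  | succ m ih => rw [pow_succ, mul_smul, h, ih]

theorem fix_of_pow {k : G} {P : ℙ F V} {j : ℕ} (hj : j.Coprime (orderOf k))
    (h : k ^ j • P = P) : k • P = P := by
  obtain ⟨m, hm⟩ := exists_pow_eq_self_of_coprime hj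
  rw [← hm]
  exact pow_smul_fix h m

theorem fix_of_pair {k : G} (ho : Odd (orderOf k)) {P Q : ℙ F V} (h1 : k • P = P ∨ k • P = Q)
    (h2 : k • Q = P ∨ k • Q = Q) : k • P = P := by
  refine fix_of_pow (j := 2) (Nat.coprime_two_left.2 ho) ?_
  rw [pow_two, mul_smul]
  rcases h1 with h1 | h1
  · rw [h1, h1]
  · rw [h1]
    rcases h2 with h2 | h2
    · exact h2
    · have : P = Q := smul_left_cancel k (h1.trans h2.symm)
      rw [h2, this]

namespace HU

theorem finiteV (U : HU n F V G) : Finite V := by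
  have := U.fd
  exact Module.finite_of_finite F

theorem finiteG (U : HU n F V G) : Finite G := by
  have := U.finiteV
  refine Finite.of_injective (fun (g : G) (x : V) => g • x) fun a b h => ?_
  exact U.ext_g fun x => congrFun h x

theorem Dual.commute {U : HU n F V G} {b b' : Fin 3 → V} (d : U.Dual b b') {g m : G}
    (hg : ∀ i, ∃ c : F, g • b i = c • b i) (hm : ∀ i, ∃ c : F, m • b i = c • b i) :
    Commute g m := by
  apply d.ext
  intro i
  obtain ⟨c, hc⟩ := hg i
  obtain ⟨c', hc'⟩ := hm i
  rw [mul_smul, mul_smul, hc, hc', U.act, U.act, hc, hc', smul_smul, smul_smul, mul_comm]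

theorem hyp_frame (U : HU n F V G) {R P Q : ℙ F V} (hR : ¬ U.iso R) (hP : U.iso P) (hQ : U.iso Q)
    (hne : P ≠ Q) (h1 : U.perp R P) (h2 : U.perp R Q) :
    ∃ u e v, ∃ f : U.Hyp u e v, P = mk F u f.ne.1 ∧ R = mk F e f.ne.2.1 ∧ Q = mk F v f.ne.2.2 := by
  obtain ⟨e, he, rfl, ee⟩ := U.exists_unit hR
  obtain ⟨u, hu, rfl⟩ := exists_mk P
  obtain ⟨v, hv, rfl⟩ := exists_mk Q
  have hP' : U.h u u = 0 := (U.perp_mk hu hu).1 hP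
  have hQ' : U.h v v = 0 := (U.perp_mk hv hv).1 hQ
  have h1' : U.h e u = 0 := (U.perp_mk he hu).1 h1
  have h2' : U.h e v = 0 := (U.perp_mk he hv).1 h2
  have uv : U.h u v ≠ 0 := fun h => hne
    (U.iso_unique hQ hP ((U.perp_mk hu hv).2 h))
  have c0 : star (U.h u v)⁻¹ ≠ 0 := by simpa using uv
  have f : U.Hyp u e (star (U.h u v)⁻¹ • v) := by
    refine ⟨hP', ?_, ee, ?_, U.h_symm0 h1', ?_⟩
    · rw [U.h_smul, U.smul_h, hQ']; simp
    · rw [U.smul_h, star_star, inv_mul_cancel₀ uv]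
    · rw [U.smul_h, h2', mul_zero]
  refine ⟨u, e, _, f, rfl, rfl, ?_⟩
  rw [Projectivization.mk_eq_mk_iff']
  exact ⟨(star (U.h u v)⁻¹)⁻¹, inv_smul_smul₀ c0 v⟩

theorem tri_frame (U : HU n F V G) {A B C : ℙ F V} (hA : ¬ U.iso A) (hB : ¬ U.iso B)
    (hC : ¬ U.iso C) (h1 : U.perp A B) (h2 : U.perp A C) (h3 : U.perp B C) :
    ∃ a b c, ∃ f : U.Orth a b c, A = mk F a f.ne.1 ∧ B = mk F b f.ne.2.1 ∧ C = mk F c f.ne.2.2 := by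
  obtain ⟨a, ha, rfl, aa⟩ := U.exists_unit hA
  obtain ⟨b, hb, rfl, bb⟩ := U.exists_unit hB
  obtain ⟨c, hc, rfl, cc⟩ := U.exists_unit hC
  exact ⟨a, b, c, ⟨aa, bb, cc, (U.perp_mk ha hb).1 h1, (U.perp_mk ha hc).1 h2,
    (U.perp_mk hb hc).1 h3⟩, rfl, rfl, rfl⟩

theorem Hyp.commute {U : HU n F V G} {u e v : V} (f : U.Hyp u e v) {g m : G}
    (hg : ∀ P ∈ ({Projectivization.mk F u f.ne.1, Projectivization.mk F e f.ne.2.1,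
      Projectivization.mk F v f.ne.2.2} : Set (ℙ F V)), g • P = P)
    (hm : ∀ P ∈ ({Projectivization.mk F u f.ne.1, Projectivization.mk F e f.ne.2.1,
      Projectivization.mk F v f.ne.2.2} : Set (ℙ F V)), m • P = P) :
    Commute g m := by
  have g1 := (smul_mk_eq g f.ne.1).1 (hg _ (by simp))
  have g2 := (smul_mk_eq g f.ne.2.1).1 (hg _ (by simp))
  have g3 := (smul_mk_eq g f.ne.2.2).1 (hg _ (by simp))
  have m1 := (smul_mk_eq m f.ne.1).1 (hm _ (by simp))
  have m2 := (smul_mk_eq m f.ne.2.1).1 (hm _ (by simp))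
  have m3 := (smul_mk_eq m f.ne.2.2).1 (hm _ (by simp))
  exact f.dual.commute (by rw [Fin.forall_fin_succ, Fin.forall_fin_two]; exact ⟨g1, g2, g3⟩)
    (by rw [Fin.forall_fin_succ, Fin.forall_fin_two]; exact ⟨m1, m2, m3⟩)

theorem Orth.commute {U : HU n F V G} {u e v : V} (f : U.Orth u e v) {g m : G}
    (hg : ∀ P ∈ ({Projectivization.mk F u f.ne.1, Projectivization.mk F e f.ne.2.1,
      Projectivization.mk F v f.ne.2.2} : Set (ℙ F V)), g • P = P)
    (hm : ∀ P ∈ ({Projectivization.mk F u f.ne.1, Projectivization.mk F e f.ne.2.1,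
      Projectivization.mk F v f.ne.2.2} : Set (ℙ F V)), m • P = P) :
    Commute g m := by
  have g1 := (smul_mk_eq g f.ne.1).1 (hg _ (by simp))
  have g2 := (smul_mk_eq g f.ne.2.1).1 (hg _ (by simp))
  have g3 := (smul_mk_eq g f.ne.2.2).1 (hg _ (by simp))
  have m1 := (smul_mk_eq m f.ne.1).1 (hm _ (by simp))
  have m2 := (smul_mk_eq m f.ne.2.1).1 (hm _ (by simp))
  have m3 := (smul_mk_eq m f.ne.2.2).1 (hm _ (by simp))
  exact f.dual.commute (by rw [Fin.forall_fin_succ, Fin.forall_fin_two]; exact ⟨g1, g2, g3⟩)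
    (by rw [Fin.forall_fin_succ, Fin.forall_fin_two]; exact ⟨m1, m2, m3⟩)

/-- An eigenvalue of a unitary map on a nonisotropic eigenvector has norm one. -/
theorem eig_norm (U : HU n F V G) {g : G} {a : V} {c : F} (aa : U.h a a = 1)
    (h : g • a = c • a) : c * star c = 1 := by
  have := U.inv g a a
  rw [h, U.h_smul, U.smul_h, aa, mul_one] at this
  exact this

/-- An element of order prime to `6` over its power, diagonal in an orthonormal frame: elements of
order `2` or `3` (more generally with trivial twelfth power) fixing the three vertices of a
triangle are trivial. -/
theorem Orth.pow_eq_one {U : HU n F V G} {a b c : V} (f : U.Orth a b c) {g : G} {x y z : F}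
    (h1 : g • a = x • a) (h2 : g • b = y • b) (h3 : g • c = z • c) (h12 : g ^ 12 = 1) : g = 1 := by
  have pw : ∀ (m : ℕ) (w : V) (t : F), g • w = t • w → g ^ m • w = t ^ m • w := by
    intro m w t h
    induction m with
    | zero => simp
    | succ m ih => rw [pow_succ, mul_smul, h, U.act, ih, smul_smul, pow_succ, mul_comm]
  have one : ∀ (w : V) (t : F), U.h w w = 1 → g • w = t • w → t = 1 := by
    intro w t ww h
    refine U.uf.norm_one_pow (U.eig_norm ww h) ?_
    have h4 := pw 12 w t h
    rw [h12, one_smul] at h4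
    have := congrArg (fun v => U.h v w) h4
    simp only [U.h_smul, ww, mul_one] at this
    exact this.symm
  apply f.ext
  · rw [h1, one a x f.aa h1]; simp
  · rw [h2, one b y f.bb h2]; simp
  · rw [h3, one c z f.cc h3]; simp

/-- A group of odd order fixing an isotropic point fixes a point not orthogonal to it (complete
reducibility, by averaging). -/
theorem maschke (U : HU n F V G) {H : Subgroup G} (ho : Odd (Nat.card H)) {P : ℙ F V}
    (hP : P ∈ fixPts F V H) : ∃ Q ∈ fixPts F V H, ¬ U.perp Q P := by
  have := U.finiteG
  have := Fintype.ofFinite H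
  obtain ⟨u, hu, rfl⟩ := exists_mk P
  obtain ⟨y, hy⟩ := U.exists_h_one hu
  have yu := U.h_symm1 hy
  have hl : ∀ g ∈ H, ∃ l : F, l ≠ 0 ∧ ∀ x, U.h (g • x) u = l * U.h x u := by
    intro g hg
    obtain ⟨l, hl⟩ := (smul_mk_eq g⁻¹ hu).1 (hP _ (H.inv_mem hg))
    refine ⟨star l, ?_, fun x => ?_⟩
    · rintro h
      rw [star_eq_zero] at h
      rw [h, zero_smul, smul_eq_zero_iff_eq] at hl
      exact hu hl
    · rw [U.h_inv', hl, U.smul_h]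
  have nz : ∀ k : H, U.h ((k : G) • y) u ≠ 0 := by
    intro k
    obtain ⟨l, l0, hl⟩ := hl k k.2
    rw [hl, yu, mul_one]; exact l0
  let w := ∑ k : H, (U.h ((k : G) • y) u)⁻¹ • ((k : G) • y)
  have hw : U.h w u = 1 := by
    have : U.h w u = ∑ k : H, (1 : F) := by
      let f : V →+ F := ⟨⟨fun x => U.h x u, U.zero_h u⟩, fun x y => U.h_add x y u⟩
      refine (map_sum f _ _).trans (Finset.sum_congr rfl fun k _ => ?_)
      show U.h (_ • _) u = 1
      rw [U.h_smul, inv_mul_cancel₀ (nz k)]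
    rw [this, Finset.sum_const, Finset.card_univ, ← Nat.card_eq_fintype_card]
    obtain ⟨r, hr⟩ := ho
    rw [hr, nsmul_eq_mul]; push_cast; rw [show (2 : F) = 0 from CharTwo.two_eq_zero]; ring
  have w0 : w ≠ 0 := by
    intro h0; rw [h0, U.zero_h] at hw; exact zero_ne_one hw
  refine ⟨mk F w w0, fun g hg => (smul_mk_eq g w0).2 ?_, ?_⟩
  · obtain ⟨l, l0, hl⟩ := hl g hg
    refine ⟨l, ?_⟩
    simp only [w]
    rw [Finset.smul_sum, Finset.smul_sum]
    rw [← Equiv.sum_comp (Equiv.mulLeft (⟨g, hg⟩ : H))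
      (fun k : H => l • (U.h ((k : G) • y) u)⁻¹ • ((k : G) • y))]
    refine Finset.sum_congr rfl fun k _ => ?_
    simp only [Equiv.coe_mulLeft, Subgroup.coe_mul]
    rw [U.act, ← mul_smul, mul_smul g, hl, mul_inv, mul_smul l⁻¹, smul_inv_smul₀ l0]
  · rw [U.perp_mk, hw]; exact one_ne_zero

/-- Every element fixing a nonisotropic point fixes a point orthogonal to it: a unitary map of a
hyperbolic line always has an eigenvector, its characteristic equation being of Artin–Schreier
type over the fixed field of the involution. -/
theorem line_fix (U : HU n F V G) {g : G} {R : ℙ F V} (hR : ¬ U.iso R) (h : g • R = R) :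
    ∃ Q : ℙ F V, g • Q = Q ∧ U.perp Q R := by
  obtain ⟨a, ha, rfl, aa⟩ := U.exists_unit hR
  obtain ⟨l, hl⟩ := (smul_mk_eq g ha).1 h
  obtain ⟨b, c, f⟩ := U.exists_orth_of_a aa
  have hN := U.eig_norm aa hl
  have l0 : l ≠ 0 := left_ne_zero_of_mul_eq_one hN
  have mv : ∀ x : V, U.h x a = 0 → U.h (g • x) a = 0 := by
    intro x hx
    have := U.inv g x a
    rw [hl, U.smul_h, hx] at this
    simpa [l0] using this
  have eb := f.expand (g • b)
  have ec := f.expand (g • c)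
  rw [mv b f.ba, zero_smul, zero_add] at eb
  rw [mv c f.ca, zero_smul, zero_add] at ec
  set p := U.h (g • b) b
  set q := U.h (g • b) c
  set r := U.h (g • c) b
  set s := U.h (g • c) c
  have o1 : p * star p + q * star q = 1 := by
    have := U.inv g b b
    rw [eb] at this
    simpa [U.h_add, U.add_h, U.h_smul, U.smul_h, f.aa, f.bb, f.cc, f.bc, f.cb] using this
  have o2 : r * star r + s * star s = 1 := by
    have := U.inv g c c
    rw [ec] at this
    simpa [U.h_add, U.add_h, U.h_smul, U.smul_h, f.aa, f.bb, f.cc, f.bc, f.cb] using this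
  have o3 : p * star r + q * star s = 0 := by
    have := U.inv g b c
    rw [eb, ec] at this
    simpa [U.h_add, U.add_h, U.h_smul, U.smul_h, f.aa, f.bb, f.cc, f.bc, f.cb] using this
  have key : ∃ x y : F, x • b + y • c ≠ 0 ∧ ∃ t : F, g • (x • b + y • c) = t • (x • b + y • c) := by
    by_cases r0 : r = 0
    · exact ⟨0, 1, by simpa using f.ne.2.2, s, by simp [ec, r0]⟩
    have fin : ∀ x : F, r * (x * x) + (p + s) * x + q = 0 → ∃ x y : F, x • b + y • c ≠ 0 ∧
        ∃ t : F, g • (x • b + y • c) = t • (x • b + y • c) := by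
      intro x hx
      refine ⟨1, x, fun h0 => ?_, p + x * r, ?_⟩
      · have := congrArg (fun w => U.h w b) h0
        simp [U.h_add, U.h_smul, f.bb, f.cb, U.zero_h] at this
      · have hq : q + x * s = (p + x * r) * x := by grind
        rw [smul_add, U.act, U.act, eb, ec]
        have : (1 : F) • (p • b + q • c) + x • (r • b + s • c) =
          (p + x * r) • b + (q + x * s) • c := by module
        rw [this, hq]; module
    by_cases q0 : q = 0
    · exact ⟨1, 0, by simpa using f.ne.2.1, p, by simp [eb, q0]⟩
    by_cases t0 : p + s = 0
    · obtain ⟨x, hx⟩ := U.uf.sqrt' (q / r)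
      refine fin x ?_
      rw [hx, t0]; field_simp; grind
    obtain ⟨d, hd⟩ : ∃ d, r = d * star q := ⟨r / star q, by
      rw [div_mul_cancel₀]; simpa using q0⟩
    have sq0 : star q ≠ 0 := by simpa using q0
    have o4 : star p * r + star q * s = 0 := by simpa using congrArg star o3
    have hs : s = d * star p := by
      apply mul_left_cancel₀ sq0
      grind
    have dd : d * star d = 1 := by
      rw [hs, hd] at o2
      simp only [star_mul, star_star] at o2
      linear_combination o2 - (d * star d) * o1
    have d0 : star d ≠ 0 := right_ne_zero_of_mul_eq_one dd
    have hst : star (p + s) = star d * (p + s) := by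
      rw [hs]; simp only [star_add, star_mul, star_star]; linear_combination -star p * dd
    have hqr : star (q * r) * d = star d * (q * r) := by
      rw [hd]; simp only [star_mul, star_star]; ring
    have hk : star (q * r / ((p + s) * (p + s))) = q * r / ((p + s) * (p + s)) := by
      rw [star_div₀, star_mul (p + s), hst]
      rw [div_eq_div_iff (mul_ne_zero (mul_ne_zero d0 t0) (mul_ne_zero d0 t0))
        (mul_ne_zero t0 t0)]
      linear_combination (star (q * r) * (p + s) * (p + s)) * (-dd) +
        (p + s) * (p + s) * star d * hqr
    obtain ⟨y, hy⟩ := U.uf.artin hk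
    refine fin ((p + s) / r * y) ?_
    have : r * ((p + s) / r * y * ((p + s) / r * y)) + (p + s) * ((p + s) / r * y) =
        (p + s) * (p + s) / r * (y * y + y) := by field_simp
    rw [this, hy]; field_simp; grind
  obtain ⟨x, y, h0, t, ht⟩ := key
  refine ⟨mk F _ h0, (smul_mk_eq g h0).2 ⟨t, ht⟩, (U.perp_mk h0 ha).2 ?_⟩
  rw [U.h_add, U.h_smul, U.h_smul, f.ba, f.ca]; simp

end HU
end OddOrder

/-! ### Normal subgroups of odd order -/

section OddNormal

open scoped LinearAlgebra.Projectivization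
open Projectivization (mk)

variable {n : ℕ} {F V G : Type} [Field F] [StarRing F] [Finite F] [CharP F 2]
  [AddCommGroup V] [Module F V] [Group G] [DistribMulAction G V] [SMulCommClass G F V]

theorem mem_fix_zpowers {g : G} {P : ℙ F V} :
    P ∈ fixPts F V (Subgroup.zpowers g) ↔ g • P = P := by
  refine ⟨fun h => h g (Subgroup.mem_zpowers g), fun h a ha => ?_⟩
  obtain ⟨k, rfl⟩ := Subgroup.mem_zpowers_iff.1 ha
  have : Subgroup.zpowers g ≤ MulAction.stabilizer G P := by
    rw [Subgroup.zpowers_le]; exact h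
  exact this ha

/-- In a nontrivial quotient of a finite `p`-group there is a nontrivial central element. -/
theorem exists_central_mod {P : Type} [Group P] [Finite P] {p : ℕ} [Fact p.Prime]
    (hP : IsPGroup p P) (N : Subgroup P) [N.Normal] (hN : N ≠ ⊤) :
    ∃ z ∉ N, ∀ k : P, z⁻¹ * (k⁻¹ * z * k) ∈ N := by
  have : Nontrivial (P ⧸ N) := by
    by_contra h
    rw [not_nontrivial_iff_subsingleton] at h
    exact hN (QuotientGroup.subsingleton_iff.1 h)
  have hc := (hP.to_quotient N).center_nontrivial
  obtain ⟨⟨c, hc⟩, h1⟩ := exists_ne (1 : Subgroup.center (P ⧸ N))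
  obtain ⟨z, rfl⟩ := QuotientGroup.mk_surjective c
  refine ⟨z, fun hz => h1 ?_, fun k => ?_⟩
  · apply Subtype.ext
    exact (QuotientGroup.eq_one_iff z).2 hz
  · rw [← QuotientGroup.eq_one_iff]
    have := Subgroup.mem_center_iff.1 hc (k : P ⧸ N)
    simp only [QuotientGroup.mk_mul, QuotientGroup.mk_inv]
    rw [mul_assoc, ← this]; group

namespace HU

/-- The completely reducible possibilities for a set of fixed points. -/
inductive Split (U : HU n F V G) (S : Set (ℙ F V)) : Prop
  | hyp (R P Q : ℙ F V) (hR : ¬ U.iso R) (hP : U.iso P) (hQ : U.iso Q) (hne : P ≠ Q)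
      (h1 : U.perp R P) (h2 : U.perp R Q) (hS : S = {R, P, Q})
  | tri (A B C : ℙ F V) (hA : ¬ U.iso A) (hB : ¬ U.iso B) (hC : ¬ U.iso C) (hAB : U.perp A B)
      (hAC : U.perp A C) (hBC : U.perp B C) (hS : S = {A, B, C})
  | hom (R : ℙ F V) (hR : ¬ U.iso R) (hS : S = {X | X = R ∨ U.perp X R})

theorem odd_type (U : HU n F V G) {H : Subgroup G} (hH : H ≠ ⊥) (ho : Odd (Nat.card H))
    (hne : (fixPts F V H).Nonempty) :
    (∃ R, ¬ U.iso R ∧ fixPts F V H = {R}) ∨ U.Split (fixPts F V H) := by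
  cases U.fixType hH hne with
  | iso P hP hS =>
    obtain ⟨Q, hQ, h⟩ := U.maschke ho (P := P) (by rw [hS]; rfl)
    rw [hS] at hQ
    exact absurd (hQ ▸ hP) h
  | flag P R hP hR hPR hS =>
    obtain ⟨Q, hQ, h⟩ := U.maschke ho (P := P) (by rw [hS]; simp)
    rw [hS] at hQ
    rcases hQ with rfl | rfl
    · exact absurd hP h
    · exact absurd (U.perp_comm.1 hPR) h
  | trans P hP hS =>
    obtain ⟨Q, hQ, h⟩ := U.maschke ho (P := P) (by rw [hS]; exact hP)
    rw [hS] at hQ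
    exact absurd hQ h
  | non R hR hS => exact .inl ⟨R, hR, hS⟩
  | hyp R P Q hR hP hQ hne h1 h2 hS => exact .inr (.hyp R P Q hR hP hQ hne h1 h2 hS)
  | tri A B C hA hB hC hAB hAC hBC hS => exact .inr (.tri A B C hA hB hC hAB hAC hBC hS)
  | hom R hR hS => exact .inr (.hom R hR hS)

/-- An element of odd order fixing a nonisotropic point, and acting nontrivially on the orthogonal
line, has exactly two fixed points on that line. -/
theorem two_fix (U : HU n F V G) {z : G} (ho : Odd (orderOf z)) {R X : ℙ F V} (hR : ¬ U.iso R)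
    (h : z • R = R) (hX : U.perp X R) (hz : z • X ≠ X) :
    ∃ S T, z • S = S ∧ U.perp S R ∧ z • T = T ∧ U.perp T R ∧
      ∀ Y, U.perp Y R → z • Y = Y → Y = S ∨ Y = T := by
  have z1 : Subgroup.zpowers z ≠ ⊥ := by
    rw [Ne, Subgroup.zpowers_eq_bot]; rintro rfl; exact hz (one_smul _ _)
  have hRm : R ∈ fixPts F V (Subgroup.zpowers z) := mem_fix_zpowers.2 h
  obtain ⟨L, hL, hLR⟩ := U.line_fix hR h
  have hLm : L ∈ fixPts F V (Subgroup.zpowers z) := mem_fix_zpowers.2 hL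
  have RL : R ≠ L := by rintro rfl; exact hR hLR
  simp only [← mem_fix_zpowers (g := z)]
  rw [Ne, ← mem_fix_zpowers (g := z)] at hz
  rcases U.odd_type z1 (by rwa [Nat.card_zpowers]) ⟨R, hRm⟩ with ⟨A, hA, hS⟩ | hsp
  · rw [hS] at hRm hLm
    exact absurd (hRm.trans hLm.symm) RL
  · cases hsp with
    | hyp A P Q hA hP hQ hne h1 h2 hS =>
      rw [hS] at hRm ⊢
      rcases hRm with rfl | rfl | rfl
      · refine ⟨P, Q, by simp, U.perp_comm.1 h1, by simp, U.perp_comm.1 h2, ?_⟩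
        rintro Y hY (rfl | hY')
        · exact absurd hY hA
        · exact hY'
      · exact absurd hP hR
      · exact absurd hQ hR
    | tri A B C hA hB hC hAB hAC hBC hS =>
      rw [hS] at hRm ⊢
      rcases hRm with rfl | rfl | rfl
      · refine ⟨B, C, by simp, U.perp_comm.1 hAB, by simp, U.perp_comm.1 hAC, ?_⟩
        rintro Y hY (rfl | hY')
        · exact absurd hY hA
        · exact hY'
      · refine ⟨A, C, by simp, hAB, by simp, U.perp_comm.1 hBC, ?_⟩
        rintro Y hY (rfl | rfl | hY')
        · exact .inl rfl
        · exact absurd hY hB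
        · exact .inr hY'
      · refine ⟨A, B, by simp, hAC, by simp, hBC, ?_⟩
        rintro Y hY (rfl | rfl | rfl)
        · exact .inl rfl
        · exact .inr rfl
        · exact absurd hY hC
    | hom A hA hS =>
      rw [hS] at hRm hz hLm ⊢
      rcases hRm with rfl | hRA
      · exact absurd (.inr hX) hz
      · have hAR : A ≠ R := by rintro rfl; exact hA hRA
        obtain ⟨Z, z1, z2, z3⟩ := U.pole hAR
        refine ⟨A, Z, .inl rfl, U.perp_comm.1 hRA, .inr (U.perp_comm.1 z2), U.perp_comm.1 z1, ?_⟩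
        rintro Y hY (rfl | hYA)
        · exact .inl rfl
        · exact .inr (z3 Y (U.perp_comm.1 hY) (U.perp_comm.1 hYA))

/-- A nontrivial `p`-group, `p` odd, fixing a point acts completely reducibly into lines. -/
theorem pgroup_split (U : HU n F V G) {Q : Subgroup G} {p : ℕ} [Fact p.Prime] (hp : Odd p)
    (hQ : IsPGroup p Q) (h1 : Q ≠ ⊥) (hne : (fixPts F V Q).Nonempty) :
    U.Split (fixPts F V Q) := by
  have := U.finiteG
  have hoQ : Odd (Nat.card Q) := by
    obtain ⟨k, hk⟩ := IsPGroup.iff_card.1 hQ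
    rw [hk]; exact hp.pow
  have hodd : ∀ k ∈ Q, Odd (orderOf k) := fun k hk => by
    have : orderOf k ∣ Nat.card Q := Subgroup.orderOf_dvd_natCard Q hk
    exact hoQ.of_dvd_nat this
  rcases U.odd_type h1 hoQ hne with ⟨R, hR, hS⟩ | h
  swap
  · exact h
  exfalso
  have hRm : R ∈ fixPts F V Q := by rw [hS]; rfl
  let N : Subgroup Q :=
    { carrier := {d | ∀ X, U.perp X R → (d : G) • X = X}
      one_mem' := fun X _ => one_smul G X
      mul_mem' := fun {a b} ha hb X hX => by
        show (a * b : G) • X = X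
        rw [mul_smul, hb X hX, ha X hX]
      inv_mem' := fun {a} ha X hX => by
        show (a : G)⁻¹ • X = X
        rw [inv_smul_eq_iff, ha X hX] }
  have hperm : ∀ k : Q, ∀ X, U.perp X R → U.perp ((k : G) • X) R := fun k X hX => by
    have := (U.perp_smul (k : G)).2 hX
    rwa [hRm k k.2] at this
  have hN : N.Normal := ⟨fun d hd k X hX => by
    have := hd ((k : G)⁻¹ • X) (by simpa using hperm k⁻¹ X hX)
    show (k * d * (k : G)⁻¹) • X = X
    rw [mul_smul, mul_smul, this, smul_inv_smul]⟩
  obtain ⟨e, he, rfl, ee⟩ := U.exists_unit hR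
  obtain ⟨u, v, f⟩ := U.exists_hyp_of_e ee
  have hu : U.perp (mk F u f.ne.1) (mk F e he) := (U.perp_mk _ _).2 f.ue
  have hNtop : N ≠ ⊤ := by
    intro h
    have : mk F u f.ne.1 ∈ fixPts F V Q := fun k hk => by
      have : (⟨k, hk⟩ : Q) ∈ N := by rw [h]; trivial
      exact this _ hu
    rw [hS] at this
    rw [this] at hu
    exact hR hu
  obtain ⟨z, hz, hcen⟩ := exists_central_mod hQ N hNtop
  have hz' : ∃ X, U.perp X (mk F e he) ∧ (z : G) • X ≠ X := by
    by_contra! hc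
    exact hz hc
  obtain ⟨X, hX, hzX⟩ := hz'
  obtain ⟨S, T, hS1, hS2, hT1, hT2, hall⟩ :=
    U.two_fix (hodd z z.2) hR (hRm z z.2) hX hzX
  have key : ∀ k : Q, ∀ Y, (z : G) • Y = Y → U.perp Y (mk F e he) →
      (k : G) • Y = S ∨ (k : G) • Y = T := by
    intro k Y hY hYe
    refine hall _ (hperm k Y hYe) ?_
    have h1 : ((z : G)⁻¹ * ((k : G)⁻¹ * z * k)) • Y = Y := hcen k Y hYe
    have h2 : (z : G) • (k : G) • Y = (k : G) • (z : G) • ((z : G)⁻¹ * ((k : G)⁻¹ * z * k)) • Y := by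
      simp only [← mul_smul]; group
    rw [h2, h1, hY]
  have hSm : S ∈ fixPts F V Q := fun k hk =>
    fix_of_pair (hodd k hk) (key ⟨k, hk⟩ S hS1 hS2) (key ⟨k, hk⟩ T hT1 hT2)
  rw [hS] at hSm
  rw [hSm] at hS2
  exact hR hS2

/-- The distinguished point of a homology type set is determined by the set. -/
theorem hom_unique (U : HU n F V G) {m : G} {R : ℙ F V} (hR : ¬ U.iso R)
    (h : ∀ X, (X = R ∨ U.perp X R) → (m • X = R ∨ U.perp (m • X) R)) : m • R = R := by
  obtain ⟨e, he, rfl, ee⟩ := U.exists_unit hR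
  obtain ⟨u, v, f⟩ := U.exists_hyp_of_e ee
  have hu : U.iso (mk F u f.ne.1) := (U.perp_mk _ _).2 f.uu
  have hv : U.iso (mk F v f.ne.2.2) := (U.perp_mk _ _).2 f.vv
  have mu : U.perp (mk F u f.ne.1) (mk F e he) := (U.perp_mk _ _).2 f.ue
  have mv : U.perp (mk F v f.ne.2.2) (mk F e he) := (U.perp_mk _ _).2 f.ve
  have step : ∀ X, U.iso X → U.perp X (mk F e he) → U.perp (m • X) (mk F e he) := by
    intro X hX hXe
    rcases h X (.inr hXe) with h | h
    · rw [← h] at hR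
      exact absurd ((U.iso_smul m).2 hX) hR
    · exact h
  refine U.pole_unique (X := m • mk F u f.ne.1) (Y := m • mk F v f.ne.2.2) ?_
    ((U.perp_smul m).2 mu) ((U.perp_smul m).2 mv) (step _ hu mu) (step _ hv mv)
  intro h
  have := smul_left_cancel m h
  have h2 : U.perp (mk F v f.ne.2.2) (mk F u f.ne.1) := by rw [this]; exact hu
  rw [U.perp_mk, f.vu] at h2
  exact one_ne_zero h2

/-- A group element acting as a scalar on `R` and on the line orthogonal to `R` commutes with every
element fixing `R`. -/
theorem hom_commute (U : HU n F V G) {R : ℙ F V} (hR : ¬ U.iso R) {k m : G} (hm : m • R = R)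
    (hk : ∀ X, (X = R ∨ U.perp X R) → k • X = X) : Commute k m := by
  obtain ⟨e, he, rfl, ee⟩ := U.exists_unit hR
  obtain ⟨u, v, f⟩ := U.exists_hyp_of_e ee
  have huv : u + v ≠ 0 := by
    intro h
    have := congrArg (fun x => U.h x u) h
    simp [U.h_add, f.uu, f.vu, U.zero_h] at this
  have dist : ∀ {x y : V} (hx : x ≠ 0) (hy : y ≠ 0) (w : V), U.h x w = 0 → U.h y w ≠ 0 →
      mk F y hy ≠ mk F x hx := by
    intro x y hx hy w h1 h2 h
    obtain ⟨c, hc⟩ := (Projectivization.mk_eq_mk_iff' F _ _ hy hx).1 h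
    rw [← hc, U.h_smul, h1, mul_zero] at h2
    exact h2 rfl
  have pu : U.perp (mk F u f.ne.1) (mk F e he) := (U.perp_mk _ _).2 f.ue
  have pv : U.perp (mk F v f.ne.2.2) (mk F e he) := (U.perp_mk _ _).2 f.ve
  have pw : U.perp (mk F (u + v) huv) (mk F e he) := (U.perp_mk _ _).2 (by
    rw [U.h_add, f.ue, f.ve, add_zero])
  obtain ⟨a, ha⟩ := U.line_scalar he
    (dist f.ne.1 f.ne.2.2 u f.uu (by rw [f.vu]; exact one_ne_zero))
    (dist f.ne.1 huv u f.uu (by rw [U.h_add, f.uu, f.vu, zero_add]; exact one_ne_zero))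
    (dist f.ne.2.2 huv v f.vv (by rw [U.h_add, f.uv, f.vv, add_zero]; exact one_ne_zero))
    pu pv pw (hk _ (.inr pu)) (hk _ (.inr pv)) (hk _ (.inr pw))
  obtain ⟨c, hc⟩ := (smul_mk_eq m he).1 hm
  obtain ⟨c', hc'⟩ := (smul_mk_eq k he).1 (hk _ (.inl rfl))
  have c0 : star c ≠ 0 := right_ne_zero_of_mul_eq_one (U.eig_norm ee hc)
  have mp : ∀ x, U.h x e = 0 → U.h (m • x) e = 0 := by
    intro x hx
    have := U.inv m x e
    rw [hc, U.smul_h, hx] at this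
    exact (mul_eq_zero.1 this).resolve_left c0
  refine f.dual.ext fun i => ?_
  have hp : ∀ x, U.h x e = 0 → (k * m) • x = (m * k) • x := by
    intro x hx
    rw [mul_smul, mul_smul, ha x hx, ha _ (mp x hx), U.act]
  fin_cases i
  · exact hp u f.ue
  · show (k * m) • e = (m * k) • e
    rw [mul_smul, mul_smul, hc, hc', U.act, U.act, hc, hc', smul_smul, smul_smul, mul_comm]
  · exact hp v f.ve

/-- An element of odd order normalizing a nontrivial `p`-subgroup, `p` odd, centralizes it, provided
its order is prime to `3` or `p = 3`. -/
theorem norm_cent (U : HU n F V G) {Q : Subgroup G} {p : ℕ} [Fact p.Prime] (hp : Odd p)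
    (hQ : IsPGroup p Q) {m : G} (hm : m ∈ Subgroup.normalizer (Q : Set G)) (ho : Odd (orderOf m))
    (h3 : 3 ∣ orderOf m → p = 3) : ∀ k ∈ Q, Commute k m := by
  have := U.finiteG
  by_cases h1 : Q = ⊥
  · intro k hk
    rw [h1, Subgroup.mem_bot] at hk
    rw [hk]; exact Commute.one_left m
  have hpQ : p ∣ Nat.card Q := by
    obtain ⟨k, hk⟩ := IsPGroup.iff_card.1 hQ
    rw [hk]
    refine dvd_pow_self p ?_
    rintro rfl
    rw [pow_zero] at hk
    exact h1 (Subgroup.card_eq_one.1 hk)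
  have hNt : Nontrivial Q := (Subgroup.nontrivial_iff_ne_bot Q).2 h1
  have := hQ.center_nontrivial
  obtain ⟨j, j1, hj⟩ := (hQ.to_subgroup (Subgroup.center Q)).nontrivial_iff_card.1 this
  obtain ⟨z, hz⟩ := exists_prime_orderOf_dvd_card' (G := Subgroup.center Q) p
    (by rw [hj]; exact dvd_pow_self p j1.ne')
  have hzo : orderOf ((z : Q) : G) = p := by rw [Subgroup.orderOf_coe, Subgroup.orderOf_coe, hz]
  have hzc : ∀ k ∈ Q, Commute k ((z : Q) : G) := fun k hk => by
    have := Subgroup.mem_center_iff.1 z.2 ⟨k, hk⟩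
    exact congrArg Subtype.val this
  have hzQ : ((z : Q) : G) ∈ Q := (z : Q).2
  have hz1 : ((z : Q) : G) ≠ 1 := fun h => by
    rw [h, orderOf_one] at hzo
    exact (Fact.out : p.Prime).one_lt.ne hzo
  generalize ((z : Q) : G) = x at *
  clear hz hj j1
  by_cases hirr : U.Irr x
  · have hC : Subgroup.centralizer {x} ∈ U.Theta := ⟨x, hirr, rfl⟩
    have hQC : ∀ k ∈ Q, k ∈ Subgroup.centralizer {x} := fun k hk => mem_cent.2 (hzc k hk).symm
    have hmC := Theta.norm_of hC (hQC x hzQ) hz1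
      (hQC _ ((Subgroup.mem_normalizer_iff.1 hm x).1 hzQ))
    have hm3 := Theta.cube hC hmC
    have n3 : ¬ 3 ∣ orderOf m := fun h => by
      have hp3 := h3 h
      refine U.not_irr_three (g := x) ?_ hirr
      rw [← pow_orderOf_eq_one x, hzo, hp3, pow_three, mul_assoc]
    obtain ⟨t, ht⟩ := exists_pow_eq_self_of_coprime ((Nat.Prime.coprime_iff_not_dvd Nat.prime_three).2 n3)
    have : m ∈ Subgroup.centralizer {x} := by rw [← ht]; exact Subgroup.pow_mem _ hm3 t
    exact fun k hk => Theta.comm hC (hQC k hk) this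
  obtain ⟨P, hP⟩ := U.exists_fix_of_comm hz1 hirr
  have hPm : P ∈ fixPts F V Q := fun k hk => hP k (hzc k hk)
  have perm : ∀ {X}, X ∈ fixPts F V Q → m • X ∈ fixPts F V Q := fun hX =>
    fixPts_perm (K := Subgroup.normalizer (Q : Set G)) le_rfl hm hX
  cases U.pgroup_split hp hQ h1 ⟨P, hPm⟩ with
  | hyp R A B hR hA hB hne hRA hRB hS =>
    obtain ⟨u, e, v, f, rfl, rfl, rfl⟩ := U.hyp_frame hR hA hB hne hRA hRB
    have pe := perm (X := mk F e f.ne.2.1) (by rw [hS]; simp)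
    have pu := perm (X := mk F u f.ne.1) (by rw [hS]; simp)
    have pv := perm (X := mk F v f.ne.2.2) (by rw [hS]; simp)
    rw [hS] at pe pu pv
    have iu := (U.iso_smul m).2 hA
    have iv := (U.iso_smul m).2 hB
    have ie := mt (U.iso_smul m).1 hR
    have me : m • mk F e f.ne.2.1 = mk F e f.ne.2.1 := by
      rcases pe with h | h | h
      · exact h
      · rw [h] at ie; exact absurd hA ie
      · rw [h] at ie; exact absurd hB ie
    have pu' : m • mk F u f.ne.1 = mk F u f.ne.1 ∨ m • mk F u f.ne.1 = mk F v f.ne.2.2 := by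
      rcases pu with h | h
      · rw [h] at iu; exact absurd iu hR
      · exact h
    have pv' : m • mk F v f.ne.2.2 = mk F u f.ne.1 ∨ m • mk F v f.ne.2.2 = mk F v f.ne.2.2 := by
      rcases pv with h | h
      · rw [h] at iv; exact absurd iv hR
      · exact h
    have mu := fix_of_pair ho pu' pv'
    have mv := fix_of_pair ho pv'.symm pu'.symm
    intro k hk
    have fk : ∀ X ∈ ({mk F u f.ne.1, mk F e f.ne.2.1, mk F v f.ne.2.2} : Set (ℙ F V)),
        k • X = X := by
      intro X hX
      have : X ∈ fixPts F V Q := by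
        rw [hS]; simp only [Set.mem_insert_iff, Set.mem_singleton_iff] at hX ⊢; tauto
      exact this k hk
    refine f.commute fk ?_
    rintro X (rfl | rfl | rfl)
    exacts [mu, me, mv]
  | tri A B C hA hB hC hAB hAC hBC hS =>
    obtain ⟨a, b, c, f, rfl, rfl, rfl⟩ := U.tri_frame hA hB hC hAB hAC hBC
    have fk : ∀ k ∈ Q, ∀ X ∈ ({mk F a f.ne.1, mk F b f.ne.2.1, mk F c f.ne.2.2} : Set (ℙ F V)),
        k • X = X := fun k hk X hX => (hS ▸ hX : X ∈ fixPts F V Q) k hk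
    have n3 : ¬ 3 ∣ orderOf m := fun h => by
      have hp3 := h3 h
      obtain ⟨_, e1⟩ := (smul_mk_eq x f.ne.1).1 (fk x hzQ _ (by simp))
      obtain ⟨_, e2⟩ := (smul_mk_eq x f.ne.2.1).1 (fk x hzQ _ (by simp))
      obtain ⟨_, e3⟩ := (smul_mk_eq x f.ne.2.2).1 (fk x hzQ _ (by simp))
      refine hz1 (f.pow_eq_one e1 e2 e3 ?_)
      exact orderOf_dvd_iff_pow_eq_one.1 (by rw [hzo, hp3]; norm_num)
    have h6 : Nat.Coprime 6 (orderOf m) := by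
      rw [show 6 = 2 * 3 from rfl]
      exact Nat.Coprime.mul_left (Nat.coprime_two_left.2 ho)
        ((Nat.Prime.coprime_iff_not_dvd Nat.prime_three).2 n3)
    rw [hS] at perm
    exact fun k hk => f.commute (fk k hk) fun X hX =>
      fix_of_pow h6 (pow_six (fun Y hY => perm hY) hX)
  | hom R hR hS =>
    rw [hS] at perm
    have mR := U.hom_unique hR fun X hX => perm hX
    exact fun k hk => U.hom_commute hR mR fun X hX => (hS ▸ hX : X ∈ fixPts F V Q) k hk

/-- Subgroups of odd order are solvable: a Sylow subgroup for the smallest prime divisor of the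
order is central in its normalizer, and Burnside's transfer theorem gives a normal complement. -/
theorem odd_solvable (U : HU n F V G) (O : Subgroup G) (ho : Odd (Nat.card O)) :
    Group.IsSolvable O := by
  have := U.finiteG
  induction hN : Nat.card O using Nat.strong_induction_on generalizing O with
  | _ N ih =>
  subst hN
  by_cases h1 : Nat.card O = 1
  · have : Subsingleton O := (Nat.card_eq_one_iff_unique.1 h1).1
    infer_instance
  have hp := Nat.minFac_prime h1
  set p := (Nat.card O).minFac with hpd
  have hpdvd : p ∣ Nat.card O := Nat.minFac_dvd _
  have hF : Fact p.Prime := ⟨hp⟩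
  have hpo : Odd p := ho.of_dvd_nat hpdvd
  obtain ⟨P⟩ : Nonempty (Sylow p O) := inferInstance
  have hPN : Subgroup.normalizer ((P : Subgroup O) : Set O) ≤
      Subgroup.centralizer ((P : Subgroup O) : Set O) := by
    intro m hm
    rw [Subgroup.mem_centralizer_iff]
    intro k hk
    have hQ : IsPGroup p ((P : Subgroup O).map O.subtype) := P.isPGroup'.map O.subtype
    have hmo : orderOf m ∣ Nat.card O := orderOf_dvd_natCard m
    have hmN : (m : G) ∈ Subgroup.normalizer (((P : Subgroup O).map O.subtype : Subgroup G) : Set G) := by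
      rw [Subgroup.mem_normalizer_iff]
      intro x
      constructor
      · rintro ⟨y, hy, rfl⟩
        exact ⟨m * y * m⁻¹, (Subgroup.mem_normalizer_iff.1 hm y).1 hy, rfl⟩
      · rintro ⟨y, hy, hxy⟩
        refine ⟨m⁻¹ * y * m, ?_, ?_⟩
        · have := (Subgroup.mem_normalizer_iff.1 (inv_mem hm) y).1 hy
          rw [inv_inv] at this
          exact this
        · have : (y : G) = m * x * (m : G)⁻¹ := hxy
          show (m : G)⁻¹ * y * m = x
          rw [this]; group
    have := U.norm_cent hpo hQ hmN (by rw [Subgroup.orderOf_coe]; exact ho.of_dvd_nat hmo)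
      (fun h => by
        rw [Subgroup.orderOf_coe] at h
        have h3 : p ≤ 3 := Nat.minFac_le_of_dvd (by norm_num) (h.trans hmo)
        have := hp.two_le
        obtain ⟨r, hr⟩ := hpo
        omega) k ⟨k, hk, rfl⟩
    exact Subtype.ext this
  have hc := MonoidHom.ker_transferSylow_isComplement' P hPN
  have hcard := hc.card_mul_card
  set K := (MonoidHom.transferSylow P hPN).ker with hK
  have hPc : p ∣ Nat.card (P : Subgroup O) := by
    have := P.dvd_card_of_dvd_card hpdvd
    exact this
  have hPpos : 0 < Nat.card (P : Subgroup O) := Nat.card_pos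
  have hKpos : 0 < Nat.card K := Nat.card_pos
  have hlt : Nat.card K < Nat.card O := by
    rw [← hcard]
    have : 2 ≤ Nat.card (P : Subgroup O) := hp.two_le.trans (Nat.le_of_dvd hPpos hPc)
    nlinarith
  have hKc : Nat.card (K.map O.subtype) = Nat.card K :=
    Nat.card_congr (K.equivMapOfInjective O.subtype O.subtype_injective).symm.toEquiv
  have hKo : Odd (Nat.card K) := ho.of_dvd_nat ⟨_, hcard.symm⟩
  have hs := ih _ (by rw [hKc]; exact hlt) (K.map O.subtype) (by rw [hKc]; exact hKo) rfl
  have hsK : Group.IsSolvable K := Group.isSolvable_of_isSolvable_injective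
    (f := (K.equivMapOfInjective O.subtype O.subtype_injective).toMonoidHom)
    (K.equivMapOfInjective O.subtype O.subtype_injective).injective
  have hsP : Group.IsSolvable (P : Subgroup O) := by
    have := P.isPGroup'.isNilpotent
    infer_instance
  exact Group.isSolvable_of_ker_le_range K.subtype (MonoidHom.transferSylow P hPN)
    (by rw [Subgroup.range_subtype])

/-- A subgroup with a nontrivial normal subgroup of odd order fixes a point or a triangle, or
normalizes a member of `Theta`. -/
theorem odd_good (U : HU n F V G) {A K : Subgroup G} (hA : A ≠ ⊥) (hAK : A ≤ K)
    (hK : K ≤ Subgroup.normalizer (A : Set G)) (ho : Odd (Nat.card A)) : U.Good K := by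
  have := U.finiteG
  have hex : ∃ c, ∃ B : Subgroup G, B ≠ ⊥ ∧ B ≤ A ∧ K ≤ Subgroup.normalizer (B : Set G) ∧
      Nat.card B = c := ⟨_, A, hA, le_rfl, hK, rfl⟩
  obtain ⟨B, hB, hBA, hKB, hc⟩ := Nat.find_spec hex
  have hmin := fun c => Nat.find_min (H := hex) (m := c)
  rw [← hc] at hmin
  have hsB := U.odd_solvable B (ho.of_dvd_nat (Subgroup.card_dvd_of_le hBA))
  have hBt : Nontrivial B := (Subgroup.nontrivial_iff_ne_bot B).2 hB
  have hlt : (⁅(⊤ : Subgroup B), ⊤⁆ : Subgroup B) < ⊤ := Group.IsSolvable.commutator_lt_of_ne_bot top_ne_bot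
  have hmap : (⁅(⊤ : Subgroup B), ⊤⁆ : Subgroup B).map B.subtype = ⁅B, B⁆ := by
    rw [Subgroup.map_commutator, ← MonoidHom.range_eq_map, Subgroup.range_subtype]
  have hle : (⁅B, B⁆ : Subgroup G) ≤ B := by
    rw [← hmap]; exact Subgroup.map_subtype_le _
  have hcomm : (⁅B, B⁆ : Subgroup G) = ⊥ := by
    by_contra hne
    refine hmin (Nat.card (⁅B, B⁆ : Subgroup G)) ?_ ⟨_, hne, hle.trans hBA, ?_, rfl⟩
    · refine lt_of_le_of_ne (Subgroup.card_le_of_le hle) fun h => hlt.ne ?_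
      have h2 : (⁅B, B⁆ : Subgroup G) = B := Subgroup.eq_of_le_of_card_ge hle h.ge
      rw [eq_top_iff]
      intro x _
      have hx : (x : G) ∈ (⁅B, B⁆ : Subgroup G) := by rw [h2]; exact x.2
      rw [← hmap] at hx
      obtain ⟨y, hy, hyx⟩ := hx
      have : y = x := Subtype.ext hyx
      rwa [← this]
    · intro k hk
      have hkB : B.map (MulAut.conj k).toMonoidHom = B := by
        ext x
        have h1 := Subgroup.mem_normalizer_iff.1 (hKB hk) (k⁻¹ * x * k)
        have h2 : k * (k⁻¹ * x * k) * k⁻¹ = x := by group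
        rw [h2] at h1
        refine Iff.trans ?_ h1
        constructor
        · rintro ⟨y, hy, rfl⟩
          have : k⁻¹ * (k * y * k⁻¹) * k = y := by group
          show k⁻¹ * (k * y * k⁻¹) * k ∈ B
          rw [this]; exact hy
        · intro h
          exact ⟨_, h, h2⟩
      have hmc := Subgroup.map_commutator B B (MulAut.conj k).toMonoidHom
      rw [hkB] at hmc
      rw [Subgroup.mem_normalizer_iff]
      intro x
      constructor
      · intro hx
        have : k * x * k⁻¹ ∈ (⁅B, B⁆ : Subgroup G).map (MulAut.conj k).toMonoidHom := ⟨x, hx, rfl⟩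
        rwa [hmc] at this
      · intro hx
        rw [← hmc] at hx
        obtain ⟨y, hy, hyx⟩ := hx
        have : y = x := (MulAut.conj k).injective hyx
        rwa [← this]
  refine U.good_of_normal hB (hBA.trans hAK) hKB (.inr fun a ha b hb => ?_)
  rw [Subgroup.commutator_eq_bot_iff_le_centralizer] at hcomm
  exact (Subgroup.mem_centralizer_iff.1 (hcomm hb)) a ha

end HU
end OddNormal

/-! ### Subgroups of even order -/

section Even
variable {n : ℕ} {F V G : Type} [Field F] [StarRing F] [Finite F] [CharP F 2]
  [AddCommGroup V] [Module F V] [Group G] [DistribMulAction G V] [SMulCommClass G F V]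

open scoped LinearAlgebra.Projectivization
open Projectivization (mk)

namespace HU

theorem tv_center (U : HU n F V G) {u v : V} (uu : U.h u u = 0) (hu : u ≠ 0) (vv : U.h v v = 0)
    {a b : F} (ha : star a = a) (h0 : a ≠ 0) (hb : star b = b) (h : U.tv u a = U.tv v b) :
    ∃ c : F, u = c • v ∧ b = a * (c * star c) := by
  obtain ⟨y, hy⟩ := U.exists_h_one hu
  have h1 := congrArg (fun g : G => g • y) h
  simp only [U.tv_apply uu ha, U.tv_apply vv hb, U.h_symm1 hy, mul_one, add_right_inj] at h1
  have h2 : u = (a⁻¹ * (b * U.h y v)) • v := by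
    rw [mul_smul, ← h1, smul_smul, inv_mul_cancel₀ h0, one_smul]
  obtain ⟨c, rfl⟩ : ∃ c : F, u = c • v := ⟨_, h2⟩
  refine ⟨c, rfl, ?_⟩
  have hv : v ≠ 0 := fun hv => hu (by rw [hv, smul_zero])
  rw [U.tv_smul vv ha] at h
  exact (U.tv_inj vv hv (by rw [star_mul', ha, star_norm]) hb h).symm

/-- The isotropic nonzero vectors `u` such that `K` contains a nontrivial transvection with
center `u`. -/
def Cen (U : HU n F V G) (K : Subgroup G) (u : V) : Prop :=
  u ≠ 0 ∧ U.h u u = 0 ∧ ∃ a, star a = a ∧ a ≠ 0 ∧ U.tv u a ∈ K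

/-- The parameters of the transvections with center `u` lying in `K`. -/
def Ax (U : HU n F V G) (K : Subgroup G) (u : V) : Set F := {a | star a = a ∧ U.tv u a ∈ K}

variable {K : Subgroup G}

theorem Ax_map (U : HU n F V G) {u : V} (uu : U.h u u = 0) {g : G} (hg : g ∈ K) {a : F}
    (ha : a ∈ U.Ax K u) : a ∈ U.Ax K (g • u) := by
  refine ⟨ha.1, ?_⟩
  rw [← U.tv_conj uu ha.1]
  exact K.mul_mem (K.mul_mem hg ha.2) (K.inv_mem hg)

theorem Cen.map {U : HU n F V G} {u : V} (hu : U.Cen K u) {g : G} (hg : g ∈ K) :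
    U.Cen K (g • u) := by
  obtain ⟨h1, h2, a, ha, h0, h3⟩ := hu
  exact ⟨(smul_ne_zero_iff_ne _).2 h1, by rw [U.inv]; exact h2, a, ha, h0, (U.Ax_map h2 hg ⟨ha, h3⟩).2⟩

theorem Ax_smul (U : HU n F V G) {u : V} (uu : U.h u u = 0) {c a : F} (ha : star a = a) :
    a ∈ U.Ax K (c • u) ↔ a * (c * star c) ∈ U.Ax K u := by
  have : star (a * (c * star c)) = a * (c * star c) := by rw [star_mul', ha, star_norm]
  simp [Ax, ha, this, U.tv_smul uu ha]

theorem Cen.smul {U : HU n F V G} {u : V} (hu : U.Cen K u) {c : F} (hc : c ≠ 0) :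
    U.Cen K (c • u) := by
  obtain ⟨h1, h2, a, ha, h0, h3⟩ := hu
  have hN : star (c * star c)⁻¹ = (c * star c)⁻¹ := by rw [star_inv₀, star_norm]
  have hc' : star c ≠ 0 := star_ne_zero.2 hc
  have hs : star (a * (c * star c)⁻¹) = a * (c * star c)⁻¹ := by rw [star_mul', ha, hN]
  refine ⟨smul_ne_zero hc h1, by simp [U.h_smul, U.smul_h, h2], a * (c * star c)⁻¹, hs,
    by simp [h0, hc, hc'], ?_⟩
  refine ((U.Ax_smul h2 hs).2 ⟨by rw [star_mul', hs, star_norm], ?_⟩).2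
  rw [mul_assoc, inv_mul_cancel₀ (mul_ne_zero hc hc'), mul_one]
  exact h3

theorem Ax_add (U : HU n F V G) {u : V} (uu : U.h u u = 0) {a b : F} (ha : a ∈ U.Ax K u)
    (hb : b ∈ U.Ax K u) : a + b ∈ U.Ax K u := by
  refine ⟨by rw [star_add, ha.1, hb.1], ?_⟩
  rw [← U.tv_add uu ha.1 hb.1]
  exact K.mul_mem ha.2 hb.2

/-- In the dihedral group generated by two transvections with distinct centers, which has twice
odd order, there is an involution exchanging the two. -/
theorem dih (U : HU n F V G) {u v : V} (uu : U.h u u = 0) (vv : U.h v v = 0) (uv : U.h u v = 1)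
    {a b : F} (ha : a ∈ U.Ax K u) (ha0 : a ≠ 0) (hb : b ∈ U.Ax K v) (hb0 : b ≠ 0) :
    ∃ s ∈ K, ∃ c : F, star c = c ∧ c ≠ 0 ∧ c * c * a = b ∧ s • u = c • v ∧ s • v = c⁻¹ • u ∧
      s * s = 1 := by
  have := U.finiteG
  have hu : u ≠ 0 := by rintro rfl; simp [U.zero_h] at uv
  have hv : v ≠ 0 := by rintro rfl; simp [U.h_zero] at uv
  set t := U.tv u a with ht
  set t' := U.tv v b with ht'
  have tt : t * t = 1 := U.tv_sq uu ha.1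
  have tt' : t' * t' = 1 := U.tv_sq vv hb.1
  have it : t⁻¹ = t := U.tv_inv uu ha.1
  have it' : t'⁻¹ = t' := U.tv_inv vv hb.1
  have hr : (t * t')⁻¹ = t' * t := by rw [mul_inv_rev, it, it']
  have c1 : ∀ j : ℕ, t * (t * t') ^ j * t⁻¹ = ((t * t') ^ j)⁻¹ := by
    intro j
    rw [← conj_pow, ← inv_pow, hr, it]
    congr 1
    rw [← mul_assoc, tt, one_mul]
  have c2 : ∀ j : ℕ, t' * (t * t') ^ j * t'⁻¹ = ((t * t') ^ j)⁻¹ := by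
    intro j
    rw [← conj_pow, ← inv_pow, hr, it']
    congr 1
    rw [mul_assoc, mul_assoc, tt', mul_one]
  have hodd : ¬ 2 ∣ orderOf (t * t') := by
    rintro ⟨m, hm⟩
    have hpos := orderOf_pos (t * t')
    have hz1 : (t * t') ^ m ≠ 1 := pow_ne_one_of_lt_orderOf (by omega) (by omega)
    have hz2 : (t * t') ^ m * (t * t') ^ m = 1 := by
      rw [← pow_add, ← two_mul, ← hm, pow_orderOf_eq_one]
    have hzi : ((t * t') ^ m)⁻¹ = (t * t') ^ m := inv_eq_of_mul_eq_one_left hz2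
    have d1 := c1 m
    have d2 := c2 m
    obtain ⟨w, d, hw, ww, hd, hd0, hz⟩ := U.involution hz1 hz2
    rw [hzi, hz, U.tv_conj ww hd] at d1 d2
    obtain ⟨x, hx, -⟩ := U.tv_center (by rw [U.inv]; exact ww) ((smul_ne_zero_iff_ne _).2 hw) ww hd hd0 hd d1
    obtain ⟨y, hy, -⟩ := U.tv_center (by rw [U.inv]; exact ww) ((smul_ne_zero_iff_ne _).2 hw) ww hd hd0 hd d2
    have e1 := (U.tv_fix uu hu ha.1 ha0).1 ((smul_mk_eq _ hw).2 ⟨x, hx⟩)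
    have e2 := (U.tv_fix vv hv hb.1 hb0).1 ((smul_mk_eq _ hw).2 ⟨y, hy⟩)
    have e1 := (U.perp_mk hw hu).1 e1
    have e2 := (U.perp_mk hw hv).1 e2
    obtain ⟨c, rfl⟩ := U.iso_perp uu hu ww e1
    rw [U.h_smul, uv, mul_one] at e2
    simp [e2] at hw
  obtain ⟨j, hj⟩ : ∃ j, orderOf (t * t') = 2 * j + 1 := ⟨orderOf (t * t') / 2, by omega⟩
  have hp : (t * t') ^ j * (t * t') ^ j * (t * t') = 1 := by
    rw [← pow_add, ← pow_succ, ← two_mul, ← hj, pow_orderOf_eq_one]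
  set r := (t * t') ^ j with hrj
  have e1 : t * r = r⁻¹ * t := by rw [← c1 j, ← hrj]; group
  have e2 : t' * r = r⁻¹ * t' := by rw [← c2 j, ← hrj]; group
  have ss : t' * r * (t' * r) = 1 := by
    rw [e2]; nth_rw 2 [← e2]
    rw [show r⁻¹ * t' * (t' * r) = r⁻¹ * (t' * t') * r by group, tt']; group
  have hconj : t' * r * t * (t' * r)⁻¹ = t' := by
    have h1 : r * t = t * r⁻¹ := by
      have := congrArg (fun x => r * x * r⁻¹) e1
      rw [show r * (t * r) * r⁻¹ = r * t by group, show r * (r⁻¹ * t) * r⁻¹ = t * r⁻¹ by group]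
        at this
      exact this
    have h2 : r⁻¹ * r⁻¹ = t * t' := by
      rw [← mul_inv_rev]; exact inv_eq_of_mul_eq_one_right hp
    rw [mul_inv_rev, it', show t' * r * t * (r⁻¹ * t') = t' * (r * t) * r⁻¹ * t' by group, h1,
      show t' * (t * r⁻¹) * r⁻¹ * t' = t' * t * (r⁻¹ * r⁻¹) * t' by group, h2,
      show t' * t * (t * t') * t' = t' * (t * t) * t' * t' by group, tt, mul_one, tt', one_mul]
  set s := t' * r with hs
  have hsK : s ∈ K := K.mul_mem hb.2 (K.pow_mem (K.mul_mem ha.2 hb.2) j)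
  rw [ht, U.tv_conj uu ha.1, ht'] at hconj
  obtain ⟨c, hc, hcb⟩ := U.tv_center (by rw [U.inv]; exact uu) ((smul_ne_zero_iff_ne _).2 hu) vv ha.1 ha0
    hb.1 hconj
  have hc0 : c ≠ 0 := by rintro rfl; simp at hcb; exact hb0 hcb
  have hsv : s • v = c⁻¹ • u := by
    have h1 : s • s • u = u := by rw [smul_smul, ss, one_smul]
    rw [hc, U.act] at h1
    rw [← h1, smul_smul, inv_mul_cancel₀ hc0, one_smul]
  have hcs : star c = c := by
    have h1 := U.inv s u v
    rw [hc, hsv, U.h_smul, U.smul_h, U.h_symm1 uv, uv, star_inv₀] at h1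
    have : star c ≠ 0 := star_ne_zero.2 hc0
    field_simp at h1
    exact h1.symm
  refine ⟨s, hsK, c, hcs, hc0, ?_, hc, hsv, ss⟩
  rw [hcb, hcs]; ring

theorem dih_e (U : HU n F V G) {u e v : V} (f : U.Hyp u e v) {s : G} {c : F}
    (h1 : s • u = c • v) (h2 : s • v = c⁻¹ • u) (h0 : c ≠ 0) (ss : s * s = 1) : s • e = e := by
  have k1 : U.h (s • e) u = 0 := by
    have : u = s • (c • v) := by rw [← h1, smul_smul, ss, one_smul]
    rw [this, U.inv, U.smul_h, f.ev, mul_zero]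
  have k2 : U.h (s • e) v = 0 := by
    have : v = s • (c⁻¹ • u) := by rw [← h2, smul_smul, ss, one_smul]
    rw [this, U.inv, U.smul_h, f.eu, mul_zero]
  have h3 := f.expand (s • e)
  rw [k1, k2, zero_smul, zero_smul, zero_add, add_zero] at h3
  set x := U.h (s • e) e
  have h4 : s • s • e = e := by rw [smul_smul, ss, one_smul]
  rw [h3, U.act, h3, smul_smul] at h4
  have h5 : (x * x + 1) • e = 0 := by rw [add_smul, one_smul, h4, U.two_V]
  have h6 := (smul_eq_zero.1 h5).resolve_right f.ne.2.1
  have h7 : x = 1 := by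
    have : (x + 1) * (x + 1) = 0 := by grind
    have := mul_self_eq_zero.1 this
    grind
  rw [h3, h7, one_smul]

/-- `K` contains the diagonal elements whose eigenvalue on the center `u` is the square root of a
quotient of two members of `Ax K u`. -/
theorem torus (U : HU n F V G) {u e v : V} (f : U.Hyp u e v) {a a' b l : F} (ha : a ∈ U.Ax K u)
    (ha0 : a ≠ 0) (ha' : a' ∈ U.Ax K u) (ha0' : a' ≠ 0) (hb : b ∈ U.Ax K v) (hb0 : b ≠ 0)
    (hl : l * l * a' = a) :
    ∃ d ∈ K, d • u = l • u ∧ d • e = e ∧ d • v = l⁻¹ • v := by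
  obtain ⟨s, hs, c, hc, hc0, hcb, h1, h2, ss⟩ := U.dih f.uu f.vv f.uv ha ha0 hb hb0
  obtain ⟨s', hs', c', hc', hc0', hcb', h1', h2', ss'⟩ := U.dih f.uu f.vv f.uv ha' ha0' hb hb0
  have e1 := U.dih_e f h1 h2 hc0 ss
  have e2 := U.dih_e f h1' h2' hc0' ss'
  have hl0 : l ≠ 0 := by rintro rfl; simp at hl; exact ha0 hl.symm
  have hlc : l = c' * c⁻¹ := by
    have h3 : l * c * (l * c) = c' * c' := by
      have : (l * c * (l * c)) * a' = c' * c' * a' := by grind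
      exact mul_right_cancel₀ ha0' this
    have h4 : (l * c + c') * (l * c + c') = 0 := by grind
    have h5 := mul_self_eq_zero.1 h4
    field_simp
    grind
  refine ⟨s * s', K.mul_mem hs hs', ?_, ?_, ?_⟩
  · rw [mul_smul, h1', U.act, h2, smul_smul, hlc]
  · rw [mul_smul, e2, e1]
  · rw [mul_smul, h2', U.act, h1, smul_smul, hlc, mul_inv, inv_inv]

/-- The ratios of members of `Ax K u` act on `Ax K u`. -/
theorem Ax_ratio (U : HU n F V G) {u v : V} (uu : U.h u u = 0) (vv : U.h v v = 0)
    (uv : U.h u v = 1) {a a' b x : F} (ha : a ∈ U.Ax K u)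
    (ha0 : a ≠ 0) (ha' : a' ∈ U.Ax K u) (ha0' : a' ≠ 0) (hb : b ∈ U.Ax K v) (hb0 : b ≠ 0)
    (hx : x ∈ U.Ax K u) : a * a'⁻¹ * x ∈ U.Ax K u := by
  obtain ⟨e, f⟩ := U.exists_hyp_of_uv uu vv uv
  have hs : star (a * a'⁻¹) = a * a'⁻¹ := by rw [star_mul', star_inv₀, ha.1, ha'.1]
  obtain ⟨l, hl, hll⟩ := U.uf.sqrt hs
  obtain ⟨d, hd, h1, -, -⟩ := U.torus f ha ha0 ha' ha0' hb hb0 (l := l) (by rw [hll]; field_simp)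
  have := U.Ax_map uu hd hx
  rw [h1, U.Ax_smul uu hx.1, hl, hll] at this
  rwa [mul_comm]

/-- Translations between centers on a hyperbolic line are in `Ax`, provided `Ax` has at least two
nonzero members. -/
theorem Ax_of_cen (U : HU n F V G) {u v : V} (uu : U.h u u = 0) (vv : U.h v v = 0)
    (uv : U.h u v = 1) {a a' y : F} (ha : a ∈ U.Ax K u)
    (ha0 : a ≠ 0) (ha' : a' ∈ U.Ax K u) (ha0' : a' ≠ 0) (haa : a ≠ a') (hv : U.Cen K v)
    (hy : star y = y) (hvy : U.Cen K (v + y • u)) : y ∈ U.Ax K u := by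
  obtain ⟨e, f⟩ := U.exists_hyp_of_uv uu vv uv
  have f' : U.Hyp u e (v + y • u) := by
    refine ⟨uu, hvy.2.1, f.ee, ?_, f.ue, ?_⟩
    · simp [U.add_h, U.smul_h, uu, uv]
    · simp [U.add_h, U.smul_h, f.ev, f.eu]
  have hs : star (a * a'⁻¹) = a * a'⁻¹ := by rw [star_mul', star_inv₀, ha.1, ha'.1]
  obtain ⟨l, hl, hll⟩ := U.uf.sqrt hs
  have hla : l * l * a' = a := by rw [hll]; field_simp
  have hl0 : l ≠ 0 := by rintro rfl; simp at hla; exact ha0 hla.symm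
  obtain ⟨-, -, b, hb, hb0, hbK⟩ := hv
  obtain ⟨-, -, b', hb', hb0', hbK'⟩ := hvy
  obtain ⟨d, hd, h1, h2, h3⟩ := U.torus f ha ha0 ha' ha0' ⟨hb, hbK⟩ hb0 hla
  obtain ⟨d', hd', h1', h2', h3'⟩ := U.torus f' ha ha0 ha' ha0' ⟨hb', hbK'⟩ hb0' hla
  have hy2 : star ((1 + l * l) * y) = (1 + l * l) * y := by simp [star_add, star_mul', hl, hy]
  have hmem : (1 + l * l) * y ∈ U.Ax K u := by
    refine ⟨hy2, ?_⟩
    have : d' = U.tv u ((1 + l * l) * y) * d := by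
      refine f.ext ?_ ?_ ?_
      · rw [mul_smul, h1, U.act, h1', U.tv_apply uu hy2, uu]; simp
      · rw [mul_smul, h2, h2', U.tv_apply uu hy2, f.eu]; simp
      · rw [mul_smul, h3, U.act, U.tv_apply uu hy2, f.vu]
        have h4 : d' • v = d' • (v + y • u) + y • d' • u := by
          rw [smul_add, U.act, add_assoc, U.two_V, add_zero]
        rw [h4, h3', h1']
        have : l⁻¹ * ((1 + l * l) * y) = l⁻¹ * y + y * l := by field_simp
        rw [mul_one, smul_add, smul_add, smul_smul, smul_smul, smul_smul, this, add_smul]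
        abel
    rw [eq_mul_inv_of_mul_eq this.symm]
    exact K.mul_mem hd' (K.inv_mem hd)
  have hne : a + a' ≠ 0 := fun h => haa (by grind)
  have := U.Ax_ratio uu vv uv ha' ha0' (U.Ax_add uu ha ha') hne ⟨hb, hbK⟩ hb0 hmem
  convert this using 1
  rw [hll]
  field_simp
  ring

theorem Cen.exists_other {U : HU n F V G} (hno : ¬ (fixPts F V K).Nonempty) {u : V}
    (hu : U.Cen K u) : ∃ v, U.Cen K v ∧ U.h u v = 1 := by
  have : ∃ k ∈ K, k • mk F u hu.1 ≠ mk F u hu.1 := by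
    by_contra! h
    exact hno ⟨_, mem_fixPts.2 h⟩
  obtain ⟨k, hk, hne⟩ := this
  have hc := hu.map hk
  have h0 : U.h u (k • u) ≠ 0 := by
    intro h0
    obtain ⟨c, hc'⟩ := U.iso_perp hu.2.1 hu.1 hc.2.1 (U.h_symm0 h0)
    exact hne ((smul_mk_eq _ _).2 ⟨c, hc'⟩)
  refine ⟨(star (U.h u (k • u)))⁻¹ • k • u, hc.smul (inv_ne_zero (star_ne_zero.2 h0)), ?_⟩
  rw [U.smul_h, star_inv₀, star_star, inv_mul_cancel₀ h0]

/-- Members of `Ax` at two distinct centers have the same ratios. -/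
theorem ratio_one (U : HU n F V G) {u v : V} (uu : U.h u u = 0) (vv : U.h v v = 0)
    (uv : U.h u v ≠ 0) {a b x : F} (ha : a ∈ U.Ax K u) (ha0 : a ≠ 0) (hb : b ∈ U.Ax K v)
    (hb0 : b ≠ 0) (hx : star x = x) (h : x * a ∈ U.Ax K u) : x * b ∈ U.Ax K v := by
  obtain ⟨c, hc0, v', rfl, h1⟩ : ∃ c : F, c ≠ 0 ∧ ∃ v', v = c • v' ∧ U.h u v' = 1 := by
    refine ⟨star (U.h u v), star_ne_zero.2 uv, (star (U.h u v))⁻¹ • v, ?_, ?_⟩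
    · rw [smul_smul, mul_inv_cancel₀ (star_ne_zero.2 uv), one_smul]
    · rw [U.smul_h, star_inv₀, star_star, inv_mul_cancel₀ uv]
  have hc0' : star c ≠ 0 := star_ne_zero.2 hc0
  have vv' : U.h v' v' = 0 := by
    rw [U.h_smul, U.smul_h] at vv
    simpa [hc0] using vv
  have hxb : star (x * b) = x * b := by rw [star_mul', hx, hb.1]
  rw [U.Ax_smul vv' hb.1] at hb
  rw [U.Ax_smul vv' hxb]
  obtain ⟨s, hs, d, hd, hd0, hda, h2, -, -⟩ := U.dih uu vv' h1 ha ha0 hb (by simp [hb0, hc0])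
  have h3 := U.Ax_map uu hs h
  rw [h2, U.Ax_smul vv' h.1, hd] at h3
  convert h3 using 1
  rw [mul_assoc, ← hda]; ring

theorem ratio_all (U : HU n F V G) (hno : ¬ (fixPts F V K).Nonempty) {u v : V} (hu : U.Cen K u)
    (hv : U.Cen K v) {a b x : F} (ha : a ∈ U.Ax K u) (ha0 : a ≠ 0) (hb : b ∈ U.Ax K v)
    (hb0 : b ≠ 0) (hx : star x = x) (h : x * a ∈ U.Ax K u) : x * b ∈ U.Ax K v := by
  by_cases uv : U.h u v = 0
  · obtain ⟨w, hw, uw⟩ := hu.exists_other hno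
    obtain ⟨c, rfl⟩ := U.iso_perp hu.2.1 hu.1 hv.2.1 (U.h_symm0 uv)
    have hc : c ≠ 0 := by rintro rfl; exact hv.1 (zero_smul _ _)
    obtain ⟨d, hd, hd0, hdK⟩ := hw.2.2
    have h1 := U.ratio_one hu.2.1 hw.2.1 (by simp [uw]) ha ha0 ⟨hd, hdK⟩ hd0 hx h
    exact U.ratio_one hw.2.1 hv.2.1 (by simp [U.smul_h, U.h_symm1 uw, hc]) ⟨hd, hdK⟩ hd0 hb hb0
      hx h1
  · exact U.ratio_one hu.2.1 hv.2.1 uv ha ha0 hb hb0 hx h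

/-- The ratios of members of `Ax K u` form a subfield, independent of the center `u`. -/
theorem exists_subfield (U : HU n F V G) (hno : ¬ (fixPts F V K).Nonempty) {u : V}
    (hu : U.Cen K u) : ∃ k : Subfield F, (∀ x ∈ k, star x = x) ∧ ∀ v, U.Cen K v →
      ∀ a ∈ U.Ax K v, a ≠ 0 → ∀ x, star x = x → (x ∈ k ↔ x * a ∈ U.Ax K v) := by
  obtain ⟨a, ha, ha0, haK⟩ := hu.2.2
  have haA : a ∈ U.Ax K u := ⟨ha, haK⟩
  have hb : ∀ b, b ∈ U.Ax K u → b ≠ 0 → ∀ x, star x = x → x * b ∈ U.Ax K u → x * a ∈ U.Ax K u :=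
    fun b hb hb0 x hx h => U.ratio_all hno hu hu hb hb0 haA ha0 hx h
  have hb' : ∀ b, b ∈ U.Ax K u → b ≠ 0 → ∀ x, star x = x → x * a ∈ U.Ax K u → x * b ∈ U.Ax K u :=
    fun b hb hb0 x hx h => U.ratio_all hno hu hu haA ha0 hb hb0 hx h
  refine ⟨{ carrier := {x | star x = x ∧ x * a ∈ U.Ax K u}
            mul_mem' := ?_, one_mem' := ?_, add_mem' := ?_, zero_mem' := ?_, neg_mem' := ?_
            inv_mem' := ?_ }, fun x hx => hx.1, ?_⟩
  · rintro x y ⟨hx, hx'⟩ ⟨hy, hy'⟩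
    refine ⟨by rw [star_mul', hx, hy], ?_⟩
    by_cases h0 : x = 0
    · subst h0; simpa using hx'
    · have := hb' _ hx' (mul_ne_zero h0 ha0) y hy hy'
      rwa [← mul_assoc, mul_comm y] at this
  · exact ⟨star_one _, by rwa [one_mul]⟩
  · rintro x y ⟨hx, hx'⟩ ⟨hy, hy'⟩
    exact ⟨by rw [star_add, hx, hy], by rw [add_mul]; exact U.Ax_add hu.2.1 hx' hy'⟩
  · exact ⟨star_zero _, by rw [zero_mul]; exact ⟨star_zero _, by rw [U.tv_zero hu.2.1]; exact K.one_mem⟩⟩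
  · rintro x hx
    rwa [CharTwo.neg_eq]
  · rintro x ⟨hx, hx'⟩
    by_cases h0 : x = 0
    · subst h0; simpa using hx'
    · refine ⟨by rw [star_inv₀, hx], hb _ hx' (mul_ne_zero h0 ha0) _ (by rw [star_inv₀, hx]) ?_⟩
      rwa [← mul_assoc, inv_mul_cancel₀ h0, one_mul]
  · intro v hv b hbA hb0 x hx
    constructor
    · rintro ⟨-, h⟩
      exact U.ratio_all hno hu hv haA ha0 hbA hb0 hx h
    · intro h
      exact ⟨hx, U.ratio_all hno hv hu hbA hb0 haA ha0 hx h⟩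

/-- The product formula linking the parameters at two centers. -/
theorem pair_mem (U : HU n F V G) {k : Subfield F}
    (hks : ∀ x ∈ k, star x = x) (hk : ∀ v, U.Cen K v →
      ∀ a ∈ U.Ax K v, a ≠ 0 → ∀ x, star x = x → (x ∈ k ↔ x * a ∈ U.Ax K v))
    (hk2 : ∃ x ∈ k, x ≠ 0 ∧ x ≠ 1) {u v : V} (hu : U.Cen K u) (hv : U.Cen K v) {a b : F}
    (ha : a ∈ U.Ax K u) (ha0 : a ≠ 0) (hb : b ∈ U.Ax K v) (hb0 : b ≠ 0) :
    a * b * (U.h u v * star (U.h u v)) ∈ k := by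
  by_cases uv : U.h u v = 0
  · rw [uv]; simp
  obtain ⟨c, hc0, v', rfl, h1⟩ : ∃ c : F, c ≠ 0 ∧ ∃ v', v = c • v' ∧ U.h u v' = 1 := by
    refine ⟨star (U.h u v), star_ne_zero.2 uv, (star (U.h u v))⁻¹ • v, ?_, ?_⟩
    · rw [smul_smul, mul_inv_cancel₀ (star_ne_zero.2 uv), one_smul]
    · rw [U.smul_h, star_inv₀, star_star, inv_mul_cancel₀ uv]
  have hc0' : star c ≠ 0 := star_ne_zero.2 hc0
  have hv' : U.Cen K v' := by
    have := hv.smul (inv_ne_zero hc0)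
    rwa [smul_smul, inv_mul_cancel₀ hc0, one_smul] at this
  rw [U.Ax_smul hv'.2.1 hb.1] at hb
  set d := b * (c * star c) with hd
  have hd0 : d ≠ 0 := by simp [hd, hb0, hc0]
  obtain ⟨x, hx, hx0, hx1⟩ := hk2
  have hxa := (hk u hu a ha ha0 x (hks x hx)).1 hx
  have hds : star d⁻¹ = d⁻¹ := by rw [star_inv₀, hb.1]
  -- the transvection at `v'` moves `u` to a multiple of `v' + d⁻¹ u`
  have hcen : U.Cen K (v' + d⁻¹ • u) := by
    have h2 := (hu.map hb.2).smul (inv_ne_zero hd0)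
    rwa [U.tv_apply hv'.2.1 hb.1, h1, mul_one, smul_add, smul_smul, inv_mul_cancel₀ hd0, one_smul,
      add_comm] at h2
  have hm := U.Ax_of_cen hu.2.1 hv'.2.1 h1 ha ha0 hxa (mul_ne_zero hx0 ha0)
    (fun h => hx1 (mul_right_cancel₀ ha0 (by rw [← h, one_mul]))) hv' hds hcen
  have h3 := (hk u hu _ hm (inv_ne_zero hd0) (a * d) (by rw [star_mul', ha.1, hb.1])).2
    (by rwa [mul_assoc, mul_inv_cancel₀ hd0, mul_one])
  convert h3 using 1
  rw [U.smul_h, h1, hd, mul_one, star_star]; ring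

/-- Every subgroup with a center admitting two nontrivial transvections and without fixed points
has full `Ax` at each center. -/
theorem Ax_full (U : HU n F V G) (hno : ¬ (fixPts F V K).Nonempty) {k : Subfield F}
    (hks : ∀ x ∈ k, star x = x) (hk : ∀ v, U.Cen K v →
      ∀ a ∈ U.Ax K v, a ≠ 0 → ∀ x, star x = x → (x ∈ k ↔ x * a ∈ U.Ax K v))
    (hk2 : ∃ x ∈ k, x ≠ 0 ∧ x ≠ 1) {u v w : V} (hu : U.Cen K u) (hv : U.Cen K v)
    (hw : U.Cen K w)
    (htr : U.h w u * U.h u v * U.h v w + star (U.h w u * U.h u v * U.h v w) ≠ 0) :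
    ∀ x : F, star x = x → x ∈ k := by
  obtain ⟨a, ha, ha0, haK⟩ := hu.2.2
  obtain ⟨b, hb, hb0, hbK⟩ := hv.2.2
  obtain ⟨d, hd, hd0, hdK⟩ := hw.2.2
  have m1 := U.pair_mem hks hk hk2 hu hv ⟨ha, haK⟩ ha0 ⟨hb, hbK⟩ hb0
  have m2 := U.pair_mem hks hk hk2 hv hw ⟨hb, hbK⟩ hb0 ⟨hd, hdK⟩ hd0
  have m3 := U.pair_mem hks hk hk2 hw hu ⟨hd, hdK⟩ hd0 ⟨ha, haK⟩ ha0
  have m4 := U.pair_mem hks hk hk2 hv (hw.map haK) ⟨hb, hbK⟩ hb0 (U.Ax_map hw.2.1 haK ⟨hd, hdK⟩) hd0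
  rw [U.tv_apply hu.2.1 ha, U.add_h, U.smul_h, star_mul', ha, ← U.h_star u v] at m4
  set p := U.h w u
  set q' := U.h u v
  set r := U.h v w
  set g := a * b * d * (p * q' * r) with hg
  have hN : g * star g ∈ k := by
    have := k.mul_mem (k.mul_mem m1 m2) m3
    convert this using 1
    simp only [hg, star_mul', ha, hb, hd]; ring
  have hT : g + star g ∈ k := by
    have := k.add_mem m4 (k.add_mem m2 (k.mul_mem m1 m3))
    convert this using 1
    simp only [hg, star_mul', star_add, star_star, ha, hb, hd]
    grind
  have hne : star g ≠ g := by
    intro h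
    apply htr
    have : a * b * d * (p * q' * r + star (p * q' * r)) = 0 := by
      have h1 : star g = a * b * d * star (p * q' * r) := by simp only [hg, star_mul', ha, hb, hd]
      rw [mul_add, ← h1, ← hg, h]
      exact CharTwo.add_self_eq_zero _
    simpa [ha0, hb0, hd0] using this
  -- the Frobenius of `k` fixes or exchanges `g` and `star g`
  have := Fintype.ofFinite k
  set Q := Fintype.card k with hQ
  have : CharP k 2 := RingHom.charP (algebraMap k F) (algebraMap k F).injective 2
  obtain ⟨m, -, hm⟩ := FiniteField.card k 2
  have hQ2 : Q = 2 ^ (m : ℕ) := hm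
  have hpow : ∀ x ∈ k, x ^ Q = x := fun x hx => by
    have := congrArg (Subtype.val) (FiniteField.pow_card (⟨x, hx⟩ : k))
    simpa using this
  have hadd : ∀ x y : F, (x + y) ^ Q = x ^ Q + y ^ Q := fun x y => by
    rw [hQ2]; exact add_pow_char_pow x y 2 m
  have hroot : (g ^ Q + g) * (g ^ Q + star g) = 0 := by
    have h1 := hpow _ hN
    have h2 := hpow _ hT
    rw [mul_pow] at h1
    rw [hadd] at h2
    grind
  have hQQ : g ^ (Q * Q) = g := by
    rw [pow_mul]
    rcases mul_eq_zero.1 hroot with h | h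
    · have h : g ^ Q = g := by grind
      rw [h, h]
    · have h : g ^ Q = star g := by grind
      have h' : (star g) ^ Q = g := by
        rw [← star_pow, h, star_star]
      rw [h, h']
  obtain ⟨i, hi⟩ : ∃ i, (m : ℕ) * Module.finrank k F = 2 ^ (n + 1) ∧ (m : ℕ) = 2 ^ i := by
    have h1 : Nat.card F = Nat.card k ^ Module.finrank k F := Module.natCard_eq_pow_finrank
    rw [Nat.card_eq_fintype_card (α := k), ← hQ, hQ2, U.uf.card, ← pow_mul, qval, ← pow_add] at h1
    have h2 := Nat.pow_right_injective le_rfl h1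
    have h3 : (m : ℕ) * Module.finrank k F = 2 ^ (n + 1) := by rw [← h2]; ring
    obtain ⟨i, -, hi⟩ := (Nat.dvd_prime_pow Nat.prime_two).1 ⟨_, h3.symm⟩
    exact ⟨i, h3, hi⟩
  have hin : n ≤ i := by
    by_contra! hin
    have hdvd : 2 * (m : ℕ) ∣ 2 ^ n := by
      rw [hi.2, ← pow_succ']; exact pow_dvd_pow 2 hin
    obtain ⟨j, hj⟩ := hdvd
    apply hne
    rw [U.uf.star_eq, qval, hj]
    have h1 : ∀ j : ℕ, g ^ (2 ^ (2 * (m : ℕ) * j)) = g := by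
      intro j
      induction j with
      | zero => simp
      | succ j ih =>
        rw [mul_add, pow_add, pow_mul, ih, mul_one, two_mul, pow_add, ← hQ2, hQQ]
    exact h1 j
  have hle : (k : Set F) ⊆ {x : F | star x = x} := hks
  have hcard : {x : F | star x = x}.ncard ≤ (k : Set F).ncard := by
    rw [U.uf.fix_card]
    have : (k : Set F).ncard = Q := by
      rw [Set.ncard, Set.encard, hQ, ← Nat.card_eq_fintype_card]; rfl
    rw [this, hQ2, hi.2, qval]
    exact Nat.pow_le_pow_right (by norm_num) (Nat.pow_le_pow_right (by norm_num) hin)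
  intro x hx
  have := Set.eq_of_subset_of_ncard_le hle hcard (Set.toFinite _)
  have h2 : x ∈ {x : F | star x = x} := hx
  rwa [← this] at h2

end HU
end Even

/-! ### Subgroups generated by transvections, and the classification -/

section Classify
variable {n : ℕ} {F V G : Type} [Field F] [StarRing F] [Finite F] [CharP F 2]
  [AddCommGroup V] [Module F V] [Group G] [DistribMulAction G V] [SMulCommClass G F V]

open scoped LinearAlgebra.Projectivization
open Projectivization (mk)

namespace HU
variable {K : Subgroup G}

theorem exists_frame (U : HU n F V G) (hno : ¬ (fixPts F V K).Nonempty) {u : V}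
    (hu : U.Cen K u) : ∃ e v w, U.Hyp u e v ∧ U.Cen K v ∧ U.Cen K w ∧ U.h w e ≠ 0 := by
  obtain ⟨v, hv, uv⟩ := hu.exists_other hno
  obtain ⟨e, f⟩ := U.exists_hyp_of_uv hu.2.1 hv.2.1 uv
  refine ⟨e, v, ?_⟩
  have : ∃ k ∈ K, k • mk F e f.ne.2.1 ≠ mk F e f.ne.2.1 := by
    by_contra! h
    exact hno ⟨_, mem_fixPts.2 h⟩
  obtain ⟨k, hk, hne⟩ := this
  by_contra! hcon
  have h1 := hcon _ f hv (hu.map (K.inv_mem hk))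
  have h2 := hcon _ f hv (hv.map (K.inv_mem hk))
  rw [U.h_inv] at h1 h2
  have h3 := f.expand (k • e)
  rw [U.h_symm0 h1, U.h_symm0 h2, zero_smul, zero_smul, zero_add, add_zero] at h3
  exact hne ((smul_mk_eq _ _).2 ⟨_, h3⟩)

/-- If every transvection with a center in `K` lies in `K` and there are three centers spanning
the space, all isotropic points are centers. -/
theorem allTv_of_full (U : HU n F V G) {u e v w : V} (f : U.Hyp u e v) (hu : U.Cen K u)
    (hv : U.Cen K v) (hw : U.Cen K w) (hwe : U.h w e ≠ 0)
    (hfull : ∀ z, U.Cen K z → ∀ a, star a = a → U.tv z a ∈ K) : U.AllTv K := by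
  -- the points of the line through `u` and a center are centers
  have hline : ∀ (z : V) (x : F), star x = x → U.h z u = 1 → U.Cen K z → U.Cen K (z + x • u) := by
    intro z x hx hzu hz
    have := hz.map (hfull u hu x hx)
    rwa [U.tv_apply hu.2.1 hx, hzu, mul_one] at this
  let B : Set F := {c | ∀ x, x + star x = c * star c → U.Cen K (v + c • e + x • u)}
  have hB : ∀ c x, x + star x = c * star c → U.Cen K (v + c • e + x • u) → c ∈ B := by
    intro c x hx h y hy
    have := hline _ (x + y) (by rw [star_add]; grind) ?_ h
    · convert this using 1
      have h1 : y = x + (x + y) := by grind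
      nth_rw 1 [h1]
      rw [add_smul, ← add_assoc]
    · simp [U.h_add, U.h_smul, f.vu, f.eu, f.uu]
  have step : ∀ c ∈ B, c ≠ 0 → ∀ y : F, star y ≠ y → y * c ∈ B := by
    intro c hc hc0 y hy
    have hy1 : (1 : F) + y ≠ 0 := by
      intro h
      have : y = 1 := by grind
      exact hy (by rw [this, star_one])
    have hy1' : (1 : F) + star y ≠ 0 := by
      intro h
      have : star y = 1 := by grind
      exact hy (by rw [this, ← star_star y, this, star_one])
    have hc0' : star c ≠ 0 := star_ne_zero.2 hc0
    have hz : y * (1 + y)⁻¹ + star y * (1 + star y)⁻¹ ≠ 0 := by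
      intro h
      field_simp at h
      exact hy (by grind)
    set a := (y * (1 + y)⁻¹ + star y * (1 + star y)⁻¹) * (c * star c)⁻¹ with ha
    have has : star a = a := by
      simp only [ha, star_mul', star_add, star_inv₀, star_star, star_one]
      ring
    have ha0 : a ≠ 0 := by simp [ha, hz, hc0]
    have hx : star y * (1 + star y)⁻¹ * a⁻¹ + star (star y * (1 + star y)⁻¹ * a⁻¹) = c * star c := by
      simp only [star_mul', star_inv₀, star_add, star_star, star_one, has]
      rw [← add_mul, add_comm (star y * _), ha, mul_inv, inv_inv, ← mul_assoc, mul_inv_cancel₀ hz,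
        one_mul]
    have h1 := hc _ hx
    have h2 := hv.map (hfull _ h1 a has)
    rw [U.tv_apply h1.2.1 has] at h2
    have h3 : a * U.h v (v + c • e + (star y * (1 + star y)⁻¹ * a⁻¹) • u) = y * (1 + y)⁻¹ := by
      simp only [U.add_h, U.smul_h, f.vv, f.ve, f.vu, star_mul', star_inv₀, star_add, star_star,
        star_one, has]
      field_simp
      ring
    rw [h3] at h2
    have h4 := h2.smul hy1
    have hv' : (1 + y) • (v + (y * (1 + y)⁻¹) • (v + c • e + (star y * (1 + star y)⁻¹ * a⁻¹) • u)) =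
        v + (y * c) • e + (y * (star y * (1 + star y)⁻¹ * a⁻¹)) • u := by
      have e1 : (1 + y) * (y * (1 + y)⁻¹) = y := by field_simp
      rw [smul_add, smul_smul, e1, add_smul, one_smul, smul_add, smul_add, smul_smul, smul_smul]
      have : v + y • v + (y • v + (y * c) • e + (y * (star y * (1 + star y)⁻¹ * a⁻¹)) • u) =
        v + (y • v + y • v) + (y * c) • e + (y * (star y * (1 + star y)⁻¹ * a⁻¹)) • u := by abel
      rw [this, U.two_V, add_zero]
    rw [hv'] at h4
    refine hB _ _ ?_ h4
    have h5 := h4.2.1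
    simp only [U.add_h, U.smul_h, U.h_add, U.h_smul, f.vv, f.ve, f.vu, f.uu, f.uv, f.ue, f.eu, f.ev,
      f.ee] at h5
    grind
  obtain ⟨b, hb, hb0⟩ : ∃ b ∈ B, b ≠ 0 := by
    have hd : U.h w u ≠ 0 := by
      intro h
      obtain ⟨c, rfl⟩ := U.iso_perp hu.2.1 hu.1 hw.2.1 h
      exact hwe (by rw [U.h_smul, f.ue, mul_zero])
    have h1 := hw.smul (inv_ne_zero hd)
    have h2 : (U.h w u)⁻¹ • w = v + ((U.h w u)⁻¹ * U.h w e) • e + ((U.h w u)⁻¹ * U.h w v) • u := by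
      nth_rw 2 [f.expand w]
      rw [smul_add, smul_add, smul_smul, smul_smul, smul_smul, inv_mul_cancel₀ hd, one_smul]
      abel
    rw [h2] at h1
    refine ⟨_, hB _ _ ?_ h1, mul_ne_zero (inv_ne_zero hd) hwe⟩
    have h5 := h1.2.1
    simp only [U.add_h, U.smul_h, U.h_add, U.h_smul, f.vv, f.ve, f.vu, f.uu, f.uv, f.ue, f.eu, f.ev,
      f.ee] at h5
    grind
  have hall : ∀ c : F, c ∈ B := by
    intro c
    by_cases hc0 : c = 0
    · subst hc0
      refine hB 0 0 (by simp) (by simpa using hv)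
    by_cases hy : star (c * b⁻¹) = c * b⁻¹
    · obtain ⟨z, hz⟩ := U.uf.exists_not_fix
      have hz0 : z ≠ 0 := by rintro rfl; simp at hz
      have h1 := step b hb hb0 z hz
      have h2 := step _ h1 (mul_ne_zero hz0 hb0) (c * b⁻¹ * z⁻¹) ?_
      · convert h2 using 1; field_simp
      · rw [star_mul', hy, star_inv₀]
        intro h
        have := mul_left_cancel₀ (mul_ne_zero hc0 (inv_ne_zero hb0)) h
        exact hz (inv_injective this)
    · convert step b hb hb0 _ hy using 1; field_simp
  intro z hz a ha
  by_cases hz0 : z = 0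
  · have : U.tv z a = 1 := U.ext_g fun x => by
      rw [U.tv_apply hz ha, hz0, smul_zero, add_zero, one_smul]
    rw [this]; exact K.one_mem
  refine hfull z ?_ a ha
  by_cases hd : U.h z u = 0
  · obtain ⟨c, rfl⟩ := U.iso_perp hu.2.1 hu.1 hz hd
    exact hu.smul (by rintro rfl; simp at hz0)
  · have h2 : (U.h z u)⁻¹ • z = v + ((U.h z u)⁻¹ * U.h z e) • e + ((U.h z u)⁻¹ * U.h z v) • u := by
      nth_rw 2 [f.expand z]
      rw [smul_add, smul_add, smul_smul, smul_smul, smul_smul, inv_mul_cancel₀ hd, one_smul]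
      abel
    have h3 := hall ((U.h z u)⁻¹ * U.h z e) ((U.h z u)⁻¹ * U.h z v) ?_
    · rw [← h2] at h3
      have := h3.smul hd
      rwa [smul_smul, mul_inv_cancel₀ hd, one_smul] at this
    · have h5 : U.h ((U.h z u)⁻¹ • z) ((U.h z u)⁻¹ • z) = 0 := by
        rw [U.h_smul, U.smul_h, hz]; ring
      rw [h2] at h5
      simp only [U.add_h, U.smul_h, U.h_add, U.h_smul, f.vv, f.ve, f.vu, f.uu, f.uv, f.ue, f.eu,
        f.ev, f.ee] at h5
      grind

theorem eq_top_of_two (U : HU n F V G) (hno : ¬ (fixPts F V K).Nonempty) {u : V}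
    (hu : U.Cen K u) {a a' : F} (ha : a ∈ U.Ax K u) (ha0 : a ≠ 0) (ha' : a' ∈ U.Ax K u)
    (ha0' : a' ≠ 0) (hne : a ≠ a') : K = ⊤ := by
  obtain ⟨k, hks, hk⟩ := U.exists_subfield hno hu
  have hk2 : ∃ x ∈ k, x ≠ 0 ∧ x ≠ 1 := by
    refine ⟨a' * a⁻¹, ?_, mul_ne_zero ha0' (inv_ne_zero ha0), ?_⟩
    · rw [hk u hu a ha ha0 _ (by rw [star_mul', star_inv₀, ha.1, ha'.1])]
      rwa [mul_assoc, inv_mul_cancel₀ ha0, mul_one]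
    · intro h
      field_simp at h
      exact hne h.symm
  obtain ⟨e, v, w, f, hv, hw, hwe⟩ := U.exists_frame hno hu
  have hful := U.Ax_full hno hks hk hk2 hu hv hw (by
    have h1 := f.expand w
    have h2 := hw.2.1
    have h3 : U.h w w = U.h w u * U.h v w + U.h w e * U.h e w + U.h w v * U.h u w := by
      nth_rw 1 [h1]
      simp only [U.h_add, U.h_smul]
      ring
    rw [h2, ← U.h_star w e, ← U.h_star w v, ← U.h_star w u] at h3
    rw [f.uv, ← U.h_star w v, star_mul', star_mul', star_one, star_star]
    intro h4
    have : U.h w e * star (U.h w e) = 0 := by grind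
    rcases mul_eq_zero.1 this with h | h
    · exact hwe h
    · exact hwe (star_eq_zero.1 h))
  refine (U.allTv_of_full f hu hv hw hwe fun z hz b hb => ?_).eq_top
  obtain ⟨c, hc, hc0, hcK⟩ := hz.2.2
  have h1 := (hk z hz c ⟨hc, hcK⟩ hc0 (b * c⁻¹) (by rw [star_mul', star_inv₀, hc, hb])).1
    (hful _ (by rw [star_mul', star_inv₀, hc, hb]))
  rw [mul_assoc, inv_mul_cancel₀ hc0, mul_one] at h1
  exact h1.2

/-- If each center in `K` admits a single nontrivial transvection, the nontrivial 2-subgroups of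
`K` are cyclic (of order 2 or 4) and fix a point. -/
theorem two_cyclic (U : HU n F V G) (hone : ∀ u, U.Cen K u → ∀ a ∈ U.Ax K u, ∀ a' ∈ U.Ax K u,
    a ≠ 0 → a' ≠ 0 → a = a') {S : Subgroup G} (hSK : S ≤ K) (hS : IsPGroup 2 S) (h1 : S ≠ ⊥) :
    IsCyclic S ∧ (fixPts F V S).Nonempty := by
  have := U.finiteG
  have : Nontrivial S := (Subgroup.nontrivial_iff_ne_bot S).2 h1
  have := hS.center_nontrivial
  obtain ⟨m, hm0, hm⟩ := (hS.to_subgroup (Subgroup.center S)).nontrivial_iff_card.1 this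
  obtain ⟨z0, hz0⟩ := exists_prime_orderOf_dvd_card' (G := Subgroup.center S) 2
    (by rw [hm]; exact dvd_pow_self 2 hm0.ne')
  have hz1 : ((z0 : S) : G) ≠ 1 := by
    intro h
    have : z0 = 1 := Subtype.ext (Subtype.ext h)
    rw [this, orderOf_one] at hz0
    omega
  have hz2 : ((z0 : S) : G) * ((z0 : S) : G) = 1 := by
    have := pow_orderOf_eq_one z0
    rw [hz0, pow_two] at this
    have := congrArg (fun x : Subgroup.center S => ((x : S) : G)) this
    simpa using this
  have hzc : ∀ s ∈ S, s * ((z0 : S) : G) * s⁻¹ = ((z0 : S) : G) := by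
    intro s hs
    have := Subgroup.mem_center_iff.1 z0.2 ⟨s, hs⟩
    have := congrArg (fun x : S => (x : G)) this
    simp only [Subgroup.coe_mul] at this
    rw [this]; group
  have hzS : ((z0 : S) : G) ∈ S := (z0 : S).2
  set z := ((z0 : S) : G)
  obtain ⟨u, a, hu, uu, ha, ha0, hz⟩ := U.involution hz1 hz2
  have haA : a ∈ U.Ax K u := ⟨ha, hz ▸ hSK hzS⟩
  have hc : U.Cen K u := ⟨hu, uu, a, ha, ha0, haA.2⟩
  have hsu : ∀ s ∈ S, s • u = u := by
    intro s hs
    have h2 := hzc s hs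
    rw [hz, U.tv_conj uu ha] at h2
    obtain ⟨c, hc, -⟩ := U.tv_center (by rw [U.inv]; exact uu) ((smul_ne_zero_iff_ne _).2 hu) uu
      ha ha0 ha h2
    obtain ⟨j, hj⟩ := hS ⟨s, hs⟩
    have hj : s ^ 2 ^ j = 1 := congrArg Subtype.val hj
    have hp : ∀ i : ℕ, s ^ i • u = c ^ i • u := by
      intro i
      induction i with
      | zero => simp
      | succ i ih => rw [pow_succ', mul_smul, ih, U.act, hc, smul_smul, pow_succ]
    have h3 := hp (2 ^ j)
    rw [hj, one_smul] at h3
    have h4 : (c ^ 2 ^ j + 1) • u = 0 := by rw [add_smul, ← h3, one_smul, U.two_V]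
    have h5 := (smul_eq_zero.1 h4).resolve_right hu
    have h6 : (c + 1) ^ 2 ^ j = 0 := by rw [add_pow_char_pow, one_pow, h5]
    have h7 : c = 1 := by
      have := eq_zero_of_pow_eq_zero h6
      grind
    rw [hc, h7, one_smul]
  refine ⟨?_, mk F u hu, mem_fixPts.2 fun s hs => (smul_mk_eq _ hu).2 ⟨1, by rw [hsu s hs, one_smul]⟩⟩
  obtain ⟨e, v, f⟩ := U.exists_hyp_of_u uu hu
  have hse : ∀ s ∈ S, s • e = e + U.h (s • e) v • u := by
    intro s hs
    have k1 : U.h (s • e) u = 0 := by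
      have := U.inv s e u
      rwa [hsu s hs, f.eu] at this
    have k2 : U.h (s • v) u = 1 := by
      have := U.inv s v u
      rwa [hsu s hs, f.vu] at this
    have h3 := f.expand (s • e)
    rw [k1, zero_smul, add_zero] at h3
    have h4 := f.det_g s
    rw [hsu s hs, k1, k2, f.uv, f.ue, f.uu] at h4
    simp [Matrix.det_fin_three] at h4
    rw [h4, one_smul, add_comm] at h3
    exact h3
  have hadd : ∀ s ∈ S, ∀ s' ∈ S, U.h ((s * s') • e) v = U.h (s • e) v + U.h (s' • e) v := by
    intro s hs s' hs'
    rw [mul_smul, hse s' hs', smul_add, U.act, hsu s hs, U.h_add, U.h_smul, f.uv, mul_one]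
    congr 1
    rw [U.h_add, U.h_smul, f.ev, f.uv]; simp
  have hker : ∀ s ∈ S, U.h (s • e) v = 0 → s = 1 ∨ s = z := by
    intro s hs h0
    have h2 := hse s hs
    rw [h0, zero_smul, add_zero] at h2
    obtain ⟨-, -, x, hx, h3⟩ := f.borel (l := 1) (by rw [hsu s hs, one_smul]) h2
    have h4 : s = U.tv u x := by
      refine f.ext ?_ ?_ ?_
      · rw [hsu s hs, U.tv_apply uu hx, uu]; simp
      · rw [h2, U.tv_apply uu hx, f.eu]; simp
      · rw [h3, U.tv_apply uu hx, f.vu]; simp [add_comm]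
    by_cases hx0 : x = 0
    · left; rw [h4, hx0, U.tv_zero uu]
    · right; rw [h4, hz, hone u hc a haA x ⟨hx, h4 ▸ hSK hs⟩ ha0 hx0]
  have hsq : ∀ s ∈ S, s * s = U.tv u (U.h (s • e) v * star (U.h (s • e) v)) := by
    intro s hs
    have h2 := hse s hs
    generalize U.h (s • e) v = x at h2 ⊢
    have hn := star_norm x
    have k2 : U.h (s • v) u = 1 := by
      have := U.inv s v u
      rwa [hsu s hs, f.vu] at this
    have k3 : U.h (s • v) e = star x := by
      have h3 := U.inv s v e
      rw [h2, U.add_h, U.smul_h, k2, f.ve, mul_one] at h3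
      grind
    have h3 := f.expand (s • v)
    rw [k2, k3, one_smul] at h3
    set y := U.h (s • v) v
    refine f.ext ?_ ?_ ?_
    · rw [mul_smul, hsu s hs, hsu s hs, U.tv_apply uu hn, uu]; simp
    · rw [mul_smul, h2, smul_add, U.act, hsu s hs, h2, U.tv_apply uu hn, f.eu, add_assoc, U.two_V]
      simp
    · rw [mul_smul, h3, smul_add, smul_add, U.act, U.act, hsu s hs, h2, h3, U.tv_apply uu hn, f.vu]
      have : y • u + star x • (e + x • u) + (y • u + star x • e + v) =
          (y • u + y • u) + (star x • e + star x • e) + (v + (x * star x * 1) • u) := by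
        rw [smul_add, smul_smul, mul_one, mul_comm x]; abel
      rw [this, U.two_V, U.two_V]; simp
  have hnorm : ∀ s ∈ S, U.h (s • e) v ≠ 0 → U.h (s • e) v * star (U.h (s • e) v) = a := by
    intro s hs h0
    refine hone u hc _ ⟨star_norm _, ?_⟩ a haA (mul_ne_zero h0 (star_ne_zero.2 h0)) ha0
    rw [← hsq s hs]; exact K.mul_mem (hSK hs) (hSK hs)
  by_cases hall : ∀ s ∈ S, U.h (s • e) v = 0
  · refine ⟨⟨z, hzS⟩, fun s => ?_⟩
    rcases hker s s.2 (hall s s.2) with h | h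
    · rw [show s = 1 from Subtype.ext h]; exact ⟨0, zpow_zero _⟩
    · rw [show s = ⟨z, hzS⟩ from Subtype.ext h]; exact ⟨1, zpow_one _⟩
  · push Not at hall
    obtain ⟨s, hs, h0⟩ := hall
    have hss : s * s = z := by rw [hsq s hs, hnorm s hs h0, hz]
    have h4 : ∀ x ∈ S, U.h (x • e) v = 0 → x ∈ Subgroup.zpowers s := by
      intro x hx hx0
      rcases hker x hx hx0 with h | h
      · rw [h]; exact Subgroup.one_mem _
      · rw [h, ← hss]; exact Subgroup.mul_mem _ (Subgroup.mem_zpowers _) (Subgroup.mem_zpowers _)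
    have h5 : ∀ x ∈ S, x ∈ Subgroup.zpowers s := by
      intro x hx
      by_cases hx0 : U.h (x • e) v = 0
      · exact h4 x hx hx0
      have h6 : U.h (s • e) v = U.h (x • e) v := by
        by_contra hne
        have h7 : U.h ((s * x) • e) v ≠ 0 := by
          rw [hadd s hs x hx]; grind
        have n1 := hnorm s hs h0
        have n2 := hnorm x hx hx0
        have n3 := hnorm _ (S.mul_mem hs hx) h7
        rw [hadd s hs x hx, star_add] at n3
        set p := U.h (s • e) v
        set r := U.h (x • e) v
        have hp : star p ≠ 0 := star_ne_zero.2 h0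
        have hr : star r ≠ 0 := star_ne_zero.2 hx0
        -- the quotient of the two parameters would be a nontrivial cube root of unity of norm one
        have e1 : (r * p⁻¹) * star (r * p⁻¹) = 1 := by
          rw [star_mul', star_inv₀]
          field_simp
          rw [n1, n2]
        have e2 : (r * p⁻¹) ^ 3 = 1 := by
          have e3 : p * star r + star p * r = p * star p := by grind
          have e4 : r * r + p * r + p * p = 0 := by
            have : (r * r + p * r + p * p) * star p = 0 := by grind
            exact (mul_eq_zero.1 this).resolve_right hp
          field_simp
          grind
        have e5 := U.uf.norm_one_cube e1 e2
        field_simp at e5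
        exact hne e5.symm
      have h7 : U.h ((s * x) • e) v = 0 := by
        rw [hadd s hs x hx, h6]; exact CharTwo.add_self_eq_zero _
      have h8 := h4 _ (S.mul_mem hs hx) h7
      exact (Subgroup.mul_mem_cancel_left _ (Subgroup.mem_zpowers s)).1 h8
    refine ⟨⟨s, hs⟩, fun x => ?_⟩
    obtain ⟨j, hj⟩ := h5 x x.2
    exact ⟨j, Subtype.ext (by simpa using hj)⟩

/-- Every proper subgroup fixes a point or a triangle or normalizes a member of `Theta`. -/
theorem good (U : HU n F V G) {K : Subgroup G} (hK : K ≠ ⊤) : U.Good K := by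
  have := U.finiteG
  by_cases hno : (fixPts F V K).Nonempty
  · exact .inl hno
  by_cases hb : K = ⊥
  · obtain ⟨u, e, v, f⟩ := U.exists_hyp
    exact absurd ⟨mk F u f.ne.1, mem_fixPts.2 fun g hg => by
      rw [hb, Subgroup.mem_bot] at hg; rw [hg, one_smul]⟩ hno
  by_cases ho : Odd (Nat.card K)
  · exact U.odd_good hb le_rfl Subgroup.le_normalizer ho
  have hev : 2 ∣ Nat.card K := (Nat.not_odd_iff_even.1 ho).two_dvd
  have hone : ∀ u, U.Cen K u → ∀ a ∈ U.Ax K u, ∀ a' ∈ U.Ax K u, a ≠ 0 → a' ≠ 0 → a = a' := by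
    intro u hu a ha a' ha' h0 h0'
    by_contra hne
    exact hK (U.eq_top_of_two hno hu ha h0 ha' h0' hne)
  let P : Sylow 2 K := default
  have hPd : 2 ∣ Nat.card P := P.dvd_card_of_dvd_card hev
  set S : Subgroup G := (P : Subgroup K).map K.subtype with hS
  have hSK : S ≤ K := Subgroup.map_subtype_le _
  have eq : P ≃* S := Subgroup.equivMapOfInjective _ _ K.subtype_injective
  have hS1 : S ≠ ⊥ := by
    intro h
    rw [Nat.card_congr eq.toEquiv, h, Subgroup.card_bot] at hPd
    omega
  obtain ⟨hcyc, hfix⟩ := U.two_cyclic hone hSK (P.2.of_equiv eq) hS1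
  have hcycP : IsCyclic P := isCyclic_of_surjective eq.symm eq.symm.surjective
  have hmf : (Nat.card K).minFac = 2 := (Nat.minFac_eq_two_iff _).2 hev
  have hcompl := IsCyclic.isComplement' (P := P) hmf hcycP
  have hodd := MonoidHom.not_dvd_card_ker_transferSylow P (hcycP.normalizer_le_centralizer hmf)
  set O := (MonoidHom.transferSylow P (hcycP.normalizer_le_centralizer hmf)).ker with hO
  by_cases hO1 : O = ⊥
  · rw [hO1, Subgroup.isComplement'_bot_left] at hcompl
    have : S = K := by rw [hS, hcompl, ← MonoidHom.range_eq_map, Subgroup.range_subtype]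
    exact absurd (this ▸ hfix) hno
  · refine U.odd_good (A := O.map K.subtype) ?_ (Subgroup.map_subtype_le _) ?_ ?_
    · rwa [Ne, Subgroup.map_eq_bot_iff_of_injective _ K.subtype_injective]
    · intro k hk
      have hN : O.Normal := by rw [hO]; infer_instance
      rw [Subgroup.mem_normalizer_iff]
      intro x
      constructor
      · rintro ⟨y, hy, rfl⟩
        exact ⟨_, hN.conj_mem y hy ⟨k, hk⟩, by simp⟩
      · rintro ⟨y, hy, hyx⟩
        refine ⟨_, hN.conj_mem y hy ⟨k⁻¹, K.inv_mem hk⟩, ?_⟩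
        have : x = k⁻¹ * (y : G) * k := by rw [show (y : G) = k * x * k⁻¹ from hyx]; group
        rw [this]; simp
    · rw [Nat.card_congr (Subgroup.equivMapOfInjective O _ K.subtype_injective).toEquiv.symm]
      exact Nat.not_even_iff_odd.1 fun h => hodd h.two_dvd

end HU
end Classify

/-! ### Counting fixed points, flags and triangles -/

section Counting
variable {n : ℕ} {F V G : Type} [Field F] [StarRing F] [Finite F] [CharP F 2]
  [AddCommGroup V] [Module F V] [Group G] [DistribMulAction G V] [SMulCommClass G F V]

open scoped LinearAlgebra.Projectivization
open Projectivization (mk)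

namespace HU
variable {K : Subgroup G}

theorem ne_of_perp {U : HU n F V G} {A B : ℙ F V} (hA : ¬ U.iso A) (h : U.perp A B) : A ≠ B := by
  rintro rfl
  exact hA h

theorem IsTri.of_mem {U : HU n F V G} {D : Set (ℙ F V)} (hD : U.IsTri D) {A : ℙ F V} (hA : A ∈ D) :
    ∃ B C : ℙ F V, ¬ U.iso A ∧ ¬ U.iso B ∧ ¬ U.iso C ∧ U.perp A B ∧ U.perp A C ∧ U.perp B C ∧
      A ≠ B ∧ A ≠ C ∧ B ≠ C ∧ D = {A, B, C} := by
  obtain ⟨X, Y, Z, hX, hY, hZ, h1, h2, h3, rfl⟩ := hD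
  have n1 := ne_of_perp hX h1
  have n2 := ne_of_perp hX h2
  have n3 := ne_of_perp hY h3
  rcases hA with rfl | rfl | rfl
  · exact ⟨Y, Z, hX, hY, hZ, h1, h2, h3, n1, n2, n3, rfl⟩
  · exact ⟨X, Z, hY, hX, hZ, U.perp_comm.1 h1, h3, h2, n1.symm, n3, n2, by
      ext; simp only [Set.mem_insert_iff, Set.mem_singleton_iff]; tauto⟩
  · exact ⟨X, Y, hZ, hX, hY, U.perp_comm.1 h2, U.perp_comm.1 h3, h1, n2.symm, n3.symm, n1, by
      ext; simp only [Set.mem_insert_iff, Set.mem_singleton_iff]; tauto⟩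

theorem IsTri.nonempty {U : HU n F V G} {D : Set (ℙ F V)} (hD : U.IsTri D) : D.Nonempty := by
  obtain ⟨X, Y, Z, -, -, -, -, -, -, rfl⟩ := hD
  exact ⟨X, .inl rfl⟩

theorem IsTri.ncard {U : HU n F V G} {D : Set (ℙ F V)} (hD : U.IsTri D) : D.ncard = 3 := by
  obtain ⟨A, hA⟩ := hD.nonempty
  obtain ⟨B, C, -, -, -, -, -, -, h1, h2, h3, rfl⟩ := hD.of_mem hA
  exact Set.ncard_eq_three.2 ⟨A, B, C, h1, h2, h3, rfl⟩

theorem IsTri.not_iso {U : HU n F V G} {D : Set (ℙ F V)} (hD : U.IsTri D) {A : ℙ F V}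
    (hA : A ∈ D) : ¬ U.iso A := by
  obtain ⟨B, C, h, -⟩ := hD.of_mem hA
  exact h

theorem IsTri.perp {U : HU n F V G} {D : Set (ℙ F V)} (hD : U.IsTri D) {A B : ℙ F V}
    (hA : A ∈ D) (hB : B ∈ D) (hne : A ≠ B) : U.perp A B := by
  obtain ⟨X, Y, -, -, -, h1, h2, -, -, -, -, rfl⟩ := hD.of_mem hA
  rcases hB with rfl | rfl | rfl
  · exact absurd rfl hne
  · exact h1
  · exact h2

theorem IsTri.third {U : HU n F V G} {D : Set (ℙ F V)} (hD : U.IsTri D) {A B : ℙ F V}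
    (hA : A ∈ D) (hB : B ∈ D) (hne : A ≠ B) : ∃ C, ¬ U.iso A ∧ ¬ U.iso B ∧ ¬ U.iso C ∧ U.perp A B ∧
      U.perp A C ∧ U.perp B C ∧ A ≠ C ∧ B ≠ C ∧ D = {A, B, C} := by
  obtain ⟨X, Y, hA', hX, hY, h1, h2, h3, n1, n2, n3, rfl⟩ := hD.of_mem hA
  rcases hB with rfl | rfl | rfl
  · exact absurd rfl hne
  · exact ⟨Y, hA', hX, hY, h1, h2, h3, n2, n3, rfl⟩
  · exact ⟨X, hA', hY, hX, h2, h1, U.perp_comm.1 h3, n1, n3.symm, by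
      ext; simp only [Set.mem_insert_iff, Set.mem_singleton_iff]; tauto⟩

theorem IsTri.eq_of_two {U : HU n F V G} {D D' : Set (ℙ F V)} (hD : U.IsTri D) (hD' : U.IsTri D')
    {A B : ℙ F V} (hA : A ∈ D) (hB : B ∈ D) (hA' : A ∈ D') (hB' : B ∈ D') (hne : A ≠ B) :
    D = D' := by
  obtain ⟨C, -, -, -, -, h1, h2, -, -, rfl⟩ := hD.third hA hB hne
  obtain ⟨C', -, -, -, -, h1', h2', -, -, rfl⟩ := hD'.third hA' hB' hne
  rw [U.pole_unique hne.symm h1 h2 h1' h2']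

theorem IsTri.smul {U : HU n F V G} {D : Set (ℙ F V)} (hD : U.IsTri D) (g : G) :
    U.IsTri (g • D) := by
  obtain ⟨A, B, C, hA, hB, hC, h1, h2, h3, rfl⟩ := hD
  refine ⟨g • A, g • B, g • C, by rwa [U.iso_smul], by rwa [U.iso_smul], by rwa [U.iso_smul],
    (U.perp_smul g).2 h1, (U.perp_smul g).2 h2, (U.perp_smul g).2 h3, ?_⟩
  simp [Set.smul_set_insert]

/-- A nonisotropic point on the polar line of a nonisotropic point `R` lies with `R` in exactly
one triangle. -/
theorem exists_tri (U : HU n F V G) {R A : ℙ F V} (hR : ¬ U.iso R) (hA : ¬ U.iso A)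
    (h : U.perp A R) : ∃ B, U.IsTri {R, A, B} ∧ U.perp B R ∧ B ≠ A ∧ B ≠ R := by
  have hne : A ≠ R := ne_of_perp hA h
  obtain ⟨Z, h1, h2, -⟩ := U.pole hne
  have hZ := U.third_noniso hR hA (U.perp_comm.1 h) h1 h2
  exact ⟨Z, ⟨R, A, Z, hR, hA, hZ, U.perp_comm.1 h, h1, h2, rfl⟩, U.perp_comm.1 h1,
    (ne_of_perp hA h2).symm, (ne_of_perp hR h1).symm⟩

/-- The flags (isotropic point, orthogonal nonisotropic point) inside `S`. -/
def flags (U : HU n F V G) (S : Set (ℙ F V)) : Set (ℙ F V × ℙ F V) :=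
  {p | p.1 ∈ S ∧ p.2 ∈ S ∧ U.iso p.1 ∧ ¬ U.iso p.2 ∧ U.perp p.1 p.2}

/-- The triangles with all vertices in `S`. -/
def tris (U : HU n F V G) (S : Set (ℙ F V)) : Set (Set (ℙ F V)) := {D | U.IsTri D ∧ D ⊆ S}

theorem finiteP (U : HU n F V G) : Finite (ℙ F V) := by
  have := U.finiteV
  exact Quotient.finite _

theorem tris_empty (U : HU n F V G) {S : Set (ℙ F V)}
    (h : ∀ A ∈ S, ∀ B ∈ S, ∀ C ∈ S, ¬ U.iso A → ¬ U.iso B → ¬ U.iso C → U.perp A B → U.perp A C →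
      U.perp B C → False) : U.tris S = ∅ := by
  rw [Set.eq_empty_iff_forall_notMem]
  rintro D ⟨⟨A, B, C, hA, hB, hC, h1, h2, h3, rfl⟩, hS⟩
  exact h A (hS (by simp)) B (hS (by simp)) C (hS (by simp)) hA hB hC h1 h2 h3

/-- The Euler characteristic identity behind the vanishing of the virtual permutation character:
in a fixed-point configuration, points outnumber flags plus twice the triangles by one. -/
theorem FixType.count {U : HU n F V G} {S : Set (ℙ F V)} (h : U.FixType S) :
    S.ncard = (U.flags S).ncard + 2 * (U.tris S).ncard + 1 := by
  have := U.finiteP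
  cases h with
  | iso P hP hS =>
    have h1 : U.flags S = ∅ := by
      rw [Set.eq_empty_iff_forall_notMem]
      rintro ⟨X, Y⟩ ⟨hX, hY, h1, h2, -⟩
      simp only [hS, Set.mem_singleton_iff] at hX hY h1 h2
      exact h2 (hY ▸ hP)
    have h2 : U.tris S = ∅ := U.tris_empty (by
      intro A hA B hB C hC h1
      rw [hS] at hA
      exact absurd (hA ▸ hP) h1)
    rw [h1, h2, hS]; simp
  | non R hR hS =>
    have h1 : U.flags S = ∅ := by
      rw [Set.eq_empty_iff_forall_notMem]
      rintro ⟨X, Y⟩ ⟨hX, hY, h1, h2, -⟩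
      simp only [hS, Set.mem_singleton_iff] at hX hY h1 h2
      exact hR (hX ▸ h1)
    have h2 : U.tris S = ∅ := U.tris_empty (by
      intro A hA B hB C hC h1 h2 h3 h4
      rw [hS] at hA hB
      cases hA; cases hB
      exact absurd h4 h1)
    rw [h1, h2, hS]; simp
  | flag P R hP hR h hS =>
    have hne : R ≠ P := ne_of_perp hR (U.perp_comm.1 h)
    have h1 : U.flags S = {(P, R)} := by
      ext ⟨X, Y⟩
      simp only [flags, hS, Set.mem_setOf_eq, Set.mem_insert_iff, Set.mem_singleton_iff,
        Prod.mk.injEq]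
      constructor
      · rintro ⟨rfl | rfl, rfl | rfl, h1, h2, h3⟩ <;> tauto
      · rintro ⟨rfl, rfl⟩; tauto
    have h2 : U.tris S = ∅ := U.tris_empty (by
      intro A hA B hB C hC n1 n2 n3 h4
      rw [hS] at hA hB
      rcases hA with rfl | rfl
      · exact absurd hP n1
      rcases hB with rfl | rfl
      · exact absurd hP n2
      exact absurd h4 n1)
    rw [h1, h2, hS, Set.ncard_pair hne.symm]; simp
  | hyp R P Q hR hP hQ hne h1 h2 hS =>
    have hRP := ne_of_perp hR h1
    have hRQ := ne_of_perp hR h2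
    have h3 : U.flags S = {(P, R), (Q, R)} := by
      ext ⟨X, Y⟩
      simp only [flags, hS, Set.mem_setOf_eq, Set.mem_insert_iff, Set.mem_singleton_iff,
        Prod.mk.injEq]
      constructor
      · rintro ⟨rfl | rfl | rfl, rfl | rfl | rfl, h1, h2, h3⟩ <;> tauto
      · have := U.perp_comm.1 h1
        have := U.perp_comm.1 h2
        rintro (⟨rfl, rfl⟩ | ⟨rfl, rfl⟩) <;> tauto
    have h4 : U.tris S = ∅ := U.tris_empty (by
      intro A hA B hB C hC h1 h2 h3 h4
      rw [hS] at hA hB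
      rcases hA with rfl | rfl | rfl
      · rcases hB with rfl | rfl | rfl <;> tauto
      all_goals tauto)
    rw [h3, h4, hS, Set.ncard_pair (by simp [hne]), Set.ncard_eq_three.2 ⟨R, P, Q, hRP, hRQ, hne, rfl⟩]
    simp
  | tri A B C hA hB hC hAB hAC hBC hS =>
    have hD : U.IsTri S := ⟨A, B, C, hA, hB, hC, hAB, hAC, hBC, hS⟩
    have h1 : U.flags S = ∅ := by
      rw [Set.eq_empty_iff_forall_notMem]
      rintro ⟨X, Y⟩ ⟨hX, hY, h1, h2, -⟩
      exact hD.not_iso hX h1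
    have h2 : U.tris S = {S} := by
      ext D
      simp only [tris, Set.mem_setOf_eq, Set.mem_singleton_iff]
      constructor
      · rintro ⟨h, hs⟩
        exact Set.eq_of_subset_of_ncard_le hs (by rw [h.ncard, hD.ncard])
      · rintro rfl; exact ⟨hD, subset_rfl⟩
    rw [h1, h2, hD.ncard]; simp
  | hom R hR hS =>
    have := Fintype.ofFinite (ℙ F V)
    have hS' : S = insert R ({X | U.iso X ∧ U.perp X R} ∪ {X | ¬ U.iso X ∧ U.perp X R}) := by
      rw [hS]; ext X
      simp only [Set.mem_setOf_eq, Set.mem_insert_iff, Set.mem_union]; tauto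
    have h1 : (U.flags S).ncard = {X | U.iso X ∧ U.perp X R}.ncard := by
      have : U.flags S = (fun X => (X, R)) '' {X | U.iso X ∧ U.perp X R} := by
        ext ⟨X, Y⟩
        simp only [flags, hS, Set.mem_setOf_eq, Set.mem_image, Prod.mk.injEq]
        constructor
        · rintro ⟨hX, hY, h1, h2, h3⟩
          have hXR : U.perp X R := hX.resolve_left (by rintro rfl; exact hR h1)
          refine ⟨X, ⟨h1, hXR⟩, rfl, ?_⟩
          rcases hY with rfl | hY
          · rfl
          · exact absurd (U.pole_unique (ne_of_perp h2 (U.perp_comm.1 h3)) h1 (U.perp_comm.1 h3)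
              hXR hY ▸ h1) hR
        · rintro ⟨X, ⟨h1, h2⟩, rfl, rfl⟩
          exact ⟨.inr h2, .inl rfl, h1, hR, h2⟩
      rw [this, Set.ncard_image_of_injective _ (fun a b h => (Prod.mk.inj h).1)]
    have h2 : {X | ¬ U.iso X ∧ U.perp X R}.ncard * 1 = (U.tris S).ncard * 2 := by
      rw [Set.ncard_eq_toFinset_card', Set.ncard_eq_toFinset_card']
      refine Finset.card_mul_eq_card_mul (fun A D => A ∈ D) ?_ ?_
      · intro A hA
        rw [Set.mem_toFinset] at hA
        obtain ⟨B, hT, hB, -, -⟩ := U.exists_tri hR hA.1 hA.2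
        rw [Finset.card_eq_one]
        refine ⟨{R, A, B}, ?_⟩
        ext D
        rw [Finset.mem_bipartiteAbove, Set.mem_toFinset, Finset.mem_singleton]
        constructor
        · rintro ⟨⟨hD, hDS⟩, hAD⟩
          have hRD : R ∈ D := by
            obtain ⟨X, Y, -, hX, -, h1, h2, h3, n1, n2, n3, rfl⟩ := hD.of_mem hAD
            have hX' := hDS (show X ∈ _ by simp)
            have hY' := hDS (show Y ∈ _ by simp)
            rw [hS] at hX' hY'
            rcases hX' with rfl | hX'
            · simp
            rcases hY' with rfl | hY'
            · simp
            rw [U.pole_unique n1.symm hA.2 hX' h2 h3]; simp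
          exact hD.eq_of_two hT hAD hRD (by simp) (by simp) (ne_of_perp hA.1 hA.2)
        · rintro rfl
          refine ⟨⟨hT, ?_⟩, by simp⟩
          rintro X (rfl | rfl | rfl) <;> rw [hS]
          · exact .inl rfl
          · exact .inr hA.2
          · exact .inr hB
      · intro D hD
        rw [Set.mem_toFinset] at hD
        obtain ⟨hD, hDS⟩ := hD
        have hRD : R ∈ D := by
          obtain ⟨A, hA⟩ := hD.nonempty
          obtain ⟨X, Y, -, hX, -, h1, h2, h3, n1, n2, n3, rfl⟩ := hD.of_mem hA
          have hA' := hDS (show A ∈ _ by simp)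
          have hX' := hDS (show X ∈ _ by simp)
          have hY' := hDS (show Y ∈ _ by simp)
          rw [hS] at hA' hX' hY'
          rcases hX' with rfl | hX'
          · simp
          rcases hY' with rfl | hY'
          · simp
          rcases hA' with rfl | hA'
          · simp
          rw [U.pole_unique n1.symm hA' hX' h2 h3]; simp
        obtain ⟨X, Y, -, hX, hY, h1, h2, h3, n1, n2, n3, rfl⟩ := hD.of_mem hRD
        rw [Finset.card_eq_two]
        refine ⟨X, Y, n3, ?_⟩
        ext Z
        simp only [Finset.mem_bipartiteBelow, Set.mem_toFinset, Set.mem_setOf_eq,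
          Set.mem_insert_iff, Set.mem_singleton_iff, Finset.mem_insert, Finset.mem_singleton]
        constructor
        · rintro ⟨⟨hZ, hZR⟩, rfl | h⟩
          · exact absurd hZR hR
          · exact h
        · rintro (rfl | rfl)
          · exact ⟨⟨hX, U.perp_comm.1 h1⟩, by simp⟩
          · exact ⟨⟨hY, U.perp_comm.1 h2⟩, by simp⟩
    have h3 : S.ncard = {X | U.iso X ∧ U.perp X R}.ncard + {X | ¬ U.iso X ∧ U.perp X R}.ncard + 1 := by
      rw [hS', Set.ncard_insert_of_notMem, Set.ncard_union_eq]
      · rw [Set.disjoint_left]; rintro X ⟨h, -⟩ ⟨h', -⟩; exact h' h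
      · rintro (⟨-, h⟩ | ⟨-, h⟩) <;> exact hR h
    omega
  | trans P hP hS =>
    have hS' : S = insert P {X | ¬ U.iso X ∧ U.perp X P} := by
      rw [hS]; ext X
      simp only [Set.mem_setOf_eq, Set.mem_insert_iff]
      constructor
      · intro h
        by_cases hX : U.iso X
        · exact .inl (U.iso_unique hP hX h)
        · exact .inr ⟨hX, h⟩
      · rintro (rfl | h)
        · exact hP
        · exact h.2
    have h1 : (U.flags S).ncard = {X | ¬ U.iso X ∧ U.perp X P}.ncard := by
      have : U.flags S = (fun X => (P, X)) '' {X | ¬ U.iso X ∧ U.perp X P} := by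
        ext ⟨X, Y⟩
        simp only [flags, hS, Set.mem_setOf_eq, Set.mem_image, Prod.mk.injEq]
        constructor
        · rintro ⟨hX, hY, h1, h2, h3⟩
          exact ⟨Y, ⟨h2, hY⟩, (U.iso_unique hP h1 hX).symm, rfl⟩
        · rintro ⟨X, ⟨h1, h2⟩, rfl, rfl⟩
          exact ⟨hP, h2, hP, h1, U.perp_comm.1 h2⟩
      rw [this, Set.ncard_image_of_injective _ (fun a b h => (Prod.mk.inj h).2)]
    have h2 : U.tris S = ∅ := U.tris_empty (by
      intro A hA B hB C hC h1 h2 h3 h4 h5 h6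
      rw [hS] at hA hB
      have := U.pole_unique (ne_of_perp h1 h4).symm h5 h6 hA hB
      exact h3 (this ▸ hP))
    rw [hS', Set.ncard_insert_of_notMem (by rintro ⟨h, -⟩; exact h hP), ← hS', h1, h2]
    simp

end HU
end Counting

/-! ### The virtual permutation character and its defect -/

section Defect
variable {n : ℕ} {F V G : Type} [Field F] [StarRing F] [Finite F] [CharP F 2]
  [AddCommGroup V] [Module F V] [Group G] [DistribMulAction G V] [SMulCommClass G F V]

open scoped LinearAlgebra.Projectivization
open Projectivization (mk)

namespace HU

/-- The triangles stabilized by `H`. -/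
def triFix (U : HU n F V G) (H : Subgroup G) : Set (Set (ℙ F V)) :=
  {D | U.IsTri D ∧ ∀ g ∈ H, g • D = D}

/-- The pairs (vertex, triangle) fixed by `H`. -/
def vtxFix (U : HU n F V G) (H : Subgroup G) : Set (ℙ F V × Set (ℙ F V)) :=
  {p | p.2 ∈ U.triFix H ∧ p.1 ∈ p.2 ∧ p.1 ∈ fixPts F V H}

/-- The members of `Theta` normalized by `H`. -/
def thetaFix (U : HU n F V G) (H : Subgroup G) : Set (Subgroup G) :=
  {C | C ∈ U.Theta ∧ H ≤ Subgroup.normalizer (C : Set G)}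

/-- The triangles stabilized by `H` none of whose vertices is fixed by `H`. -/
def freeTri (U : HU n F V G) (H : Subgroup G) : Set (Set (ℙ F V)) :=
  {D | D ∈ U.triFix H ∧ ∀ A ∈ D, A ∉ fixPts F V H}

/-- The number of fixed elements of `H` in the virtual `G`-set
(flags) + (vertices of triangles) - (points) - (triangles) - `Theta`. -/
noncomputable def X0 (U : HU n F V G) (H : Subgroup G) : ℤ :=
  (U.flags (fixPts F V H)).ncard + (U.vtxFix H).ncard - (fixPts F V H).ncard - (U.triFix H).ncard
    - (U.thetaFix H).ncard

/-- The defect of `H`: the deviation of `X0` from its generic value `-1`. -/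
noncomputable def defect (U : HU n F V G) (H : Subgroup G) : ℤ :=
  (U.freeTri H).ncard + (U.thetaFix H).ncard - if (fixPts F V H).Nonempty then 0 else 1

/-- A stabilized triangle has none, exactly one or all three of its vertices fixed. -/
theorem vtx_count (U : HU n F V G) (H : Subgroup G) :
    (U.vtxFix H).ncard + (U.freeTri H).ncard =
      (U.triFix H).ncard + 2 * (U.tris (fixPts F V H)).ncard := by
  have := U.finiteP
  have := Fintype.ofFinite (ℙ F V)
  have hsub : U.tris (fixPts F V H) ⊆ U.triFix H := by
    rintro D ⟨hD, hS⟩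
    refine ⟨hD, fun g hg => ?_⟩
    have : g • D = (fun x => x) '' D := Set.image_congr fun x hx => hS hx g hg
    rw [this, Set.image_id']
  have h1 : (U.vtxFix H).toFinset.card =
      ∑ D ∈ (U.triFix H).toFinset, (D ∩ fixPts F V H).ncard := by
    rw [Finset.card_eq_sum_card_fiberwise (f := Prod.snd) (t := (U.triFix H).toFinset)]
    · refine Finset.sum_congr rfl fun D hD => ?_
      rw [Set.mem_toFinset] at hD
      rw [← Set.ncard_coe_finset]
      refine Set.ncard_congr (fun p _ => p.1) ?_ ?_ ?_
      · intro p hp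
        rw [Finset.mem_coe, Finset.mem_filter, Set.mem_toFinset] at hp
        exact ⟨hp.2 ▸ hp.1.2.1, hp.1.2.2⟩
      · intro p q hp hq h
        rw [Finset.mem_coe, Finset.mem_filter] at hp hq
        exact Prod.ext h (hp.2.trans hq.2.symm)
      · intro X hX
        refine ⟨(X, D), ?_, rfl⟩
        rw [Finset.mem_coe, Finset.mem_filter, Set.mem_toFinset]
        exact ⟨⟨hD, hX.1, hX.2⟩, rfl⟩
    · intro p hp
      simp only [Set.coe_toFinset] at hp ⊢
      exact hp.1
  have h2 : (U.freeTri H).toFinset.card =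
      ∑ D ∈ (U.triFix H).toFinset, if (∀ A ∈ D, A ∉ fixPts F V H) then 1 else 0 := by
    rw [← Finset.card_filter]
    congr 1; ext D
    simp only [Set.mem_toFinset, Finset.mem_filter]
    exact Iff.rfl
  have h3 : (U.tris (fixPts F V H)).toFinset.card =
      ∑ D ∈ (U.triFix H).toFinset, if D ⊆ fixPts F V H then 1 else 0 := by
    rw [← Finset.card_filter]
    congr 1; ext D
    simp only [Set.mem_toFinset, Finset.mem_filter]
    exact ⟨fun h => ⟨hsub h, h.2⟩, fun h => ⟨h.1.1, h.2⟩⟩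
  rw [Set.ncard_eq_toFinset_card', Set.ncard_eq_toFinset_card', Set.ncard_eq_toFinset_card',
    Set.ncard_eq_toFinset_card', h1, h2, h3, Finset.card_eq_sum_ones, Finset.mul_sum,
    ← Finset.sum_add_distrib, ← Finset.sum_add_distrib]
  refine Finset.sum_congr rfl fun D hD => ?_
  rw [Set.mem_toFinset] at hD
  by_cases h : ∀ A ∈ D, A ∉ fixPts F V H
  · have h4 : D ∩ fixPts F V H = ∅ := by
      rw [Set.eq_empty_iff_forall_notMem]; exact fun A hA => h A hA.1 hA.2
    have h5 : ¬ D ⊆ fixPts F V H := by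
      intro h5
      obtain ⟨A, hA⟩ := hD.1.nonempty
      exact h A hA (h5 hA)
    rw [if_pos h, if_neg h5, h4]; simp
  · rw [if_neg h]
    push Not at h
    obtain ⟨A, hA, hAf⟩ := h
    obtain ⟨B, C, hA', hB, hC, h1, h2, h3, n1, n2, n3, hDe⟩ := hD.1.of_mem hA
    by_cases hBf : B ∈ fixPts F V H
    · have hCf := U.pole_mem n1.symm hAf hBf h2 h3
      have h5 : D ⊆ fixPts F V H := by
        rw [hDe]; rintro X (rfl | rfl | rfl) <;> assumption
      rw [if_pos h5, Set.inter_eq_left.2 h5, hD.1.ncard]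
      norm_num
    · have hCf : C ∉ fixPts F V H := fun hCf =>
        hBf (U.pole_mem n2.symm hAf hCf h1 (U.perp_comm.1 h3))
      have h5 : ¬ D ⊆ fixPts F V H := fun h => hBf (h (hDe ▸ by simp))
      have h4 : D ∩ fixPts F V H = {A} := by
        ext X
        simp only [hDe, Set.mem_inter_iff, Set.mem_insert_iff, Set.mem_singleton_iff]
        constructor
        · rintro ⟨rfl | rfl | rfl, h⟩
          · rfl
          · exact absurd h hBf
          · exact absurd h hCf
        · rintro rfl; exact ⟨.inl rfl, hAf⟩
      rw [if_neg h5, h4]; simp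

/-- The fixed points of a nontrivial subgroup form one of the configurations of `FixType`; in each
of them (flags) - (points) + 2 (fixed triangles) is `-1`, or `0` when there are no fixed points. -/
theorem X0_eq (U : HU n F V G) {H : Subgroup G} (hH : H ≠ ⊥) : U.X0 H = -1 - U.defect H := by
  have h1 := U.vtx_count H
  unfold X0 defect
  by_cases hne : (fixPts F V H).Nonempty
  · have h2 := (U.fixType hH hne).count
    rw [if_pos hne]; omega
  · rw [Set.not_nonempty_iff_eq_empty] at hne
    have h2 : U.flags (fixPts F V H) = ∅ := by
      rw [Set.eq_empty_iff_forall_notMem]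
      rintro p ⟨h, -⟩
      rw [hne] at h; exact h
    have h3 : U.tris (fixPts F V H) = ∅ := U.tris_empty (by
      intro A hA; rw [hne] at hA; exact hA.elim)
    have h4 : U.vtxFix H = ∅ := by
      rw [Set.eq_empty_iff_forall_notMem]
      rintro p ⟨-, -, h⟩
      rw [hne] at h; exact h
    rw [h2, h4, hne]
    rw [h3, h4] at h1
    simp at h1 ⊢
    omega

end HU
end Defect

/-! ### Subgroups with nonzero defect have order three or six -/

section DefectZero
variable {n : ℕ} {F V G : Type} [Field F] [StarRing F] [Finite F] [CharP F 2]
  [AddCommGroup V] [Module F V] [Group G] [DistribMulAction G V] [SMulCommClass G F V]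

open scoped LinearAlgebra.Projectivization
open Projectivization (mk)

namespace HU

theorem Irr.smul_ne {U : HU n F V G} {g : G} (hg : U.Irr g) (P : ℙ F V) : g • P ≠ P := by
  obtain ⟨x, hx, rfl⟩ := exists_mk P
  intro h
  obtain ⟨a, ha⟩ := (smul_mk_eq g hx).1 h
  exact hx (hg x a ha)

theorem Theta.smul_ne {U : HU n F V G} {C : Subgroup G} (hC : C ∈ U.Theta) {g : G} (hg : g ∈ C)
    (h1 : g ≠ 1) (P : ℙ F V) : g • P ≠ P := (Theta.irr hC hg h1).smul_ne P

theorem IsTri.six {U : HU n F V G} {D : Set (ℙ F V)} (hD : U.IsTri D) {g : G} (hg : g • D = D)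
    {X : ℙ F V} (hX : X ∈ D) : g ^ 6 • X = X := by
  obtain ⟨A, B, C, -, -, -, -, -, -, rfl⟩ := hD
  refine pow_six (fun Y hY => ?_) hX
  have := Set.smul_mem_smul_set (a := g) hY
  rwa [hg] at this

theorem IsTri.pow_eq_one {U : HU n F V G} {D : Set (ℙ F V)} (hD : U.IsTri D) {g : G}
    (hg : ∀ X ∈ D, g • X = X) (h12 : g ^ 12 = 1) : g = 1 := by
  obtain ⟨A, B, C, hA, hB, hC, h1, h2, h3, rfl⟩ := hD
  obtain ⟨a, b, c, f, rfl, rfl, rfl⟩ := U.tri_frame hA hB hC h1 h2 h3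
  obtain ⟨x, hx⟩ := (smul_mk_eq g _).1 (hg _ (.inl rfl))
  obtain ⟨y, hy⟩ := (smul_mk_eq g _).1 (hg _ (.inr (.inl rfl)))
  obtain ⟨z, hz⟩ := (smul_mk_eq g _).1 (hg _ (.inr (.inr rfl)))
  exact f.pow_eq_one hx hy hz h12

/-- Elements fixing the vertices of a triangle have order prime to six, because `q + 1` is. -/
theorem IsTri.coprime {U : HU n F V G} {D : Set (ℙ F V)} (hD : U.IsTri D) {g : G}
    (hg : ∀ X ∈ D, g • X = X) : Nat.Coprime 6 (orderOf g) := by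
  have := U.finiteG
  rw [Nat.coprime_iff_gcd_eq_one]
  set d := Nat.gcd 6 (orderOf g) with hd
  have h6 : d ∣ 6 := Nat.gcd_dvd_left _ _
  obtain ⟨m, hm⟩ : d ∣ orderOf g := Nat.gcd_dvd_right _ _
  have h1 : g ^ m = 1 := by
    refine hD.pow_eq_one (fun X hX => pow_smul_fix (hg X hX) m) ?_
    rw [← pow_mul]
    apply orderOf_dvd_iff_pow_eq_one.1
    rw [hm, mul_comm]
    exact Nat.mul_dvd_mul_left m (h6.trans (by norm_num))
  have h2 := orderOf_dvd_of_pow_eq_one h1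
  have h3 : 0 < orderOf g := orderOf_pos g
  rw [hm] at h2 h3
  have h4 : 0 < m := Nat.pos_of_mul_pos_left h3 
  have h5 := Nat.le_of_dvd h4 h2
  have : 0 < d := Nat.pos_of_mul_pos_right h3
  nlinarith

theorem IsTri.eq_of_subset {U : HU n F V G} {D D' : Set (ℙ F V)} (hD : U.IsTri D)
    (hD' : U.IsTri D') (h : D ⊆ D') : D = D' := by
  have := U.finiteP
  exact Set.eq_of_subset_of_ncard_le h (by rw [hD.ncard, hD'.ncard])

/-- An involution stabilizing a triangle fixes one of its vertices. -/
theorem IsTri.fix_of_sq {U : HU n F V G} {D : Set (ℙ F V)} (hD : U.IsTri D) {g : G}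
    (hg : g • D = D) (h2 : g * g = 1) : ∃ X ∈ D, g • X = X := by
  have hst : ∀ X ∈ D, g • X ∈ D := fun X hX => by
    have := Set.smul_mem_smul_set (a := g) hX
    rwa [hg] at this
  have hgg : ∀ X : ℙ F V, g • g • X = X := fun X => by rw [← mul_smul, h2, one_smul]
  obtain ⟨A, hA⟩ := hD.nonempty
  by_cases hAf : g • A = A
  · exact ⟨A, hA, hAf⟩
  obtain ⟨C, -, -, -, -, -, -, h1, h3, rfl⟩ := hD.third hA (hst A hA) (Ne.symm hAf)
  refine ⟨C, by simp, ?_⟩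
  rcases hst C (by simp) with h | h | h
  · exact absurd (by rw [← h, hgg]) h3
  · exact absurd (MulAction.injective g h).symm h1
  · exact h

/-- If a nontrivial element of `H` fixes the vertices of a free triangle `D` of `H`, then the fixed
points of the vertexwise stabilizer of `D` in `H` are exactly the vertices of `D`. -/
theorem freeTri_fix (U : HU n F V G) {H : Subgroup G} {D : Set (ℙ F V)} (hD : D ∈ U.freeTri H)
    {g : G} (hg : g ∈ H) (h1 : g ≠ 1) (hf : ∀ X ∈ D, g • X = X) :
    fixPts F V (H ⊓ fixingSubgroup G D) = D := by
  have := U.finiteP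
  obtain ⟨⟨hD, hst⟩, hfree⟩ := hD
  set A := H ⊓ fixingSubgroup G D with hA
  have hmem : ∀ a, a ∈ A ↔ a ∈ H ∧ ∀ X ∈ D, a • X = X := fun a => by
    rw [hA, Subgroup.mem_inf, mem_fixingSubgroup_iff]
  have hA1 : A ≠ ⊥ := by
    intro h
    have : g ∈ A := (hmem g).2 ⟨hg, hf⟩
    rw [h] at this
    exact h1 (Subgroup.mem_bot.1 this)
  have hsub : D ⊆ fixPts F V A := fun X hX a ha => ((hmem a).1 ha).2 X hX
  have hnorm : H ≤ Subgroup.normalizer (A : Set G) := by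
    have key : ∀ m ∈ H, ∀ a ∈ A, m * a * m⁻¹ ∈ A := by
      intro m hm a ha
      obtain ⟨ha1, ha2⟩ := (hmem a).1 ha
      refine (hmem _).2 ⟨H.mul_mem (H.mul_mem hm ha1) (H.inv_mem hm), fun X hX => ?_⟩
      have h3 : m⁻¹ • X ∈ D := by
        have := Set.smul_mem_smul_set (a := m⁻¹) hX
        rwa [hst _ (H.inv_mem hm)] at this
      rw [mul_smul, mul_smul, ha2 _ h3, smul_inv_smul]
    intro m hm
    rw [Subgroup.mem_normalizer_iff]
    refine fun a => ⟨key m hm a, fun h => ?_⟩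
    have := key m⁻¹ (H.inv_mem hm) _ h
    simpa [mul_assoc] using this
  have hc := hD.ncard
  have hle := Set.ncard_le_ncard hsub
  obtain ⟨X, Y, Z, hX, hY, hZ, pXY, pXZ, pYZ, hDe⟩ := hD
  have hD : U.IsTri D := ⟨X, Y, Z, hX, hY, hZ, pXY, pXZ, pYZ, hDe⟩
  have mX := hsub (hDe ▸ .inl rfl : X ∈ D)
  have mY := hsub (hDe ▸ .inr (.inl rfl) : Y ∈ D)
  have mZ := hsub (hDe ▸ .inr (.inr rfl) : Z ∈ D)
  have nXY := ne_of_perp hX pXY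
  have ft := U.fixType hA1 ⟨X, mX⟩
  cases ft with
  | iso P hP hS => rw [hS, hc, Set.ncard_singleton] at hle; omega
  | non P hP hS => rw [hS, hc, Set.ncard_singleton] at hle; omega
  | flag P R _ _ _ hS =>
    rw [hS, hc] at hle
    have := Set.ncard_insert_le P {R}
    rw [Set.ncard_singleton] at this; omega
  | hyp R P Q hR hP hQ hne h1 h2 hS =>
    have h3 : ({R, P, Q} : Set (ℙ F V)).ncard ≤ 3 := Set.ncard_insert_le _ _ |>.trans (by
      have := Set.ncard_insert_le P {Q}
      rw [Set.ncard_singleton] at this; omega)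
    have h4 : D = {R, P, Q} := Set.eq_of_subset_of_ncard_le (hS ▸ hsub) (by rw [hc]; exact h3)
    exact absurd hP (hD.not_iso (h4 ▸ by simp))
  | tri A B C hA hB hC hAB hAC hBC hS =>
    exact (hD.eq_of_subset ⟨A, B, C, hA, hB, hC, hAB, hAC, hBC, hS⟩ hsub).symm
  | hom R hR hS =>
    exfalso
    have hRD : R ∈ D := by
      rw [hS] at mX mY
      rcases mX with rfl | mX
      · rw [hDe]; simp
      rcases mY with rfl | mY
      · rw [hDe]; simp
      rw [U.pole_unique nXY.symm mX mY pXZ pYZ, hDe]; simp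
    refine hfree R hRD fun m hm => U.hom_unique hR fun W hW => ?_
    have h3 : W ∈ fixPts F V A := by rw [hS]; exact hW
    have h4 := fixPts_perm hnorm hm h3
    rwa [hS] at h4
  | trans P hP hS =>
    rw [hS] at mX mY
    exact absurd (U.pole_unique nXY.symm mX mY pXZ pYZ ▸ hP) hZ

/-- When some nontrivial element of `H` fixes the vertices of a free triangle, this triangle is the
only one of its kind and no member of `Theta` is normalized. -/
theorem defect_of_tri_fix (U : HU n F V G) {H : Subgroup G} {D : Set (ℙ F V)}
    (hD : D ∈ U.freeTri H) {g : G} (hg : g ∈ H) (h1 : g ≠ 1) (hf : ∀ X ∈ D, g • X = X) :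
    U.defect H = 0 := by
  have hfix := U.freeTri_fix hD hg h1 hf
  have hco := hD.1.1.coprime hf
  have h2 : U.freeTri H = {D} := by
    refine Set.eq_singleton_iff_unique_mem.2 ⟨hD, fun D' hD' => ?_⟩
    refine hD'.1.1.eq_of_subset hD.1.1 fun X hX => ?_
    rw [← hfix]
    rintro a ⟨ha, ha'⟩
    have ha'' := (mem_fixingSubgroup_iff G).1 ha'
    exact fix_of_pow (hD.1.1.coprime ha'') (hD'.1.1.six (hD'.1.2 a ha) hX)
  have h3 : U.thetaFix H = ∅ := by
    rw [Set.eq_empty_iff_forall_notMem]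
    rintro C ⟨hC, hHC⟩
    have h4 := Theta.cube hC (hHC hg)
    obtain ⟨X, hX⟩ := hD.1.1.nonempty
    refine Theta.smul_ne hC h4 (fun h5 => h1 ?_) X (pow_smul_fix (hf X hX) 3)
    refine hD.1.1.pow_eq_one hf ?_
    rw [show 12 = 3 * 4 by norm_num, pow_mul, h5, one_pow]
  have h4 : ¬ (fixPts F V H).Nonempty := by
    rintro ⟨X, hX⟩
    have : X ∈ D := by
      rw [← hfix]; exact fun a ha => hX a ha.1
    exact hD.2 X this hX
  unfold defect
  rw [h2, h3, if_neg h4]; simp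

/-- A group acting faithfully on the vertices of a triangle, without fixed vertex, is cyclic of
order three or symmetric. -/
theorem card_of_tri_free (U : HU n F V G) {H : Subgroup G} {D : Set (ℙ F V)}
    (hD : D ∈ U.freeTri H) (hf : ∀ g ∈ H, (∀ X ∈ D, g • X = X) → g = 1) :
    Nat.card H = 3 ∨ Nat.card H = 6 := by
  have := U.finiteP
  have := U.finiteG
  let S : SubMulAction H (ℙ F V) :=
    { carrier := D
      smul_mem' := fun g X hX => by
        have := Set.smul_mem_smul_set (a := (g : G)) hX
        rwa [hD.1.2 g g.2] at this }
  have hS : Nat.card S = 3 := hD.1.1.ncard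
  have hinj : Function.Injective (MulAction.toPermHom H S) := by
    rw [injective_iff_map_eq_one]
    intro g hg
    apply Subtype.ext
    refine hf g g.2 fun X hX => ?_
    have := congrArg (fun p : Equiv.Perm S => ((p ⟨X, hX⟩ : S) : ℙ F V)) hg
    exact this
  have h6 := Subgroup.card_dvd_of_injective _ hinj
  rw [Nat.card_perm, hS] at h6
  have hle := Nat.le_of_dvd (by decide) h6
  have key : ∀ k, Nat.card H ≠ 2 ^ k := by
    intro k hk
    have : Fact (Nat.Prime 2) := ⟨Nat.prime_two⟩
    obtain ⟨X, hX⟩ := (IsPGroup.of_card hk).nonempty_fixed_point_of_prime_not_dvd_card S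
      (by rw [hS]; norm_num)
    exact hD.2 X X.2 fun g hg => congrArg Subtype.val (hX ⟨g, hg⟩)
  have k0 := key 0
  have k1 := key 1
  have e6 : Nat.factorial 3 = 6 := rfl
  rw [e6] at h6 hle
  norm_num at k0 k1
  interval_cases h : Nat.card H <;> revert h6 k0 k1 <;> simp_all

/-- Subgroups of exponent three are diagonal in a hyperbolic frame. -/
theorem exp_three_frame (U : HU n F V G) {H : Subgroup G} (hH : H ≠ ⊥)
    (h3 : ∀ g ∈ H, g ^ 3 = 1) : ∃ u e v, U.Hyp u e v ∧ ∀ g : H, ∃ l : F, (g : G) • u = l • u ∧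
      (g : G) • e = e ∧ (g : G) • v = star l⁻¹ • v ∧ l ^ 3 = 1 := by
  have := U.finiteG
  have f3 : Fact (Nat.Prime 3) := ⟨Nat.prime_three⟩
  have hp : IsPGroup 3 H := fun g => ⟨1, by
    rw [pow_one]; exact Subtype.ext (h3 g g.2)⟩
  have hnt : Nontrivial H := (Subgroup.nontrivial_iff_ne_bot H).2 hH
  have h12 : ∀ g ∈ H, g ^ 12 = 1 := fun g hg => by
    rw [show 12 = 3 * 4 by norm_num, pow_mul, h3 g hg, one_pow]
  have hne : (fixPts F V H).Nonempty := by
    have := hp.center_nontrivial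
    obtain ⟨z, hz⟩ := exists_ne (1 : Subgroup.center H)
    have hz1 : ((z : H) : G) ≠ 1 := fun h => hz (Subtype.ext (Subtype.ext h))
    obtain ⟨P, hP⟩ := U.exists_fix_of_comm hz1 (U.not_irr_three (by
      have := h3 _ (z : H).2
      rwa [pow_succ, pow_two] at this))
    refine ⟨P, fun g hg => hP g ?_⟩
    have := Subgroup.mem_center_iff.1 z.2 ⟨g, hg⟩
    exact congrArg Subtype.val this
  have htri : ∀ D, U.IsTri D → ¬ D ⊆ fixPts F V H := by
    intro D hD hs
    apply hH
    rw [Subgroup.eq_bot_iff_forall]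
    exact fun g hg => hD.pow_eq_one (fun X hX => hs hX g hg) (h12 g hg)
  cases U.pgroup_split (by decide) hp hH hne with
  | tri A B C hA hB hC hAB hAC hBC hS =>
    exact absurd hS.symm.subset (htri _ ⟨A, B, C, hA, hB, hC, hAB, hAC, hBC, rfl⟩)
  | hom R hR hS =>
    exfalso
    obtain ⟨a, ha, rfl, aa⟩ := U.exists_unit hR
    obtain ⟨b, c, f⟩ := U.exists_orth_of_a aa
    have nb : ¬ U.iso (mk F b f.ne.2.1) := fun h => by
      have := (U.perp_mk _ _).1 h
      rw [f.bb] at this; exact one_ne_zero this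
    have nc : ¬ U.iso (mk F c f.ne.2.2) := fun h => by
      have := (U.perp_mk _ _).1 h
      rw [f.cc] at this; exact one_ne_zero this
    refine htri {mk F a ha, mk F b f.ne.2.1, mk F c f.ne.2.2} ⟨_, _, _, hR, nb, nc,
      (U.perp_mk _ _).2 f.ab, (U.perp_mk _ _).2 f.ac, (U.perp_mk _ _).2 f.bc, rfl⟩ ?_
    rw [hS]
    rintro X (rfl | rfl | rfl)
    · exact .inl rfl
    · exact .inr ((U.perp_mk _ _).2 f.ba)
    · exact .inr ((U.perp_mk _ _).2 f.ca)
  | hyp R P Q hR hP hQ hne h1 h2 hS =>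
    obtain ⟨u, e, v, f, rfl, rfl, rfl⟩ := U.hyp_frame hR hP hQ hne h1 h2
    refine ⟨u, e, v, f, fun g => ?_⟩
    have hfix : ∀ X ∈ fixPts F V H, (g : G) • X = X := fun X hX => hX g g.2
    rw [hS] at hfix
    obtain ⟨x, hx⟩ := (smul_mk_eq (g : G) _).1 (hfix _ (.inl rfl))
    obtain ⟨l, hl⟩ := (smul_mk_eq (g : G) _).1 (hfix _ (.inr (.inl rfl)))
    obtain ⟨c, hc⟩ := (smul_mk_eq (g : G) _).1 (hfix _ (.inr (.inr rfl)))
    have cube : ∀ {w : V} {y : F}, w ≠ 0 → (g : G) • w = y • w → y ^ 3 = 1 := by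
      intro w y hw hy
      have h4 : ((g : G) ^ 3) • w = (y ^ 3) • w := by
        rw [pow_succ, pow_two, mul_smul, mul_smul, hy, U.act, U.act, hy, U.act, hy,
          smul_smul, smul_smul]
        congr 1; ring
      rw [h3 g g.2, one_smul] at h4
      have h5 : (y ^ 3 - 1) • w = 0 := by rw [sub_smul, ← h4, one_smul, sub_self]
      exact sub_eq_zero.1 ((smul_eq_zero.1 h5).resolve_right hw)
    have hx1 : x = 1 := U.uf.norm_one_cube (U.eig_norm f.ee hx) (cube f.ne.2.1 hx)
    have hl3 := cube f.ne.1 hl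
    have hl0 : l ≠ 0 := by rintro rfl; norm_num at hl3
    refine ⟨l, hl, by rw [hx, hx1, one_smul], ?_, hl3⟩
    have h6 := U.inv g u v
    rw [hl, hc, U.h_smul, U.smul_h, f.uv, mul_one] at h6
    have h7 : star c = l⁻¹ := eq_inv_of_mul_eq_one_right h6
    rw [hc, ← h7, star_star]

/-- In the frame of `exp_three_frame` the first eigenvalue embeds `H` in the cube roots of unity. -/
theorem card_of_exp_three (U : HU n F V G) {H : Subgroup G} (hH : H ≠ ⊥)
    (h3 : ∀ g ∈ H, g ^ 3 = 1) : Nat.card H = 3 := by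
  have := U.finiteG
  have f3 : Fact (Nat.Prime 3) := ⟨Nat.prime_three⟩
  have hp : IsPGroup 3 H := fun g => ⟨1, by
    rw [pow_one]; exact Subtype.ext (h3 g g.2)⟩
  have hnt : Nontrivial H := (Subgroup.nontrivial_iff_ne_bot H).2 hH
  have hcard : 3 ∣ Nat.card H := by
    obtain ⟨k, hk⟩ := IsPGroup.iff_card.1 hp
    have h1 : 1 < Nat.card H := Finite.one_lt_card
    rw [hk] at h1 ⊢
    refine dvd_pow_self 3 ?_
    rintro rfl
    simp at h1
  obtain ⟨u, e, v, f, eig⟩ := U.exp_three_frame hH h3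
  choose l hl1 hl2 hl3 hl4 using eig
  have hinj : Function.Injective l := by
    intro g g' h
    refine Subtype.ext (f.ext ?_ ?_ ?_)
    · rw [hl1, hl1, h]
    · rw [hl2, hl2]
    · rw [hl3, hl3, h]
  have hr := UF.roots_bound (Polynomial.X ^ 3 - 1 : Polynomial F)
    (Polynomial.X_pow_sub_C_ne_zero (by norm_num) 1) (Set.range l) (by
      rintro _ ⟨g, rfl⟩
      simp [hl4])
  have hd : (Polynomial.X ^ 3 - 1 : Polynomial F).natDegree = 3 :=
    Polynomial.natDegree_X_pow_sub_C (r := 1)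
  rw [hd, ← Nat.card_coe_set_eq, Nat.card_range_of_injective hinj] at hr
  exact le_antisymm hr (Nat.le_of_dvd Nat.card_pos hcard)

/-- If `H` normalizes `C ∈ Theta`, then either `H` meets `C` nontrivially, which leaves room for no
other member of `Theta` and for no triangle, or `H` has exponent three. -/
theorem defect_of_theta (U : HU n F V G) {H C : Subgroup G} (hH : H ≠ ⊥) (hC : C ∈ U.thetaFix H) :
    Nat.card H = 3 ∨ U.defect H = 0 := by
  obtain ⟨hC, hHC⟩ := hC
  by_cases hb : ∀ a ∈ H, a ∈ C → a = 1
  · exact .inl (U.card_of_exp_three hH fun g hg =>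
      hb _ (H.pow_mem hg 3) (Theta.cube hC (hHC hg)))
  · right
    push Not at hb
    obtain ⟨a, ha, haC, h1⟩ := hb
    have hirr := Theta.irr hC haC h1
    have h2 : a ^ 2 ≠ 1 := fun h => U.not_irr_two (by rwa [← pow_two]) hirr
    have h3 : a ^ 3 ≠ 1 := fun h => U.not_irr_three (by rwa [pow_succ, pow_two] at h) hirr
    have h6 : a ^ 6 ≠ 1 := fun h => U.not_irr_three (g := a ^ 2) (by
      rw [← h]; group) (Theta.irr hC (C.pow_mem haC 2) h2)
    have e1 : U.freeTri H = ∅ := by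
      rw [Set.eq_empty_iff_forall_notMem]
      rintro D ⟨⟨hD, hst⟩, -⟩
      obtain ⟨X, hX⟩ := hD.nonempty
      exact Theta.smul_ne hC (C.pow_mem haC 6) h6 X (hD.six (hst a ha) hX)
    have e2 : U.thetaFix H = {C} := by
      refine Set.eq_singleton_iff_unique_mem.2 ⟨⟨hC, hHC⟩, fun C' hC' => ?_⟩
      exact Theta.eq hC'.1 hC (Theta.cube hC'.1 (hC'.2 ha)) (C.pow_mem haC 3) h3
    have e3 : ¬ (fixPts F V H).Nonempty := by
      rintro ⟨X, hX⟩
      exact Theta.smul_ne hC haC h1 X (hX a ha)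
    unfold defect
    rw [e1, e2, if_neg e3]; simp

/-- The classification of proper subgroups, read for subgroups without fixed points. -/
theorem freeTri_or_thetaFix (U : HU n F V G) {H : Subgroup G} (hH : H ≠ ⊤)
    (hne : ¬ (fixPts F V H).Nonempty) : (U.freeTri H).Nonempty ∨ (U.thetaFix H).Nonempty := by
  rcases U.good hH with h | ⟨D, hD, hst⟩ | ⟨C, hC, hHC⟩
  · exact absurd h hne
  · exact .inl ⟨D, ⟨hD, hst⟩, fun A _ hA => hne ⟨A, hA⟩⟩
  · exact .inr ⟨C, hC, hHC⟩

theorem finiteTri (U : HU n F V G) : Finite (Set (ℙ F V)) := by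
  have := U.finiteP; infer_instance

theorem defect_nonneg (U : HU n F V G) {H : Subgroup G} (hH : H ≠ ⊤) : 0 ≤ U.defect H := by
  have := U.finiteTri
  have := U.finiteG
  unfold defect
  split_ifs with h
  · omega
  · rcases U.freeTri_or_thetaFix hH h with h | h
    · have := (Set.ncard_pos (Set.toFinite _)).2 h; omega
    · have := (Set.ncard_pos (Set.toFinite _)).2 h; omega

/-- The defect of a proper nontrivial subgroup vanishes unless the subgroup has order 3 or 6. -/
theorem defect_eq_zero (U : HU n F V G) {H : Subgroup G} (h1 : H ≠ ⊥) (h2 : H ≠ ⊤)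
    (c3 : Nat.card H ≠ 3) (c6 : Nat.card H ≠ 6) : U.defect H = 0 := by
  by_cases hT : (U.freeTri H).Nonempty
  · obtain ⟨D, hD⟩ := hT
    by_cases hf : ∀ g ∈ H, (∀ X ∈ D, g • X = X) → g = 1
    · rcases U.card_of_tri_free hD hf with h | h
      · exact absurd h c3
      · exact absurd h c6
    · push Not at hf
      obtain ⟨g, hg, hf, hg1⟩ := hf
      exact U.defect_of_tri_fix hD hg hg1 hf
  by_cases hC : (U.thetaFix H).Nonempty
  · obtain ⟨C, hC⟩ := hC
    exact (U.defect_of_theta h1 hC).resolve_left c3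
  · have hn : (fixPts F V H).Nonempty := by
      by_contra h
      rcases U.freeTri_or_thetaFix h2 h with h | h
      · exact hT h
      · exact hC h
    rw [Set.not_nonempty_iff_eq_empty] at hT hC
    unfold defect
    rw [hT, hC, if_pos hn]; simp

/-- An element of order three is diagonal with eigenvalues `w`, `1`, `w ^ 2` in a hyperbolic frame. -/
theorem three_frame (U : HU n F V G) {w : F} (hw : w * w + w + 1 = 0) (hws : star w = w) {g : G}
    (h1 : g ≠ 1) (h3 : g * g * g = 1) :
    ∃ u e v, U.Hyp u e v ∧ g • u = w • u ∧ g • e = e ∧ g • v = (w * w) • v := by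
  have w3 : w * (w * w) = 1 := by grind
  have w0 : w ≠ 0 := by rintro rfl; simp at hw
  have wi : w⁻¹ = w * w := inv_eq_of_mul_eq_one_right w3
  have wi' : (w * w)⁻¹ = w := inv_eq_of_mul_eq_one_left w3
  have hne : Subgroup.zpowers g ≠ ⊥ := by simpa using h1
  obtain ⟨u, e, v, f, eig⟩ := U.exp_three_frame hne (by
    rintro _ ⟨k, rfl⟩
    have : (g ^ k) ^ 3 = (g * g * g) ^ k := by
      rw [show g * g * g = g ^ 3 by rw [pow_succ, pow_two], ← zpow_natCast, ← zpow_natCast,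
        zpow_comm]
    show (g ^ k) ^ 3 = 1
    rw [this, h3, one_zpow])
  obtain ⟨l, hl1, hl2, hl3, hl4⟩ := eig ⟨g, Subgroup.mem_zpowers g⟩
  simp only at hl1 hl2 hl3
  have hl : l = 1 ∨ l = w ∨ l = w * w := by
    have : (l - 1) * ((l - w) * (l - w * w)) = 0 := by grind
    rcases mul_eq_zero.1 this with h | h
    · exact .inl (sub_eq_zero.1 h)
    rcases mul_eq_zero.1 h with h | h
    · exact .inr (.inl (sub_eq_zero.1 h))
    · exact .inr (.inr (sub_eq_zero.1 h))
  rcases hl with rfl | rfl | rfl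
  · exfalso
    apply h1
    refine f.ext ?_ ?_ ?_
    · rw [hl1]; simp
    · rw [hl2]; simp
    · rw [hl3]; simp
  · refine ⟨u, e, v, f, hl1, hl2, ?_⟩
    rw [hl3, wi, star_mul, hws]
  · refine ⟨v, e, u, f.swap, ?_, hl2, hl1⟩
    rw [hl3, wi', hws]

theorem thetaFix_of_two_dvd (U : HU n F V G) {H : Subgroup G} (h : 2 ∣ Nat.card H) :
    U.thetaFix H = ∅ := by
  have := U.finiteG
  have : Fact (Nat.Prime 2) := ⟨Nat.prime_two⟩
  obtain ⟨g, hg⟩ := exists_prime_orderOf_dvd_card' 2 h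
  rw [Set.eq_empty_iff_forall_notMem]
  rintro C ⟨hC, hHC⟩
  refine Theta.sq_ne hC (m := g) ?_ ?_ (hHC g.2)
  · intro h1
    rw [show g = 1 from Subtype.ext h1, orderOf_one] at hg; omega
  · have := pow_orderOf_eq_one g
    rw [hg, pow_two] at this
    exact congrArg Subtype.val this

theorem defect_six (U : HU n F V G) {H : Subgroup G} (h6 : Nat.card H = 6) :
    U.defect H ≤ (U.freeTri H).ncard := by
  have h := U.thetaFix_of_two_dvd (H := H) (by rw [h6]; norm_num)
  unfold defect
  rw [h]
  split_ifs <;> simp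

theorem exists_gen_three {H : Subgroup G} (h3 : Nat.card H = 3) :
    ∃ g, g ≠ 1 ∧ g * g * g = 1 ∧ H = Subgroup.zpowers g := by
  have : Fact (Nat.Prime 3) := ⟨Nat.prime_three⟩
  have hf : Finite H := Nat.finite_of_card_ne_zero (by rw [h3]; norm_num)
  obtain ⟨g, hg⟩ := exists_prime_orderOf_dvd_card' (G := H) 3 (by rw [h3])
  have hg' : orderOf (g : G) = 3 := by rw [Subgroup.orderOf_coe, hg]
  refine ⟨g, ?_, ?_, ?_⟩
  · intro h; rw [h, orderOf_one] at hg'; omega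
  · have := pow_orderOf_eq_one (g : G)
    rwa [hg', pow_succ, pow_two] at this
  · symm
    have := Subgroup.eq_of_le_of_card_ge (H := Subgroup.zpowers (g : G)) (K := H)
      (by rw [Subgroup.zpowers_le]; exact g.2) (by rw [Nat.card_zpowers, hg', h3])
    exact this

theorem fix_of_three (U : HU n F V G) {H : Subgroup G} (h3 : Nat.card H = 3) :
    (fixPts F V H).Nonempty := by
  obtain ⟨g, h1, hg, rfl⟩ := exists_gen_three h3
  obtain ⟨P, hP⟩ := U.exists_fix_of_comm h1 (U.not_irr_three hg)
  exact ⟨P, mem_fix_zpowers.2 (hP g (Commute.refl g))⟩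

theorem defect_three (U : HU n F V G) {H : Subgroup G} (h3 : Nat.card H = 3) :
    U.defect H = (U.freeTri H).ncard + (U.thetaFix H).ncard := by
  unfold defect
  rw [if_pos (U.fix_of_three h3)]; simp

/-- `G` fixes no point and no triangle, and normalizes no member of `Theta`. -/
theorem X0_top (U : HU n F V G) : U.X0 ⊤ = 0 := by
  obtain ⟨u, e, v, f⟩ := U.exists_hyp
  have htv : ∀ {w : V}, U.h w w = 0 → ∀ hw : w ≠ 0, ∀ {P : ℙ F V}, U.tv w 1 • P = P →
      U.perp P (mk F w hw) := fun ww hw _ h => (U.tv_fix ww hw (star_one _) one_ne_zero).1 h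
  have h1 : fixPts F V (⊤ : Subgroup G) = ∅ := by
    rw [Set.eq_empty_iff_forall_notMem]
    intro P hP
    obtain ⟨x, hx, rfl⟩ := exists_mk P
    have key : ∀ {w : V}, U.h w w = 0 → w ≠ 0 → U.h x w = 0 := fun ww hw =>
      (U.perp_mk hx hw).1 (htv ww hw (hP _ trivial))
    obtain ⟨t, ht⟩ := U.uf.exists_theta
    have hu := key f.uu f.ne.1
    have hv := key f.vv f.ne.2.2
    have hw := key (w := t • u + e + v) (by
      simp only [U.h_add, U.add_h, U.h_smul, U.smul_h, f.uu, f.ue, f.uv, f.eu, f.ee, f.ev, f.vu,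
        f.ve, f.vv]
      grind) (by
      intro h0
      have := congrArg (fun y => U.h y u) h0
      simp [U.h_add, U.h_smul, f.uu, f.eu, f.vu, U.zero_h] at this)
    simp only [U.add_h, U.smul_h, hu, hv, mul_zero, zero_add, add_zero] at hw
    apply hx
    rw [f.expand x, hu, hv, hw]; simp
  have h2 : U.triFix (⊤ : Subgroup G) = ∅ := by
    rw [Set.eq_empty_iff_forall_notMem]
    rintro D ⟨hD, hst⟩
    obtain ⟨A, B, C, hA, hB, hC, p1, p2, p3, rfl⟩ := id hD
    obtain ⟨a, b, c, f, rfl, rfl, rfl⟩ := U.tri_frame hA hB hC p1 p2 p3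
    obtain ⟨w, hw1, hw2, hw3⟩ := U.uf.exists_omega
    have ww : U.h (a + w • b + (w * w) • c) (a + w • b + (w * w) • c) = 0 := by
      simp only [U.h_add, U.add_h, U.h_smul, U.smul_h, f.aa, f.ab, f.ac, f.ba, f.bb, f.bc, f.ca,
        f.cb, f.cc, star_mul, hw2]
      grind
    have ha : U.h a (a + w • b + (w * w) • c) = 1 := by
      simp [U.add_h, U.smul_h, f.aa, f.ab, f.ac]
    have w0 : w ≠ 0 := by rintro rfl; simp at hw1
    have hne : a + w • b + (w * w) • c ≠ 0 := by
      intro h; rw [h, U.h_zero] at ha; exact zero_ne_one ha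
    obtain ⟨X, hX, hX'⟩ := hD.fix_of_sq (hst _ trivial) (U.tv_sq ww (a := 1) (star_one _))
    have hp := htv ww hne hX'
    rcases hX with rfl | rfl | rfl
    · have := (U.perp_mk _ _).1 hp
      rw [ha] at this; exact one_ne_zero this
    · have := (U.perp_mk _ _).1 hp
      simp [U.add_h, U.smul_h, f.ba, f.bb, f.bc, hw2, w0] at this
    · have := (U.perp_mk _ _).1 hp
      simp [U.add_h, U.smul_h, f.ca, f.cb, f.cc, hw2, w0] at this
  have h3 : U.thetaFix (⊤ : Subgroup G) = ∅ := by
    rw [Set.eq_empty_iff_forall_notMem]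
    rintro C ⟨hC, hst⟩
    exact Theta.sq_ne hC (U.tv_ne_one f.uu f.ne.1 (star_one _) one_ne_zero)
      (U.tv_sq f.uu (star_one _)) (hst trivial)
  have h4 : U.flags (fixPts F V (⊤ : Subgroup G)) = ∅ := by
    rw [Set.eq_empty_iff_forall_notMem]
    rintro p ⟨h, -⟩
    rw [h1] at h; exact h
  have h5 : U.vtxFix (⊤ : Subgroup G) = ∅ := by
    rw [Set.eq_empty_iff_forall_notMem]
    rintro p ⟨h, -⟩
    rw [h2] at h; exact h
  unfold X0
  rw [h4, h5, h1, h2, h3]; simp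

end HU
end DefectZero

/-! ### Members of `Theta` normalized by an element of order three -/

section Kummer
variable {n : ℕ} {F V G : Type} [Field F] [StarRing F] [Finite F] [CharP F 2]
  [AddCommGroup V] [Module F V] [Group G] [DistribMulAction G V] [SMulCommClass G F V]

open scoped LinearAlgebra.Projectivization
open Projectivization (mk)

namespace HU

/-- `y` is a nonzero Kummer generator: it lies in the commutant of `g`, is multiplied by `w` under
conjugation by `s`, and has an adjoint `y'` which also commutes with `g`. -/
structure Kum (U : HU n F V G) (g s : G) (w : F) (y y' : V →ₗ[F] V) : Prop where
  ne : y ≠ 0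
  comm : ∀ x, y (g • x) = g • y x
  comm' : ∀ x, y' (g • x) = g • y' x
  conj : ∀ x, s • y x = w • y (s • x)
  adj : ∀ x z, U.h (y x) z = U.h x (y' z)

/-- The component of `g` in the `c`-eigenspace of conjugation by `s`. -/
def comp (U : HU n F V G) (g s : G) (c : F) : V →ₗ[F] V :=
  U.T g + (c * c) • U.T (s * g * s⁻¹) + c • U.T (s * (s * g * s⁻¹) * s⁻¹)

/-- The adjoint of `comp`. -/
def comp' (U : HU n F V G) (g s : G) (c : F) : V →ₗ[F] V :=
  U.T g⁻¹ + star (c * c) • U.T (s * g * s⁻¹)⁻¹ + star c • U.T (s * (s * g * s⁻¹) * s⁻¹)⁻¹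

theorem comp_apply (U : HU n F V G) (g s : G) (c : F) (x : V) : U.comp g s c x =
    g • x + (c * c) • ((s * g * s⁻¹) • x) + c • ((s * (s * g * s⁻¹) * s⁻¹) • x) := rfl

theorem comp'_apply (U : HU n F V G) (g s : G) (c : F) (x : V) : U.comp' g s c x =
    g⁻¹ • x + star (c * c) • ((s * g * s⁻¹)⁻¹ • x) +
      star c • ((s * (s * g * s⁻¹) * s⁻¹)⁻¹ • x) := rfl

theorem comp_conj (U : HU n F V G) {g s : G} {c : F} (hs : s * s * s = 1) (hc : c * (c * c) = 1)
    (x : V) : s • U.comp g s c x = c • U.comp g s c (s • x) := by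
  have e1 : ∀ a : G, s • a • x = (s * a * s⁻¹) • s • x := fun a => by
    simp only [← mul_smul]; group
  have e2 : s * (s * (s * g * s⁻¹) * s⁻¹) * s⁻¹ = g := by
    calc _ = (s * s * s) * g * (s * s * s)⁻¹ := by group
      _ = g := by rw [hs]; group
  rw [comp_apply, comp_apply]
  simp only [smul_add, U.act s]
  rw [e1 g, e1 (s * g * s⁻¹), e1 (s * (s * g * s⁻¹) * s⁻¹), e2]
  simp only [smul_smul c, hc, one_smul]
  abel

theorem comp_adj (U : HU n F V G) (g s : G) (c : F) (x z : V) :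
    U.h (U.comp g s c x) z = U.h x (U.comp' g s c z) := by
  rw [comp_apply, comp'_apply]
  simp only [U.h_add, U.add_h, U.h_smul, U.smul_h, star_star, U.h_inv']

theorem comp_comm (U : HU n F V G) {g s : G} (h1 : Commute g (s * g * s⁻¹))
    (h2 : Commute g (s * (s * g * s⁻¹) * s⁻¹)) (c : F) (x : V) :
    U.comp g s c (g • x) = g • U.comp g s c x := by
  rw [comp_apply, comp_apply]
  simp only [smul_add, U.act g]
  rw [U.commute_iff.1 h1, U.commute_iff.1 h2]

theorem comp'_comm (U : HU n F V G) {g s : G} (h1 : Commute g (s * g * s⁻¹))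
    (h2 : Commute g (s * (s * g * s⁻¹) * s⁻¹)) (c : F) (x : V) :
    U.comp' g s c (g • x) = g • U.comp' g s c x := by
  rw [comp'_apply, comp'_apply]
  simp only [smul_add, U.act g]
  rw [U.commute_iff.1 h1.inv_right, U.commute_iff.1 h2.inv_right,
    U.commute_iff.1 (Commute.refl g).inv_right]

/-- If `s` has order three and normalizes `C`, conjugation by `s` acts on the commutant of `C`, the
field with `q^6` elements, as a Kummer automorphism of order three over the field with `q²`
elements. -/
theorem exists_kum (U : HU n F V G) {w : F} (hw : w * w + w + 1 = 0) {C : Subgroup G}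
    (hC : C ∈ U.Theta) {s : G} (h1 : s ≠ 1) (hs : s * s * s = 1)
    (hsC : s ∈ Subgroup.normalizer (C : Set G)) :
    ∃ g ∈ C, g ≠ 1 ∧ ∃ y y', U.Kum g s w y y' := by
  obtain ⟨g, hg, hirr⟩ := Theta.exists_mem hC
  have m1 : s * g * s⁻¹ ∈ C := (Subgroup.mem_normalizer_iff.1 hsC g).1 hg
  have m2 := (Subgroup.mem_normalizer_iff.1 hsC _).1 m1
  have c1 := Theta.comm hC hg m1
  have c2 := Theta.comm hC hg m2
  have w3 : w * (w * w) = 1 := by grind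
  have w3' : w * w * (w * w * (w * w)) = 1 := by grind
  refine ⟨g, hg, hirr.ne_one, ?_⟩
  by_cases k1 : U.comp g s w = 0
  · by_cases k2 : U.comp g s (w * w) = 0
    · exfalso
      have key : ∀ x : V, g • x = g • x + (s * g * s⁻¹) • x + (s * (s * g * s⁻¹) * s⁻¹) • x := by
        intro x
        have e1 := congrArg (fun f => f x) k1
        have e2 := congrArg (fun f => f x) k2
        simp only [comp_apply, LinearMap.zero_apply] at e1 e2
        rw [show w * w * (w * w) = w by grind] at e2
        have := U.sum_three hw (g • x) ((s * g * s⁻¹) • x) ((s * (s * g * s⁻¹) * s⁻¹) • x)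
        rw [e1, e2, add_zero, add_zero] at this
        exact this.symm
      have e2 : s * (s * (s * g * s⁻¹) * s⁻¹) * s⁻¹ = g := by
        calc _ = (s * s * s) * g * (s * s * s)⁻¹ := by group
          _ = g := by rw [hs]; group
      have hcomm : Commute g s := by
        rw [U.commute_iff]
        intro x
        have e1 : ∀ a : G, s • a • x = (s * a * s⁻¹) • s • x := fun a => by
          simp only [← mul_smul]; group
        symm
        calc s • g • x = s • (g • x + (s * g * s⁻¹) • x + (s * (s * g * s⁻¹) * s⁻¹) • x) := by
              rw [← key x]
          _ = g • s • x + (s * g * s⁻¹) • s • x + (s * (s * g * s⁻¹) * s⁻¹) • s • x := by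
              rw [smul_add, smul_add, e1 g, e1 (s * g * s⁻¹), e1 (s * (s * g * s⁻¹) * s⁻¹), e2]
              abel
          _ = g • s • x := (key _).symm
      exact U.not_irr_three hs (Theta.irr hC (Theta.mem hC hg hirr.ne_one hcomm) h1)
    · -- the square of the `w ^ 2`-component is a nonzero `w`-component
      set f := U.comp g s (w * w) with hf
      set f' := U.comp' g s (w * w) with hf'
      have fc := U.comp_comm c1 c2 (w * w)
      have fc' := U.comp'_comm c1 c2 (w * w)
      have fs := U.comp_conj (g := g) hs w3'
      refine ⟨f ∘ₗ f, f' ∘ₗ f', ?_, ?_, ?_, ?_, ?_⟩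
      · intro h0
        have : ∃ v, f v ≠ 0 := by
          by_contra! h; exact k2 (LinearMap.ext h)
        obtain ⟨v, hv⟩ := this
        exact k2 (hirr.ker fc hv (congrArg (fun f => f v) h0))
      · intro x; simp only [LinearMap.comp_apply]; rw [fc, fc]
      · intro x; simp only [LinearMap.comp_apply]; rw [fc', fc']
      · intro x
        simp only [LinearMap.comp_apply]
        rw [fs, fs, map_smul, smul_smul]
        congr 1; grind
      · intro x z
        simp only [LinearMap.comp_apply]
        rw [U.comp_adj, U.comp_adj]
  · exact ⟨_, _, k1, U.comp_comm c1 c2 w, U.comp'_comm c1 c2 w, U.comp_conj hs w3,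
      U.comp_adj g s w⟩

/-- In an eigenframe of `s` the Kummer generator can be normalized so as to depend on a single
nonzero scalar. -/
theorem kum_shape (U : HU n F V G) {w : F} (hw : w * w + w + 1 = 0) (hws : star w = w)
    {u e v : V} (f : U.Hyp u e v) {s : G} (su : s • u = w • u) (se : s • e = e)
    (sv : s • v = (w * w) • v) {C : Subgroup G} (hC : C ∈ U.Theta) (h1 : s ≠ 1)
    (hs : s * s * s = 1) (hsC : s ∈ Subgroup.normalizer (C : Set G)) :
    ∃ a : F, a ≠ 0 ∧ ∃ g ∈ C, g ≠ 1 ∧ ∃ y : V →ₗ[F] V, (∀ x, y (g • x) = g • y x) ∧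
      y e = a • u ∧ y u = v ∧ y v = star a • e := by
  obtain ⟨g, hg, hg1, y, y', k⟩ := U.exists_kum hw hC h1 hs hsC
  have hirr := Theta.irr hC hg hg1
  have comps : ∀ {z : V} {c : F}, s • z = c • z → U.h z u = c * w * U.h z u ∧
      U.h z e = c * U.h z e ∧ U.h z v = c * (w * w) * U.h z v := by
    intro z c hz
    refine ⟨?_, ?_, ?_⟩
    · have := U.inv s z u
      rw [hz, su, U.h_smul, U.smul_h, hws] at this
      rw [← this]; grind
    · have := U.inv s z e
      rw [hz, se, U.h_smul] at this
      exact this.symm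
    · have := U.inv s z v
      rw [hz, sv, U.h_smul, U.smul_h, star_mul, hws] at this
      rw [← this]; grind
  have shapeE : ∀ {z : V}, s • z = w • z → z = U.h z v • u := by
    intro z hz
    obtain ⟨c1, c2, -⟩ := comps hz
    have z1 : U.h z u = 0 := by grind
    have z2 : U.h z e = 0 := by grind
    conv_lhs => rw [f.expand z, z1, z2]
    simp
  have shapeU : ∀ {z : V}, s • z = (w * w) • z → z = U.h z u • v := by
    intro z hz
    obtain ⟨-, c2, c3⟩ := comps hz
    have z1 : U.h z v = 0 := by grind
    have z2 : U.h z e = 0 := by grind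
    conv_lhs => rw [f.expand z, z1, z2]
    simp
  have shapeV : ∀ {z : V}, s • z = (1 : F) • z → z = U.h z e • e := by
    intro z hz
    obtain ⟨c1, -, c3⟩ := comps hz
    have z1 : U.h z v = 0 := by grind
    have z2 : U.h z u = 0 := by grind
    conv_lhs => rw [f.expand z, z1, z2]
    simp
  have ye : y e = U.h (y e) v • u := shapeE (by rw [k.conj, se])
  have yu : y u = U.h (y u) u • v := shapeU (by rw [k.conj, su, map_smul, smul_smul])
  have yv : y v = U.h (y v) e • e := shapeV (by
    rw [k.conj, sv, map_smul, smul_smul]; congr 1; grind)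
  have conj' : ∀ x, s • y' x = w • y' (s • x) := by
    intro x
    refine U.ext_h fun z => ?_
    have h5 : ∀ p q, U.h (y' p) q = U.h p (y q) := fun p q => by
      rw [← U.h_star, ← k.adj, U.h_star]
    have h6 : y (s⁻¹ • z) = w • s⁻¹ • y z := by
      have := k.conj (s⁻¹ • z)
      rw [smul_inv_smul] at this
      rw [← U.act, ← this, inv_smul_smul]
    rw [U.h_inv', h5, U.h_smul, h5, U.h_inv', h6, U.smul_h, hws]
  have ye' : y' e = U.h (y' e) v • u := shapeE (by rw [conj', se])
  have inj : ∀ {x : V}, x ≠ 0 → y x ≠ 0 := fun hx h0 => k.ne (hirr.ker k.comm hx h0)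
  set α := U.h (y e) v with hα
  set β := U.h (y u) u with hβ
  set γ := U.h (y v) e with hγ
  have α0 : α ≠ 0 := fun h => inj f.ne.2.1 (by rw [ye, h, zero_smul])
  have β0 : β ≠ 0 := fun h => inj f.ne.1 (by rw [yu, h, zero_smul])
  set κ := U.h (y' e) v / α with hκ
  have hy' : y' - κ • y = 0 := by
    refine hirr.ker (fun x => ?_) f.ne.2.1 ?_
    · simp only [LinearMap.sub_apply, LinearMap.smul_apply]
      rw [k.comm, k.comm', smul_sub, U.act]
    · simp only [LinearMap.sub_apply, LinearMap.smul_apply]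
      rw [ye, ye', smul_smul, hκ, div_mul_cancel₀ _ α0, sub_self]
  have hyk : ∀ x, y' x = κ • y x := fun x => by
    have := congrArg (fun f => f x) hy'
    exact sub_eq_zero.1 this
  have r1 : α = star κ * star γ := by
    rw [hα, k.adj, hyk, yv, U.smul_h, U.smul_h, f.ee, mul_one]
  have r2 : β = star κ * star β := by
    conv_lhs => rw [hβ, k.adj, hyk, yu, U.smul_h, U.smul_h, f.uv, mul_one]
  have κ0 : κ ≠ 0 := by
    intro h; rw [h, star_zero, zero_mul] at r2; exact β0 r2
  have r1' : star α = κ * γ := by rw [r1]; simp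
  have r2' : star β = κ * β := by conv_lhs => rw [r2]; simp
  refine ⟨α / β, div_ne_zero α0 β0, g, hg, hg1, β⁻¹ • y, ?_, ?_, ?_, ?_⟩
  · intro x
    simp only [LinearMap.smul_apply]
    rw [k.comm, U.act]
  · rw [LinearMap.smul_apply, ye, smul_smul, div_eq_inv_mul]
  · rw [LinearMap.smul_apply, yu, smul_smul, inv_mul_cancel₀ β0, one_smul]
  · rw [LinearMap.smul_apply, yv, smul_smul]
    congr 1
    rw [star_div₀, r1', r2']
    field_simp

/-- An element of order three normalizes at most `q ^ 2 - 1` members of `Theta`. -/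
theorem thetaFix_three (U : HU n F V G) {H : Subgroup G} (h3 : Nat.card H = 3) :
    (U.thetaFix H).ncard ≤ qval n * qval n - 1 := by
  obtain ⟨s, h1, hs, rfl⟩ := exists_gen_three h3
  obtain ⟨w, hw, hws, -⟩ := U.uf.exists_omega
  obtain ⟨u, e, v, f, su, se, sv⟩ := U.three_frame hw hws h1 hs
  have shape : ∀ C : U.thetaFix (Subgroup.zpowers s), ∃ a : F, a ≠ 0 ∧ ∃ g ∈ (C : Subgroup G),
      g ≠ 1 ∧ ∃ y : V →ₗ[F] V, (∀ x, y (g • x) = g • y x) ∧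
      y e = a • u ∧ y u = v ∧ y v = star a • e := fun C =>
    U.kum_shape hw hws f su se sv C.2.1 h1 hs (C.2.2 (Subgroup.mem_zpowers s))
  choose a a0 g hg hg1 y hy ye yu yv using shape
  have inj : Function.Injective a := by
    intro C C' haa
    have hyy : y C = y C' := by
      refine LinearMap.ext fun x => ?_
      rw [f.expand x]
      simp only [map_add, map_smul, ye, yu, yv, haa]
    have hb := hy C'
    rw [← hyy] at hb
    have hc := hy C
    -- `u`, `y u`, `y (y u)` is a basis, so `g C` is a polynomial in `y`
    obtain ⟨p, q, r, hpq⟩ : ∃ p q r : F, g C • u = p • u + q • y C u + r • y C (y C u) := by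
      refine ⟨U.h (g C • u) v, U.h (g C • u) u, U.h (g C • u) e * (star (a C))⁻¹, ?_⟩
      conv_lhs => rw [f.expand (g C • u)]
      rw [yu, yv, smul_smul, inv_mul_cancel_right₀ (by simpa using a0 C)]
      abel
    have e1 : ∀ x : V, g C • x = p • x + q • y C x + r • y C (y C x) → g C • y C x =
        p • y C x + q • y C (y C x) + r • y C (y C (y C x)) := by
      intro x hx
      rw [← hc, hx]
      simp only [map_add, map_smul]
    have e2 := e1 _ hpq
    have e3 := e1 _ e2
    rw [yu] at e2 e3
    rw [yv] at e3
    have all : ∀ x : V, g C • x = p • x + q • y C x + r • y C (y C x) := by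
      intro x
      have e4 : g C • e = p • e + q • y C e + r • y C (y C e) := by
        have h5 : star (a C) ≠ 0 := by simpa using a0 C
        have e5 : star (a C) • (g C • e) = star (a C) • (p • e + q • y C e + r • y C (y C e)) := by
          rw [← U.act, e3]
          simp only [map_smul, smul_add]
          simp only [smul_smul, mul_comm]
        exact smul_right_injective V h5 e5
      rw [f.expand x]
      simp only [smul_add, map_add, map_smul, U.act (g C), hpq, e2, e4]
      simp only [smul_add, smul_smul, yu, mul_comm]
      abel
    have hcomm : Commute (g C) (g C') := by
      rw [U.commute_iff]
      intro x
      rw [all, all x]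
      simp only [smul_add, U.act (g C'), hb]
    refine Subtype.ext (Theta.eq C.2.1 C'.2.1 (hg C) ?_ (hg1 C))
    exact Theta.mem C'.2.1 (hg C') (hg1 C') hcomm.symm
  have := Fintype.ofFinite F
  have hle : Nat.card (U.thetaFix (Subgroup.zpowers s)) ≤ Nat.card {x : F // x ≠ 0} :=
    Nat.card_le_card_of_injective (fun C => (⟨a C, a0 C⟩ : {x : F // x ≠ 0})) fun C C' h =>
      inj (congrArg Subtype.val h)
  rw [Nat.card_coe_set_eq] at hle
  have hc : Nat.card {x : F // x ≠ 0} = qval n * qval n - 1 := by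
    rw [← U.uf.card, Nat.card_eq_fintype_card, Nat.card_eq_fintype_card,
      Fintype.card_subtype_compl, Fintype.card_subtype_eq]
  rwa [hc] at hle

end HU
end Kummer

/-! ### Order of the group, subgroups of order three, and members of `Theta` -/

section Counting
variable {n : ℕ} {F V G : Type} [Field F] [StarRing F] [Finite F] [CharP F 2]
  [AddCommGroup V] [Module F V] [Group G] [DistribMulAction G V] [SMulCommClass G F V]

open scoped LinearAlgebra.Projectivization
open Projectivization (mk)

namespace HU

theorem Dual.det_norm {U : HU n F V G} {b b' c c' : Fin 3 → V} (d : U.Dual b b')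
    (d' : U.Dual c c') : (Matrix.of fun i j => U.h (c j) (b' i)).det *
      star (Matrix.of fun i j => U.h (c' j) (b i)).det = 1 := by
  rw [← Matrix.det_conjTranspose, ← Matrix.det_mul]
  convert Matrix.det_one (n := Fin 3) (R := F)
  ext i k
  rw [Matrix.mul_apply]
  simp only [Matrix.conjTranspose_apply, Matrix.of_apply, U.h_star]
  have h1 := congrArg (fun x => U.h x (b' i)) (d'.expand (b k))
  rw [U.h_sum, d k i] at h1
  rw [Matrix.one_apply]
  simp only [eq_comm (a := i), h1]
  exact Finset.sum_congr rfl fun j _ => mul_comm _ _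

/-- `G` is transitive on hyperbolic pairs. -/
theorem Hyp.move {U : HU n F V G} {u e v u' v' : V} (f : U.Hyp u e v) (uu : U.h u' u' = 0)
    (vv : U.h v' v' = 0) (uv : U.h u' v' = 1) : ∃ g : G, g • u = u' ∧ g • v = v' := by
  obtain ⟨e', f'⟩ := U.exists_hyp_of_uv uu vv uv
  have h := f.dual.det_norm f'.dual
  simp only [Matrix.det_fin_three, Matrix.of_apply, Matrix.cons_val] at h
  set D := U.h u' v * U.h e' e * U.h v' u - U.h u' v * U.h v' e * U.h e' u -
    U.h e' v * U.h u' e * U.h v' u + U.h e' v * U.h v' e * U.h u' u +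
    U.h v' v * U.h u' e * U.h e' u - U.h v' v * U.h e' e * U.h u' u with hD
  have hN : D * star D = 1 := by
    convert h using 3
    rw [hD]; ring
  have hN' : star D * D = 1 := by rw [mul_comm]; exact hN
  obtain ⟨g, h1, -, h3⟩ := f.build (u' := u') (e' := star D • e') (v' := v') (by
    constructor <;>
      simp [U.h_smul, U.smul_h, f'.uu, f'.vv, f'.ee, f'.uv, f'.ue, f'.ev, hN']) (by
    simp only [Matrix.det_fin_three, Matrix.of_apply, Matrix.cons_val, U.h_smul]
    rw [← hN', hD]
    ring)
  exact ⟨g, h1, h3⟩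

/-- The Heisenberg parameters `(β, x)` with `x + x̄ = β β̄`. -/
def heis (_U : HU n F V G) : Set (F × F) := {p | p.2 + star p.2 = p.1 * star p.1}

theorem heis_card (U : HU n F V G) : qval n * qval n * qval n ≤ Nat.card U.heis := by
  have : ∀ b : F, ∃ t : F, t + star t = b * star b := fun b => U.uf.trace_surj (star_norm b)
  choose t ht using this
  have hc : Nat.card (F × {x : F | star x = x}) = qval n * qval n * qval n := by
    rw [Nat.card_prod, U.uf.card, Nat.card_coe_set_eq, U.uf.fix_card]
  rw [← hc]
  refine Nat.card_le_card_of_injective (fun p => ⟨(p.1, t p.1 + p.2), ?_⟩) ?_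
  · have h1 := ht p.1
    have h2 : star (p.2 : F) = p.2 := p.2.2
    show t p.1 + p.2 + star (t p.1 + p.2) = p.1 * star p.1
    rw [star_add, h2]
    grind
  · intro p p' h
    simp only [Subtype.mk.injEq, Prod.mk.injEq] at h
    obtain ⟨h1, h2⟩ := h
    rw [h1, add_right_inj] at h2
    exact Prod.ext h1 (Subtype.ext h2)

theorem card_ne_zero' (U : HU n F V G) : Nat.card {x : F // x ≠ 0} = qval n * qval n - 1 := by
  have := Fintype.ofFinite F
  rw [← U.uf.card, Nat.card_eq_fintype_card, Nat.card_eq_fintype_card,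
    Fintype.card_subtype_compl, Fintype.card_subtype_eq]

/-- The isotropic vector with parameters `(β, x)` in a frame. -/
theorem Hyp.heis {U : HU n F V G} {u e v : V} (f : U.Hyp u e v) {b x : F}
    (hx : x + star x = b * star b) :
    U.h (v + b • e + x • u) (v + b • e + x • u) = 0 ∧ U.h u (v + b • e + x • u) = 1 := by
  simp only [U.h_add, U.add_h, U.h_smul, U.smul_h, f.uu, f.vv, f.ee, f.uv, f.ue, f.ev, f.vu, f.eu,
    f.ve]
  constructor <;> grind

/-- Counting hyperbolic pairs. -/
theorem card_ge (U : HU n F V G) :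
    (qval n * qval n - 1) * (qval n * qval n * qval n + 1) * (qval n * qval n * qval n) ≤
      Nat.card G := by
  have := U.finiteG
  obtain ⟨u, e, v, f⟩ := U.exists_hyp
  let A := U.heis
  let vec : Option A → V := fun o => o.elim u fun p => v + p.1.1 • e + p.1.2 • u
  have hvec : ∀ o, U.h (vec o) (vec o) = 0 := by
    rintro (_ | p)
    · exact f.uu
    · exact (f.heis p.2).1
  have hvec0 : ∀ o, vec o ≠ 0 := by
    rintro (_ | p) h
    · exact f.ne.1 h
    · have := (f.heis p.2).2
      rw [show v + p.1.1 • e + p.1.2 • u = 0 from h, U.h_zero] at this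
      exact zero_ne_one this
  have hinj : ∀ o o' (l l' : F), l ≠ 0 → l' ≠ 0 → l • vec o = l' • vec o' → l = l' ∧ o = o' := by
    have key : ∀ (o : Option A) (l : F), U.h (l • vec o) u = if o = none then 0 else l := by
      rintro (_ | p) l
      · simp [vec, U.h_smul, f.uu]
      · simp [vec, U.h_smul, U.h_add, f.uu, f.vu, f.eu]
    intro o o' l l' h0 h0' h
    have h1 := congrArg (fun x => U.h x u) h
    simp only [key] at h1
    rcases o with _ | p <;> rcases o' with _ | p'
    · refine ⟨?_, rfl⟩
      have := congrArg (fun x => U.h x v) h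
      simpa [vec, U.h_smul, f.uv] using this
    · exact absurd (by simpa using h1.symm) h0'
    · exact absurd (by simpa using h1) h0
    · have hl : l = l' := by simpa using h1
      subst hl
      have h2 := smul_right_injective V h0 h
      refine ⟨rfl, congrArg some (Subtype.ext (Prod.ext ?_ ?_))⟩
      · have := congrArg (fun x => U.h x e) h2
        simpa [vec, U.h_smul, U.h_add, f.ue, f.ve, f.ee] using this
      · have := congrArg (fun x => U.h x v) h2
        simpa [vec, U.h_smul, U.h_add, f.uv, f.ev, f.vv] using this
  have hu : ∀ p : {x : F // x ≠ 0} × Option A, U.h (p.1.1 • vec p.2) (p.1.1 • vec p.2) = 0 ∧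
      p.1.1 • vec p.2 ≠ 0 := fun p => by
    refine ⟨by rw [U.h_smul, U.smul_h, hvec]; ring, smul_ne_zero p.1.2 (hvec0 _)⟩
  have hfr := fun p => U.exists_hyp_of_u (hu p).1 (hu p).2
  choose E W hf using hfr
  have hg : ∀ p : ({x : F // x ≠ 0} × Option A) × A, ∃ g : G, g • u = p.1.1.1 • vec p.1.2 ∧
      g • v = W p.1 + p.2.1.1 • E p.1 + p.2.1.2 • (p.1.1.1 • vec p.1.2) := fun p =>
    f.move (hu p.1).1 ((hf p.1).heis p.2.2).1 ((hf p.1).heis p.2.2).2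
  choose g gu gv using hg
  have inj : Function.Injective g := by
    intro p p' h
    have h1 := gu p
    rw [h, gu p'] at h1
    obtain ⟨h2, h3⟩ := hinj _ _ _ _ p'.1.1.2 p.1.1.2 h1
    have h4 : p.1 = p'.1 := (Prod.ext (Subtype.ext h2) h3).symm
    have h5 := gv p
    rw [h, gv p', h4] at h5
    refine Prod.ext h4 (Subtype.ext (Prod.ext ?_ ?_))
    · have := congrArg (fun x => U.h x (E p'.1)) h5
      have h6 := (hf p'.1).ue
      rw [U.h_smul] at h6
      simpa [U.h_add, U.h_smul, (hf p'.1).ve, (hf p'.1).ee, h6] using this.symm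
    · have := congrArg (fun x => U.h x (W p'.1)) h5
      have h6 := (hf p'.1).uv
      rw [U.h_smul] at h6
      simpa [U.h_add, U.h_smul, (hf p'.1).vv, (hf p'.1).ev, h6] using this.symm
  have hle := Nat.card_le_card_of_injective g inj
  rw [Nat.card_prod, Nat.card_prod, U.card_ne_zero', Finite.card_option] at hle
  have hA : qval n * qval n * qval n ≤ Nat.card A := U.heis_card
  calc _ ≤ (qval n * qval n - 1) * (Nat.card A + 1) * Nat.card A := by gcongr
    _ ≤ _ := hle

/-- The subgroups of order three. -/
def C3 (_U : HU n F V G) : Set (Subgroup G) := {K | Nat.card K = 3}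

/-- Elements of order three, together with a scaling of their eigenbasis, inject into the
hyperbolic pairs. -/
theorem card_C3 (U : HU n F V G) :
    2 * U.C3.ncard * (qval n * qval n - 1) ≤ Nat.card G := by
  have := U.finiteG
  obtain ⟨u, e, v, f⟩ := U.exists_hyp
  obtain ⟨w, hw, hws, hw3⟩ := U.uf.exists_omega
  have hgen : ∀ K : U.C3, ∃ g, g ≠ 1 ∧ g * g * g = 1 ∧ K.1 = Subgroup.zpowers g :=
    fun K => exists_gen_three K.2
  choose k k1 k3 hk using hgen
  let g : U.C3 × Bool → G := fun p => if p.2 then k p.1 else k p.1 * k p.1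
  have g1 : ∀ p, g p ≠ 1 := by
    rintro ⟨K, _ | _⟩ h
    · have h' : k K * k K = 1 := h
      have := k3 K
      rw [h', one_mul] at this
      exact k1 K this
    · exact k1 K h
  have g3 : ∀ p, g p * g p * g p = 1 := by
    rintro ⟨K, _ | _⟩
    · have h : k K * k K * (k K * k K) * (k K * k K) = (k K * k K * k K) * (k K * k K * k K) := by
        group
      show k K * k K * (k K * k K) * (k K * k K) = 1
      rw [h, k3, one_mul]
    · exact k3 K
  have gK : ∀ p, p.1.1 = Subgroup.zpowers (g p) := by
    intro p
    have hp : g p ∈ p.1.1 := by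
      obtain ⟨K, _ | _⟩ := p
      · show k K * k K ∈ K.1
        rw [hk]; exact mul_mem (Subgroup.mem_zpowers _) (Subgroup.mem_zpowers _)
      · show k K ∈ K.1
        rw [hk]; exact Subgroup.mem_zpowers _
    symm
    refine Subgroup.eq_of_le_of_card_ge (by rwa [Subgroup.zpowers_le]) ?_
    rw [Nat.card_zpowers, show Nat.card p.1.1 = 3 from p.1.2]
    have : orderOf (g p) = 3 := by
      have : Fact (Nat.Prime 3) := ⟨Nat.prime_three⟩
      exact orderOf_eq_prime (by rw [pow_succ, pow_two]; exact g3 p) (g1 p)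
    rw [this]
  have ginj : Function.Injective g := by
    intro p p' h
    have h1 : p.1 = p'.1 := Subtype.ext (by rw [gK, gK, h])
    refine Prod.ext h1 ?_
    obtain ⟨K, b⟩ := p
    obtain ⟨K', b'⟩ := p'
    obtain rfl : K = K' := h1
    rcases b with _ | _ <;> rcases b' with _ | _ <;> try rfl
    · exact absurd (mul_eq_left.1 (show k K * k K = k K from h)) (k1 K)
    · exact absurd (mul_eq_left.1 (show k K * k K = k K from h.symm)) (k1 K)
  choose x y z hf hx hy hz using fun p => U.three_frame hw hws (g1 p) (g3 p)
  have hm : ∀ p : (U.C3 × Bool) × {x : F // x ≠ 0}, ∃ m : G, m • u = p.2.1 • x p.1 ∧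
      m • v = (star p.2.1)⁻¹ • z p.1 := fun p => by
    have h0 : star p.2.1 ≠ 0 := by simpa using p.2.2
    refine f.move ?_ ?_ ?_
    · simp [U.h_smul, U.smul_h, (hf p.1).uu]
    · simp [U.h_smul, U.smul_h, (hf p.1).vv]
    · simp [U.h_smul, U.smul_h, (hf p.1).uv, p.2.2]
  choose m mu mv using hm
  have inj : Function.Injective m := by
    rintro ⟨p, l⟩ ⟨p', l'⟩ h
    have h1 := mu ⟨p, l⟩
    have h2 := mv ⟨p, l⟩
    rw [h, mu ⟨p', l'⟩] at h1
    rw [h, mv ⟨p', l'⟩] at h2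
    simp only at h1 h2
    have hx' : x p = (l.1⁻¹ * l'.1) • x p' := by
      rw [mul_smul, h1, smul_smul, inv_mul_cancel₀ l.2, one_smul]
    have hl : star l.1 ≠ 0 := by simpa using l.2
    have hl' : star l'.1 ≠ 0 := by simpa using l'.2
    have hz' : z p = (star l.1 * (star l'.1)⁻¹) • z p' := by
      rw [mul_smul, h2, smul_smul, mul_inv_cancel₀ hl, one_smul]
    have hy' : y p = U.h (y p) (y p') • y p' := by
      conv_lhs => rw [(hf p').expand (y p)]
      have a1 : U.h (y p) (x p) = 0 := (hf p).eu
      have a2 : U.h (y p) (z p) = 0 := (hf p).ev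
      rw [hx', U.smul_h] at a1
      rw [hz', U.smul_h] at a2
      have b1 : U.h (y p) (x p') = 0 :=
        (mul_eq_zero.1 a1).resolve_left (by simp [l.2, l'.2])
      have b2 : U.h (y p) (z p') = 0 :=
        (mul_eq_zero.1 a2).resolve_left (by simp [l.2, l'.2])
      rw [b1, b2]; simp
    have hgg : g p = g p' := by
      apply (hf p).ext
      · rw [hx, hx', U.act, hx, smul_comm]
      · rw [hy, hy', U.act, hy]
      · rw [hz, hz', U.act, hz, smul_comm]
    obtain rfl := ginj hgg
    have h4 := congrArg (fun t => U.h t (z p)) h1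
    simp only [U.h_smul, (hf p).uv, mul_one] at h4
    rw [Prod.mk.injEq]
    exact ⟨rfl, Subtype.ext h4.symm⟩
  have hle := Nat.card_le_card_of_injective m inj
  rw [Nat.card_prod, Nat.card_prod, U.card_ne_zero', Nat.card_coe_set_eq, Nat.card_eq_fintype_card,
    Fintype.card_bool] at hle
  rwa [mul_comm 2]

/-- Distinct members of `Theta` meet trivially and have at least three nonidentity elements. -/
theorem card_Theta (U : HU n F V G) : 3 * U.Theta.ncard ≤ Nat.card G := by
  have := U.finiteG
  choose g hg hI using fun C : U.Theta => Theta.exists_mem C.2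
  have h2 : ∀ C, g C * g C ≠ 1 := fun C h => U.not_irr_two h (hI C)
  have h3 : ∀ C, g C * g C * g C ≠ 1 := fun C h => U.not_irr_three h (hI C)
  let k : U.Theta × Option Bool → G := fun p =>
    p.2.elim (g p.1) fun b => if b then g p.1 * g p.1 else g p.1 * g p.1 * g p.1
  have kC : ∀ p, k p ∈ p.1.1 := by
    rintro ⟨C, _ | _ | _⟩
    · exact hg C
    · exact mul_mem (mul_mem (hg C) (hg C)) (hg C)
    · exact mul_mem (hg C) (hg C)
  have k1 : ∀ p, k p ≠ 1 := by
    rintro ⟨C, _ | _ | _⟩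
    · exact (hI C).ne_one
    · exact h3 C
    · exact h2 C
  have inj : Function.Injective k := by
    rintro p p' h
    have h1 : p.1 = p'.1 := Subtype.ext (Theta.eq p.1.2 p'.1.2 (kC p) (h ▸ kC p') (k1 p))
    obtain ⟨C, b⟩ := p
    obtain ⟨C', b'⟩ := p'
    obtain rfl : C = C' := h1
    have e1 := (hI C).ne_one
    have e2 := h2 C
    rcases b with _ | _ | _ <;> rcases b' with _ | _ | _ <;> try rfl
    · have h' : g C = g C * g C * g C := h
      rw [mul_assoc, left_eq_mul] at h'
      exact absurd h' e2
    · have h' : g C = g C * g C := h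
      rw [left_eq_mul] at h'
      exact absurd h' e1
    · have h' : g C * g C * g C = g C := h
      rw [mul_assoc, mul_eq_left] at h'
      exact absurd h' e2
    · have h' : g C * g C * g C = g C * g C := h
      rw [mul_eq_left] at h'
      exact absurd h' e1
    · have h' : g C * g C = g C := h
      rw [mul_eq_left] at h'
      exact absurd h' e1
    · have h' : g C * g C = g C * g C * g C := h
      rw [left_eq_mul] at h'
      exact absurd h' e1
  have hle := Nat.card_le_card_of_injective k inj
  rw [Nat.card_prod, Nat.card_coe_set_eq, Finite.card_option, Nat.card_eq_fintype_card,
    Fintype.card_bool] at hle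
  rwa [mul_comm]

end HU
end Counting

/-! ### Numbers of points, flags and triangles -/

section CountPoints
variable {n : ℕ} {F V G : Type} [Field F] [StarRing F] [Finite F] [CharP F 2]
  [AddCommGroup V] [Module F V] [Group G] [DistribMulAction G V] [SMulCommClass G F V]

open scoped LinearAlgebra.Projectivization
open Projectivization (mk)

namespace HU

theorem card_points (U : HU n F V G) :
    Nat.card (ℙ F V) = qval n * qval n * (qval n * qval n) + qval n * qval n + 1 := by
  rw [Projectivization.card_of_finrank F V U.dim, U.uf.card]
  simp only [Finset.sum_range_succ, Finset.sum_range_zero]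
  ring

/-- The points perpendicular to a given point are those of a projective line. -/
theorem perp_card (U : HU n F V G) (A : ℙ F V) :
    {X | U.perp X A}.ncard ≤ qval n * qval n + 1 := by
  obtain ⟨a, ha, rfl⟩ := exists_mk A
  obtain ⟨y, hy, ya, -⟩ := U.exists_perp a a
  obtain ⟨b, hb⟩ := U.exists_h_one hy
  obtain ⟨z, hz, za, zb⟩ := U.exists_perp a b
  have hzy : ∀ c : F, z ≠ c • y := by
    rintro c rfl
    rw [U.h_smul, hb, mul_one] at zb
    rw [zb, zero_smul] at hz
    exact hz rfl
  have h0 : ∀ t : F, z + t • y ≠ 0 := fun t h => hzy t (U.eq_of_add h)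
  let s : Option F → {X | U.perp X (mk F a ha)} := fun o => o.elim
    ⟨mk F y hy, (U.perp_mk _ _).2 ya⟩ fun t => ⟨mk F (z + t • y) (h0 t), (U.perp_mk _ _).2 (by
      rw [U.h_add, U.h_smul, za, ya]; ring)⟩
  have hs : Function.Surjective s := by
    rintro ⟨X, hX⟩
    obtain ⟨x, hx, rfl⟩ := exists_mk X
    have hX' : U.h x a = 0 := (U.perp_mk hx ha).1 hX
    obtain ⟨c, d, hcd⟩ := U.perp_span hy hzy ha ya za hX'
    by_cases hd : d = 0
    · refine ⟨none, Subtype.ext ?_⟩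
      show mk F y hy = mk F x hx
      have hc : c ≠ 0 := by rintro rfl; simp [hd] at hcd; exact hx hcd
      rw [Projectivization.mk_eq_mk_iff']
      exact ⟨c⁻¹, by rw [hcd, hd, zero_smul, add_zero, smul_smul, inv_mul_cancel₀ hc, one_smul]⟩
    · refine ⟨some (d⁻¹ * c), Subtype.ext ?_⟩
      show mk F (z + (d⁻¹ * c) • y) (h0 _) = mk F x hx
      rw [Projectivization.mk_eq_mk_iff']
      exact ⟨d⁻¹, by rw [hcd, smul_add, smul_smul, smul_smul, inv_mul_cancel₀ hd, one_smul,
        add_comm]⟩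
  have h := Nat.card_le_card_of_surjective s hs
  rwa [Finite.card_option, U.uf.card, Nat.card_coe_set_eq] at h

/-- The number of pairs of perpendicular points. -/
theorem perp_pairs (U : HU n F V G) : {p : ℙ F V × ℙ F V | U.perp p.1 p.2}.ncard ≤
    Nat.card (ℙ F V) * (qval n * qval n + 1) := by
  have := U.finiteP
  have := Fintype.ofFinite (ℙ F V)
  rw [← Nat.card_coe_set_eq]
  let i : {p : ℙ F V × ℙ F V | U.perp p.1 p.2} → Σ A : ℙ F V, {X | U.perp X A} :=
    fun p => ⟨p.1.2, p.1.1, p.2⟩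
  have hi : Function.Injective i := by
    rintro ⟨⟨a, b⟩, h⟩ ⟨⟨c, d⟩, h'⟩ hh
    simp only [i, Sigma.mk.injEq] at hh
    obtain ⟨rfl, h2⟩ := hh
    simp only [heq_eq_eq, Subtype.mk.injEq] at h2
    simp [h2]
  refine (Nat.card_le_card_of_injective i hi).trans ?_
  rw [Nat.card_sigma, Nat.card_eq_fintype_card, ← smul_eq_mul]
  exact Finset.sum_le_card_nsmul _ _ _ fun A _ => by
    rw [Nat.card_coe_set_eq]; exact U.perp_card A

theorem flags_card (U : HU n F V G) : (U.flags Set.univ).ncard ≤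
    Nat.card (ℙ F V) * (qval n * qval n + 1) := by
  have := U.finiteP
  refine le_trans (Set.ncard_le_ncard ?_ (Set.toFinite _)) U.perp_pairs
  rintro p ⟨-, -, -, -, h⟩
  exact h

/-- The set of triangles. -/
def Tri (U : HU n F V G) : Set (Set (ℙ F V)) := {D | U.IsTri D}

/-- The set of pairs (vertex, triangle). -/
def Vtx (U : HU n F V G) : Set (ℙ F V × Set (ℙ F V)) := {p | U.IsTri p.2 ∧ p.1 ∈ p.2}

theorem vtx_card (U : HU n F V G) : U.Vtx.ncard = 3 * U.Tri.ncard := by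
  have := U.finiteP
  have := U.finiteTri
  have : Fintype (ℙ F V) := Fintype.ofFinite _
  have : Fintype (Set (ℙ F V)) := Fintype.ofFinite _
  rw [← Nat.card_coe_set_eq, ← Nat.card_coe_set_eq]
  let i : U.Vtx ≃ Σ D : U.Tri, D.1 := 
    { toFun := fun p => ⟨⟨p.1.2, p.2.1⟩, p.1.1, p.2.2⟩
      invFun := fun p => ⟨(p.2.1, p.1.1), p.1.2, p.2.2⟩
      left_inv := fun p => rfl
      right_inv := fun p => rfl }
  rw [Nat.card_congr i, Nat.card_sigma, Finset.sum_congr rfl fun D _ => by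
    rw [Nat.card_coe_set_eq, IsTri.ncard D.2]]
  simp [Nat.card_eq_fintype_card, mul_comm]

/-- Every triangle contributes six ordered pairs of perpendicular points. -/
theorem tri_card (U : HU n F V G) : 6 * U.Tri.ncard ≤
    Nat.card (ℙ F V) * (qval n * qval n + 1) := by
  have := U.finiteP
  have h : ∀ p : U.Vtx, ∃ B C : ℙ F V, U.perp p.1.1 B ∧ U.perp p.1.1 C ∧
      p.1.1 ≠ B ∧ p.1.1 ≠ C ∧ B ≠ C ∧ p.1.2 = {p.1.1, B, C} := fun p => by
    obtain ⟨B, C, -, -, -, h1, h2, -, h3, h4, h5, h6⟩ := IsTri.of_mem p.2.1 p.2.2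
    exact ⟨B, C, h1, h2, h3, h4, h5, h6⟩
  choose B C hB hC nB nC hBC hD using h
  let i : U.Vtx × Bool → {p : ℙ F V × ℙ F V | U.perp p.1 p.2} := fun p =>
    if p.2 then ⟨(p.1.1.1, B p.1), hB p.1⟩ else ⟨(p.1.1.1, C p.1), hC p.1⟩
  have key : ∀ p, (i p).1.1 = p.1.1.1 ∧ (i p).1.2 ∈ p.1.1.2 ∧ (i p).1.2 ≠ p.1.1.1 := by
    rintro ⟨p, _ | _⟩
    · refine ⟨rfl, ?_, (nC p).symm⟩
      show C p ∈ p.1.2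
      rw [hD]; simp
    · refine ⟨rfl, ?_, (nB p).symm⟩
      show B p ∈ p.1.2
      rw [hD]; simp
  have hi : Function.Injective i := by
    intro p p' hh
    obtain ⟨a1, a2, a3⟩ := key p
    obtain ⟨b1, b2, b3⟩ := key p'
    rw [hh] at a1 a2 a3
    have e1 : p.1.1.1 = p'.1.1.1 := a1.symm.trans b1
    have e2 : p.1.1.2 = p'.1.1.2 :=
      IsTri.eq_of_two p.1.2.1 p'.1.2.1 p.1.2.2 a2 (e1 ▸ p'.1.2.2) b2 a3.symm
    have e3 : p.1 = p'.1 := Subtype.ext (Prod.ext e1 e2)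
    obtain ⟨p, b⟩ := p
    obtain ⟨p', b'⟩ := p'
    obtain rfl : p = p' := e3
    rcases b with _ | _ <;> rcases b' with _ | _ <;> try rfl
    · have := congrArg (fun x => x.1.2) hh
      exact absurd this.symm (hBC p)
    · have := congrArg (fun x => x.1.2) hh
      exact absurd this (hBC p)
  have hle := Nat.card_le_card_of_injective i hi
  rw [Nat.card_prod, Nat.card_coe_set_eq, Nat.card_coe_set_eq, U.vtx_card,
    Nat.card_eq_fintype_card, Fintype.card_bool] at hle
  have := hle.trans U.perp_pairs
  omega

end HU
end CountPoints

/-! ### Subgroups of order three or six acting freely on a triangle -/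

section CountFree
variable {n : ℕ} {F V G : Type} [Field F] [StarRing F] [Finite F] [CharP F 2]
  [AddCommGroup V] [Module F V] [Group G] [DistribMulAction G V] [SMulCommClass G F V]

open scoped LinearAlgebra.Projectivization
open Projectivization (mk)

namespace HU

theorem smul_mk_eq' (g : G) {x y : V} (hx : x ≠ 0) (hy : y ≠ 0)
    (h : g • mk F x hx = mk F y hy) : ∃ a : F, g • x = a • y := by
  rw [Projectivization.smul_mk, Projectivization.mk_eq_mk_iff'] at h
  exact h.imp fun a ha => ha.symm

/-- A subgroup of order three moving all vertices of a triangle is generated by a rotation. -/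
theorem freeTri_rot {U : HU n F V G} {K : Subgroup G} (h3 : Nat.card K = 3) {A B C : ℙ F V}
    (hAB : A ≠ B) (hAC : A ≠ C) (hBC : B ≠ C) (hD : ({A, B, C} : Set (ℙ F V)) ∈ U.freeTri K) :
    ∃ g, K = Subgroup.zpowers g ∧ g * g * g = 1 ∧ g • A = B ∧ g • B = C := by
  obtain ⟨g, g1, g3, rfl⟩ := exists_gen_three h3
  obtain ⟨⟨-, hT⟩, hf⟩ := hD
  have hg := hT g (Subgroup.mem_zpowers g)
  have hm : ∀ X ∈ ({A, B, C} : Set (ℙ F V)), g • X = A ∨ g • X = B ∨ g • X = C := fun X hX => by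
    have : g • X ∈ g • ({A, B, C} : Set (ℙ F V)) := Set.smul_mem_smul_set hX
    rw [hg] at this
    simpa using this
  have hn : ∀ X ∈ ({A, B, C} : Set (ℙ F V)), g • X ≠ X := fun X hX h =>
    hf X hX (mem_fix_zpowers.2 h)
  have inj : ∀ X Y : ℙ F V, X ≠ Y → g • X ≠ g • Y := fun X Y h h' => h (smul_left_cancel g h')
  have iAB := inj A B hAB
  have iAC := inj A C hAC
  have iBC := inj B C hBC
  have nA := hn A (by simp)
  have nB := hn B (by simp)
  have nC := hn C (by simp)
  have mA := hm A (by simp)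
  have mB := hm B (by simp)
  have mC := hm C (by simp)
  rcases mA with h | h | h
  · exact absurd h nA
  · refine ⟨g, rfl, g3, h, ?_⟩
    rcases mB with h' | h' | h'
    · rcases mC with h'' | h'' | h''
      · rw [h', h''] at iBC; exact absurd rfl iBC
      · rw [h, h''] at iAC; exact absurd rfl iAC
      · exact absurd h'' nC
    · exact absurd h' nB
    · exact h'
  · have hB : g • B = A := by
      rcases mB with h' | h' | h'
      · exact h'
      · exact absurd h' nB
      · rw [h, h'] at iAB; exact absurd rfl iAB
    have hC : g • C = B := by
      rcases mC with h' | h' | h'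
      · rw [hB, h'] at iBC; exact absurd rfl iBC
      · exact h'
      · exact absurd h' nC
    refine ⟨g⁻¹, (Subgroup.zpowers_inv).symm, ?_, ?_, ?_⟩
    · have : g⁻¹ * g⁻¹ * g⁻¹ = (g * g * g)⁻¹ := by group
      rw [this, g3, inv_one]
    · rw [inv_smul_eq_iff, hB]
    · rw [inv_smul_eq_iff, hC]

/-- The pairs of a subgroup of order `k` and a triangle it stabilizes without fixing a vertex. -/
def freePairs (U : HU n F V G) (k : ℕ) : Set (Subgroup G × Set (ℙ F V)) :=
  {p | Nat.card p.1 = k ∧ p.2 ∈ U.freeTri p.1}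

/-- In a unit frame `a`, `b`, `c` of a triangle, a rotation of order three is determined by the
scalars `x`, `y` of norm one for which `a` is sent to `x • b` and `b` to `y • c`. -/
theorem freePairs_three (U : HU n F V G) :
    (U.freePairs 3).ncard ≤ U.Tri.ncard * ((qval n + 1) * (qval n + 1)) := by
  have := U.finiteP
  have := U.finiteTri
  have := U.finiteG
  have hfr : ∀ D : U.Tri, ∃ a b c, ∃ f : U.Orth a b c,
      D.1 = {mk F a f.ne.1, mk F b f.ne.2.1, mk F c f.ne.2.2} := by
    rintro ⟨D, A, B, C, hA, hB, hC, h1, h2, h3, rfl⟩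
    obtain ⟨a, b, c, f, rfl, rfl, rfl⟩ := U.tri_frame hA hB hC h1 h2 h3
    exact ⟨a, b, c, f, rfl⟩
  choose a b c f hfD using hfr
  let D : U.freePairs 3 → U.Tri := fun p => ⟨p.1.2, p.2.2.1.1⟩
  have hg : ∀ p : U.freePairs 3, ∃ (g : G) (x y : F), p.1.1 = Subgroup.zpowers g ∧ g * g * g = 1 ∧
      x * star x = 1 ∧ y * star y = 1 ∧ g • a (D p) = x • b (D p) ∧
      g • b (D p) = y • c (D p) := by
    intro p
    have hmem := p.2.2
    rw [show p.1.2 = (D p).1 from rfl, hfD] at hmem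
    obtain ⟨h1, h2, h3⟩ := (f (D p)).ne
    have n1 : ∀ {x y : V} (hx : x ≠ 0) (hy : y ≠ 0), U.h x x = 1 → U.h x y = 0 →
        mk F x hx ≠ mk F y hy := fun hx hy hxx hxy =>
      ne_of_perp (U := U) (fun h => by rw [(U.perp_mk hx hx).1 h] at hxx; exact zero_ne_one hxx) ((U.perp_mk _ _).2 hxy)
    obtain ⟨g, hK, g3, gA, gB⟩ := freeTri_rot p.2.1 (n1 _ _ (f (D p)).aa (f (D p)).ab)
      (n1 _ _ (f (D p)).aa (f (D p)).ac) (n1 _ _ (f (D p)).bb (f (D p)).bc) hmem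
    obtain ⟨x, hx⟩ := smul_mk_eq' g _ _ gA
    obtain ⟨y, hy⟩ := smul_mk_eq' g _ _ gB
    refine ⟨g, x, y, hK, g3, ?_, ?_, hx, hy⟩
    · have := U.inv g (a (D p)) (a (D p))
      rwa [hx, U.h_smul, U.smul_h, (f (D p)).bb, (f (D p)).aa, mul_one] at this
    · have := U.inv g (b (D p)) (b (D p))
      rwa [hy, U.h_smul, U.smul_h, (f (D p)).cc, (f (D p)).bb, mul_one] at this
  choose g x y hK g3 hx hy ga gb using hg
  have gc : ∀ p, g p • c (D p) = (x p * y p)⁻¹ • a (D p) := by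
    intro p
    have h := congrArg (fun t => t • a (D p)) (g3 p)
    simp only [mul_smul, one_smul] at h
    rw [ga, U.act, gb, U.act, U.act, smul_smul] at h
    have h0 : x p * y p ≠ 0 := mul_ne_zero (left_ne_zero_of_mul_eq_one (hx p))
      (left_ne_zero_of_mul_eq_one (hy p))
    rw [eq_inv_smul_iff₀ h0, h]
  let N := {t : F | t * star t = 1}
  let i : U.freePairs 3 → U.Tri × (N × N) := fun p => (D p, ⟨x p, hx p⟩, ⟨y p, hy p⟩)
  have hi : Function.Injective i := by
    intro p p' h
    simp only [i, Prod.mk.injEq, Subtype.mk.injEq] at h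
    obtain ⟨hD, e1, e2⟩ := h
    have hgg : g p = g p' := by
      apply (f (D p)).ext
      · rw [ga, hD, ga, e1]
      · rw [gb, hD, gb, e2]
      · rw [gc, hD, gc, e1, e2]
    exact Subtype.ext (Prod.ext (by rw [hK, hK, hgg]) (congrArg Subtype.val hD))
  have hle := Nat.card_le_card_of_injective i hi
  rw [Nat.card_prod, Nat.card_prod, Nat.card_coe_set_eq, Nat.card_coe_set_eq,
    Nat.card_coe_set_eq] at hle
  refine hle.trans ?_
  have := U.uf.norm_one_card_le
  gcongr <;> exact this

/-- An element of order three stabilizing a triangle fixes none of its vertices. -/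
theorem IsTri.three_free {U : HU n F V G} {D : Set (ℙ F V)} (hD : U.IsTri D) {s : G}
    (hs : s • D = D) (h3 : orderOf s = 3) {A : ℙ F V} (hA : A ∈ D) : s • A ≠ A := by
  intro h
  obtain ⟨B, C, -, -, -, -, -, -, hAB, hAC, -, rfl⟩ := hD.of_mem hA
  have hm : ∀ X ∈ ({A, B, C} : Set (ℙ F V)), s • X = A ∨ s • X = B ∨ s • X = C := fun X hX => by
    have : s • X ∈ s • ({A, B, C} : Set (ℙ F V)) := Set.smul_mem_smul_set hX
    rw [hs] at this
    simpa using this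
  have ho : Odd (orderOf s) := by rw [h3]; decide
  have nB : s • B = B ∨ s • B = C := (hm B (by simp)).resolve_left fun h' =>
    hAB (smul_left_cancel s (h.trans h'.symm))
  have nC : s • C = B ∨ s • C = C := (hm C (by simp)).resolve_left fun h' =>
    hAC (smul_left_cancel s (h.trans h'.symm))
  have hB : s • B = B := fix_of_pair ho nB nC
  have hC : s • C = C := fix_of_pair ho nC.symm nB.symm
  have h1 : s = 1 := hD.pow_eq_one (g := s) (by
    intro X hX
    simp only [Set.mem_insert_iff, Set.mem_singleton_iff] at hX
    rcases hX with rfl | rfl | rfl <;> assumption)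
    (by rw [← orderOf_dvd_iff_pow_eq_one, h3]; decide)
  rw [h1, orderOf_one] at h3
  omega

theorem exists_three_of_six {S : Subgroup G} (h6 : Nat.card S = 6) :
    ∃ s ∈ S, orderOf s = 3 := by
  have hf : Finite S := Nat.finite_of_card_ne_zero (by rw [h6]; norm_num)
  have : Fact (Nat.Prime 3) := ⟨Nat.prime_three⟩
  obtain ⟨s, hs⟩ := exists_prime_orderOf_dvd_card' (G := S) 3 (by rw [h6]; decide)
  exact ⟨s, s.2, by rw [Subgroup.orderOf_coe, hs]⟩

/-- In a group of order six acting on a triangle with an element `s` of order three, some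
involution fixes the given vertex, swaps the others and inverts `s`. -/
theorem exists_inv_six {U : HU n F V G} {S : Subgroup G} (h6 : Nat.card S = 6) {A B C : ℙ F V}
    (hAB : A ≠ B) (hAC : A ≠ C) (hBC : B ≠ C) (hD : U.IsTri {A, B, C})
    (hST : ∀ g ∈ S, g • ({A, B, C} : Set (ℙ F V)) = {A, B, C}) {s : G} (hs : s ∈ S)
    (sA : s • A = B) (sB : s • B = C) (s3 : s * s * s = 1) :
    ∃ t ∈ S, t ≠ 1 ∧ t * t = 1 ∧ t • A = A ∧ t • B = C ∧ t • C = B ∧ t * s * t * s = 1 := by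
  have hf : Finite S := Nat.finite_of_card_ne_zero (by rw [h6]; norm_num)
  have hone : ∀ g ∈ S, g • A = A → g • B = B → g • C = C → g = 1 := by
    intro g hg a b c
    refine hD.pow_eq_one (g := g) ?_ ?_
    · intro X hX
      simp only [Set.mem_insert_iff, Set.mem_singleton_iff] at hX
      rcases hX with rfl | rfl | rfl <;> assumption
    · have h : (⟨g, hg⟩ : S) ^ Nat.card S = 1 := pow_card_eq_one'
      rw [h6] at h
      have h' : g ^ 6 = 1 := congrArg Subtype.val h
      rw [show 12 = 6 * 2 from rfl, pow_mul, h', one_pow]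
  have sC : s • C = A := by
    rw [← sB, ← sA, ← mul_smul, ← mul_smul, s3, one_smul]
  have : Fact (Nat.Prime 2) := ⟨Nat.prime_two⟩
  obtain ⟨t₀, ht₀⟩ := exists_prime_orderOf_dvd_card' (G := S) 2 (by rw [h6]; decide)
  have ht : orderOf (t₀ : G) = 2 := by rw [Subgroup.orderOf_coe, ht₀]
  have t1 : (t₀ : G) ≠ 1 := fun h => by rw [h, orderOf_one] at ht; omega
  have t2 : (t₀ : G) * t₀ = 1 := by
    have := pow_orderOf_eq_one (t₀ : G)
    rwa [ht, pow_two] at this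
  obtain ⟨X, hX, tX⟩ := hD.fix_of_sq (hST t₀ t₀.2) t2
  obtain ⟨m, hm, mX⟩ : ∃ m ∈ S, m • X = A := by
    simp only [Set.mem_insert_iff, Set.mem_singleton_iff] at hX
    rcases hX with rfl | rfl | rfl
    · exact ⟨1, one_mem _, one_smul _ _⟩
    · exact ⟨s * s, mul_mem hs hs, by rw [mul_smul, sB, sC]⟩
    · exact ⟨s, hs, sC⟩
  have htS : m * t₀ * m⁻¹ ∈ S := mul_mem (mul_mem hm t₀.2) (inv_mem hm)
  have htA : (m * t₀ * m⁻¹) • A = A := by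
    rw [← mX, ← mul_smul, inv_mul_cancel_right, mul_smul, tX]
  have htt : m * t₀ * m⁻¹ * (m * t₀ * m⁻¹) = 1 := by
    have : m * t₀ * m⁻¹ * (m * t₀ * m⁻¹) = m * (t₀ * t₀) * m⁻¹ := by group
    rw [this, t2]; group
  have ht1 : m * t₀ * m⁻¹ ≠ 1 := fun h => t1 (by simpa using conj_eq_one_iff.1 h)
  generalize m * t₀ * m⁻¹ = t at htS htA htt ht1
  have hm : ∀ X ∈ ({A, B, C} : Set (ℙ F V)), t • X = A ∨ t • X = B ∨ t • X = C := fun X hX => by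
    have : t • X ∈ t • ({A, B, C} : Set (ℙ F V)) := Set.smul_mem_smul_set hX
    rw [hST t htS] at this
    simpa using this
  have nB : t • B = B ∨ t • B = C := (hm B (by simp)).resolve_left fun h' =>
    hAB (smul_left_cancel t (htA.trans h'.symm))
  have nC : t • C = B ∨ t • C = C := (hm C (by simp)).resolve_left fun h' =>
    hAC (smul_left_cancel t (htA.trans h'.symm))
  have tB : t • B = C := by
    refine nB.resolve_left fun h => ht1 (hone t htS htA h ?_)
    exact nC.resolve_left fun h' => hBC (smul_left_cancel t (h.trans h'.symm))
  have tC : t • C = B := by rw [← tB, ← mul_smul, htt, one_smul]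
  refine ⟨t, htS, ht1, htt, htA, tB, tC, hone _ (mul_mem (mul_mem (mul_mem htS hs) htS) hs) ?_ ?_ ?_⟩
  · simp only [mul_smul, sA, tB, sC, htA]
  · simp only [mul_smul, sB, tC]
  · simp only [mul_smul, sC, htA, sA, tB]

/-- A subgroup of order six acting freely on a triangle is determined by the triangle and its
subgroup of order three. -/
theorem freePairs_six (U : HU n F V G) : (U.freePairs 6).ncard ≤ (U.freePairs 3).ncard := by
  have := U.finiteP
  have := U.finiteTri
  have := U.finiteG
  have hs : ∀ p : U.freePairs 6, ∃ s ∈ p.1.1, orderOf s = 3 := fun p => exists_three_of_six p.2.1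
  choose s hsS hs3 using hs
  let i : U.freePairs 6 → U.freePairs 3 := fun p => ⟨(Subgroup.zpowers (s p), p.1.2), by
    refine ⟨by rw [Nat.card_zpowers, hs3], ⟨p.2.2.1.1, fun g hg => p.2.2.1.2 g ?_⟩, ?_⟩
    · exact (Subgroup.zpowers_le.2 (hsS p)) hg
    · intro A hA hf
      exact IsTri.three_free p.2.2.1.1 (p.2.2.1.2 _ (hsS p)) (hs3 p) hA (mem_fix_zpowers.1 hf)⟩
  have hi : Function.Injective i := by
    rintro ⟨⟨S, D⟩, h6, hD⟩ ⟨⟨S', D'⟩, h6', hD'⟩ h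
    set p : U.freePairs 6 := ⟨⟨S, D⟩, h6, hD⟩
    set p' : U.freePairs 6 := ⟨⟨S', D'⟩, h6', hD'⟩
    have hDD : D = D' := congrArg (fun x => x.1.2) h
    have hK : Subgroup.zpowers (s p) = Subgroup.zpowers (s p') := congrArg (fun x => x.1.1) h
    subst hDD
    have hKD : D ∈ U.freeTri (Subgroup.zpowers (s p)) := (i p).2.2
    have hKS : Subgroup.zpowers (s p) ≤ S := Subgroup.zpowers_le.2 (hsS p)
    have hKS' : Subgroup.zpowers (s p) ≤ S' := hK ▸ Subgroup.zpowers_le.2 (hsS p')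
    have hK3 : Nat.card (Subgroup.zpowers (s p)) = 3 := by rw [Nat.card_zpowers, hs3]
    generalize Subgroup.zpowers (s p) = K at hKD hKS hKS' hK3
    have hT := hD.1.1
    obtain ⟨A, B, C, hA, hB, hC, h1, h2, h3, rfl⟩ := hD.1.1
    have hAB := ne_of_perp hA h1
    have hAC := ne_of_perp hA h2
    have hBC := ne_of_perp hB h3
    obtain ⟨σ, rfl, σ3, σA, σB⟩ := freeTri_rot hK3 hAB hAC hBC hKD
    have σm := Subgroup.mem_zpowers σ
    obtain ⟨t, tS, t1, tt, tA, tB, tC, tσ⟩ :=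
      exists_inv_six h6 hAB hAC hBC hT hD.1.2 (hKS σm) σA σB σ3
    obtain ⟨t', tS', t1', tt', tA', tB', tC', tσ'⟩ :=
      exists_inv_six h6' hAB hAC hBC hT hD'.1.2 (hKS' σm) σA σB σ3
    -- `t t'` commutes with `σ` and fixes the vertices, so it is a scalar
    have hcomm : t * t' * σ = σ * (t * t') := by
      have e1 : t' * σ = σ⁻¹ * t'⁻¹ := by
        rw [← mul_inv_rev, eq_inv_iff_mul_eq_one, ← mul_assoc]; exact tσ'
      have e2 : t * σ⁻¹ = σ * t := by
        have : t * σ * t = σ⁻¹ := by rw [eq_inv_iff_mul_eq_one]; exact tσ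
        rw [← this, ← mul_assoc, ← mul_assoc, tt, one_mul]
      have e3 : t'⁻¹ = t' := inv_eq_of_mul_eq_one_left tt'
      rw [mul_assoc, e1, e3, ← mul_assoc, e2, mul_assoc]
    obtain ⟨a, b, c, f, rfl, rfl, rfl⟩ := U.tri_frame hA hB hC h1 h2 h3
    obtain ⟨x, hx⟩ := smul_mk_eq' σ _ _ σA
    obtain ⟨y, hy⟩ := smul_mk_eq' σ _ _ σB
    obtain ⟨l, hl⟩ := (smul_mk_eq (F := F) (t * t') f.ne.1).1 (by rw [mul_smul, tA', tA])
    have x0 : x ≠ 0 := by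
      rintro rfl; rw [zero_smul, smul_eq_zero_iff_eq] at hx; exact f.ne.1 hx
    have y0 : y ≠ 0 := by
      rintro rfl; rw [zero_smul, smul_eq_zero_iff_eq] at hy; exact f.ne.2.1 hy
    have step : ∀ (p q : V) (z : F), z ≠ 0 → σ • p = z • q → (t * t') • p = l • p →
        (t * t') • q = l • q := by
      intro p q z z0 h h'
      apply smul_right_injective V z0
      show z • ((t * t') • q) = z • (l • q)
      rw [← U.act, ← h, ← mul_smul, hcomm, mul_smul, h', U.act, h, smul_comm]
    have hb := step a b x x0 hx hl
    have hc := step b c y y0 hy hb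
    have hm : t * t' = 1 := U.scalar (a := l) fun v => by
      rw [f.expand v]
      simp only [smul_add, U.act, hl, hb, hc]
      simp only [smul_comm l]
    have htt : t' = t := by
      rw [← mul_left_cancel_iff (a := t), hm, tt]
    rw [htt] at tS'
    -- both groups are generated by `σ` and `t`
    have hfS : Finite S := Nat.finite_of_card_ne_zero (by rw [h6]; norm_num)
    have d3 : 3 ∣ Nat.card (S ⊓ S' : Subgroup G) := by
      rw [← hK3]; exact Subgroup.card_dvd_of_le (le_inf hKS hKS')
    have d2 : 2 ∣ Nat.card (S ⊓ S' : Subgroup G) := by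
      have : orderOf t = 2 := orderOf_eq_prime (by rw [pow_two, tt]) t1
      rw [← this]
      exact Subgroup.orderOf_dvd_natCard _ (Subgroup.mem_inf.2 ⟨tS, tS'⟩)
    have d6 : 6 ∣ Nat.card (S ⊓ S' : Subgroup G) :=
      Nat.Coprime.mul_dvd_of_dvd_of_dvd (by norm_num : Nat.Coprime 2 3) d2 d3
    have h6le : 6 ≤ Nat.card (S ⊓ S' : Subgroup G) := Nat.le_of_dvd Nat.card_pos d6
    have e1 : S ⊓ S' = S := Subgroup.eq_of_le_of_card_ge inf_le_left (by rw [h6]; exact h6le)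
    have e2 : S ⊓ S' = S' := Subgroup.eq_of_le_of_card_ge inf_le_right (by rw [h6']; exact h6le)
    have : S = S' := e1.symm.trans e2
    subst this
    rfl
  have hle := Nat.card_le_card_of_injective i hi
  rwa [Nat.card_coe_set_eq, Nat.card_coe_set_eq] at hle

end HU
end CountFree

/-! ### Stabilizers determine points, flags, triangles and members of `Theta` -/

section Stabilizers
variable {n : ℕ} {F V G : Type} [Field F] [StarRing F] [Finite F] [CharP F 2]
  [AddCommGroup V] [Module F V] [Group G] [DistribMulAction G V] [SMulCommClass G F V]

open scoped LinearAlgebra.Projectivization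
open Projectivization (mk)
open MulAction (stabilizer mem_stabilizer_iff)

namespace HU

theorem perp_of_tv (U : HU n F V G) {u : V} (uu : U.h u u = 0) (hu : u ≠ 0) {P : ℙ F V}
    (h : U.tv u 1 ∈ stabilizer G P) : U.perp P (mk F u hu) :=
  (U.tv_fix uu hu (star_one F) one_ne_zero).1 (mem_stabilizer_iff.1 h)

theorem tv_mem (U : HU n F V G) {u : V} (uu : U.h u u = 0) (hu : u ≠ 0) {P : ℙ F V}
    (h : U.perp P (mk F u hu)) : U.tv u 1 ∈ stabilizer G P :=
  mem_stabilizer_iff.2 ((U.tv_fix uu hu (star_one F) one_ne_zero).2 h)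

theorem Hyp.ne_points {U : HU n F V G} {u e v : V} (f : U.Hyp u e v) :
    Projectivization.mk F v f.ne.2.2 ≠ Projectivization.mk F u f.ne.1 := by
  intro h
  rw [Projectivization.mk_eq_mk_iff'] at h
  obtain ⟨a, ha⟩ := h
  have := f.uv
  rw [← ha, U.smul_h, f.uu, mul_zero] at this
  exact zero_ne_one this

theorem stab_point_non (U : HU n F V G) {R P : ℙ F V} (hR : ¬ U.iso R)
    (h : stabilizer G R = stabilizer G P) : R = P := by
  obtain ⟨e, he, rfl, ee⟩ := U.exists_unit hR
  obtain ⟨u, v, f⟩ := U.exists_hyp_of_e ee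
  have eu : U.perp (mk F e he) (mk F u f.ne.1) := (U.perp_mk _ _).2 f.eu
  have ev : U.perp (mk F e he) (mk F v f.ne.2.2) := (U.perp_mk _ _).2 f.ev
  have pu := U.perp_of_tv f.uu f.ne.1 (h ▸ U.tv_mem f.uu f.ne.1 eu)
  have pv := U.perp_of_tv f.vv f.ne.2.2 (h ▸ U.tv_mem f.vv f.ne.2.2 ev)
  exact U.pole_unique f.ne_points (U.perp_comm.1 eu) (U.perp_comm.1 ev) (U.perp_comm.1 pu)
    (U.perp_comm.1 pv)

theorem iso_of_tv (U : HU n F V G) {P P' : ℙ F V} (hP : U.iso P) (hP' : U.iso P')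
    (h : ∀ g : G, (∀ X, U.perp X P → g • X = X) → g ∈ stabilizer G P') : P' = P := by
  obtain ⟨u, hu, rfl⟩ := exists_mk P
  have uu := (U.perp_mk hu hu).1 hP
  exact U.iso_unique hP hP' (U.perp_of_tv uu hu
    (h _ fun X hX => (U.tv_fix uu hu (star_one F) one_ne_zero).2 hX))

theorem stab_point (U : HU n F V G) {P P' : ℙ F V} (h : stabilizer G P = stabilizer G P') :
    P = P' := by
  by_cases hP : U.iso P
  · by_cases hP' : U.iso P'
    · exact (U.iso_of_tv hP hP' fun g hg => h ▸ mem_stabilizer_iff.2 (hg P hP)).symm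
    · exact (U.stab_point_non hP' h.symm).symm
  · exact U.stab_point_non hP h

/-- A diagonal element whose sixth power fixes only the vertices of its triangle. -/
theorem IsTri.exists_diag {U : HU n F V G} {D : Set (ℙ F V)} (hD : U.IsTri D) :
    ∃ d : G, (∀ X ∈ D, d • X = X) ∧ ∀ X : ℙ F V, d ^ 6 • X = X → X ∈ D := by
  obtain ⟨A, B, C, hA, hB, hC, h1, h2, h3, rfl⟩ := hD
  obtain ⟨a, b, c, f, rfl, rfl, rfl⟩ := U.tri_frame hA hB hC h1 h2 h3
  obtain ⟨z, hz, z1⟩ := U.uf.exists_norm_one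
  obtain ⟨d, da, db, dc⟩ := f.diag hz
  have z0 : z ≠ 0 := left_ne_zero_of_mul_eq_one hz
  have hpow : ∀ (x : V) (y : F) (k : ℕ), d • x = y • x → d ^ k • x = y ^ k • x := by
    intro x y k h
    induction k with
    | zero => simp
    | succ k ih => rw [pow_succ, mul_smul, h, U.act, ih, smul_smul, pow_succ, mul_comm]
  have da6 := hpow a z 6 da
  have db6 := hpow b (star z) 6 db
  have dc6 : d ^ 6 • c = c := by
    have := hpow c 1 6 (by rw [dc, one_smul])
    rwa [one_pow, one_smul] at this
  refine ⟨d, ?_, ?_⟩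
  · intro X hX
    simp only [Set.mem_insert_iff, Set.mem_singleton_iff] at hX
    rcases hX with rfl | rfl | rfl
    · exact (smul_mk_eq d _).2 ⟨_, da⟩
    · exact (smul_mk_eq d _).2 ⟨_, db⟩
    · exact (smul_mk_eq d _).2 ⟨1, by rw [dc, one_smul]⟩
  · intro X hX
    obtain ⟨x, hx, rfl⟩ := exists_mk X
    obtain ⟨l, hl⟩ := (smul_mk_eq _ hx).1 hX
    have e6 : z ^ 6 ≠ 1 := fun h => z1 (U.uf.norm_one_six hz h)
    have e6' : star z ^ 6 ≠ 1 := fun h => e6 (by simpa using congrArg star h)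
    have e12 : z ^ 6 ≠ star z ^ 6 := fun h => z1 (U.uf.norm_one_pow hz (by
      have : z ^ 12 = z ^ 6 * star z ^ 6 := by rw [← h]; ring
      rw [this, ← mul_pow, hz, one_pow]))
    have hexp := f.expand x
    set p := U.h x a with hp
    set q := U.h x b with hq
    set r := U.h x c with hr
    rw [hexp] at hl
    simp only [smul_add, U.act, da6, db6, dc6] at hl
    have ea := congrArg (fun t => U.h t a) hl
    have eb := congrArg (fun t => U.h t b) hl
    have ec := congrArg (fun t => U.h t c) hl
    simp only [U.h_add, U.h_smul, f.aa, f.bb, f.cc, f.ab, f.ac, f.bc, f.ba, f.ca, f.cb, mul_one,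
      mul_zero, add_zero, zero_add] at ea eb ec
    have hmk : ∀ (y : V) (hy : y ≠ 0) (s : F), x = s • y → mk F x hx = mk F y hy := by
      intro y hy s h
      rw [Projectivization.mk_eq_mk_iff']
      exact ⟨s, h.symm⟩
    by_cases p0 : p = 0
    · by_cases q0 : q = 0
      · simp only [Set.mem_insert_iff, Set.mem_singleton_iff]
        exact .inr (.inr (hmk _ _ r (by rw [hexp, p0, q0]; simp)))
      · have hl' : l = star z ^ 6 := mul_left_cancel₀ q0 (by rw [eb]; ring)
        have r0 : r = 0 := by
          by_contra r0
          exact e6' (mul_left_cancel₀ r0 (by rw [← hl']; linear_combination -ec))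
        simp only [Set.mem_insert_iff, Set.mem_singleton_iff]
        exact .inr (.inl (hmk _ _ q (by rw [hexp, p0, r0]; simp)))
    · have hl' : l = z ^ 6 := mul_left_cancel₀ p0 (by rw [ea]; ring)
      have r0 : r = 0 := by
        by_contra r0
        exact e6 (mul_left_cancel₀ r0 (by rw [← hl']; linear_combination -ec))
      have q0 : q = 0 := by
        by_contra q0
        exact e12 (mul_left_cancel₀ q0 (by rw [← hl']; linear_combination -eb))
      exact .inl (hmk _ _ p (by rw [hexp, q0, r0]; simp))

theorem IsTri.fix_smul {D : Set (ℙ F V)} {d : G} (h : ∀ X ∈ D, d • X = X) : d • D = D := by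
  have : d • D = (fun x => x) '' D := Set.image_congr h
  rw [this, Set.image_id']

theorem IsTri.eq_of_stab {U : HU n F V G} {D D' : Set (ℙ F V)} (hD : U.IsTri D)
    (hD' : U.IsTri D') (h : ∀ d : G, (∀ X ∈ D, d • X = X) → d • D' = D') : D = D' := by
  obtain ⟨d, h1, h2⟩ := hD.exists_diag
  exact (hD'.eq_of_subset hD fun X hX => h2 X (hD'.six (h d h1) hX)).symm

theorem stab_tri {U : HU n F V G} {D D' : Set (ℙ F V)} (hD : U.IsTri D)
    (hD' : U.IsTri D') (h : stabilizer G D = stabilizer G D') : D = D' :=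
  hD.eq_of_stab hD' fun d hd => by
    have : d ∈ stabilizer G D := mem_stabilizer_iff.2 (IsTri.fix_smul hd)
    rw [h] at this
    exact this

/-- An involution stabilizing a triangle and fixing only one, prescribed, vertex. -/
theorem IsTri.exists_swap {U : HU n F V G} {D : Set (ℙ F V)} (hD : U.IsTri D) {A : ℙ F V}
    (hA : A ∈ D) : ∃ g : G, g ≠ 1 ∧ g * g = 1 ∧ g • A = A ∧ g • D = D ∧
      ∀ X ∈ D, g • X = X → X = A := by
  obtain ⟨B, C, nA, nB, nC, h1, h2, h3, hAB, hAC, hBC, rfl⟩ := hD.of_mem hA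
  obtain ⟨a, b, c, f, rfl, rfl, rfl⟩ := U.tri_frame nA nB nC h1 h2 h3
  obtain ⟨g, gb, gc, ga⟩ := f.rot.swap_mem
  have sA : g • mk F a f.ne.1 = mk F a f.ne.1 := (smul_mk_eq g _).2 ⟨1, by rw [ga, one_smul]⟩
  have sB : g • mk F b f.ne.2.1 = mk F c f.ne.2.2 := by
    rw [Projectivization.smul_mk]; simp only [gb]
  have sC : g • mk F c f.ne.2.2 = mk F b f.ne.2.1 := by
    rw [Projectivization.smul_mk]; simp only [gc]
  refine ⟨g, ?_, ?_, sA, ?_, ?_⟩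
  · rintro rfl
    rw [one_smul] at sB
    exact hBC sB
  · apply f.ext <;> simp only [mul_smul, ga, gb, gc, one_smul]
  · rw [Set.smul_set_insert, Set.smul_set_insert, Set.smul_set_singleton, sA, sB, sC]
    congr 1
    exact Set.pair_comm _ _
  · intro X hX h
    simp only [Set.mem_insert_iff, Set.mem_singleton_iff] at hX
    rcases hX with rfl | rfl | rfl
    · rfl
    · rw [sB] at h; exact absurd h.symm hBC
    · rw [sC] at h; exact absurd h hBC

theorem stab_vtx {U : HU n F V G} {p p' : ℙ F V × Set (ℙ F V)} (hp : p ∈ U.Vtx)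
    (hp' : p' ∈ U.Vtx) (h : stabilizer G p.1 ⊓ stabilizer G p.2 =
      stabilizer G p'.1 ⊓ stabilizer G p'.2) : p = p' := by
  obtain ⟨A, D⟩ := p
  obtain ⟨A', D'⟩ := p'
  obtain ⟨hD, hA⟩ := hp
  obtain ⟨hD', hA'⟩ := hp'
  simp only at h hD hA hD' hA'
  obtain rfl : D = D' := hD.eq_of_stab hD' fun d hd => by
    have : d ∈ stabilizer G A ⊓ stabilizer G D :=
      ⟨mem_stabilizer_iff.2 (hd A hA), mem_stabilizer_iff.2 (IsTri.fix_smul hd)⟩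
    rw [h] at this
    exact this.2
  obtain ⟨g, -, -, gA, gD, hg⟩ := hD.exists_swap hA
  have : g ∈ stabilizer G A ⊓ stabilizer G D :=
      ⟨mem_stabilizer_iff.2 gA, mem_stabilizer_iff.2 gD⟩
  rw [h] at this
  rw [hg A' hA' this.1]

/-- The transvections at the isotropic point determine that point, and a diagonal element of the
stabilizer with distinct eigenvalues then determines the nonisotropic one. -/
theorem stab_flag {U : HU n F V G} {p p' : ℙ F V × ℙ F V} (hp : p ∈ U.flags Set.univ)
    (hp' : p' ∈ U.flags Set.univ) (h : stabilizer G p.1 ⊓ stabilizer G p.2 =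
      stabilizer G p'.1 ⊓ stabilizer G p'.2) : p = p' := by
  obtain ⟨P, R⟩ := p
  obtain ⟨P', R'⟩ := p'
  obtain ⟨-, -, hP, hR, hPR⟩ := hp
  obtain ⟨-, -, hP', hR', hPR'⟩ := hp'
  simp only at h hP hR hPR hP' hR' hPR'
  obtain rfl : P' = P := U.iso_of_tv hP hP' fun g hg => by
    have : g ∈ stabilizer G P ⊓ stabilizer G R :=
      ⟨mem_stabilizer_iff.2 (hg P hP), mem_stabilizer_iff.2 (hg R (U.perp_comm.1 hPR))⟩
    rw [h] at this
    exact this.1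
  obtain ⟨e, he, rfl, ee⟩ := U.exists_unit hR
  obtain ⟨u, hu, rfl⟩ := exists_mk P'
  obtain ⟨r, hr, rfl, rr⟩ := U.exists_unit hR'
  obtain ⟨v, f⟩ := U.exists_hyp_of_ue ((U.perp_mk hu hu).1 hP) hu ee ((U.perp_mk hu he).1 hPR)
  obtain ⟨w, hw, hws, -⟩ := U.uf.exists_omega
  have w0 : w ≠ 0 := by rintro rfl; simp at hw
  have w1 : w ≠ 1 := by rintro rfl; grind
  obtain ⟨g, gu, ge, -⟩ := f.diag hws w0
  have hg : g ∈ stabilizer G (mk F u hu) ⊓ stabilizer G (mk F e he) :=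
    ⟨mem_stabilizer_iff.2 ((smul_mk_eq g _).2 ⟨w, gu⟩),
      mem_stabilizer_iff.2 ((smul_mk_eq g _).2 ⟨1, by rw [ge, one_smul]⟩)⟩
  rw [h] at hg
  obtain ⟨l, hl⟩ := (smul_mk_eq g hr).1 (mem_stabilizer_iff.1 hg.2)
  have hexp := f.expand r
  have ru : U.h r u = 0 := U.h_symm0 ((U.perp_mk hu hr).1 hPR')
  rw [ru, zero_smul, add_zero] at hexp
  set a := U.h r v
  set b := U.h r e
  have b0 : b ≠ 0 := by
    intro h0
    rw [h0, zero_smul, add_zero] at hexp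
    rw [hexp, U.h_smul, U.smul_h, f.uu] at rr
    simp at rr
  rw [hexp] at hl
  simp only [smul_add, U.act g, gu, ge] at hl
  have e1 := congrArg (fun t => U.h t e) hl
  have e2 := congrArg (fun t => U.h t v) hl
  simp only [U.h_add, U.h_smul, f.ue, f.ee, f.uv, f.ev, mul_zero, mul_one, zero_add,
    add_zero] at e1 e2
  have hl1 : l = 1 := mul_right_cancel₀ b0 (by rw [one_mul]; exact e1.symm)
  have a0 : a = 0 := by
    by_contra a0
    rw [hl1, one_mul] at e2
    exact w1 (mul_left_cancel₀ a0 (by rw [e2, mul_one]))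
  rw [a0, zero_smul, zero_add] at hexp
  refine Prod.ext rfl ?_
  show mk F e he = mk F r hr
  rw [eq_comm, Projectivization.mk_eq_mk_iff']
  exact ⟨b, hexp.symm⟩

theorem stab_theta {U : HU n F V G} {C C' : Subgroup G} (hC : C ∈ U.Theta) (hC' : C' ∈ U.Theta)
    (h : Subgroup.normalizer (C : Set G) = Subgroup.normalizer (C' : Set G)) : C = C' := by
  obtain ⟨a, ha, Ia⟩ := Theta.exists_mem hC
  obtain ⟨b, hb, Ib⟩ := Theta.exists_mem hC'
  have haN : a ∈ Subgroup.normalizer (C' : Set G) := h ▸ Subgroup.le_normalizer ha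
  have hbN : b ∈ Subgroup.normalizer (C : Set G) := h ▸ Subgroup.le_normalizer hb
  have m1 : a * b * a⁻¹ * b⁻¹ ∈ C' :=
    mul_mem ((Subgroup.mem_normalizer_iff.1 haN b).1 hb) (inv_mem hb)
  have m2 : a * b * a⁻¹ * b⁻¹ ∈ C := by
    have := mul_mem ha ((Subgroup.mem_normalizer_iff.1 hbN a⁻¹).1 (inv_mem ha))
    simpa [mul_assoc] using this
  by_cases h1 : a * b * a⁻¹ * b⁻¹ = 1
  · have hab : Commute a b := by
      rw [mul_inv_eq_one, mul_inv_eq_iff_eq_mul] at h1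
      exact h1
    exact Theta.eq hC hC' (Theta.mem hC ha Ia.ne_one hab) hb Ib.ne_one
  · exact Theta.eq hC hC' m2 m1 h1

theorem exists_inv_point (U : HU n F V G) (P : ℙ F V) :
    ∃ t ∈ stabilizer G P, t ≠ 1 ∧ t * t = 1 := by
  by_cases hP : U.iso P
  · obtain ⟨u, hu, rfl⟩ := exists_mk P
    have uu := (U.perp_mk hu hu).1 hP
    exact ⟨U.tv u 1, U.tv_mem uu hu hP, U.tv_ne_one uu hu (star_one F) one_ne_zero,
      U.tv_sq uu (star_one F)⟩
  · obtain ⟨e, he, rfl, ee⟩ := U.exists_unit hP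
    obtain ⟨u, v, f⟩ := U.exists_hyp_of_e ee
    exact ⟨U.tv u 1, U.tv_mem f.uu f.ne.1 ((U.perp_mk _ _).2 f.eu),
      U.tv_ne_one f.uu f.ne.1 (star_one F) one_ne_zero, U.tv_sq f.uu (star_one F)⟩

theorem exists_inv_tri {U : HU n F V G} {D : Set (ℙ F V)} (hD : U.IsTri D) :
    ∃ t ∈ stabilizer G D, t ≠ 1 ∧ t * t = 1 := by
  obtain ⟨A, hA⟩ := hD.nonempty
  obtain ⟨g, g1, g2, -, gD, -⟩ := hD.exists_swap hA
  exact ⟨g, mem_stabilizer_iff.2 gD, g1, g2⟩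

end HU
end Stabilizers

/-! ### Möbius inversion over subgroups of order 1, 2, 3 and 6 -/

section Moebius
variable {G : Type} [Group G]

/-- The number of elements of `S` whose stabilizer is exactly `K`. -/
noncomputable def cnt {X : Type} (S : Set X) (st : X → Subgroup G) (K : Subgroup G) : ℤ :=
  ({x | x ∈ S ∧ st x = K} : Set X).ncard

theorem cnt_nonneg {X : Type} (S : Set X) (st : X → Subgroup G) (K : Subgroup G) :
    0 ≤ cnt S st K := Nat.cast_nonneg _

theorem cnt_le_one {X : Type} {S : Set X} {st : X → Subgroup G}
    (hst : ∀ x ∈ S, ∀ y ∈ S, st x = st y → x = y) (K : Subgroup G) : cnt S st K ≤ 1 := by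
  rw [cnt]
  have h : ({x | x ∈ S ∧ st x = K} : Set X).Subsingleton :=
    fun x hx y hy => hst x hx.1 y hy.1 (hx.2.trans hy.2.symm)
  exact_mod_cast (Set.ncard_le_one h.finite).2 fun a ha b hb => h ha hb

theorem cnt_eq_zero {X : Type} {S : Set X} {st : X → Subgroup G} {K : Subgroup G}
    (h : ∀ x ∈ S, st x ≠ K) : cnt S st K = 0 := by
  rw [cnt, Nat.cast_eq_zero]
  have : {x | x ∈ S ∧ st x = K} = (∅ : Set X) :=
    Set.eq_empty_of_forall_notMem fun x hx => h x hx.1 hx.2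
  rw [this, Set.ncard_empty]

variable [Fintype (Subgroup G)]

/-- The sum of `f` over all subgroups containing `H`. -/
noncomputable def up (f : Subgroup G → ℤ) (H : Subgroup G) : ℤ :=
  ∑ K : Subgroup G, if H ≤ K then f K else 0

theorem up_mobius {mu : Subgroup G → ℤ} (hmu : IsSubgroupMobius mu) (H : Subgroup G) :
    up mu H = if H = ⊤ then 1 else 0 := by
  rw [← hmu H, up, finsum_eq_sum_of_fintype]
  exact Finset.sum_congr rfl fun K _ => (finsum_eq_if).symm

theorem up_sub (f g : Subgroup G → ℤ) (H : Subgroup G) :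
    up (fun K => f K - g K) H = up f H - up g H := by
  rw [up, up, up, ← Finset.sum_sub_distrib]
  refine Finset.sum_congr rfl fun K _ => ?_
  split_ifs <;> simp

theorem up_add (f g : Subgroup G → ℤ) (H : Subgroup G) :
    up (fun K => f K + g K) H = up f H + up g H := by
  rw [up, up, up, ← Finset.sum_add_distrib]
  refine Finset.sum_congr rfl fun K _ => ?_
  split_ifs <;> simp

/-- Double counting of a relation. -/
theorem sum_ncard {α β : Type} [Fintype α] [Finite β] (p : α → Prop)
    [DecidablePred p] (r : α → β → Prop) :
    (∑ a, if p a then (({b | r a b} : Set β).ncard : ℤ) else 0) =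
      ({x | p x.1 ∧ r x.1 x.2} : Set (α × β)).ncard := by
  have := Fintype.ofFinite β
  rw [Set.ncard_eq_toFinset_card',
    Finset.card_eq_sum_card_fiberwise (f := Prod.fst) (t := Finset.univ) (fun _ _ => by simp),
    Nat.cast_sum]
  refine Finset.sum_congr rfl fun a _ => ?_
  rw [← Set.ncard_coe_finset]
  split_ifs with h
  · congr 1
    refine Set.ncard_congr (fun b _ => (a, b)) ?_ ?_ ?_
    · intro b hb
      rw [Finset.mem_coe, Finset.mem_filter, Set.mem_toFinset]
      exact ⟨⟨h, hb⟩, rfl⟩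
    · intro b b' _ _ hbb
      exact (Prod.mk.inj hbb).2
    · rintro ⟨a', b⟩ hb
      rw [Finset.mem_coe, Finset.mem_filter, Set.mem_toFinset] at hb
      obtain ⟨⟨_, h2⟩, h3⟩ := hb
      exact ⟨b, h3 ▸ h2, by rw [← h3]⟩
  · symm
    rw [Nat.cast_eq_zero, Set.ncard_eq_zero]
    rw [Set.eq_empty_iff_forall_notMem]
    intro x hx
    rw [Finset.mem_coe, Finset.mem_filter, Set.mem_toFinset] at hx
    exact h (hx.2 ▸ hx.1.1)

theorem up_cnt {X : Type} [Finite X] (S : Set X) (st : X → Subgroup G) (H : Subgroup G) :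
    up (cnt S st) H = ({x | x ∈ S ∧ H ≤ st x} : Set X).ncard := by
  rw [up]
  refine (sum_ncard (fun K => H ≤ K) (fun K x => x ∈ S ∧ st x = K)).trans ?_
  congr 1
  refine Set.ncard_congr (fun p _ => p.2) ?_ ?_ ?_
  · rintro ⟨K, x⟩ ⟨h1, h2, h3⟩
    exact ⟨h2, h1.trans h3.ge⟩
  · rintro ⟨K, x⟩ ⟨K', x'⟩ ⟨_, _, h3⟩ ⟨_, _, h3'⟩ h
    have h : x = x' := h
    subst h
    exact Prod.ext (h3.symm.trans h3') rfl
  · rintro x ⟨h1, h2⟩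
    exact ⟨(st x, x), ⟨h2, h1, rfl⟩, rfl⟩

variable [Finite G]

theorem eq_of_le_dvd {H K : Subgroup G} (h : H ≤ K) (hc : Nat.card K ≤ Nat.card H) : K = H :=
  (Subgroup.eq_of_le_of_card_ge h hc).symm

/-- The orders of subgroups that are treated separately. -/
def small (H : Subgroup G) : Prop :=
  Nat.card H = 1 ∨ Nat.card H = 2 ∨ Nat.card H = 3 ∨ Nat.card H = 6

theorem small_of_le {H K : Subgroup G} (h : H ≤ K) (hK : small K) : small H := by
  have h6 : Nat.card H ∣ 6 := (Subgroup.card_dvd_of_le h).trans (by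
    rcases hK with h | h | h | h <;> rw [h] <;> decide)
  have h7 := Nat.le_of_dvd (by norm_num) h6
  unfold small
  generalize Nat.card H = k at *
  interval_cases k <;> simp_all <;> omega

/-- If the upward sums of `d` are supported on small subgroups, so is `d`. -/
theorem delta_zero {d e : Subgroup G → ℤ} (hd : ∀ H, up d H = e H)
    (he : ∀ H, ¬ small H → e H = 0) (H : Subgroup G) : ¬ small H → d H = 0 := by
  induction H using WellFoundedGT.induction with
  | ind H ih =>
    intro hH
    rw [← he H hH, ← hd H, up, Finset.sum_eq_single H]
    · rw [if_pos le_rfl]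
    · intro K _ hK
      split_ifs with h
      · exact ih K (lt_of_le_of_ne h hK.symm) fun h' => hH (small_of_le h h')
      · rfl
    · intro h
      exact absurd (Finset.mem_univ _) h

theorem delta_six {d e : Subgroup G → ℤ} (hd : ∀ H, up d H = e H)
    (he : ∀ H, ¬ small H → e H = 0) {H : Subgroup G} (hH : Nat.card H = 6) : d H = e H := by
  rw [← hd H, up, Finset.sum_eq_single H]
  · rw [if_pos le_rfl]
  · intro K _ hK
    split_ifs with h
    · refine delta_zero hd he K fun h' => hK (eq_of_le_dvd h ?_)
      rcases h' with h' | h' | h' | h' <;> omega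
    · rfl
  · intro h
    exact absurd (Finset.mem_univ _) h

/-- The sum of `e` over the subgroups of order 6 containing `H`. -/
noncomputable def six (e : Subgroup G → ℤ) (H : Subgroup G) : ℤ :=
  ∑ K : Subgroup G, if Nat.card K = 6 ∧ H ≤ K then e K else 0

theorem delta_prime {d e : Subgroup G → ℤ} (hd : ∀ H, up d H = e H)
    (he : ∀ H, ¬ small H → e H = 0) {H : Subgroup G} (hH : Nat.card H = 2 ∨ Nat.card H = 3) :
    d H = e H - six e H := by
  have : up d H = ∑ K : Subgroup G, ((if K = H then d H else 0) +
      if Nat.card K = 6 ∧ H ≤ K then e K else 0) := by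
    rw [up]
    refine Finset.sum_congr rfl fun K _ => ?_
    by_cases hHK : H ≤ K
    · rw [if_pos hHK]
      by_cases h6 : Nat.card K = 6
      · rw [if_neg (by rintro rfl; omega), if_pos ⟨h6, hHK⟩, zero_add, delta_six hd he h6]
      · rw [if_neg (show ¬ (Nat.card K = 6 ∧ H ≤ K) from fun h => h6 h.1), add_zero]
        split_ifs with h
        · rw [h]
        · refine delta_zero hd he K fun h' => h (eq_of_le_dvd hHK ?_)
          have := Subgroup.card_dvd_of_le hHK
          rcases hH with hH | hH <;> rcases h' with h' | h' | h' | h' <;> rw [hH, h'] at this <;>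
            omega
    · rw [if_neg hHK, if_neg (fun h => hHK h.ge), if_neg (fun h => hHK h.2), add_zero]
  rw [hd, Finset.sum_add_distrib, Finset.sum_ite_eq' Finset.univ H, if_pos (Finset.mem_univ _)]
    at this
  rw [this, six]
  ring

/-- The value at the trivial subgroup, by inversion on the subgroups of order 1, 2, 3 and 6. -/
theorem delta_bot {d e : Subgroup G → ℤ} (hd : ∀ H, up d H = e H)
    (he : ∀ H, ¬ small H → e H = 0) :
    d ⊥ = e ⊥ - six e ⊥ - (∑ K : Subgroup G, if Nat.card K = 2 ∨ Nat.card K = 3 then e K else 0) +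
      ∑ K : Subgroup G, if Nat.card K = 6 then
        e K * ({L | (Nat.card L = 2 ∨ Nat.card L = 3) ∧ L ≤ K} : Set (Subgroup G)).ncard else 0 := by
  have h1 : up d ⊥ = ∑ K : Subgroup G, ((if K = ⊥ then d ⊥ else 0) +
      (if Nat.card K = 6 ∧ ⊥ ≤ K then e K else 0) +
      ((if Nat.card K = 2 ∨ Nat.card K = 3 then e K else 0) -
        if Nat.card K = 2 ∨ Nat.card K = 3 then six e K else 0)) := by
    rw [up]
    refine Finset.sum_congr rfl fun K _ => ?_
    rw [if_pos bot_le]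
    by_cases hK : small K
    · rcases hK with h | h | h | h
      · have := Subgroup.card_eq_one.1 h
        subst this
        simp
      · have h1 : K ≠ ⊥ := by rintro rfl; simp at h
        simp [h, h1, delta_prime hd he (Or.inl h)]
      · have h1 : K ≠ ⊥ := by rintro rfl; simp at h
        simp [h, h1, delta_prime hd he (Or.inr h)]
      · have h1 : K ≠ ⊥ := by rintro rfl; simp at h
        simp [h, h1, delta_six hd he h]
    · rw [delta_zero hd he K hK]
      have h1 : K ≠ ⊥ := by
        rintro rfl
        exact hK (Or.inl (by simp))
      unfold small at hK
      push Not at hK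
      simp [h1, hK]
  have h2 : (∑ K : Subgroup G, if Nat.card K = 2 ∨ Nat.card K = 3 then six e K else 0) =
      ∑ K : Subgroup G, if Nat.card K = 6 then
        e K * ({L | (Nat.card L = 2 ∨ Nat.card L = 3) ∧ L ≤ K} : Set (Subgroup G)).ncard
      else 0 := by
    have : ∀ K : Subgroup G, (if Nat.card K = 2 ∨ Nat.card K = 3 then six e K else 0) =
        ∑ S : Subgroup G, if (Nat.card K = 2 ∨ Nat.card K = 3) ∧ Nat.card S = 6 ∧ K ≤ S
          then e S else 0 := by
      intro K
      split_ifs with h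
      · exact Finset.sum_congr rfl fun S _ => by simp [h]
      · exact (Finset.sum_eq_zero fun S _ => by simp [h]).symm
    rw [Finset.sum_congr rfl fun K _ => this K, Finset.sum_comm]
    refine Finset.sum_congr rfl fun S _ => ?_
    split_ifs with h
    · rw [Set.ncard_eq_toFinset_card', Set.toFinset_setOf, ← Finset.sum_filter_add_sum_filter_not
        Finset.univ fun L : Subgroup G => (Nat.card L = 2 ∨ Nat.card L = 3) ∧ L ≤ S,
        Finset.sum_congr rfl (g := fun _ => e S), Finset.sum_const, Finset.sum_eq_zero, add_zero,
        nsmul_eq_mul, mul_comm]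
      · intro L hL
        rw [Finset.mem_filter] at hL
        exact if_neg fun h' => hL.2 ⟨h'.1, h'.2.2⟩
      · intro L hL
        rw [Finset.mem_filter] at hL
        exact if_pos ⟨hL.2.1, h, hL.2.2⟩
    · exact Finset.sum_eq_zero fun L _ => if_neg fun h' => h h'.2.1
  rw [hd, Finset.sum_add_distrib, Finset.sum_add_distrib, Finset.sum_sub_distrib,
    Finset.sum_ite_eq' Finset.univ, if_pos (Finset.mem_univ _), h2] at h1
  rw [h1, six]
  ring

/-- A group of order 6 has between one and four subgroups of prime order: besides a subgroup of
order 3, each is generated by one of the three remaining elements. -/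
theorem primes_in_six {S : Subgroup G} (h6 : Nat.card S = 6) :
    1 ≤ ({L | (Nat.card L = 2 ∨ Nat.card L = 3) ∧ L ≤ S} : Set (Subgroup G)).ncard ∧
    ({L | (Nat.card L = 2 ∨ Nat.card L = 3) ∧ L ≤ S} : Set (Subgroup G)).ncard ≤ 4 := by
  obtain ⟨s, hs, s3⟩ := HU.exists_three_of_six h6
  set A := Subgroup.zpowers s with hA
  have hAS : A ≤ S := by rwa [hA, Subgroup.zpowers_le]
  have hA3 : Nat.card A = 3 := by rw [hA, Nat.card_zpowers, s3]
  set P := ({L | (Nat.card L = 2 ∨ Nat.card L = 3) ∧ L ≤ S} : Set (Subgroup G)) with hP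
  have hAP : A ∈ P := ⟨Or.inr hA3, hAS⟩
  refine ⟨(Set.ncard_pos).2 ⟨A, hAP⟩, ?_⟩
  have gen : ∀ L : Subgroup G, (Nat.card L = 2 ∨ Nat.card L = 3) → ∀ x ∈ L, x ≠ 1 →
      L = Subgroup.zpowers x := by
    intro L hL x hx h1
    have hle : Subgroup.zpowers x ≤ L := by rwa [Subgroup.zpowers_le]
    refine eq_of_le_dvd hle ?_
    have hd := Subgroup.card_dvd_of_le hle
    have hne : Nat.card (Subgroup.zpowers x) ≠ 1 := by
      rw [Nat.card_zpowers]
      exact fun h => h1 (orderOf_eq_one_iff.1 h)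
    have hp : (Nat.card L).Prime := by rcases hL with h | h <;> rw [h] <;> norm_num
    exact ((Nat.dvd_prime hp).1 hd |>.resolve_left hne).ge
  have hex : ∀ L : Subgroup G, ∃ x, L ∈ P → x ∈ L ∧ x ≠ 1 := by
    intro L
    by_cases hL : L ∈ P
    · have : L ≠ ⊥ := by
        rintro rfl
        simpa using hL.1
      obtain ⟨x, hx⟩ := Subgroup.ne_bot_iff_exists_ne_one.1 this
      exact ⟨x, fun _ => ⟨x.2, fun h => hx (Subtype.ext h)⟩⟩
    · exact ⟨1, fun h => absurd h hL⟩
  choose f hf using hex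
  have h1 : (P \ {A}).ncard ≤ ((S : Set G) \ A).ncard := by
    refine Set.ncard_le_ncard_of_injOn f ?_ ?_ (Set.toFinite _)
    · rintro L ⟨hL, hLA⟩
      refine ⟨hL.2 (hf L hL).1, fun h => hLA ?_⟩
      rw [Set.mem_singleton_iff, gen L hL.1 _ (hf L hL).1 (hf L hL).2,
        gen A hAP.1 _ h (hf L hL).2]
    · rintro L ⟨hL, _⟩ L' ⟨hL', _⟩ h
      rw [gen L hL.1 _ (hf L hL).1 (hf L hL).2, gen L' hL'.1 _ (hf L' hL').1 (hf L' hL').2, h]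
  have h2 : ((S : Set G) \ A).ncard + (A : Set G).ncard = (S : Set G).ncard :=
    Set.ncard_sdiff_add_ncard_of_subset hAS
  have h3 : (P \ {A}).ncard + 1 = P.ncard := Set.ncard_sdiff_singleton_add_one hAP
  have h4 : (A : Set G).ncard = 3 := by rw [← hA3, ← Nat.card_coe_set_eq]; rfl
  have h5 : (S : Set G).ncard = 6 := by rw [← h6, ← Nat.card_coe_set_eq]; rfl
  omega

/-- The bounds for the correction term at the trivial subgroup. -/
theorem delta_bot_bounds {d e : Subgroup G → ℤ} (hd : ∀ H, up d H = e H)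
    (he : ∀ H, ¬ small H → e H = 0) (h2 : ∀ H : Subgroup G, Nat.card H = 2 → e H = 0)
    (h6 : ∀ H : Subgroup G, Nat.card H = 6 → 0 ≤ e H) :
    e ⊥ - (∑ K : Subgroup G, if Nat.card K = 3 then e K else 0) ≤ d ⊥ ∧
    d ⊥ ≤ e ⊥ - (∑ K : Subgroup G, if Nat.card K = 3 then e K else 0) + 3 * six e ⊥ := by
  have h := delta_bot hd he
  have h3 : (∑ K : Subgroup G, if Nat.card K = 2 ∨ Nat.card K = 3 then e K else 0) =
      ∑ K : Subgroup G, if Nat.card K = 3 then e K else 0 := by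
    refine Finset.sum_congr rfl fun K _ => ?_
    by_cases h : Nat.card K = 2
    · simp [h, h2 K h]
    · simp [h]
  rw [h3] at h
  have h4 : six e ⊥ ≤ ∑ K : Subgroup G, if Nat.card K = 6 then
      e K * ({L | (Nat.card L = 2 ∨ Nat.card L = 3) ∧ L ≤ K} : Set (Subgroup G)).ncard
      else 0 := by
    refine Finset.sum_le_sum fun K _ => ?_
    by_cases hK : Nat.card K = 6
    · rw [if_pos ⟨hK, bot_le⟩, if_pos hK]
      have h1 : (1 : ℤ) ≤
        ({L | (Nat.card L = 2 ∨ Nat.card L = 3) ∧ L ≤ K} : Set (Subgroup G)).ncard := by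
        exact_mod_cast (primes_in_six hK).1
      nlinarith [h6 K hK]
    · rw [if_neg fun h => hK h.1, if_neg hK]
  have h5 : (∑ K : Subgroup G, if Nat.card K = 6 then
      e K * ({L | (Nat.card L = 2 ∨ Nat.card L = 3) ∧ L ≤ K} : Set (Subgroup G)).ncard
      else 0) ≤ 4 * six e ⊥ := by
    rw [six, Finset.mul_sum]
    refine Finset.sum_le_sum fun K _ => ?_
    by_cases hK : Nat.card K = 6
    · rw [if_pos hK, if_pos ⟨hK, bot_le⟩]
      have h1 : (({L | (Nat.card L = 2 ∨ Nat.card L = 3) ∧ L ≤ K} : Set (Subgroup G)).ncard : ℤ)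
        ≤ 4 := by
        exact_mod_cast (primes_in_six hK).2
      nlinarith [h6 K hK]
    · rw [if_neg hK, if_neg fun h => hK h.1, mul_zero]
  constructor <;> linarith

end Moebius

/-! ### The Möbius function up to a correction, and the final estimates -/

section Bound
variable {n : ℕ} {F V G : Type} [Field F] [StarRing F] [Finite F] [CharP F 2]
  [AddCommGroup V] [Module F V] [Group G] [DistribMulAction G V] [SMulCommClass G F V]

open scoped LinearAlgebra.Projectivization
open MulAction (stabilizer mem_stabilizer_iff)

/-- The inequalities between the order of the group and the numbers of points, flags and triangles,
as polynomials in `q`; they are verified after the substitution `q = 4 + k`. -/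
theorem arith {q : ℕ} (hq : 4 ≤ q) :
    (q * q * (q * q) + q * q + 1) * (q * q + 1) * ((q + 1) * (q + 1)) +
      3 * (q * q * (q * q) + q * q + 1) + 6 ≤ 2 * ((q * q - 1) * (q * q * q + 1) * (q * q * q)) ∧
    18 + 9 * ((q * q * (q * q) + q * q + 1) * (q * q + 1)) +
      (q * q * (q * q) + q * q + 1) * (q * q + 1) * ((q + 1) * (q + 1)) ≤
        3 * ((q * q - 1) * (q * q * q + 1) * (q * q * q)) := by
  obtain ⟨k, rfl⟩ := Nat.exists_eq_add_of_le hq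
  have h1 : (4 + k) * (4 + k) - 1 = k * k + 8 * k + 15 := by
    have : (4 + k) * (4 + k) = k * k + 8 * k + 15 + 1 := by ring
    omega
  rw [h1]
  constructor
  all_goals
    ring_nf
    have := Nat.zero_le k
    have := Nat.zero_le (k ^ 2)
    have := Nat.zero_le (k ^ 3)
    have := Nat.zero_le (k ^ 4)
    have := Nat.zero_le (k ^ 5)
    have := Nat.zero_le (k ^ 6)
    have := Nat.zero_le (k ^ 7)
    have := Nat.zero_le (k ^ 8)
    omega

namespace HU

/-- The main part of the Möbius function: the class of the virtual `G`-set
(flags) + (vertices of triangles) - (points) - (triangles) - `Theta`, plus one at `⊤`. -/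
noncomputable def mainPart (U : HU n F V G) (H : Subgroup G) : ℤ :=
  (if H = ⊤ then 1 else 0) +
    cnt (U.flags Set.univ) (fun p => stabilizer G p.1 ⊓ stabilizer G p.2) H +
    cnt U.Vtx (fun p => stabilizer G p.1 ⊓ stabilizer G p.2) H -
    cnt (Set.univ : Set (ℙ F V)) (fun p => stabilizer G p) H -
    cnt U.Tri (fun D => stabilizer G D) H -
    cnt U.Theta (fun C => Subgroup.normalizer (C : Set G)) H

/-- The upward sums of `mainPart` are the fixed-point numbers `X0`, increased by one. -/
theorem up_mainPart (U : HU n F V G) [Fintype (Subgroup G)] (H : Subgroup G) :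
    up U.mainPart H = 1 + U.X0 H := by
  have := U.finiteP
  have := U.finiteTri
  have h0 : up (fun K : Subgroup G => if K = ⊤ then 1 else 0) H = 1 := by
    rw [up, Finset.sum_eq_single ⊤]
    · simp
    · intro K _ hK
      simp [hK]
    · intro h
      exact absurd (Finset.mem_univ _) h
  have e1 : {p : ℙ F V × ℙ F V | p ∈ U.flags Set.univ ∧
      H ≤ stabilizer G p.1 ⊓ stabilizer G p.2} = U.flags (fixPts F V H) := by
    ext p
    constructor
    · rintro ⟨⟨-, -, h⟩, h'⟩
      exact ⟨fun g hg => (h' hg).1, fun g hg => (h' hg).2, h⟩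
    · rintro ⟨h1, h2, h⟩
      exact ⟨⟨trivial, trivial, h⟩, fun g hg => ⟨h1 g hg, h2 g hg⟩⟩
  have e2 : {p : ℙ F V × Set (ℙ F V) | p ∈ U.Vtx ∧
      H ≤ stabilizer G p.1 ⊓ stabilizer G p.2} = U.vtxFix H := by
    ext p
    constructor
    · rintro ⟨⟨h1, h2⟩, h'⟩
      exact ⟨⟨h1, fun g hg => (h' hg).2⟩, h2, fun g hg => (h' hg).1⟩
    · rintro ⟨⟨h1, h3⟩, h2, h4⟩
      exact ⟨⟨h1, h2⟩, fun g hg => ⟨h4 g hg, h3 g hg⟩⟩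
  have e3 : {p : ℙ F V | p ∈ (Set.univ : Set (ℙ F V)) ∧ H ≤ stabilizer G p} = fixPts F V H := by
    ext p
    exact ⟨fun h g hg => h.2 hg, fun h => ⟨trivial, fun g hg => h g hg⟩⟩
  have e4 : {D : Set (ℙ F V) | D ∈ U.Tri ∧ H ≤ stabilizer G D} = U.triFix H := by
    ext D
    exact ⟨fun h => ⟨h.1, fun g hg => h.2 hg⟩, fun h => ⟨h.1, fun g hg => h.2 g hg⟩⟩
  have e5 : {C : Subgroup G | C ∈ U.Theta ∧ H ≤ Subgroup.normalizer (C : Set G)} =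
      U.thetaFix H := rfl
  have : up U.mainPart H = up (fun K : Subgroup G => if K = ⊤ then 1 else 0) H +
      up (cnt (U.flags Set.univ) fun p => stabilizer G p.1 ⊓ stabilizer G p.2) H +
      up (cnt U.Vtx fun p => stabilizer G p.1 ⊓ stabilizer G p.2) H -
      up (cnt (Set.univ : Set (ℙ F V)) fun p => stabilizer G p) H -
      up (cnt U.Tri fun D => stabilizer G D) H -
      up (cnt U.Theta fun C => Subgroup.normalizer (C : Set G)) H := by
    rw [← up_add, ← up_add, ← up_sub, ← up_sub, ← up_sub]
    rfl
  rw [this, h0, up_cnt, up_cnt, up_cnt, up_cnt, up_cnt, e1, e2, e3, e4, e5, X0]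
  ring

/-- Points, flags, vertices, triangles and members of `Theta` are determined by their stabilizers,
so that each of them contributes at most one to `mainPart H`. -/
theorem mainPart_le (U : HU n F V G) {H : Subgroup G} (hH : H ≠ ⊤) : |U.mainPart H| ≤ 2 := by
  have a1 := cnt_nonneg (U.flags Set.univ) (fun p => stabilizer G p.1 ⊓ stabilizer G p.2) H
  have b1 := cnt_le_one (S := U.flags Set.univ)
    (st := fun p => stabilizer G p.1 ⊓ stabilizer G p.2)
    (fun x hx y hy h => U.stab_flag hx hy h) H
  have a2 := cnt_nonneg U.Vtx (fun p => stabilizer G p.1 ⊓ stabilizer G p.2) H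
  have b2 := cnt_le_one (S := U.Vtx) (st := fun p => stabilizer G p.1 ⊓ stabilizer G p.2)
    (fun x hx y hy h => U.stab_vtx hx hy h) H
  have a3 := cnt_nonneg (Set.univ : Set (ℙ F V)) (fun p => stabilizer G p) H
  have b3 := cnt_le_one (S := (Set.univ : Set (ℙ F V))) (st := fun p => stabilizer G p)
    (fun x _ y _ h => U.stab_point h) H
  have a4 := cnt_nonneg U.Tri (fun D => stabilizer G D) H
  have b4 := cnt_le_one (S := U.Tri) (st := fun D => stabilizer G D)
    (fun x hx y hy h => U.stab_tri hx hy h) H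
  have a5 := cnt_nonneg U.Theta (fun C => Subgroup.normalizer (C : Set G)) H
  have b5 := cnt_le_one (S := U.Theta) (st := fun C => Subgroup.normalizer (C : Set G))
    (fun x hx y hy h => U.stab_theta hx hy h) H
  -- normalizers of members of `Theta` contain no involution, the other stabilizers do
  have h5 : cnt U.Theta (fun C => Subgroup.normalizer (C : Set G)) H = 0 ∨
      (cnt (Set.univ : Set (ℙ F V)) (fun p => stabilizer G p) H = 0 ∧
        cnt U.Tri (fun D => stabilizer G D) H = 0) := by
    by_cases h : ∃ t ∈ H, t ≠ 1 ∧ t * t = 1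
    · obtain ⟨t, ht, h1, h2⟩ := h
      left
      refine cnt_eq_zero fun C hC h => Theta.sq_ne hC h1 h2 ?_
      rw [h]
      exact ht
    · right
      constructor
      · refine cnt_eq_zero fun P _ hP => h ?_
        rw [← hP]
        exact U.exists_inv_point P
      · refine cnt_eq_zero fun D hD hP => h ?_
        rw [← hP]
        exact exists_inv_tri hD
  rw [mainPart, if_neg hH, abs_le]
  rcases h5 with h5 | ⟨h5, h6⟩
  · rw [h5]
    constructor <;> linarith
  · rw [h5, h6]
    constructor <;> linarith

/-- The Möbius sums of the correction term. -/
noncomputable def err (U : HU n F V G) (H : Subgroup G) : ℤ :=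
  (if H = ⊤ then 1 else 0) - (1 + U.X0 H)

theorem err_top (U : HU n F V G) : U.err ⊤ = 0 := by
  rw [err, X0_top, if_pos rfl]
  norm_num

theorem err_eq (U : HU n F V G) {H : Subgroup G} (h1 : H ≠ ⊥) (h2 : H ≠ ⊤) :
    U.err H = U.defect H := by
  rw [err, X0_eq U h1, if_neg h2]
  ring

/-- The numerical facts about `q = qval n` and the order of `G` used below. -/
theorem nums (U : HU n F V G) :
    2 * (U.freePairs 3).ncard + U.Theta.ncard + Nat.card (ℙ F V) + 2 ≤ Nat.card G ∧
    2 * (3 + (U.flags Set.univ).ncard + 3 * U.Tri.ncard + (U.freePairs 3).ncard) ≤ Nat.card G ∧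
    3 * ((U.freePairs 3).ncard + 2) ≤ Nat.card G ∧
    6 * (U.Tri.ncard + 2) ≤ Nat.card G ∧
    3 * (U.Tri.ncard + (qval n * qval n - 1) + 2) ≤ Nat.card G := by
  have h1 := U.card_ge
  have h2 := U.card_Theta
  have h3 := U.card_points
  have h4 := U.flags_card
  have h5 := U.tri_card
  have h6 := U.freePairs_three
  obtain ⟨h7, h8⟩ := arith (qval_ge U.uf.hn)
  have hq := qval_ge U.uf.hn
  generalize qval n = q at *
  rw [h3] at h4 h5
  have h9 : 6 * (U.freePairs 3).ncard ≤
      (q * q * (q * q) + q * q + 1) * (q * q + 1) * ((q + 1) * (q + 1)) :=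
    calc 6 * (U.freePairs 3).ncard ≤ 6 * (U.Tri.ncard * ((q + 1) * (q + 1))) := by gcongr
      _ = 6 * U.Tri.ncard * ((q + 1) * (q + 1)) := by ring
      _ ≤ _ := by gcongr
  have h10 : 2 * (q * q) ≤ (q * q * (q * q) + q * q + 1) * (q * q + 1) := by nlinarith
  have h11 : 2 ≤ q * q * (q * q) + q * q + 1 := by nlinarith
  have h12 : 16 ≤ q * q := by nlinarith
  rw [h3]
  generalize (q * q * (q * q) + q * q + 1) * (q * q + 1) * ((q + 1) * (q + 1)) = W at *
  generalize (q * q * (q * q) + q * q + 1) * (q * q + 1) = W' at *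
  generalize (q * q - 1) * (q * q * q + 1) * (q * q * q) = W'' at *
  generalize q * q * (q * q) + q * q + 1 = p at *
  generalize q * q = Q at *
  refine ⟨?_, ?_, ?_, ?_, ?_⟩ <;> omega

theorem freeTri_le (U : HU n F V G) (H : Subgroup G) : (U.freeTri H).ncard ≤ U.Tri.ncard := by
  have := U.finiteTri
  exact Set.ncard_le_ncard (fun D hD => hD.1.1) (Set.toFinite _)

/-- The difference of `mu` and `mainPart` has the upward sums `err`, which vanish outside the
subgroups of order 1, 3 and 6. There the difference is computed by inversion, and its size is
compared with the index through the counts collected in `nums`. -/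
theorem index_bound (U : HU n F V G) (mu : Subgroup G → ℤ) (hmu : IsSubgroupMobius mu)
    (H : Subgroup G) : (mu H).natAbs ≤ H.index := by
  have := U.finiteG
  have := U.finiteP
  have := U.finiteTri
  have := Fintype.ofFinite (Subgroup G)
  obtain ⟨n1, n2, n3, n4, n5⟩ := U.nums
  have hq := qval_ge U.uf.hn
  have hd : ∀ H, up (fun K => mu K - U.mainPart K) H = U.err H := fun H => by
    rw [up_sub, up_mobius hmu, up_mainPart, err]
  have hsmall_top : ∀ K : Subgroup G, small K → K ≠ ⊤ := by
    rintro K hK rfl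
    unfold small at hK
    rw [Subgroup.card_top] at hK
    omega
  have sbot : ∀ K : Subgroup G, 1 < Nat.card K → K ≠ ⊥ := by
    rintro K hK rfl
    rw [Subgroup.card_bot] at hK
    omega
  have he : ∀ K : Subgroup G, ¬ small K → U.err K = 0 := by
    intro K hK
    by_cases hT : K = ⊤
    · rw [hT, err_top]
    · unfold small at hK
      push Not at hK
      have hb : K ≠ ⊥ := by
        rintro rfl
        exact hK.1 Subgroup.card_bot
      rw [U.err_eq hb hT, U.defect_eq_zero hb hT hK.2.2.1 hK.2.2.2]
  have he2 : ∀ K : Subgroup G, Nat.card K = 2 → U.err K = 0 := by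
    intro K hK
    have hb := sbot K (by omega)
    have hT := hsmall_top K (Or.inr (Or.inl hK))
    rw [U.err_eq hb hT, U.defect_eq_zero hb hT (by omega) (by omega)]
  have he3 : ∀ K : Subgroup G, Nat.card K = 3 →
      U.err K = (U.freeTri K).ncard + (U.thetaFix K).ncard := by
    intro K hK
    rw [U.err_eq (sbot K (by omega)) (hsmall_top K (Or.inr (Or.inr (Or.inl hK)))), U.defect_three hK]
  have he6 : ∀ K : Subgroup G, Nat.card K = 6 →
      0 ≤ U.err K ∧ U.err K ≤ (U.freeTri K).ncard := by
    intro K hK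
    have hT := hsmall_top K (Or.inr (Or.inr (Or.inr hK)))
    rw [U.err_eq (sbot K (by omega)) hT]
    exact ⟨U.defect_nonneg hT, U.defect_six hK⟩
  have six0 : ∀ K, 0 ≤ six U.err K := by
    intro K
    refine Finset.sum_nonneg fun S _ => ?_
    split_ifs with h
    · exact (he6 S h.1).1
    · exact le_rfl
  have sixle : ∀ K, six U.err K ≤ (U.freePairs 3).ncard := by
    intro K
    have h6 := U.freePairs_six
    have h7 : ((U.freePairs 6).ncard : ℤ) =
        ∑ S : Subgroup G, if Nat.card S = 6 then ((U.freeTri S).ncard : ℤ) else 0 :=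
      (sum_ncard (fun S : Subgroup G => Nat.card S = 6) (fun S D => D ∈ U.freeTri S)).symm
    have h8 : six U.err K ≤ (U.freePairs 6).ncard := by
      rw [h7, six]
      refine Finset.sum_le_sum fun S _ => ?_
      by_cases h : Nat.card S = 6
      · rw [if_pos h]
        split_ifs
        · exact (he6 S h).2
        · exact Nat.cast_nonneg _
      · rw [if_neg h, if_neg fun h' => h h'.1]
    have : ((U.freePairs 6).ncard : ℤ) ≤ (U.freePairs 3).ncard := by exact_mod_cast h6
    linarith
  have hidx := H.index_mul_card
  by_cases hT : H = ⊤
  · subst hT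
    have h := up_mobius hmu ⊤
    rw [if_pos rfl, up, Finset.sum_eq_single ⊤, if_pos le_rfl] at h
    · rw [h, Subgroup.index_top]
      rfl
    · intro K _ hK
      exact if_neg fun h => hK (top_le_iff.1 h)
    · intro h
      exact absurd (Finset.mem_univ _) h
  have hm := abs_le.1 (U.mainPart_le hT)
  by_cases hs : small H
  swap
  · have h1 := delta_zero hd he H hs
    have h2 := H.one_lt_index_of_ne_top hT
    omega
  rcases hs with h | h | h | h
  · have hb := Subgroup.card_eq_one.1 h
    subst hb
    rw [h, mul_one] at hidx
    obtain ⟨b1, b2⟩ := delta_bot_bounds hd he he2 fun K hK => (he6 K hK).1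
    have s0 := six0 ⊥
    have sl := sixle ⊥
    have hE : U.err ⊥ = -1 - (U.flags Set.univ).ncard - 2 * U.Tri.ncard + Nat.card (ℙ F V) +
        U.Theta.ncard := by
      have e0 : fixPts F V (⊥ : Subgroup G) = Set.univ := by
        refine Set.eq_univ_of_forall fun P g hg => ?_
        rw [Subgroup.mem_bot.1 hg, one_smul]
      have e1 : U.triFix ⊥ = U.Tri := by
        ext D
        refine ⟨fun h => h.1, fun h => ⟨h, fun g hg => ?_⟩⟩
        rw [Subgroup.mem_bot.1 hg, one_smul]
      have e2 : U.vtxFix ⊥ = U.Vtx := by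
        ext p
        rw [vtxFix, e1, e0]
        exact ⟨fun h => ⟨h.1, h.2.1⟩, fun h => ⟨h.1, h.2, trivial⟩⟩
      have e3 : U.thetaFix ⊥ = U.Theta := by
        ext C
        exact ⟨fun h => h.1, fun h => ⟨h, bot_le⟩⟩
      rw [err, if_neg hT, X0, e0, e1, e2, e3, U.vtx_card, Set.ncard_univ]
      push_cast
      ring
    have hE3 : (∑ K : Subgroup G, if Nat.card K = 3 then U.err K else 0) =
        (U.freePairs 3).ncard +
          ∑ K : Subgroup G, if Nat.card K = 3 then ((U.thetaFix K).ncard : ℤ) else 0 := by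
      have h7 : ((U.freePairs 3).ncard : ℤ) =
          ∑ S : Subgroup G, if Nat.card S = 3 then ((U.freeTri S).ncard : ℤ) else 0 :=
        (sum_ncard (fun S : Subgroup G => Nat.card S = 3) (fun S D => D ∈ U.freeTri S)).symm
      rw [h7, ← Finset.sum_add_distrib]
      refine Finset.sum_congr rfl fun K _ => ?_
      split_ifs with h
      · exact he3 K h
      · rfl
    have hth0 : 0 ≤ ∑ K : Subgroup G, if Nat.card K = 3 then ((U.thetaFix K).ncard : ℤ) else 0 := by
      refine Finset.sum_nonneg fun K _ => ?_
      split_ifs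
      · exact Nat.cast_nonneg _
      · exact le_rfl
    have hth : 2 * (∑ K : Subgroup G, if Nat.card K = 3 then ((U.thetaFix K).ncard : ℤ) else 0) ≤
        Nat.card G := by
      have h8 : (∑ K : Subgroup G, if Nat.card K = 3 then ((U.thetaFix K).ncard : ℤ) else 0) ≤
          U.C3.ncard * ((qval n * qval n - 1 : ℕ) : ℤ) := by
        rw [C3, Set.ncard_eq_toFinset_card', Set.toFinset_setOf, ← nsmul_eq_mul,
          ← Finset.sum_const, Finset.sum_filter]
        refine Finset.sum_le_sum fun K _ => ?_
        split_ifs with h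
        · exact_mod_cast U.thetaFix_three h
        · exact le_rfl
      have h9 : ((2 * U.C3.ncard * (qval n * qval n - 1) : ℕ) : ℤ) ≤ Nat.card G := by
        exact_mod_cast U.card_C3
      rw [Nat.cast_mul, Nat.cast_mul] at h9
      push_cast at h8 h9 ⊢
      linarith
    rw [hE, hE3] at b1 b2
    generalize (∑ K : Subgroup G, if Nat.card K = 3 then ((U.thetaFix K).ncard : ℤ) else 0) = E
      at *
    generalize six U.err ⊥ = E6 at *
    rw [hidx]
    omega
  · have h1 := delta_prime hd he (Or.inl h)
    rw [he2 H h] at h1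
    have s0 := six0 H
    have sl := sixle H
    generalize six U.err H = E6 at *
    rw [h] at hidx
    omega
  · have h1 := delta_prime hd he (Or.inr h)
    rw [he3 H h] at h1
    have s0 := six0 H
    have sl := sixle H
    have t1 := U.freeTri_le H
    have t2 := U.thetaFix_three h
    generalize six U.err H = E6 at *
    generalize qval n * qval n = Q at *
    rw [h] at hidx
    omega
  · have h1 := delta_six hd he h
    obtain ⟨s0, sl⟩ := he6 H h
    have t1 := U.freeTri_le H
    rw [h] at hidx
    omega

end HU

end Bound

/-! ### The groups `SU(3,q)` and `PSU(3,q)` -/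

section Center
variable {n : ℕ} {F V G : Type} [Field F] [StarRing F] [Finite F] [CharP F 2]
  [AddCommGroup V] [Module F V] [Group G] [DistribMulAction G V] [SMulCommClass G F V]

open scoped LinearAlgebra.Projectivization

/-- A central element fixes every point, because it preserves all stabilizers of points. -/
theorem HU.center_eq_bot (U : HU n F V G) : Subgroup.center G = ⊥ := by
  rw [eq_bot_iff]
  intro g hg
  have hfix : ∀ P : ℙ F V, g • P = P := by
    intro P
    refine U.stab_point ?_
    ext a
    rw [MulAction.mem_stabilizer_iff, MulAction.mem_stabilizer_iff, smul_smul,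
      Subgroup.mem_center_iff.1 hg a, mul_smul, smul_left_cancel_iff]
  obtain ⟨a, ha⟩ := LinearMap.exists_eq_smul_id_of_forall_notLinearIndependent
    (f := DistribSMul.toLinearMap F V g) fun v => by
      by_cases hv : v = 0
      · simp [hv, linearIndependent_fin2]
      · obtain ⟨b, hb⟩ := (smul_mk_eq g hv).1 (hfix _)
        rw [LinearIndependent.pair_iff' hv]
        push Not
        exact ⟨b, hb.symm⟩
  refine Subgroup.mem_bot.2 (U.scalar (a := a) fun x => ?_)
  exact congrArg (fun f : V →ₗ[F] V => f x) ha

end Center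

section Transport

theorem IsSubgroupMobius.comp {G G' : Type*} [Group G] [Group G'] {mu : Subgroup G' → ℤ}
    (hmu : IsSubgroupMobius mu) (f : G ≃* G') :
    IsSubgroupMobius fun K : Subgroup G => mu (f.mapSubgroup K) := by
  intro H
  have h := hmu (f.mapSubgroup H)
  rw [show (f.mapSubgroup H = ⊤) = (H = ⊤) from propext (map_eq_top_iff f.mapSubgroup)] at h
  rw [← h]
  refine finsum_mem_eq_of_bijOn f.mapSubgroup ⟨?_, f.mapSubgroup.injective.injOn, ?_⟩
    fun _ _ => rfl
  · intro K hK
    exact f.mapSubgroup.monotone hK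
  · intro K hK
    have hK : f.mapSubgroup H ≤ K := hK
    exact ⟨f.mapSubgroup.symm K, f.mapSubgroup.le_symm_apply.2 hK,
      f.mapSubgroup.apply_symm_apply K⟩

end Transport

section Concrete
open Matrix

/-- The matrices in `SU(3,q)` act on column vectors by multiplication. -/
noncomputable instance suSMul (n : ℕ) : SMul (SU3 n) (Fin 3 → Fq2 n) where
  smul g x := g.1.1 *ᵥ x

noncomputable instance suAction (n : ℕ) : DistribMulAction (SU3 n) (Fin 3 → Fq2 n) where
  toSMul := suSMul n
  one_smul x := one_mulVec x
  mul_smul g g' x := (mulVec_mulVec x g.1.1 g'.1.1).symm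
  smul_zero g := mulVec_zero _
  smul_add g x y := mulVec_add _ x y

theorem su_smul {n : ℕ} (g : SU3 n) (x : Fin 3 → Fq2 n) : g • x = g.1.1 *ᵥ x := rfl

instance suComm (n : ℕ) : SMulCommClass (SU3 n) (Fq2 n) (Fin 3 → Fq2 n) where
  smul_comm g a x := mulVec_smul g.1.1 a x

theorem su_form {n : ℕ} {A : Matrix (Fin 3) (Fin 3) (Fq2 n)} (x y : Fin 3 → Fq2 n) :
    (A *ᵥ x) ⬝ᵥ star (A *ᵥ y) = star y ⬝ᵥ ((Aᴴ * A) *ᵥ x) := by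
  rw [star_mulVec, dotProduct_comm, ← dotProduct_mulVec, mulVec_mulVec]

/-- The standard hermitian space on which `SU(3,q)` acts. -/
noncomputable def suSpace {n : ℕ} (hn : 1 ≤ n) : HU n (Fq2 n) (Fin 3 → Fq2 n) (SU3 n) where
  uf := {
    hn := hn
    card := by
      rw [GaloisField.card 2 (2 ^ (n + 1)) (by positivity), ← pow_add, ← two_mul, pow_succ,
        mul_comm]
    star_eq := fun _ => rfl }
  h x y := x ⬝ᵥ star y
  h_add x y z := add_dotProduct x y _
  h_smul a x y := smul_dotProduct a x _
  h_star x y := by rw [← star_dotProduct_star, star_star, dotProduct_comm]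
  nondeg x hx := by
    funext i
    have := hx (Pi.single i 1)
    rwa [← Pi.single_star, star_one, dotProduct_single, mul_one] at this
  dim := by simp
  inv g x y := by
    have h : (g.1.1)ᴴ * g.1.1 = 1 := mem_unitaryGroup_iff'.1 g.1.2
    rw [su_smul, su_smul, su_form, h, one_mulVec, dotProduct_comm]
  faithful g hg := by
    refine Subtype.ext (Subtype.ext (Matrix.ext_of_mulVec_single fun i => ?_))
    exact (hg _).trans (one_mulVec _).symm
  build f hf hdet := by
    have hA : ∀ x, (LinearMap.toMatrix' f) *ᵥ x = f x := fun x => LinearMap.toMatrix'_mulVec f x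
    have hU : LinearMap.toMatrix' f ∈ unitaryGroup (Fin 3) (Fq2 n) := by
      rw [mem_unitaryGroup_iff']
      refine Matrix.ext_of_mulVec_single fun i => ?_
      funext j
      have h := hf (Pi.single i 1) (Pi.single j 1)
      rw [← hA, ← hA, su_form, dotProduct_comm _ (star _), ← Pi.single_star, star_one,
        single_dotProduct, single_dotProduct, one_mul, one_mul] at h
      rw [one_mulVec]
      exact h
    refine ⟨⟨⟨_, hU⟩, ?_⟩, fun x => hA x⟩
    exact (LinearMap.det_toMatrix' f).trans hdet
  det_one g := by
    have : DistribSMul.toLinearMap (Fq2 n) (Fin 3 → Fq2 n) g = Matrix.toLin' g.1.1 :=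
      LinearMap.ext fun x => rfl
    rw [this, LinearMap.det_toLin']
    exact g.2
  exists_e := ⟨Pi.single 0 1, by
    rw [← Pi.single_star, star_one, single_dotProduct, Pi.single_eq_same, one_mul]⟩

end Concrete

theorem stmt16 (n : ℕ) (hn : 1 ≤ n) (mu : Subgroup (PSU3 n) → ℤ)
    (hmu : IsSubgroupMobius mu) (H : Subgroup (PSU3 n)) :
    (mu H).natAbs ≤ H.index := by
  have U := suSpace hn
  have hinj : Function.Injective (QuotientGroup.mk' (Subgroup.center (SU3 n))) := by
    rw [← MonoidHom.ker_eq_bot_iff, QuotientGroup.ker_mk', U.center_eq_bot]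
  let f : SU3 n ≃* PSU3 n :=
    MulEquiv.ofBijective _ ⟨hinj, QuotientGroup.mk'_surjective (Subgroup.center (SU3 n))⟩
  have h := U.index_bound _ (hmu.comp f) (f.mapSubgroup.symm H)
  have h2 : (f.mapSubgroup (f.mapSubgroup.symm H)).index = (f.mapSubgroup.symm H).index :=
    Subgroup.index_map_equiv _ f
  rw [OrderIso.apply_symm_apply] at h h2
  rwa [h2]

end PSUPaper
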